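/- Fix an algebraic closure ℚ̄ of ℚ and a positive integer D. Let Q(3,D) be the set of polynomials P(T,Y) = Y³ + a(T)Y² + b(T)Y + c(T) with a, b, c ∈ ℤ[T] of degree at most D, and Q(3,D,H) the subset of those all of whose integer coefficients have absolute value at most H. For x ≥ 1 let 𝒮(S₃,x) be the (finite, by Hermite's theorem) set of intermediate fields F of ℚ̄/ℚ that are finite Galois over ℚ with Galois group isomorphic to S₃ and with absolute discriminant |d_F| ≤ x; for P ∈ Q(3,D) let Sp(P) be the set of such fields F for which there exists t₀ ∈ ℚ with P(t₀,Y) separable and F equal to the splitting field of P(t₀,Y) inside ℚ̄. Let S be the set of P ∈ Q(3,D) such that: (a) the splitting field of P(T,Y) over the rational function field ℚ̄(T) has Galois group of order 6 (i.e., P defines a regular S₃-extension of ℚ(T)); and (b) there exists a constant α > 0 with |Sp(P) ∩ 𝒮(S₃,x)| / |𝒮(S₃,x)| = O((log x)^{−α}) as x → ∞. Then |S ∩ Q(3,D,H)| / |Q(3,D,H)| = 1 − O(log H / √H) as H → ∞. -/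

import Mathlib

/-!
Write `Δ ∈ ℤ[T]` for the discriminant in `Y` of `P = Y³ + a(T) Y² + b(T) Y + c(T)`; its degree is at
most `4 * D`. Two conditions on `Δ` suffice for `P` to be good (`polyOf_mem_GoodS3`):

* the resultant `rowRes` of `Δ` and `Δ'`, formed in the degrees `4 * D` and `4 * D - 1`, is nonzero;
* some prime `l` does not divide the coefficient of `T ^ (4 * D)` in `Δ`, and `Δ` has no root
  modulo `l`.

The rest of the argument shows that they suffice, and that they fail for a proportion
`O(log H / √H)` of all `P` of height at most `H`.

**The Galois group.** If `Δ` is squarefree of degree exactly `4 * D`, then it is not a square over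
`ℚ̄(T)`, and `P` has no root there, because a root would force a square factor of `Δ` or make its
degree too small (`gal_card_ratFunc`).

**Many `S₃`-fields.** For squarefree `m ≥ 2` the least solution `r > 2` of `r² - m w² = 4` makes
`X³ - 3 X - r` irreducible. Its splitting field is an `S₃`-field containing `√(-3 * m)`, and explicit
integers in it show that its discriminant is `O(m³)`. Different `m` give different fields, so there
are `≫ x^(1/3)` of them with discriminant at most `x` (`S3Fields_lower`).

**Few specialisations.** Let `F` be an `S₃`-field of discriminant at most `x` that is the splitting
field of some `P(t₀, Y)`, and let `k` be a cubic subfield. The maximal order of `k` corresponds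
to a binary cubic form. Up to finitely many primes, which depend on `P` only, the discriminant `d` of
this form is squarefree and its prime divisors divide a value of `Δ`, so that `Δ` has a root modulo
each of them. Since `ℚ(√d) ⊆ F`, it follows that `|d| ≪ x^(1/3)` (`spec_field`). The form can be
taken reduced (`exists_reduced`), which confines its coefficients to boxes. In such a box Brun's pure
sieve counts the forms whose discriminant is coprime to all primes modulo which `Δ` is rootless
(`sieve_main`). The saving is a power of `log x`, because these primes have positive density in the
sense that the sum of their reciprocals up to `z` is at least `δ * log (log z) - K`
(`rootless_recip_sum`): by hypothesis the Frobenius element at `l` moves every root of `Δ`, and primes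
whose decomposition group is generated by the same element are counted through the poles of Dedekind
zeta functions. Altogether `|Sp(P) ∩ 𝒮(S₃, x)| ≪ x^(1/3) (log x)^(-η)` (`sp_upper`), to be compared
with the lower bound for `|𝒮(S₃, x)|`.

**Genericity.** The resultant vanishes for a proportion `O(1 / H)` of all `P`, by the Schwartz–Zippel
lemma (`rowRes_zero_count`). For a large prime `l`, a proportion at least `1 / (8 * D)` of the
coefficient vectors modulo `l` makes `l` an admissible prime (`card_goodRows`). A second moment
computation over the primes `l ≪ √H`, with a Fejér weight for which the events at different primes are
exactly uncorrelated (`variance_sieve`), shows that all but a proportion `O(1 / π(√H))`, which is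
`O(log H / √H)`, of the vectors admit such a prime (`bad_count`).
-/

open Polynomial Filter Asymptotics IntermediateField
open scoped Classical

noncomputable section

/-- Absolute discriminant of an intermediate field of `ℚ̄/ℚ`
(defined to be `0` in the irrelevant infinite-dimensional case). -/
def absDiscr (F : IntermediateField ℚ (AlgebraicClosure ℚ)) : ℤ :=
  if h : FiniteDimensional ℚ F then
    letI := h
    letI : NumberField F := ⟨⟩
    NumberField.discr F
  else 0

/-- `Q(n,D)`: monic polynomials of degree `n` in `Y` over `ℤ[T]` whose coefficients
have degree at most `D` in `T`. -/
def QSet (n D : ℕ) : Set (Polynomial (Polynomial ℤ)) :=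
  {P | P.Monic ∧ P.natDegree = n ∧ ∀ i, (P.coeff i).natDegree ≤ D}

/-- All integer coefficients of `P(T,Y)` have absolute value at most `H`. -/
def QHeightLE (P : Polynomial (Polynomial ℤ)) (H : ℕ) : Prop :=
  ∀ i j, |(P.coeff i).coeff j| ≤ (H : ℤ)

/-- `𝒮(S₃,x)`: intermediate fields of `ℚ̄/ℚ` that are finite Galois over `ℚ` with
Galois group isomorphic to `S₃` and absolute discriminant at most `x`. -/
def S3Fields (x : ℕ) : Set (IntermediateField ℚ (AlgebraicClosure ℚ)) :=
  {F | FiniteDimensional ℚ F ∧ IsGalois ℚ F ∧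
    Nonempty ((F ≃ₐ[ℚ] F) ≃* Equiv.Perm (Fin 3)) ∧ |absDiscr F| ≤ (x : ℤ)}

/-- The specialization of `P(T,Y)` at `T = t₀`, a polynomial in `ℚ[Y]`. -/
def specialize (P : Polynomial (Polynomial ℤ)) (t₀ : ℚ) : Polynomial ℚ :=
  P.map (Polynomial.eval₂RingHom (Int.castRingHom ℚ) t₀)

/-- `Sp(P)`: the intermediate fields of `ℚ̄/ℚ` that arise as splitting fields (inside `ℚ̄`)
of a separable specialization `P(t₀,Y)`, `t₀ ∈ ℚ`. -/
def SpSet (P : Polynomial (Polynomial ℤ)) : Set (IntermediateField ℚ (AlgebraicClosure ℚ)) :=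
  {F | ∃ t₀ : ℚ, (specialize P t₀).Separable ∧
    F = IntermediateField.adjoin ℚ ((specialize P t₀).rootSet (AlgebraicClosure ℚ))}

/-- `P(T,Y)` viewed as a polynomial in `Y` over `ℚ̄(T)`. -/
def toQbarT (P : Polynomial (Polynomial ℤ)) : Polynomial (RatFunc (AlgebraicClosure ℚ)) :=
  P.map ((algebraMap (Polynomial (AlgebraicClosure ℚ)) (RatFunc (AlgebraicClosure ℚ))).comp
    (Polynomial.mapRingHom (Int.castRingHom (AlgebraicClosure ℚ))))

/-- The set `S`: polynomials in `Q(3,D)` defining a regular `S₃`-extension of `ℚ(T)`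
and whose specialization set has density `0` at a rate `O((log x)^{-α})`. -/
def GoodS3 (D : ℕ) : Set (Polynomial (Polynomial ℤ)) :=
  {P | P ∈ QSet 3 D ∧ Nat.card (toQbarT P).Gal = 6 ∧
    ∃ α : ℝ, 0 < α ∧
      (fun x : ℕ => ((SpSet P ∩ S3Fields x).ncard : ℝ) / ((S3Fields x).ncard : ℝ))
        =O[atTop] fun x : ℕ => Real.log x ^ (-α)}

/-! ### Ideals of given norm -/

/-- The number of ideals of norm `n` in the ring of integers of `K`. -/
def idealCount (K : Type*) [Field K] [NumberField K] (n : ℕ) : ℕ :=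
  Nat.card {I : Ideal (NumberField.RingOfIntegers K) // Ideal.absNorm I = n}

section
variable (K : Type*) [Field K] [NumberField K]
local notation "OK" => NumberField.RingOfIntegers K

lemma finite_idealCount {n : ℕ} : Finite {I : Ideal OK // Ideal.absNorm I = n} :=
  Ideal.finite_setOfPred_absNorm_eq n

lemma idealCount_one : idealCount K 1 = 1 := by
  unfold idealCount
  rw [Nat.card_eq_one_iff_unique]
  constructor
  · constructor
    rintro ⟨I, hI⟩ ⟨J, hJ⟩
    rw [Ideal.absNorm_eq_one_iff] at hI hJ
    simp [hI, hJ]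
  · exact ⟨⟨⊤, by simp⟩⟩

lemma sup_span_of_coprime {m n : ℕ} (h : m.Coprime n) {I J : Ideal OK}
    (hI : Ideal.absNorm I = m) (hJ : Ideal.absNorm J = n) :
    I * J ⊔ Ideal.span {(m : OK)} = I := by
  have hm : (m : OK) ∈ I := hI ▸ Ideal.absNorm_mem I
  have hn : (n : OK) ∈ J := hJ ▸ Ideal.absNorm_mem J
  apply le_antisymm
  · refine sup_le Ideal.mul_le_left ?_
    rw [Ideal.span_le]; simpa using hm
  · intro x hx
    obtain ⟨u, v, huv⟩ := (Nat.isCoprime_iff_coprime.mpr h)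
    have h1 : x = (v : OK) * (x * n) + (u * x) * m := by
      have : ((u * m + v * n : ℤ) : OK) = 1 := by rw [huv]; simp
      push_cast at this
      linear_combination (-x) * this
    rw [h1]
    apply Ideal.add_mem
    · exact Ideal.mul_mem_left _ _ (Ideal.mem_sup_left (Ideal.mul_mem_mul hx hn))
    · exact Ideal.mul_mem_left _ _ (Ideal.mem_sup_right (Ideal.subset_span rfl))

/-- Ideals of norm `m * n` factor uniquely into parts of norms `m` and `n`, so the Dedekind zeta function
has an Euler product. -/
lemma idealCount_mul {m n : ℕ} (h : m.Coprime n) :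
    idealCount K (m * n) = idealCount K m * idealCount K n := by
  unfold idealCount
  rw [← Nat.card_prod]
  symm
  apply Nat.card_congr
  refine Equiv.ofBijective (fun p => ⟨p.1.1 * p.2.1, by rw [map_mul, p.1.2, p.2.2]⟩) ⟨?_, ?_⟩
  · rintro ⟨⟨I, hI⟩, ⟨J, hJ⟩⟩ ⟨⟨I', hI'⟩, ⟨J', hJ'⟩⟩ he
    simp only [Subtype.mk.injEq] at he
    have h1 := sup_span_of_coprime K h hI hJ
    have h2 := sup_span_of_coprime K h hI' hJ'
    have h3 := sup_span_of_coprime K h.symm hJ hI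
    have h4 := sup_span_of_coprime K h.symm hJ' hI'
    rw [he, h2] at h1
    rw [mul_comm J I, he, mul_comm I' J', h4] at h3
    simp [h1, h3]
  · rintro ⟨I, hI⟩
    have hmn : ((m * n : ℕ) : OK) ∈ I := hI ▸ Ideal.absNorm_mem I
    set A := I ⊔ Ideal.span {(m : OK)}
    set B := I ⊔ Ideal.span {(n : OK)}
    have hAB : A * B = I := by
      apply le_antisymm
      · rw [Ideal.mul_le]
        intro r hr s hs
        obtain ⟨i, hi, a, ha, rfl⟩ := Submodule.mem_sup.mp hr
        obtain ⟨j, hj, b, hb, rfl⟩ := Submodule.mem_sup.mp hs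
        obtain ⟨a, rfl⟩ := Ideal.mem_span_singleton'.mp ha
        obtain ⟨b, rfl⟩ := Ideal.mem_span_singleton'.mp hb
        have : (i + a * m) * (j + b * n) = (j + b * n) * i + (a * m) * j + (a * b) * ((m * n : ℕ) : OK) := by
          push_cast; ring
        rw [this]
        exact I.add_mem (I.add_mem (I.mul_mem_left _ hi) (I.mul_mem_left _ hj)) (I.mul_mem_left _ hmn)
      · intro x hx
        obtain ⟨u, v, huv⟩ := (Nat.isCoprime_iff_coprime.mpr h)
        have h1 : x = (u : OK) * (m * x) + v * (x * n) := by
          have : ((u * m + v * n : ℤ) : OK) = 1 := by rw [huv]; simp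
          push_cast at this
          linear_combination (-x) * this
        rw [h1]
        apply Ideal.add_mem
        · exact Ideal.mul_mem_left _ _ (Ideal.mul_mem_mul (Ideal.mem_sup_right (Ideal.subset_span rfl)) (Ideal.mem_sup_left hx))
        · exact Ideal.mul_mem_left _ _ (Ideal.mul_mem_mul (Ideal.mem_sup_left hx) (Ideal.mem_sup_right (Ideal.subset_span rfl)))
    have hN : Ideal.absNorm A * Ideal.absNorm B = m * n := by rw [← map_mul, hAB, hI]
    have key : ∀ (k : ℕ), ∃ d, Ideal.absNorm (I ⊔ Ideal.span {(k : OK)}) ∣ k ^ d := by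
      intro k
      refine ⟨Module.finrank ℤ OK, ?_⟩
      have := Ideal.absNorm_dvd_absNorm_of_le (le_sup_right : Ideal.span {(k : OK)} ≤ I ⊔ Ideal.span {(k : OK)})
      rwa [Ideal.absNorm_span_natCast] at this
    obtain ⟨d, hd⟩ := key m
    obtain ⟨e, he⟩ := key n
    have hAn : (Ideal.absNorm A).Coprime n := Nat.Coprime.coprime_dvd_left hd (h.pow_left d)
    have hBm : (Ideal.absNorm B).Coprime m := Nat.Coprime.coprime_dvd_left he (h.symm.pow_left e)
    have h1 : Ideal.absNorm A ∣ m := hAn.dvd_of_dvd_mul_right (hN ▸ dvd_mul_right _ _)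
    have h2 : Ideal.absNorm B ∣ n := hBm.dvd_of_dvd_mul_left (hN ▸ dvd_mul_left _ _)
    have h3 : m ∣ Ideal.absNorm A := hBm.symm.dvd_of_dvd_mul_right (hN ▸ dvd_mul_right _ _)
    have h4 : n ∣ Ideal.absNorm B := hAn.symm.dvd_of_dvd_mul_left (hN ▸ dvd_mul_left _ _)
    exact ⟨⟨⟨A, Nat.dvd_antisymm h1 h3⟩, ⟨B, Nat.dvd_antisymm h2 h4⟩⟩, Subtype.ext hAB⟩

open UniqueFactorizationMonoid in
lemma card_normalizedFactors_le {p e : ℕ} (hp : p.Prime) {I : Ideal OK}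
    (hI : Ideal.absNorm I = p ^ e) : Multiset.card (normalizedFactors I) ≤ e := by
  have hI0 : I ≠ 0 := by
    rintro rfl
    simp at hI
    exact absurd hI.symm (pow_ne_zero _ hp.ne_zero)
  have h1 : ((normalizedFactors I).map Ideal.absNorm).prod = p ^ e := by
    rw [← hI, Multiset.prod_hom, Ideal.prod_normalizedFactors_eq_self hI0]
  have h2 : ∀ q ∈ (normalizedFactors I).map Ideal.absNorm, p ≤ q := by
    intro q hq
    obtain ⟨J, hJ, rfl⟩ := Multiset.mem_map.mp hq
    have hd : Ideal.absNorm J ∣ p ^ e := hI ▸ map_dvd Ideal.absNorm (dvd_of_mem_normalizedFactors hJ)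
    obtain ⟨k, hk, hk2⟩ := (Nat.dvd_prime_pow hp).mp hd
    have hne : Ideal.absNorm J ≠ 1 := by
      rw [Ne, Ideal.absNorm_eq_one_iff]
      exact (Ideal.isPrime_of_prime (prime_of_normalized_factor J hJ)).ne_top
    rw [hk2] at hne ⊢
    rcases k with _ | k
    · simp at hne
    · exact Nat.le_of_dvd (pow_pos hp.pos _) (dvd_pow_self _ (by simp))
  have h3 := Multiset.pow_card_le_prod h2
  rw [h1, Multiset.card_map] at h3
  exact (Nat.pow_le_pow_iff_right hp.one_lt).mp h3

open UniqueFactorizationMonoid in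
/-- An ideal of norm `p ^ e` is determined by its exponents at the at most `[K : ℚ]` primes above `p`,
each of which is at most `e`. -/
lemma idealCount_pow_le {p : ℕ} (hp : p.Prime) (e : ℕ) :
    idealCount K (p ^ e) ≤ (e + 1) ^ Module.finrank ℤ OK := by
  set S := (normalizedFactors (Ideal.span {(p : OK)})).toFinset
  have hp0 : Ideal.span {(p : OK)} ≠ 0 := by
    simpa using hp.ne_zero
  have hS : S.card ≤ Module.finrank ℤ OK := by
    refine (Multiset.toFinset_card_le _).trans (card_normalizedFactors_le K hp ?_)
    exact Ideal.absNorm_span_natCast p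
  have : idealCount K (p ^ e) ≤ Nat.card (S → Fin (e + 1)) := by
    unfold idealCount
    refine Nat.card_le_card_of_injective
      (fun I J => ⟨(normalizedFactors I.1).count J.1,
        Nat.lt_succ_of_le ((Multiset.count_le_card _ _).trans (card_normalizedFactors_le K hp I.2))⟩) ?_
    rintro ⟨I, hI⟩ ⟨J, hJ⟩ h
    have key : ∀ {I : Ideal OK}, Ideal.absNorm I = p ^ e → I ≠ 0 ∧ ∀ Q ∈ normalizedFactors I, Q ∈ S := by
      intro I hI
      have hI0 : I ≠ 0 := by
        rintro rfl
        simp at hI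
        exact absurd hI.symm (pow_ne_zero _ hp.ne_zero)
      refine ⟨hI0, fun Q hQ => ?_⟩
      have hpr := prime_of_normalized_factor Q hQ
      have h1 : (p : OK) ^ e ∈ I := by have := Ideal.absNorm_mem I; rwa [hI, Nat.cast_pow] at this
      have h2 : (p : OK) ^ e ∈ Q := (Ideal.le_of_dvd (dvd_of_mem_normalizedFactors hQ)) h1
      have h3 : (p : OK) ∈ Q := (Ideal.isPrime_of_prime hpr).mem_of_pow_mem _ h2
      rw [Multiset.mem_toFinset, mem_normalizedFactors_iff' hp0]
      refine ⟨hpr.irreducible, normalize_eq _, ?_⟩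
      rw [Ideal.dvd_span_singleton]; exact h3
    obtain ⟨hI0, hI1⟩ := key hI
    obtain ⟨hJ0, hJ1⟩ := key hJ
    apply Subtype.ext
    change I = J
    rw [← Ideal.prod_normalizedFactors_eq_self hI0, ← Ideal.prod_normalizedFactors_eq_self hJ0]
    congr 1
    ext Q
    by_cases hQ : Q ∈ S
    · have := congrFun h ⟨Q, hQ⟩
      simpa using this
    · rw [Multiset.count_eq_zero_of_notMem (fun h => hQ (hI1 _ h)),
        Multiset.count_eq_zero_of_notMem (fun h => hQ (hJ1 _ h))]
  refine this.trans ?_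
  simp only [Nat.card_eq_fintype_card, Fintype.card_fun, Fintype.card_fin, Fintype.card_coe]
  exact Nat.pow_le_pow_right (by omega) hS
end

/-! ### Primes of degree one -/

/-- Logarithm of an Euler product whose local coefficients grow polynomially: only the
prime terms contribute, up to a bounded error that is uniform in `s > 1`. -/
lemma log_eulerProduct_bound (n : ℕ) : ∃ C : ℝ, ∀ a : ℕ → ℕ, a 1 = 1 →
    (∀ {m k : ℕ}, m.Coprime k → a (m * k) = a m * a k) →
    (∀ {p : ℕ}, p.Prime → ∀ e, a (p ^ e) ≤ (e + 1) ^ n) →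
    ∀ s : ℝ, 1 < s → Summable (fun m : ℕ => (a m : ℝ) * (m : ℝ) ^ (-s)) →
    Summable (fun p : Nat.Primes => (a p : ℝ) * (p : ℝ) ^ (-s)) ∧
    |Real.log (∑' m : ℕ, (a m : ℝ) * (m : ℝ) ^ (-s)) -
      ∑' p : Nat.Primes, (a p : ℝ) * (p : ℝ) ^ (-s)| ≤ C := by
  set S : ℝ := ∑' e : ℕ, ((e : ℝ) + 3) ^ n * (1 / 2) ^ e with hS
  have hSsum : Summable (fun e : ℕ => ((e : ℝ) + 3) ^ n * (1 / 2 : ℝ) ^ e) := by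
    have h1 := summable_pow_mul_geometric_of_norm_lt_one n (r := (1 / 2 : ℝ)) (by norm_num)
    have h2 := (summable_nat_add_iff 3).mpr h1
    refine (h2.mul_left 8).congr fun e => ?_
    push_cast
    rw [pow_add]; ring
  have hS0 : 0 ≤ S := tsum_nonneg fun e => by positivity
  set B : ℝ := S + (2 ^ n + S) ^ 2
  have hB : Summable (fun p : Nat.Primes => B * (p : ℝ) ^ (-2 : ℝ)) :=
    (Nat.Primes.summable_rpow.mpr (by norm_num)).mul_left B
  refine ⟨∑' p : Nat.Primes, B * (p : ℝ) ^ (-2 : ℝ), fun a h1 hmul hpow s hs hsum => ?_⟩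
  have hs0 : s ≠ 0 := by linarith
  set g : ℕ → ℝ := fun m => (a m : ℝ) * (m : ℝ) ^ (-s) with hg
  have hg0 : g 0 = 0 := by simp [hg, Real.zero_rpow (neg_ne_zero.mpr hs0)]
  have hgnn : ∀ m, 0 ≤ g m := fun m => by positivity
  have hEP := EulerProduct.eulerProduct_hasProd (f := g) (by simp [hg, h1])
    (fun {m k} h => by
      simp only [hg, hmul h]
      push_cast
      rw [Real.mul_rpow (by positivity) (by positivity)]; ring)
    (by simpa using hsum.norm) hg0
  have hps : Summable (fun p : Nat.Primes => g p) :=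
    hsum.comp_injective Nat.Primes.coe_nat_injective
  refine ⟨hps, ?_⟩
  -- local factors
  have hloc : ∀ p : Nat.Primes, Summable (fun e : ℕ => g (p ^ e)) := fun p =>
    hsum.comp_injective (Nat.pow_right_injective p.2.two_le)
  set ε : Nat.Primes → ℝ := fun p => ∑' e : ℕ, g (p ^ (e + 2)) with hε
  have hF : ∀ p : Nat.Primes, ∑' e, g (p ^ e) = 1 + (g p + ε p) := by
    intro p
    rw [← (hloc p).sum_add_tsum_nat_add 2]
    simp [Finset.sum_range_succ, hg, h1, hε, add_assoc]
  have hε0 : ∀ p, 0 ≤ ε p := fun p => tsum_nonneg fun e => hgnn _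
  have hp2 : ∀ p : Nat.Primes, (2 : ℝ) ≤ p := fun p => by exact_mod_cast p.2.two_le
  have hterm : ∀ (p : Nat.Primes) (e : ℕ), (((p : ℕ) ^ e : ℕ) : ℝ) ^ (-s) ≤ ((p : ℝ)⁻¹) ^ e := by
    intro p e
    have hp1 : (1 : ℝ) ≤ ((p : ℕ) ^ e : ℕ) := by exact_mod_cast Nat.one_le_pow _ _ p.2.pos
    calc (((p : ℕ) ^ e : ℕ) : ℝ) ^ (-s) ≤ (((p : ℕ) ^ e : ℕ) : ℝ) ^ (-1 : ℝ) :=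
          Real.rpow_le_rpow_of_exponent_le hp1 (by linarith)
      _ = ((p : ℝ)⁻¹) ^ e := by rw [Real.rpow_neg_one]; push_cast; rw [inv_pow]
  have hε1 : ∀ p, ε p ≤ S * (p : ℝ) ^ (-2 : ℝ) := by
    intro p
    have hinv : (p : ℝ)⁻¹ ≤ 1 / 2 := by rw [one_div]; exact inv_anti₀ (by norm_num) (hp2 p)
    have hpn : (0 : ℝ) ≤ (p : ℝ)⁻¹ := by positivity
    rw [hS, ← tsum_mul_right]
    refine Summable.tsum_le_tsum (fun e => ?_) ((summable_nat_add_iff 2).mpr (hloc p)) (hSsum.mul_right _)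
    have h3 : (p : ℝ) ^ (-2 : ℝ) = ((p : ℝ)⁻¹) ^ 2 := by
      rw [Real.rpow_neg (by positivity), inv_pow]; norm_num
    rw [h3]
    calc g (p ^ (e + 2)) ≤ ((e + 2 : ℕ) + 1 : ℝ) ^ n * ((p : ℝ)⁻¹) ^ (e + 2) := by
          refine mul_le_mul ?_ (hterm p (e + 2)) (by positivity) (by positivity)
          exact_mod_cast hpow p.2 (e + 2)
      _ = ((e : ℝ) + 3) ^ n * ((p : ℝ)⁻¹) ^ e * ((p : ℝ)⁻¹) ^ 2 := by
          rw [pow_add]; push_cast; ring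
      _ ≤ _ := by gcongr
  have hgp : ∀ p : Nat.Primes, g p ≤ 2 ^ n * (p : ℝ)⁻¹ := by
    intro p
    have h4 := hterm p 1
    have h5 := hpow p.2 1
    simp only [pow_one] at h4 h5
    refine mul_le_mul ?_ h4 (by positivity) (by positivity)
    exact_mod_cast (by simpa using h5)
  have hsq : ∀ p : Nat.Primes, (p : ℝ) ^ (-2 : ℝ) = ((p : ℝ)⁻¹) ^ 2 := by
    intro p; rw [Real.rpow_neg (by positivity), inv_pow]; norm_num
  have hu : ∀ p : Nat.Primes, g p + ε p ≤ (2 ^ n + S) * (p : ℝ)⁻¹ := by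
    intro p
    have h6 := hε1 p
    rw [hsq] at h6
    have h7 : ((p : ℝ)⁻¹) ^ 2 ≤ (p : ℝ)⁻¹ := by
      have : (p : ℝ)⁻¹ ≤ 1 := inv_le_one_of_one_le₀ (by linarith [hp2 p])
      have h0 : 0 ≤ (p : ℝ)⁻¹ := by positivity
      nlinarith
    have h8 := mul_le_mul_of_nonneg_left h7 hS0
    linarith [hgp p]
  have hdiff : ∀ p : Nat.Primes, |Real.log (1 + (g p + ε p)) - g p| ≤ B * (p : ℝ) ^ (-2 : ℝ) := by
    intro p
    set u := g p + ε p with hu_def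
    have hu0 : 0 ≤ u := add_nonneg (hgnn _) (hε0 p)
    have l1 : Real.log (1 + u) ≤ u := by
      have := Real.log_le_sub_one_of_pos (show (0 : ℝ) < 1 + u by linarith)
      linarith
    have l2 : u - u ^ 2 ≤ Real.log (1 + u) := by
      refine le_trans ?_ (Real.le_log_one_add_of_nonneg hu0)
      rw [le_div_iff₀ (by linarith)]
      nlinarith [mul_nonneg hu0 hu0, mul_nonneg hu0 (mul_nonneg hu0 hu0)]
    have l3 : u ^ 2 ≤ (2 ^ n + S) ^ 2 * (p : ℝ) ^ (-2 : ℝ) := by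
      rw [hsq, ← mul_pow]
      exact pow_le_pow_left₀ hu0 (hu p) 2
    have l4 := hε1 p
    have l5 := hε0 p
    have l6 : 0 ≤ (2 ^ n + S) ^ 2 * (p : ℝ) ^ (-2 : ℝ) := by positivity
    have l7 : 0 ≤ S * (p : ℝ) ^ (-2 : ℝ) := by positivity
    rw [abs_le]
    constructor <;> simp only [B, add_mul] <;> linarith
  have hεs : Summable ε := Summable.of_nonneg_of_le hε0 hε1
    ((Nat.Primes.summable_rpow.mpr (by norm_num)).mul_left S)
  have hlogs := Real.summable_log_one_add_of_summable (hps.add hεs)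
  have hprod := Real.hasProd_of_hasSum_log (f := fun p : Nat.Primes => 1 + (g p + ε p))
    (fun p => by have := hε0 p; have := hgnn p; linarith) hlogs.hasSum
  have hEP' : HasProd (fun p : Nat.Primes => 1 + (g p + ε p)) (∑' m, g m) := by
    simpa only [hF] using hEP
  rw [hEP'.unique hprod, Real.log_exp, ← hlogs.tsum_sub hps]
  have hds : Summable (fun p : Nat.Primes => ‖Real.log (1 + (g p + ε p)) - g p‖) :=
    Summable.of_nonneg_of_le (fun _ => norm_nonneg _) hdiff hB
  rw [← Real.norm_eq_abs]
  exact (norm_tsum_le_tsum_norm hds).trans (Summable.tsum_le_tsum hdiff hds hB)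

/-- Prime ideals of degree one are distributed as rational primes: the class number formula
gives `∑ₚ aₚ p⁻ˢ = log (1 / (s - 1)) + O(1)`, where `aₚ` counts the ideals of norm `p`. -/
theorem degreeOnePrimes_sum (K : Type*) [Field K] [NumberField K] : ∃ C : ℝ,
    ∀ᶠ s : ℝ in nhdsWithin 1 (Set.Ioi 1),
      Summable (fun p : Nat.Primes => (idealCount K p : ℝ) * (p : ℝ) ^ (-s)) ∧
      |∑' p : Nat.Primes, (idealCount K p : ℝ) * (p : ℝ) ^ (-s) - Real.log (1 / (s - 1))| ≤ C := by
  obtain ⟨C, hC⟩ := log_eulerProduct_bound (Module.finrank ℤ (NumberField.RingOfIntegers K))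
  set ρ := NumberField.dedekindZeta_residue K
  have hρ : 0 < ρ := NumberField.dedekindZeta_residue_pos K
  have ht := NumberField.tendsto_sub_one_mul_dedekindZeta_nhdsGT K
  have key : ∀ s : ℝ, 1 < s → NumberField.dedekindZeta K s ≠ 0 →
      Summable (fun m : ℕ => (idealCount K m : ℝ) * (m : ℝ) ^ (-s)) ∧
      NumberField.dedekindZeta K s = ((∑' m : ℕ, (idealCount K m : ℝ) * (m : ℝ) ^ (-s) : ℝ) : ℂ) := by
    intro s hs hne
    have hterm : ∀ m : ℕ, LSeries.term (fun n ↦ (Nat.card {I : Ideal (NumberField.RingOfIntegers K) // Ideal.absNorm I = n} : ℂ)) s m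
        = (((idealCount K m : ℝ) * (m : ℝ) ^ (-s) : ℝ) : ℂ) := by
      intro m
      rcases eq_or_ne m 0 with rfl | hm
      · simp [Real.zero_rpow (show -s ≠ 0 by linarith)]
      · rw [LSeries.term_of_ne_zero hm]
        push_cast
        rw [Complex.ofReal_cpow (by positivity)]
        simp [idealCount, Complex.cpow_neg, div_eq_mul_inv]
    have hd : NumberField.dedekindZeta K s = ∑' m : ℕ, (((idealCount K m : ℝ) * (m : ℝ) ^ (-s) : ℝ) : ℂ) := by
      unfold NumberField.dedekindZeta LSeries
      exact tsum_congr hterm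
    refine ⟨?_, by rw [hd, Complex.ofReal_tsum]⟩
    by_contra hns
    apply hne
    rw [hd]
    apply tsum_eq_zero_of_not_summable
    rwa [Complex.summable_ofReal]
  have ht' : Tendsto (fun s : ℝ => ((s - 1) * (NumberField.dedekindZeta K s).re)) (nhdsWithin 1 (Set.Ioi 1)) (nhds ρ) := by
    have := (Complex.continuous_re.tendsto _).comp ht
    refine (this.congr fun s => ?_)
    simp only [Function.comp]
    rw [← Complex.ofReal_one, ← Complex.ofReal_sub, Complex.re_ofReal_mul]
  refine ⟨C + max |Real.log (ρ / 2)| |Real.log (2 * ρ)|, ?_⟩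
  filter_upwards [ht'.eventually (Ioo_mem_nhds (show ρ / 2 < ρ by linarith) (show ρ < 2 * ρ by linarith)),
    self_mem_nhdsWithin] with s hs hs1
  have hs1 : 1 < s := hs1
  have hne : NumberField.dedekindZeta K s ≠ 0 := by
    intro h0
    rw [h0] at hs
    simp at hs
    linarith [hs.1]
  obtain ⟨hsum, hval⟩ := key s hs1 hne
  obtain ⟨hps, hb⟩ := hC (idealCount K) (idealCount_one K) (fun h => idealCount_mul K h)
    (fun hp e => idealCount_pow_le K hp e) s hs1 hsum
  refine ⟨hps, ?_⟩
  rw [hval, Complex.ofReal_re] at hs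
  set Z := ∑' m : ℕ, (idealCount K m : ℝ) * (m : ℝ) ^ (-s)
  set Y := ∑' p : Nat.Primes, (idealCount K p : ℝ) * (p : ℝ) ^ (-s)
  have hs2 : 0 < s - 1 := by linarith
  have hZ : 0 < Z := by
    have : 0 < (s - 1) * Z := by linarith [hs.1]
    exact (pos_iff_pos_of_mul_pos this).mp hs2
  have e1 : Real.log ((s - 1) * Z) = Real.log Z - Real.log (1 / (s - 1)) := by
    rw [Real.log_mul hs2.ne' hZ.ne', one_div, Real.log_inv]; ring
  have e2 : Real.log (ρ / 2) ≤ Real.log ((s - 1) * Z) := Real.log_le_log (by positivity) hs.1.le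
  have e3 : Real.log ((s - 1) * Z) ≤ Real.log (2 * ρ) := Real.log_le_log (by positivity) hs.2.le
  have e4 : |Real.log ((s - 1) * Z)| ≤ max |Real.log (ρ / 2)| |Real.log (2 * ρ)| :=
    abs_le_max_abs_abs e2 e3
  have : Y - Real.log (1 / (s - 1)) = Real.log ((s - 1) * Z) - (Real.log Z - Y) := by rw [e1]; ring
  rw [this]
  refine (abs_sub _ _).trans ?_
  linarith

/-! ### Decomposition groups and fixed fields -/

section
open NumberField
open scoped Pointwise
variable (L : Type*) [Field L] [NumberField L] [IsGalois ℚ L]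

/-- The subfield of `L` fixed by `H`. -/
abbrev fixedSub (H : Subgroup Gal(L/ℚ)) : IntermediateField ℚ L :=
  FixedPoints.intermediateField H

instance instGaloisGroupFixedSub (H : Subgroup Gal(L/ℚ)) : IsGaloisGroup H (fixedSub L H) L :=
  IsGaloisGroup.subgroup Gal(L/ℚ) ℚ L H

instance instGaloisGroupFixedSubInt (H : Subgroup Gal(L/ℚ)) :
    IsGaloisGroup H (𝓞 (fixedSub L H)) (𝓞 L) :=
  .of_isFractionRing _ _ _ (fixedSub L H) L

lemma inertia_subgroup_trivial (H : Subgroup Gal(L/ℚ)) (P : Ideal (𝓞 L))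
    (hP : P.inertia Gal(L/ℚ) = ⊥) : P.inertia H = ⊥ := by
  rw [Subgroup.eq_bot_iff_forall]
  rintro ⟨h, hh⟩ hi
  have : h ∈ P.inertia Gal(L/ℚ) := fun x => hi x
  rw [hP, Subgroup.mem_bot] at this
  exact Subtype.ext this

/-- For `P` unramified over `p`, the prime below `P` in the fixed field of `H` has degree one exactly when
`H` contains the decomposition group of `P`; in that case `H` acts transitively on the primes above it,
with stabiliser the full decomposition group. -/
lemma primesOver_under_props {p : ℕ} (hp : p.Prime) (P : Ideal (𝓞 L)) [P.IsPrime]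
    [hP : P.LiesOver (Ideal.span {(p : ℤ)})] (hI : P.inertia Gal(L/ℚ) = ⊥) (H : Subgroup Gal(L/ℚ)) :
    (Ideal.absNorm (P.under (𝓞 (fixedSub L H))) = p ↔ MulAction.stabilizer Gal(L/ℚ) P ≤ H) ∧
    (Ideal.absNorm (P.under (𝓞 (fixedSub L H))) = p →
      ((P.under (𝓞 (fixedSub L H))).primesOver (𝓞 L)).ncard * Nat.card (MulAction.stabilizer Gal(L/ℚ) P)
        = Nat.card H) := by
  have hpp : Prime (p : ℤ) := Nat.prime_iff_prime_int.mp hp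
  have : (Ideal.span {(p : ℤ)}).IsPrime := (Ideal.span_singleton_prime hpp.ne_zero).mpr hpp
  set Q := P.under (𝓞 (fixedSub L H)) with hQ
  have : P.LiesOver Q := ⟨hQ⟩
  have : Q.LiesOver (Ideal.span {(p : ℤ)}) := Ideal.LiesOver.tower_bot P Q _
  have h1 := Ideal.card_stabilizer_eq_card_inertia_mul_finrank (G := Gal(L/ℚ)) (Ideal.span {(p : ℤ)}) P
  have h2 := Ideal.card_stabilizer_eq_card_inertia_mul_finrank (G := H) Q P
  have h3 := Ideal.ncard_primesOver_mul_card_inertia_mul_finrank (G := H) Q P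
  rw [hI, Subgroup.card_bot, one_mul] at h1
  rw [inertia_subgroup_trivial L H P hI, Subgroup.card_bot, one_mul] at h2
  rw [inertia_subgroup_trivial L H P hI, Subgroup.card_bot, mul_one] at h3
  have h2 : Nat.card (MulAction.stabilizer H P) = P.inertiaDeg (𝓞 (fixedSub L H)) := h2
  have h4 := Ideal.inertiaDeg_tower (R := ℤ) Q P
  have h5 : Ideal.absNorm Q = p ^ Q.inertiaDeg ℤ := by
    have := Ideal.natAbs_pow_inertiaDeg (p : ℤ) Q
    rw [Int.natAbs_natCast] at this
    exact this.symm
  have h6 : Ideal.absNorm Q = p ↔ Q.inertiaDeg ℤ = 1 := by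
    rw [h5]
    constructor
    · intro h
      exact Nat.pow_right_injective hp.two_le (by simpa using h)
    · intro h; rw [h, pow_one]
  have h7 : Nat.card (MulAction.stabilizer H P) ≤ Nat.card (MulAction.stabilizer Gal(L/ℚ) P) := by
    refine Nat.card_le_card_of_injective (fun h => ⟨h.1.1, h.2⟩) ?_
    intro a b hab
    have hab' : a.1.1 = b.1.1 := Subtype.mk.inj hab
    exact Subtype.ext (Subtype.ext hab')
  have hpos : 0 < Nat.card (MulAction.stabilizer H P) := Nat.card_pos
  rw [h6]
  refine ⟨⟨fun h => ?_, fun h => ?_⟩, fun h => ?_⟩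
  · rw [h, one_mul, ← h2] at h4
    rw [h4] at h1
    have hle : (MulAction.stabilizer H P).map H.subtype ≤ MulAction.stabilizer Gal(L/ℚ) P := by
      rintro _ ⟨h, hh, rfl⟩; exact hh
    have heq : (MulAction.stabilizer H P).map H.subtype = MulAction.stabilizer Gal(L/ℚ) P := by
      apply Subgroup.eq_of_le_of_card_ge hle
      rw [h1, Subgroup.card_map_of_injective H.subtype_injective]
    rw [← heq]
    exact Subgroup.map_subtype_le _
  · have h8 : Nat.card (MulAction.stabilizer Gal(L/ℚ) P) ≤ Nat.card (MulAction.stabilizer H P) := by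
      refine Nat.card_le_card_of_injective (fun g => ⟨⟨g.1, h g.2⟩, g.2⟩) ?_
      intro a b hab
      exact Subtype.ext (congrArg (fun x => x.1.1) hab)
    have h9 := le_antisymm h7 h8
    rw [h1, h2, h4] at h9
    rw [h2] at hpos
    exact Nat.eq_of_mul_eq_mul_right hpos (by rw [one_mul, ← h9])
  · rw [h1, h4, h, one_mul]; exact h3
end

section
open NumberField
open scoped Pointwise
variable (L : Type*) [Field L] [NumberField L] [IsGalois ℚ L]

/-- The primes of `L` above the rational prime `p`. -/
def primesAbove (p : ℕ) : Set (Ideal (𝓞 L)) := (Ideal.span {(p : ℤ)}).primesOver (𝓞 L)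

lemma primesAbove_finite {p : ℕ} (hp : p.Prime) : (primesAbove L p).Finite := by
  have hpp : Prime (p : ℤ) := Nat.prime_iff_prime_int.mp hp
  have : (Ideal.span {(p : ℤ)}).IsMaximal := 
    have := Fact.mk hp
    Int.ideal_span_isMaximal_of_prime p
  exact IsDedekindDomain.primesOver_finite _ _

/-- The degree one primes of the fixed field of `H` above an unramified `p`, counted through the primes
of `L` whose decomposition group lies in `H`. -/
lemma card_mul_idealCount {p : ℕ} (hp : p.Prime)
    (hI : ∀ P ∈ primesAbove L p, P.inertia Gal(L/ℚ) = ⊥) (H : Subgroup Gal(L/ℚ)) :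
    Nat.card H * idealCount (fixedSub L H) p =
      ∑ P ∈ (primesAbove_finite L hp).toFinset with MulAction.stabilizer Gal(L/ℚ) P ≤ H,
        Nat.card (MulAction.stabilizer Gal(L/ℚ) P) := by
  have hfin : {I : Ideal (𝓞 (fixedSub L H)) | Ideal.absNorm I = p}.Finite :=
    Ideal.finite_setOfPred_absNorm_eq p
  have hpp : Prime (p : ℤ) := Nat.prime_iff_prime_int.mp hp
  have : (Ideal.span {(p : ℤ)}).IsPrime := (Ideal.span_singleton_prime hpp.ne_zero).mpr hpp
  have hT : idealCount (fixedSub L H) p = hfin.toFinset.card := by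
    rw [idealCount, ← Set.ncard_eq_toFinset_card _ hfin]
    rfl
  rw [← Finset.sum_fiberwise_of_maps_to (t := hfin.toFinset)
    (g := fun P => P.under (𝓞 (fixedSub L H)))]
  · rw [Finset.sum_congr rfl (g := fun _ => Nat.card H)]
    · rw [Finset.sum_const, smul_eq_mul, hT, mul_comm]
    · intro Q hQ
      have hQ : Ideal.absNorm Q = p := by simpa using hQ
      have hQp : Q.IsPrime := Ideal.isPrime_of_irreducible_absNorm (by rw [hQ]; exact hp)
      have hQ0 : Q ≠ ⊥ := by rintro rfl; simp at hQ; exact hp.ne_zero hQ.symm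
      have hQm : Q.IsMaximal := hQp.isMaximal hQ0
      have hQl : Q.LiesOver (Ideal.span {(p : ℤ)}) := by
        have := Fact.mk hp
        refine ⟨(Int.ideal_span_isMaximal_of_prime p).eq_of_le
          (Ideal.IsPrime.ne_top inferInstance) ?_⟩
        rw [Ideal.span_singleton_le_iff_mem, Ideal.under_def, Ideal.mem_comap]
        have h := Ideal.absNorm_mem Q
        rw [hQ] at h
        simpa using h
      have key : ({P ∈ {P ∈ (primesAbove_finite L hp).toFinset | MulAction.stabilizer Gal(L/ℚ) P ≤ H} |
        P.under (𝓞 (fixedSub L H)) = Q} : Finset (Ideal (𝓞 L))) = 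
          (IsDedekindDomain.primesOver_finite Q (𝓞 L)).toFinset := by
        ext P
        simp only [Finset.mem_filter, Set.Finite.mem_toFinset]
        constructor
        · rintro ⟨⟨h1, -⟩, h2⟩
          exact ⟨h1.1, ⟨h2.symm⟩⟩
        · rintro ⟨h1, h2⟩
          have h3 : P.under (𝓞 (fixedSub L H)) = Q := h2.over.symm
          have h4 : P.LiesOver (Ideal.span {(p : ℤ)}) := Ideal.LiesOver.trans P Q _
          refine ⟨⟨⟨h1, h4⟩, ?_⟩, h3⟩
          rw [← (primesOver_under_props L hp P (hI P ⟨h1, h4⟩) H).1, h3, hQ]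
      rw [key]
      have hne : ((Q.primesOver (𝓞 L))).Nonempty :=
        Set.nonempty_coe_sort.mp (Ideal.nonempty_primesOver Q)
      have hc : ∀ P ∈ (IsDedekindDomain.primesOver_finite Q (𝓞 L)).toFinset,
          (Q.primesOver (𝓞 L)).ncard * Nat.card (MulAction.stabilizer Gal(L/ℚ) P) = Nat.card H := by
        intro P hP
        obtain ⟨h1, h2⟩ := (Set.Finite.mem_toFinset _).mp hP
        have h3 : P.under (𝓞 (fixedSub L H)) = Q := h2.over.symm
        have h4 : P.LiesOver (Ideal.span {(p : ℤ)}) := Ideal.LiesOver.trans P Q _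
        have := (primesOver_under_props L hp P (hI P ⟨h1, h4⟩) H).2
        rw [h3] at this
        exact this hQ
      have hpos : 0 < (Q.primesOver (𝓞 L)).ncard :=
        (Set.ncard_pos (IsDedekindDomain.primesOver_finite Q (𝓞 L))).mpr hne
      apply Nat.eq_of_mul_eq_mul_left hpos
      rw [Finset.mul_sum, Finset.sum_congr rfl hc, Finset.sum_const, smul_eq_mul,
        ← Set.ncard_eq_toFinset_card _ (IsDedekindDomain.primesOver_finite Q (𝓞 L))]
  · intro P hP
    simp only [Finset.mem_filter, Set.Finite.mem_toFinset] at hP ⊢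
    obtain ⟨⟨h1, h2⟩, h3⟩ := hP
    exact (primesOver_under_props L hp P (hI P ⟨h1, h2⟩) H).1.mpr h3
end

/-! ### Logarithmic densities of decomposition groups -/

section
open NumberField Topology
open scoped Pointwise

/-- The Dirichlet series `∑_p f(p) p^{-s}` equals `a log (1/(s-1)) + O(1)` as `s → 1⁺`. -/
def LogAsymp (f : Nat.Primes → ℝ) (a : ℝ) : Prop :=
  ∃ K : ℝ, ∀ᶠ s : ℝ in 𝓝[>] 1, Summable (fun p : Nat.Primes => f p * (p : ℝ) ^ (-s)) ∧
    |∑' p : Nat.Primes, f p * (p : ℝ) ^ (-s) - a * Real.log (1 / (s - 1))| ≤ K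

lemma LogAsymp.add {f g : Nat.Primes → ℝ} {a b : ℝ} (hf : LogAsymp f a) (hg : LogAsymp g b) :
    LogAsymp (fun p => f p + g p) (a + b) := by
  obtain ⟨K, hK⟩ := hf
  obtain ⟨K', hK'⟩ := hg
  refine ⟨K + K', ?_⟩
  filter_upwards [hK, hK'] with s h h'
  simp only [add_mul]
  refine ⟨h.1.add h'.1, ?_⟩
  rw [h.1.tsum_add h'.1, add_sub_add_comm]
  exact (abs_add_le _ _).trans (add_le_add h.2 h'.2)

lemma LogAsymp.const_mul {f : Nat.Primes → ℝ} {a : ℝ} (hf : LogAsymp f a) (c : ℝ) :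
    LogAsymp (fun p => c * f p) (c * a) := by
  obtain ⟨K, hK⟩ := hf
  refine ⟨|c| * K, ?_⟩
  filter_upwards [hK] with s h
  simp only [mul_assoc]
  refine ⟨h.1.mul_left c, ?_⟩
  rw [tsum_mul_left, ← mul_sub, abs_mul]
  exact mul_le_mul_of_nonneg_left h.2 (abs_nonneg c)

lemma LogAsymp.sub {f g : Nat.Primes → ℝ} {a b : ℝ} (hf : LogAsymp f a) (hg : LogAsymp g b) :
    LogAsymp (fun p => f p - g p) (a - b) := by
  have := hf.add (hg.const_mul (-1))
  convert this using 2 <;> ring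

lemma LogAsymp.of_finite {f : Nat.Primes → ℝ} (hf : f.support.Finite) : LogAsymp f 0 := by
  refine ⟨∑ p ∈ hf.toFinset, |f p|, ?_⟩
  filter_upwards [self_mem_nhdsWithin] with s hs
  have hs : (1 : ℝ) < s := hs
  have h0 : ∀ p ∉ hf.toFinset, f p * (p : ℝ) ^ (-s) = 0 := by
    intro p hp
    have : f p = 0 := by simpa using hp
    rw [this, zero_mul]
  refine ⟨summable_of_ne_finset_zero h0, ?_⟩
  rw [tsum_eq_sum h0, zero_mul, sub_zero]
  refine (Finset.abs_sum_le_sum_abs _ _).trans (Finset.sum_le_sum fun p _ => ?_)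
  rw [abs_mul]
  refine mul_le_of_le_one_right (abs_nonneg _) ?_
  rw [abs_of_nonneg (by positivity)]
  exact Real.rpow_le_one_of_one_le_of_nonpos (by exact_mod_cast p.2.one_lt.le) (by linarith)

lemma LogAsymp.sum {ι : Type*} (S : Finset ι) {f : ι → Nat.Primes → ℝ} {a : ι → ℝ}
    (h : ∀ i ∈ S, LogAsymp (f i) (a i)) : LogAsymp (fun p => ∑ i ∈ S, f i p) (∑ i ∈ S, a i) := by
  induction S using Finset.induction_on with
  | empty => simpa using LogAsymp.of_finite (f := fun _ => 0) (by simp)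
  | insert i S hi ih =>
    simp only [Finset.sum_insert hi]
    exact (h i (Finset.mem_insert_self _ _)).add (ih fun j hj => h j (Finset.mem_insert_of_mem hj))

/-- Inversion over a finite poset: cumulative asymptotics determine the individual ones. -/
lemma LogAsymp.of_cumulative {α : Type*} [Fintype α] [PartialOrder α]
    {c f : α → Nat.Primes → ℝ} {t a : α → ℝ}
    (hc : ∀ C p, ∑ C' with C' ≤ C, c C' p = f C p) (ht : ∀ C, ∑ C' with C' ≤ C, t C' = a C)
    (hf : ∀ C, LogAsymp (f C) (a C)) (C : α) : LogAsymp (c C) (t C) := by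
  induction C using WellFoundedLT.induction with
  | ind C ih =>
    have hsplit : ({C' | C' ≤ C} : Finset α) = insert C ({C' | C' < C} : Finset α) := by
      ext x; simp [le_iff_eq_or_lt]
    have hnot : C ∉ ({C' | C' < C} : Finset α) := by simp
    have h := (hf C).sub (LogAsymp.sum ({C' | C' < C} : Finset α) (f := c) (a := t)
      fun C' h => ih C' (by simpa using h))
    convert h using 1
    · ext p
      rw [← hc C p, hsplit, Finset.sum_insert hnot]; ring
    · rw [← ht C, hsplit, Finset.sum_insert hnot]; ring

variable (L : Type*) [Field L] [NumberField L] [IsGalois ℚ L]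

/-- `|C|` times the number of primes above `p` with decomposition group `C`; set to `0` at the
primes where some inertia group is nontrivial. -/
def decompCount (C : Subgroup Gal(L/ℚ)) (p : Nat.Primes) : ℝ :=
  if ∀ P ∈ primesAbove L p, P.inertia Gal(L/ℚ) = ⊥ then
    Nat.card C * ({P ∈ (primesAbove_finite L p.2).toFinset |
      MulAction.stabilizer Gal(L/ℚ) P = C} : Finset _).card else 0

lemma sum_decompCount (C : Subgroup Gal(L/ℚ)) (p : Nat.Primes)
    (hI : ∀ P ∈ primesAbove L p, P.inertia Gal(L/ℚ) = ⊥) :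
    ∑ C' with C' ≤ C, decompCount L C' p = Nat.card C * idealCount (fixedSub L C) p := by
  have h := card_mul_idealCount L p.2 hI C
  rw [← Finset.sum_fiberwise_of_maps_to (t := ({C' | C' ≤ C} : Finset (Subgroup Gal(L/ℚ))))
    (g := fun P => MulAction.stabilizer Gal(L/ℚ) P)
    (by intro P hP; simpa using (Finset.mem_filter.mp hP).2)] at h
  rw [← Nat.cast_mul, h, Nat.cast_sum]
  refine Finset.sum_congr rfl fun C' hC' => ?_
  rw [decompCount, if_pos hI, Finset.filter_filter]
  rw [Finset.sum_congr rfl (g := fun _ => Nat.card C')]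
  · rw [Finset.sum_const, smul_eq_mul, Nat.cast_mul, mul_comm]
    congr 3
    ext P
    simp only [Finset.mem_filter, and_congr_right_iff]
    intro _
    refine ⟨fun h => ⟨?_, h⟩, fun h => h.2⟩
    rw [h]; simpa using hC'
  · intro P hP
    rw [(Finset.mem_filter.mp hP).2.2]

/-- The decomposition group equals `C` for primes of logarithmic density proportional to the number
of generators of `C`. -/
lemma logAsymp_decompCount
    (hfin : {p : Nat.Primes | ¬ ∀ P ∈ primesAbove L p, P.inertia Gal(L/ℚ) = ⊥}.Finite)
    (C : Subgroup Gal(L/ℚ)) :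
    LogAsymp (decompCount L C)
      (({g : Gal(L/ℚ) | Subgroup.zpowers g = C} : Finset Gal(L/ℚ)).card) := by
  refine LogAsymp.of_cumulative (f := fun (C : Subgroup Gal(L/ℚ)) (p : Nat.Primes) =>
    if ∀ P ∈ primesAbove L p, P.inertia Gal(L/ℚ) = ⊥ then
      (Nat.card C * idealCount (fixedSub L C) p : ℝ) else 0)
    (a := fun C : Subgroup Gal(L/ℚ) => (Nat.card C : ℝ))
    (t := fun C => ((({g : Gal(L/ℚ) | Subgroup.zpowers g = C} : Finset Gal(L/ℚ)).card : ℕ) : ℝ)) ?_ ?_ ?_ C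
  · intro C p
    split_ifs with h
    · exact sum_decompCount L C p h
    · refine Finset.sum_eq_zero fun C' _ => ?_
      rw [decompCount, if_neg h]
  · intro C
    rw [← Nat.cast_sum, Nat.cast_inj]
    have : Nat.card C = ({g : Gal(L/ℚ) | g ∈ C} : Finset _).card := by
      rw [Nat.card_eq_fintype_card, Fintype.card_subtype]
    rw [this, Finset.card_eq_sum_card_fiberwise
      (s := ({g : Gal(L/ℚ) | g ∈ C} : Finset _))
      (t := ({C' | C' ≤ C} : Finset (Subgroup Gal(L/ℚ))))
      (f := fun g => Subgroup.zpowers g)]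
    · refine Finset.sum_congr rfl fun C' hC' => ?_
      congr 1
      ext g
      simp only [Finset.mem_filter, Finset.mem_univ, true_and]
      refine ⟨fun h => ⟨?_, h⟩, fun h => h.2⟩
      have : C' ≤ C := by simpa using hC'
      exact this (h ▸ Subgroup.mem_zpowers g)
    · intro g hg
      simpa using hg
  · intro C
    have h1 : LogAsymp (fun p => (idealCount (fixedSub L C) p : ℝ)) 1 := by
      obtain ⟨K, hK⟩ := degreeOnePrimes_sum (fixedSub L C)
      refine ⟨K, ?_⟩
      filter_upwards [hK] with s hs
      rw [one_mul]; exact hs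
    have h2 := h1.const_mul (Nat.card C)
    have h3 : LogAsymp (fun p : Nat.Primes =>
        if ∀ P ∈ primesAbove L p, P.inertia Gal(L/ℚ) = ⊥ then (0:ℝ)
        else (Nat.card C * idealCount (fixedSub L C) p : ℝ)) 0 := by
      apply LogAsymp.of_finite
      refine hfin.subset fun p hp hn => ?_
      rw [Function.mem_support] at hp
      exact hp (if_pos hn)
    convert h2.sub h3 using 1
    · ext p
      split_ifs <;> simp
    · simp
end

/-! ### Primes modulo which a polynomial has no root -/

section
open NumberField Topology
open scoped Pointwise

/-- `g` has no root modulo `p`. -/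
def Rootless (g : ℤ[X]) (p : ℕ) : Prop := ∀ a : ℤ, ¬ (p : ℤ) ∣ g.eval a

variable (L : Type*) [Field L] [NumberField L] [IsGalois ℚ L]

lemma intCast_mem_primesAbove {p : ℕ} {P : Ideal (𝓞 L)} (hP : P ∈ primesAbove L p) (a : ℤ) :
    (a : 𝓞 L) ∈ P ↔ (p : ℤ) ∣ a := by
  have h := hP.2.over
  rw [← Ideal.mem_span_singleton, h, Ideal.under_def, Ideal.mem_comap]
  simp

/-- An element of the residue field at `P` fixed by the `p`-power map lies in the prime field. -/
lemma exists_int_of_pow_sub_mem {p : ℕ} (hp : p.Prime) {P : Ideal (𝓞 L)}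
    (hP : P ∈ primesAbove L p) {x : 𝓞 L} (hx : x ^ p - x ∈ P) : ∃ a : ℤ, (a : 𝓞 L) - x ∈ P := by
  have := Fact.mk hp
  have hPp : P.IsPrime := hP.1
  have hc : CharP (𝓞 L ⧸ P) p := by
    refine ⟨fun n => ?_⟩
    have := intCast_mem_primesAbove L hP n
    rw [← Ideal.Quotient.eq_zero_iff_mem, Int.natCast_dvd_natCast] at this
    simpa using this
  have h1 : (X ^ p - X : (𝓞 L ⧸ P)[X]) =
      ∏ a : ZMod p, (X - C (ZMod.castHom dvd_rfl (𝓞 L ⧸ P) a)) := by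
    have hr : (X ^ p - X : (ZMod p)[X]).roots = Finset.univ.val := by
      have := FiniteField.roots_X_pow_card_sub_X (ZMod p)
      rwa [ZMod.card] at this
    have hm : (X ^ p - X : (ZMod p)[X]).Monic :=
      monic_X_pow_sub (by rw [degree_X]; exact_mod_cast hp.one_lt)
    have h := prod_multiset_X_sub_C_of_monic_of_roots_card_eq hm (by
      rw [hr, FiniteField.X_pow_card_sub_X_natDegree_eq _ hp.one_lt]
      simp)
    rw [hr] at h
    have h' := congrArg (Polynomial.map (ZMod.castHom dvd_rfl (𝓞 L ⧸ P))) h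
    rw [Polynomial.map_sub, Polynomial.map_pow, map_X] at h'
    rw [← h', Finset.prod_map_val, Polynomial.map_prod]
    simp only [Polynomial.map_sub, map_X, map_C]
  have h2 := congrArg (Polynomial.eval (Ideal.Quotient.mk P x)) h1
  rw [Polynomial.eval_prod] at h2
  simp only [eval_sub, eval_pow, eval_X, eval_C] at h2
  rw [← map_pow, ← map_sub, Ideal.Quotient.eq_zero_iff_mem.mpr hx, eq_comm,
    Finset.prod_eq_zero_iff] at h2
  obtain ⟨a, -, ha⟩ := h2
  obtain ⟨b, rfl⟩ := ZMod.intCast_surjective a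
  refine ⟨b, ?_⟩
  rw [← Ideal.Quotient.eq_zero_iff_mem, map_sub, ← neg_eq_zero, neg_sub, ← ha]
  simp

variable {L} in
/-- If `g` has no root modulo `l`, the Frobenius element at a prime above `l` fixes no root of `g`. The
prime `l` may ramify. -/
lemma frob_no_fixed {g : ℤ[X]} {l : ℕ} (hl : l.Prime) (hg : Rootless g l) :
    ∃ σ : Gal(L/ℚ), ∀ x : 𝓞 L, aeval x g = 0 → σ • x ≠ x := by
  have hlp : Prime (l : ℤ) := Nat.prime_iff_prime_int.mp hl
  have : (Ideal.span {(l : ℤ)}).IsPrime := (Ideal.span_singleton_prime hlp.ne_zero).mpr hlp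
  obtain ⟨P, hP⟩ : (primesAbove L l).Nonempty :=
    Set.nonempty_coe_sort.mp (Ideal.nonempty_primesOver (S := 𝓞 L) (Ideal.span {(l : ℤ)}))
  have hPp : P.IsPrime := hP.1
  have hP0 : P ≠ ⊥ := by
    rintro rfl
    have := (intCast_mem_primesAbove L hP l).mpr dvd_rfl
    simp at this
    exact hl.ne_zero this
  have : Finite (𝓞 L ⧸ P) := Ideal.finiteQuotientOfFreeOfNeBot P hP0
  obtain ⟨σ, hσ⟩ := IsArithFrobAt.exists_of_isInvariant ℤ Gal(L/ℚ) P
  refine ⟨σ, fun x hx hfix => ?_⟩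
  have h1 := hσ x
  have h2 : P.under ℤ = Ideal.span {(l : ℤ)} := hP.2.over.symm
  have h3 : Nat.card (ℤ ⧸ P.under ℤ) = l := by
    rw [h2, Int.card_ideal_quot]
  rw [h3] at h1
  have h4 : x - x ^ l ∈ P := by
    have : (MulSemiringAction.toAlgHom ℤ (𝓞 L) σ) x = x := hfix
    rwa [this] at h1
  obtain ⟨a, ha⟩ := exists_int_of_pow_sub_mem L hl hP (x := x) (by
    rw [← neg_sub]; exact P.neg_mem h4)
  apply hg a
  rw [← intCast_mem_primesAbove L hP]
  have h5 := Polynomial.sub_dvd_eval_sub (a : 𝓞 L) x (g.map (algebraMap ℤ (𝓞 L)))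
  have h6 : eval x (g.map (algebraMap ℤ (𝓞 L))) = 0 := by rw [eval_map_algebraMap, hx]
  have h7 : eval (a : 𝓞 L) (g.map (algebraMap ℤ (𝓞 L))) = ((g.eval a : ℤ) : 𝓞 L) := by
    rw [eval_intCast_map]; simp
  rw [h6, h7, sub_zero] at h5
  exact P.mem_of_dvd h5 ha
end

section
open NumberField Topology
open scoped Pointwise

/-- Outside finitely many primes, inertia is trivial and a root of `g` modulo `p` lifts to a root of `g`
fixed by the decomposition group. -/
lemma rootless_decomp (L : Type*) [Field L] [NumberField L] [IsGalois ℚ L] {g : ℤ[X]}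
    (s : Multiset (𝓞 L)) (hs : g.map (algebraMap ℤ (𝓞 L)) = (s.map fun x => X - C x).prod)
    (hgen : ∀ σ : Gal(L/ℚ), (∀ x ∈ s, σ • x = x) → σ = 1) :
    ∃ N : ℕ, N ≠ 0 ∧ ∀ p : ℕ, p.Prime → ¬ p ∣ N → ∀ P ∈ primesAbove L p,
      P.inertia Gal(L/ℚ) = ⊥ ∧
      ((¬ Rootless g p) → ∃ x ∈ s, ∀ σ ∈ MulAction.stabilizer Gal(L/ℚ) P, σ • x = x) := by
  have hroot : ∀ x : 𝓞 L, x ∈ s ↔ aeval x g = 0 := by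
    intro x
    rw [← eval_map_algebraMap, hs, eval_multiset_prod, Multiset.prod_eq_zero_iff]
    simp only [Multiset.map_map, Multiset.mem_map, Function.comp, eval_sub, eval_X, eval_C]
    exact ⟨fun h => ⟨x, h, sub_self x⟩, fun ⟨y, hy, h⟩ => by rwa [sub_eq_zero.mp h]⟩
  have hstab : ∀ (σ : Gal(L/ℚ)), ∀ x ∈ s, σ • x ∈ s := by
    intro σ x hx
    rw [hroot] at hx ⊢
    have := Polynomial.aeval_algHom_apply (MulSemiringAction.toAlgHom ℤ (𝓞 L) σ) x g
    rw [hx, map_zero] at this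
    exact this
  let d : 𝓞 L := ∏ x ∈ s.toFinset, ∏ y ∈ s.toFinset.erase x, (y - x)
  have hd : d ≠ 0 := by
    refine Finset.prod_ne_zero_iff.mpr fun x _ => Finset.prod_ne_zero_iff.mpr fun y hy => ?_
    exact sub_ne_zero.mpr (Finset.ne_of_mem_erase hy)
  refine ⟨Ideal.absNorm (Ideal.span {d}), ?_, ?_⟩
  · rw [Ne, Ideal.absNorm_eq_zero_iff]
    simpa using hd
  intro p hp hpN P hP
  have hPp : P.IsPrime := hP.1
  have hdP : d ∉ P := by
    intro h
    apply hpN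
    have h1 : (Ideal.span {d}) ≤ P := by rwa [Ideal.span_singleton_le_iff_mem]
    have h2 := h1 (Ideal.absNorm_mem _)
    have := (intCast_mem_primesAbove L hP (Ideal.absNorm (Ideal.span {d}) : ℤ)).mp (by simpa using h2)
    exact_mod_cast this
  have hdist : ∀ x ∈ s, ∀ y ∈ s, y - x ∈ P → y = x := by
    intro x hx y hy h
    by_contra hne
    apply hdP
    refine P.mem_of_dvd ?_ h
    exact (Finset.dvd_prod_of_mem (fun y => y - x)
      (Finset.mem_erase.mpr ⟨hne, Multiset.mem_toFinset.mpr hy⟩)).trans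
      (Finset.dvd_prod_of_mem (fun x => ∏ y ∈ s.toFinset.erase x, (y - x))
        (Multiset.mem_toFinset.mpr hx))
  refine ⟨?_, fun hr => ?_⟩
  · rw [Subgroup.eq_bot_iff_forall]
    intro σ hσ
    exact hgen σ fun x hx => hdist x hx _ (hstab σ x hx) (hσ x)
  · unfold Rootless at hr
    push Not at hr
    obtain ⟨a, ha⟩ := hr
    rw [← intCast_mem_primesAbove L hP] at ha
    have h7 : eval (a : 𝓞 L) (g.map (algebraMap ℤ (𝓞 L))) = ((g.eval a : ℤ) : 𝓞 L) := by
      rw [eval_intCast_map]; simp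
    rw [← h7, hs, eval_multiset_prod, Multiset.map_map] at ha
    obtain ⟨b, hb, hbP⟩ := (Ideal.IsPrime.multiset_prod_mem_iff_exists_mem hPp _).mp ha
    obtain ⟨x, hx, rfl⟩ := Multiset.mem_map.mp hb
    simp only [Function.comp, eval_sub, eval_X, eval_C] at hbP
    refine ⟨x, hx, fun σ hσ => hdist x hx _ (hstab σ x hx) ?_⟩
    have h8 : σ • ((a : 𝓞 L) - x) ∈ P := by
      have : σ • P = P := hσ
      rw [← this]
      exact Ideal.smul_mem_pointwise_smul _ _ _ hbP
    have h9 : σ • (a : 𝓞 L) = a := map_intCast (MulSemiringAction.toRingHom Gal(L/ℚ) (𝓞 L) σ) a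
    rw [smul_sub, h9] at h8
    have := P.sub_mem hbP h8
    simpa using this

lemma card_primesAbove_le (L : Type*) [Field L] [NumberField L] [IsGalois ℚ L] {p : ℕ}
    (hp : p.Prime) : (primesAbove_finite L hp).toFinset.card ≤ Nat.card Gal(L/ℚ) := by
  have := Fact.mk hp
  rw [← Set.ncard_eq_toFinset_card _ (primesAbove_finite L hp)]
  by_cases h : (primesAbove L p).Nonempty
  · obtain ⟨P, hP⟩ := h
    have h1 := hP.1
    have h2 : P.LiesOver (Ideal.span {(p : ℤ)}) := hP.2
    have hm : (Ideal.span {(p : ℤ)}).IsMaximal := Int.ideal_span_isMaximal_of_prime p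
    have h3 := Ideal.ncard_primesOver_mul_card_inertia_mul_finrank (G := Gal(L/ℚ)) (Ideal.span {(p : ℤ)}) P
    rw [mul_assoc] at h3
    exact Nat.le_of_dvd Nat.card_pos (Dvd.intro _ h3)
  · rw [Set.not_nonempty_iff_eq_empty] at h
    simp [h]

lemma exists_splitting_multiset {g : ℤ[X]} (hg : g.Monic) (L : Type*) [Field L] [NumberField L]
    (hL : ((g.map (Int.castRingHom ℚ)).map (algebraMap ℚ L)).Splits)  :
    ∃ s : Multiset (𝓞 L), g.map (algebraMap ℤ (𝓞 L)) = (s.map fun x => X - C x).prod ∧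
      s.map (algebraMap (𝓞 L) L) = ((g.map (Int.castRingHom ℚ)).map (algebraMap ℚ L)).roots := by
  set f := (g.map (Int.castRingHom ℚ)).map (algebraMap ℚ L) with hf
  have hfg : f = g.map (algebraMap ℤ L) := by
    rw [hf, Polynomial.map_map]; congr 1; exact RingHom.ext_int _ _
  have hfm : f.Monic := hfg ▸ hg.map _
  have hinteg : ∀ x ∈ f.roots, IsIntegral ℤ x := by
    intro x hx
    refine ⟨g, hg, ?_⟩
    rw [← eval_map, ← hfg]
    exact isRoot_of_mem_roots hx
  have hex : ∃ s : Multiset (𝓞 L), s.map (algebraMap (𝓞 L) L) = f.roots := by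
    have hmem : ∀ x : {x // x ∈ f.roots}, ∃ y : 𝓞 L, algebraMap (𝓞 L) L y = x.1 :=
      fun x => ⟨⟨x.1, hinteg x.1 x.2⟩, rfl⟩
    choose F hF using hmem
    refine ⟨f.roots.attach.map F, ?_⟩
    rw [Multiset.map_map]
    simp only [Function.comp_def, hF]
    exact Multiset.attach_map_val _
  obtain ⟨s, hs⟩ := hex
  refine ⟨s, ?_, hs⟩
  apply Polynomial.map_injective (algebraMap (𝓞 L) L) (FaithfulSMul.algebraMap_injective _ _)
  rw [Polynomial.map_map, Polynomial.map_multiset_prod, Multiset.map_map]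
  have h1 := hL.eq_prod_roots_of_monic hfm
  rw [← hs, Multiset.map_map] at h1
  rw [← IsScalarTower.algebraMap_eq, ← hfg, h1]
  simp

/-- Every prime whose decomposition group is generated by the element of `frob_no_fixed` is rootless, up to
finitely many exceptions, and `logAsymp_decompCount` counts these primes. -/
lemma rootless_logsum_aux (L : Type*) [Field L] [NumberField L] [IsGalois ℚ L] {g : ℤ[X]} (hg : g.Monic) {l : ℕ} (hl : l.Prime) (hr : Rootless g l)
    [hsf : IsSplittingField ℚ L (g.map (Int.castRingHom ℚ))] :
    ∃ A : ℝ, 0 < A ∧ ∃ K : ℝ, ∀ᶠ s : ℝ in 𝓝[>] 1, Real.log (1 / (s - 1)) - K ≤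
      A * ∑' p : Nat.Primes, (if Rootless g p then (p : ℝ) ^ (-s) else 0) := by
  let f := g.map (Int.castRingHom ℚ)
  obtain ⟨S, hS1, hS2⟩ := exists_splitting_multiset hg L (IsSplittingField.splits L f)
  have hroot : ∀ x ∈ S, aeval x g = 0 := by
    intro x hx
    rw [← eval_map_algebraMap, hS1, eval_multiset_prod, Multiset.prod_eq_zero_iff]
    simp only [Multiset.map_map, Multiset.mem_map, Function.comp, eval_sub, eval_X, eval_C]
    exact ⟨x, hx, sub_self x⟩
  obtain ⟨N, hN0, hN⟩ := rootless_decomp L S hS1 (by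
    intro σ hσ
    have hadj : (⊤ : Subalgebra ℚ L) ≤ AlgHom.equalizer (σ : L →ₐ[ℚ] L) (AlgHom.id ℚ L) := by
      rw [← IsSplittingField.adjoin_rootSet L f, Algebra.adjoin_le_iff]
      intro x hx
      have hx' : x ∈ (f.map (algebraMap ℚ L)).roots := by
        rw [mem_rootSet'] at hx
        rw [mem_roots hx.1, IsRoot, eval_map_algebraMap]
        exact hx.2
      rw [← hS2] at hx'
      obtain ⟨y, hy, rfl⟩ := Multiset.mem_map.mp hx'
      exact congrArg (algebraMap (𝓞 L) L) (hσ y hy)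
    ext x
    exact hadj (Algebra.mem_top (x := x)))
  obtain ⟨σ, hσ⟩ := frob_no_fixed (L := L) hl hr
  let C : Subgroup Gal(L/ℚ) := Subgroup.zpowers σ
  have hfin : {p : Nat.Primes | ¬ ∀ P ∈ primesAbove L p, P.inertia Gal(L/ℚ) = ⊥}.Finite := by
    refine Set.Finite.of_finite_image (f := fun p : Nat.Primes => (p : ℕ))
      ((Nat.divisors N).finite_toSet.subset ?_) (Nat.Primes.coe_nat_injective.injOn)
    rintro _ ⟨p, hp, rfl⟩
    simp only [Finset.mem_coe, Nat.mem_divisors]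
    refine ⟨?_, hN0⟩
    by_contra h
    exact hp fun P hP => (hN p p.2 h P hP).1
  obtain ⟨K, hK⟩ := logAsymp_decompCount L hfin C
  set A0 : ℝ := Nat.card C * Nat.card Gal(L/ℚ) with hA0
  have hA0pos : 0 < A0 := by
    have h1 : 0 < Nat.card C := Nat.card_pos
    have h2 : 0 < Nat.card Gal(L/ℚ) := Nat.card_pos
    positivity
  have ht : (1 : ℝ) ≤ ({g : Gal(L/ℚ) | Subgroup.zpowers g = C} : Finset Gal(L/ℚ)).card := by
    rw [Nat.one_le_cast, Nat.one_le_iff_ne_zero, Finset.card_ne_zero]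
    exact ⟨σ, by simp [C]⟩
  -- finitely many primes dividing `N` contribute a bounded amount
  have hle : ∀ p : Nat.Primes, decompCount L C p ≤
      A0 * (if Rootless g p then 1 else 0) + A0 * (if (p : ℕ) ∣ N then 1 else 0) := by
    intro p
    have hub : decompCount L C p ≤ A0 := by
      unfold decompCount
      split_ifs
      · rw [hA0]
        gcongr
        exact (Finset.card_le_card (Finset.filter_subset _ _)).trans (card_primesAbove_le L p.2)
      · exact hA0pos.le
    by_cases h1 : (p : ℕ) ∣ N
    · rw [if_pos h1]; split_ifs <;> linarith
    by_cases h2 : Rootless g p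
    · rw [if_pos h2, if_neg h1]; linarith
    rw [if_neg h1, if_neg h2, mul_zero, add_zero]
    unfold decompCount
    split_ifs
    · apply le_of_eq
      rw [Finset.card_eq_zero.mpr, Nat.cast_zero, mul_zero]
      rw [Finset.filter_eq_empty_iff]
      intro P hP hPC
      obtain ⟨x, hx, hfix⟩ := (hN p p.2 h1 P ((Set.Finite.mem_toFinset _).mp hP)).2 h2
      exact hσ x (hroot x hx) (hfix σ (hPC ▸ Subgroup.mem_zpowers σ))
    · exact le_rfl
  obtain ⟨K2, hK2⟩ := LogAsymp.of_finite (f := fun p : Nat.Primes => A0 * (if (p : ℕ) ∣ N then 1 else 0)) (by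
    refine Set.Finite.of_finite_image (f := fun p : Nat.Primes => (p : ℕ))
      ((Nat.divisors N).finite_toSet.subset ?_) (Nat.Primes.coe_nat_injective.injOn)
    rintro _ ⟨p, hp, rfl⟩
    simp only [Finset.mem_coe, Nat.mem_divisors]
    refine ⟨?_, hN0⟩
    by_contra h
    simp [h] at hp)
  refine ⟨A0, hA0pos, K + K2, ?_⟩
  have hlt2 : ∀ᶠ s : ℝ in 𝓝[>] 1, s < 2 := nhdsWithin_le_nhds (Iio_mem_nhds (by norm_num))
  filter_upwards [hK, hK2, self_mem_nhdsWithin, hlt2] with s h1 h2 hs hs2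
  have hs : (1 : ℝ) < s := hs
  have hsum : Summable (fun p : Nat.Primes => (if Rootless g p then (p : ℝ) ^ (-s) else 0)) := by
    refine Summable.of_nonneg_of_le (fun p => by split_ifs <;> positivity) (fun p => ?_)
      (Nat.Primes.summable_rpow.mpr (show -s < -1 by linarith))
    split_ifs
    · exact le_rfl
    · positivity
  have hlog : 0 ≤ Real.log (1 / (s - 1)) := by
    apply Real.log_nonneg
    rw [le_div_iff₀ (by linarith)]; linarith
  have h3 : ∑' p : Nat.Primes, decompCount L C p * (p : ℝ) ^ (-s) ≤
      A0 * ∑' p : Nat.Primes, (if Rootless g p then (p : ℝ) ^ (-s) else 0) +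
      ∑' p : Nat.Primes, (A0 * (if (p : ℕ) ∣ N then 1 else 0)) * (p : ℝ) ^ (-s) := by
    rw [← tsum_mul_left, ← (hsum.mul_left A0).tsum_add h2.1]
    refine h1.1.tsum_le_tsum (fun p => ?_) ((hsum.mul_left A0).add h2.1)
    have := mul_le_mul_of_nonneg_right (hle p) (show 0 ≤ (p : ℝ) ^ (-s) by positivity)
    refine this.trans (le_of_eq ?_)
    split_ifs <;> ring
  have h4 := (abs_le.mp h1.2).1
  have h5 := (abs_le.mp h2.2).2
  have h6 := mul_le_mul_of_nonneg_right ht hlog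
  linarith

lemma rootless_logsum {g : ℤ[X]} (hg : g.Monic) {l : ℕ} (hl : l.Prime) (hr : Rootless g l) :
    ∃ A : ℝ, 0 < A ∧ ∃ K : ℝ, ∀ᶠ s : ℝ in 𝓝[>] 1, Real.log (1 / (s - 1)) - K ≤
      A * ∑' p : Nat.Primes, (if Rootless g p then (p : ℝ) ^ (-s) else 0) := by
  let f := g.map (Int.castRingHom ℚ)
  have h1 : @IsSplittingField ℚ f.SplittingField _ _ DivisionRing.toRatAlgebra f := by
    convert! Polynomial.IsSplittingField.splittingField f
  have h2 : NumberField f.SplittingField :=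
    @NumberField.mk _ _ inferInstance
      (@IsSplittingField.finiteDimensional ℚ f.SplittingField _ _ DivisionRing.toRatAlgebra f h1)
  have h3 : @Normal ℚ f.SplittingField _ _ DivisionRing.toRatAlgebra :=
    @Normal.of_isSplittingField ℚ _ f.SplittingField _ DivisionRing.toRatAlgebra f h1
  have h4 : @IsGalois ℚ _ f.SplittingField _ DivisionRing.toRatAlgebra :=
    @IsGalois.mk ℚ _ f.SplittingField _ DivisionRing.toRatAlgebra inferInstance h3
  exact rootless_logsum_aux f.SplittingField hg hl hr
end

section
open Topology

/-- The terms with `p > z` of the Dirichlet series over `S` are compared with the zeta function at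
`1 + (s - 1) / 2`. -/
lemma tail_bound {s : ℝ} (hs : 1 < s) (S : Set Nat.Primes) {z : ℝ} (hz : 1 ≤ z)
    (h2 : (s - 1) / 2 * ∑' n : ℕ, 1 / (n : ℝ) ^ (1 + (s - 1) / 2) ≤ 2) :
    ∑' p : Nat.Primes, (if p ∈ S then (p : ℝ) ^ (-s) else 0) ≤
      ∑ p ∈ Finset.range (⌊z⌋₊ + 1) with ∃ h : p.Prime, (⟨p, h⟩ : Nat.Primes) ∈ S, 1 / (p : ℝ) +
      z ^ (-((s - 1) / 2)) * (2 / ((s - 1) / 2)) := by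
  set ε := (s - 1) / 2 with hε
  have hε0 : 0 < ε := by rw [hε]; linarith
  have hzpos : 0 < z := by linarith
  have hsumN : Summable (fun n : ℕ => 1 / (n : ℝ) ^ (1 + ε)) :=
    Real.summable_one_div_nat_rpow.mpr (by linarith)
  have hsumP : Summable (fun p : Nat.Primes => 1 / (p : ℝ) ^ (1 + ε)) :=
    hsumN.comp_injective Nat.Primes.coe_nat_injective
  have hP : ∑' p : Nat.Primes, 1 / (p : ℝ) ^ (1 + ε) ≤ 2 / ε := by
    have h3 : ∑' p : Nat.Primes, 1 / (p : ℝ) ^ (1 + ε) ≤ ∑' n : ℕ, 1 / (n : ℝ) ^ (1 + ε) :=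
      tsum_comp_le_tsum_of_inj hsumN (fun n => by positivity) Nat.Primes.coe_nat_injective
    rw [le_div_iff₀ hε0]
    nlinarith
  have hfin : {p : Nat.Primes | (p : ℕ) < ⌊z⌋₊ + 1}.Finite :=
    Set.Finite.of_finite_image (f := fun p : Nat.Primes => (p : ℕ))
      ((Finset.range (⌊z⌋₊ + 1)).finite_toSet.subset (by
        rintro _ ⟨p, hp, rfl⟩; simpa using hp)) Nat.Primes.coe_nat_injective.injOn
  have h0 : ∀ p ∉ hfin.toFinset, (if (p : ℕ) < ⌊z⌋₊ + 1 ∧ p ∈ S then 1 / (p : ℝ) else 0) = 0 := by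
    intro p hp
    rw [if_neg]
    intro h
    exact hp ((Set.Finite.mem_toFinset _).mpr h.1)
  have hs1 : Summable (fun p : Nat.Primes =>
      (if (p : ℕ) < ⌊z⌋₊ + 1 ∧ p ∈ S then 1 / (p : ℝ) else 0)) := summable_of_ne_finset_zero h0
  have hterm : ∀ p : Nat.Primes, (if p ∈ S then (p : ℝ) ^ (-s) else 0) ≤
      (if (p : ℕ) < ⌊z⌋₊ + 1 ∧ p ∈ S then 1 / (p : ℝ) else 0) +
        z ^ (-ε) * (1 / (p : ℝ) ^ (1 + ε)) := by
    intro p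
    have hp1 : (1 : ℝ) ≤ p := by exact_mod_cast p.2.one_lt.le
    have hp0 : (0 : ℝ) < p := by linarith
    have hnn : 0 ≤ z ^ (-ε) * (1 / (p : ℝ) ^ (1 + ε)) := by positivity
    by_cases hS : p ∈ S
    · by_cases hpz : (p : ℕ) < ⌊z⌋₊ + 1
      · rw [if_pos hS, if_pos ⟨hpz, hS⟩]
        have : (p : ℝ) ^ (-s) ≤ 1 / p := by
          rw [one_div, ← Real.rpow_neg_one]
          exact Real.rpow_le_rpow_of_exponent_le hp1 (by linarith)
        linarith
      · rw [if_pos hS, if_neg (fun h => hpz h.1), zero_add]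
        have hzp : z ≤ p := by
          have h1 : ⌊z⌋₊ + 1 ≤ (p : ℕ) := by omega
          have h2 := (Nat.lt_floor_add_one z).le
          have h3 : ((⌊z⌋₊ + 1 : ℕ) : ℝ) ≤ p := by exact_mod_cast h1
          push_cast at h3
          linarith
        have h4 : (p : ℝ) ^ (-s) = (p : ℝ) ^ (-ε) * (1 / (p : ℝ) ^ (1 + ε)) := by
          rw [one_div, ← Real.rpow_neg hp0.le, ← Real.rpow_add hp0]
          congr 1
          rw [hε]; ring
        rw [h4]
        refine mul_le_mul_of_nonneg_right ?_ (by positivity)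
        exact Real.rpow_le_rpow_of_nonpos hzpos hzp (by linarith)
    · rw [if_neg hS, if_neg (fun h => hS h.2)]; linarith
  have hsumS : Summable (fun p : Nat.Primes => (if p ∈ S then (p : ℝ) ^ (-s) else 0)) :=
    Summable.of_nonneg_of_le (fun p => by split_ifs <;> positivity) hterm
      (hs1.add (hsumP.mul_left _))
  refine (hsumS.tsum_le_tsum hterm (hs1.add (hsumP.mul_left _))).trans ?_
  rw [hs1.tsum_add (hsumP.mul_left _), tsum_mul_left]
  refine add_le_add (le_of_eq ?_) (mul_le_mul_of_nonneg_left hP (by positivity))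
  rw [tsum_eq_sum h0, ← Finset.sum_filter]
  refine Finset.sum_bij (fun p _ => (p : ℕ)) ?_ ?_ ?_ ?_
  · intro p hp
    simp only [Finset.mem_filter, Finset.mem_range] at hp ⊢
    exact ⟨hp.2.1, p.2, hp.2.2⟩
  · intro p _ q _ h
    exact Nat.Primes.coe_nat_injective h
  · intro n hn
    simp only [Finset.mem_filter, Finset.mem_range] at hn
    obtain ⟨h1, h2, h3⟩ := hn
    refine ⟨⟨n, h2⟩, ?_, rfl⟩
    refine Finset.mem_filter.mpr ⟨(Set.Finite.mem_toFinset _).mpr ?_, ?_, h3⟩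
    · exact h1
    · exact h1
  · intro p _; rfl

/-- Passage from the Dirichlet series of `rootless_logsum` to a finite sum, by choosing `s` close to `1` in
terms of `z` and bounding the tail. -/
lemma rootless_recip_sum_monic {g : ℤ[X]} (hg : g.Monic) {l : ℕ} (hl : l.Prime)
    (hr : Rootless g l) :
    ∃ δ : ℝ, 0 < δ ∧ ∃ K : ℝ, ∀ᶠ z : ℝ in atTop, δ * Real.log (Real.log z) - K ≤
      ∑ p ∈ Finset.range (⌊z⌋₊ + 1) with p.Prime ∧ Rootless g p, 1 / (p : ℝ) := by
  obtain ⟨A, hA, K, hK⟩ := rootless_logsum hg hl hr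
  have hz : ∀ᶠ s : ℝ in 𝓝[>] 1, (s - 1) * ∑' n : ℕ, 1 / (n : ℝ) ^ s ≤ 2 :=
    (tendsto_sub_mul_tsum_nat_rpow.eventually (Iio_mem_nhds (show (1:ℝ) < 2 by norm_num))).mono
      fun s h => le_of_lt h
  have hlogu : Tendsto (fun u : ℝ => Real.log u / u) atTop (𝓝[>] 0) := by
    rw [tendsto_nhdsWithin_iff]
    constructor
    · have := Real.isLittleO_log_id_atTop.tendsto_div_nhds_zero
      simpa using this
    · filter_upwards [eventually_gt_atTop 1] with u hu
      exact div_pos (Real.log_pos hu) (by linarith)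
  have hε1 : Tendsto (fun u : ℝ => 1 + Real.log u / u) atTop (𝓝[>] 1) := by
    rw [tendsto_nhdsWithin_iff] at hlogu ⊢
    constructor
    · simpa using hlogu.1.const_add 1
    · filter_upwards [hlogu.2] with u hu
      simp only [Set.mem_Ioi] at hu ⊢
      linarith
  have hε2 : Tendsto (fun u : ℝ => 1 + 2 * (Real.log u / u)) atTop (𝓝[>] 1) := by
    rw [tendsto_nhdsWithin_iff] at hlogu ⊢
    constructor
    · simpa using (hlogu.1.const_mul 2).const_add 1
    · filter_upwards [hlogu.2] with u hu
      simp only [Set.mem_Ioi] at hu ⊢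
      linarith
  have hsmall : ∀ᶠ u : ℝ in atTop, 2 * Real.log u ≤ u ^ (1/2 : ℝ) := by
    have := (isLittleO_log_rpow_atTop (show (0:ℝ) < 1/2 by norm_num)).bound
      (show (0:ℝ) < 1/2 by norm_num)
    filter_upwards [this, eventually_gt_atTop 1] with u h hu
    rw [Real.norm_of_nonneg (Real.log_nonneg hu.le), Real.norm_of_nonneg (by positivity)] at h
    linarith
  -- with `u = log z`, the series is evaluated at `s = 1 + 2 * log u / u`: its tail is then bounded, and
  -- `log (1 / (s - 1))` is still at least `log u / 2`
  refine ⟨1 / (2 * A), by positivity, K / A + 2, ?_⟩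
  have hmain : ∀ᶠ u : ℝ in atTop, 1 / (2 * A) * Real.log u - (K / A + 2) ≤
      ∑ p ∈ Finset.range (⌊Real.exp u⌋₊ + 1) with p.Prime ∧ Rootless g p, 1 / (p : ℝ) := by
    filter_upwards [hε2.eventually hK, hε1.eventually hz, hsmall, eventually_gt_atTop (Real.exp 1)]
      with u h1 h2 h3 hu
    have hu1 : 1 < u := lt_trans (by simp) hu
    have hu0 : 0 < u := by linarith
    have hlog1 : 1 < Real.log u := (Real.lt_log_iff_exp_lt hu0).mpr hu
    have hq : 0 < Real.log u / u := by positivity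
    have h4 := tail_bound (s := 1 + 2 * (Real.log u / u)) (by linarith)
      {p : Nat.Primes | Rootless g p} (z := Real.exp u) (Real.one_le_exp hu0.le) (by
        convert h2 using 3
        · ring
        · ring_nf)
    have h5 : (1 + 2 * (Real.log u / u) - 1) / 2 = Real.log u / u := by ring
    rw [h5] at h4
    have h6 : Real.exp u ^ (-(Real.log u / u)) = 1 / u := by
      rw [← Real.exp_mul, mul_neg, mul_div_cancel₀ _ hu0.ne', Real.exp_neg, Real.exp_log hu0,
        one_div]
    have h7 : 1 / u * (2 / (Real.log u / u)) ≤ 2 := by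
      have : 1 / u * (2 / (Real.log u / u)) = 2 / Real.log u := by field_simp
      rw [this, div_le_iff₀ (by linarith)]
      linarith
    rw [h6] at h4
    have h8 : Real.log u / 2 ≤ Real.log (1 / (1 + 2 * (Real.log u / u) - 1)) := by
      have : 1 / (1 + 2 * (Real.log u / u) - 1) = u / (2 * Real.log u) := by
        field_simp; ring
      rw [this, Real.log_div hu0.ne' (by positivity)]
      have := Real.log_le_log (by positivity) h3
      rw [Real.log_rpow hu0] at this
      linarith
    have h9 : Real.log u / 2 - K ≤ A * (∑ p ∈ Finset.range (⌊Real.exp u⌋₊ + 1) with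
        p.Prime ∧ Rootless g p, 1 / (p : ℝ) + 2) := by
      refine (sub_le_sub_right h8 K).trans (h1.trans (mul_le_mul_of_nonneg_left ?_ hA.le))
      refine (h4.trans (add_le_add_right h7 _)).trans (le_of_eq ?_)
      congr 2
      ext p
      simp only [Finset.mem_filter, Finset.mem_range, and_congr_right_iff]
      intro _
      exact ⟨fun ⟨h, h'⟩ => ⟨h, h'⟩, fun ⟨h, h'⟩ => ⟨h, h'⟩⟩
    have h10 : 1 / (2 * A) * Real.log u - (K / A + 2) = (Real.log u / 2 - K) / A - 2 := by
      field_simp; ring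
    rw [h10]
    have := (div_le_iff₀' hA).mpr h9
    linarith
  filter_upwards [Real.tendsto_log_atTop.eventually hmain, eventually_gt_atTop 0] with z h hz
  rwa [Real.exp_log hz] at h

/-- Reciprocal sum over the primes at which `g` has no root: if there is one such prime not dividing
the leading coefficient, the sum grows like a positive multiple of `log log z`. -/
theorem rootless_recip_sum {g : ℤ[X]} (hdeg : 1 ≤ g.natDegree) {l : ℕ} (hl : l.Prime)
    (hlc : ¬ (l : ℤ) ∣ g.leadingCoeff) (hr : Rootless g l) :
    ∃ δ : ℝ, 0 < δ ∧ ∃ K : ℝ, ∀ᶠ z : ℝ in atTop, δ * Real.log (Real.log z) - K ≤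
      ∑ p ∈ Finset.range (⌊z⌋₊ + 1) with p.Prime ∧ Rootless g p, 1 / (p : ℝ) := by
  have hg0 : g ≠ 0 := by rintro rfl; simp at hdeg
  have key : ∀ a : ℤ, g.integralNormalization.eval (g.leadingCoeff * a) =
      g.leadingCoeff ^ (g.natDegree - 1) * g.eval a := by
    intro a
    have := integralNormalization_eval₂_leadingCoeff_mul hdeg (RingHom.id ℤ) a
    simpa [eval₂_id] using this
  have hlp : Prime (l : ℤ) := Nat.prime_iff_prime_int.mp hl
  have hr' : Rootless g.integralNormalization l := by
    intro b hb
    have hcop : IsCoprime (g.leadingCoeff) (l : ℤ) := ((hlp.coprime_iff_not_dvd).mpr hlc).symm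
    obtain ⟨x, y, hxy⟩ := hcop
    have h1 : (l : ℤ) ∣ g.integralNormalization.eval (g.leadingCoeff * (x * b)) := by
      have h2 := Polynomial.sub_dvd_eval_sub (g.leadingCoeff * (x * b)) b g.integralNormalization
      have h3 : (l : ℤ) ∣ g.leadingCoeff * (x * b) - b := ⟨-y * b, by linear_combination b * hxy⟩
      have := (h3.trans h2).add hb
      simpa using this
    rw [key] at h1
    rcases hlp.dvd_or_dvd h1 with h | h
    · exact hlc (hlp.dvd_of_dvd_pow h)
    · exact hr _ h
  obtain ⟨δ, hδ, K, hK⟩ := rootless_recip_sum_monic (monic_integralNormalization hg0) hl hr'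
  refine ⟨δ, hδ, K, hK.mono fun z hz => hz.trans ?_⟩
  refine Finset.sum_le_sum_of_subset_of_nonneg ?_ (fun _ _ _ => by positivity)
  intro p hp
  simp only [Finset.mem_filter] at hp ⊢
  refine ⟨hp.1, hp.2.1, fun a ha => hp.2.2 (g.leadingCoeff * a) ?_⟩
  rw [key]
  exact Dvd.dvd.mul_left ha _
end

/-! ### Brun's pure sieve -/

section
lemma alternating_choose_nonneg (ν r : ℕ) :
    (if ν = 0 then (1 : ℝ) else 0) ≤ ∑ k ∈ Finset.range (2 * r + 1), (-1 : ℝ) ^ k * (ν.choose k) := by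
  rcases ν with _ | ν
  · rw [if_pos rfl, Finset.sum_range_succ']
    simp
  · rw [if_neg (by omega)]
    have : ∀ m : ℕ, ∑ k ∈ Finset.range (m + 1), (-1 : ℝ) ^ k * ((ν + 1).choose k) =
        (-1) ^ m * (ν.choose m) := by
      intro m
      induction m with
      | zero => simp
      | succ m ih =>
        rw [Finset.sum_range_succ, ih, Nat.choose_succ_succ]
        push_cast
        ring
    rw [this, pow_mul]
    simp

/-- Bonferroni upper bound, in the form of a sum over subsets of size at most `2 r`. -/
lemma bonferroni {ι : Type*} (S : Finset ι) (Q : ι → Prop) (r : ℕ) :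
    (if ∀ i ∈ S, ¬ Q i then (1 : ℝ) else 0) ≤
      ∑ U ∈ S.powerset with U.card ≤ 2 * r, (-1 : ℝ) ^ U.card * (if ∀ i ∈ U, Q i then 1 else 0) := by
  set S' := S.filter Q with hS'
  have h1 : (if ∀ i ∈ S, ¬ Q i then (1 : ℝ) else 0) = if S'.card = 0 then 1 else 0 := by
    congr 1
    rw [Finset.card_eq_zero, hS', Finset.filter_eq_empty_iff]
  rw [h1]
  refine (alternating_choose_nonneg S'.card r).trans (le_of_eq ?_)
  have h2 : ∑ U ∈ S.powerset with U.card ≤ 2 * r,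
      (-1 : ℝ) ^ U.card * (if ∀ i ∈ U, Q i then 1 else 0) =
      ∑ U ∈ S'.powerset with U.card ≤ 2 * r, (-1 : ℝ) ^ U.card := by
    rw [Finset.sum_filter, Finset.sum_filter]
    symm
    refine Finset.sum_subset_zero_on_sdiff (Finset.powerset_mono.mpr (Finset.filter_subset _ _)) ?_ ?_
    · intro U hU
      rw [Finset.mem_sdiff, Finset.mem_powerset, Finset.mem_powerset] at hU
      have : ¬ ∀ i ∈ U, Q i := fun h => hU.2 fun i hi => Finset.mem_filter.mpr ⟨hU.1 hi, h i hi⟩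
      simp [this]
    · intro U hU
      rw [Finset.mem_powerset] at hU
      have : ∀ i ∈ U, Q i := fun i hi => (Finset.mem_filter.mp (hU hi)).2
      rw [if_pos this, mul_one]
  rw [h2]
  rw [← Finset.sum_fiberwise_of_maps_to (t := Finset.range (2 * r + 1)) (g := Finset.card)
    (by intro U hU; have := (Finset.mem_filter.mp hU).2; simp; omega)]
  refine Finset.sum_congr rfl fun k hk => ?_
  have h3 : ({U ∈ {U ∈ S'.powerset | U.card ≤ 2 * r} | U.card = k} : Finset _) = S'.powersetCard k := by
    ext U
    simp only [Finset.mem_filter, Finset.mem_powerset, Finset.mem_powersetCard]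
    have := Finset.mem_range.mp hk
    constructor
    · rintro ⟨⟨h, -⟩, h'⟩; exact ⟨h, h'⟩
    · rintro ⟨h, h'⟩; exact ⟨⟨h, by omega⟩, h'⟩
  rw [h3, Finset.sum_congr rfl (g := fun _ => (-1 : ℝ) ^ k)
    (fun U hU => by rw [(Finset.mem_powersetCard.mp hU).2]), Finset.sum_const,
    Finset.card_powersetCard, nsmul_eq_mul, mul_comm]

lemma card_small_subsets_le {ι : Type*} (S : Finset ι) (m : ℕ) {y : ℝ} (hy : (S.card : ℝ) ≤ y)
    (hy1 : 1 ≤ y) :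
    ((S.powerset.filter fun U => U.card ≤ m).card : ℝ) ≤ 3 * y ^ m := by
  have hy0 : 0 < y := by linarith
  have h1 : ((S.powerset.filter fun U => U.card ≤ m).card : ℝ) ≤
      ∑ U ∈ S.powerset, y ^ m * ∏ i ∈ U, (1 / y) := by
    rw [Finset.card_eq_sum_ones, Nat.cast_sum]
    refine (Finset.sum_le_sum (g := fun U => y ^ m * ∏ i ∈ U, (1 / y)) fun U hU => ?_).trans
      (Finset.sum_le_sum_of_subset_of_nonneg (Finset.filter_subset _ _) fun _ _ _ => by positivity)
    have hU' := (Finset.mem_filter.mp hU).2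
    rw [Finset.prod_const, Nat.cast_one, one_div, inv_pow, ← div_eq_mul_inv,
      le_div_iff₀ (by positivity), one_mul]
    exact pow_le_pow_right₀ hy1 hU'
  refine h1.trans ?_
  rw [← Finset.mul_sum, ← Finset.prod_one_add, Finset.prod_const, mul_comm]
  refine mul_le_mul_of_nonneg_right ?_ (by positivity)
  have h2 : 1 + 1 / y ≤ Real.exp (1 / y) := by
    have := Real.add_one_le_exp (1 / y); linarith
  calc (1 + 1 / y) ^ S.card ≤ Real.exp (1 / y) ^ S.card := by gcongr
    _ = Real.exp (S.card * (1 / y)) := by rw [← Real.exp_nat_mul]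
    _ ≤ Real.exp 1 := by
      apply Real.exp_le_exp.mpr
      rw [mul_one_div, div_le_one hy0]; exact hy
    _ ≤ 3 := by have := Real.exp_one_lt_d9; linarith

/-- Brun's pure sieve. -/
lemma brunPure {ι α : Type*} (S : Finset ι) (Ω : Finset α) (Q : ι → α → Prop) (g : ι → ℝ)
    (hg0 : ∀ i ∈ S, 0 ≤ g i) (hg1 : ∀ i ∈ S, g i ≤ 1) {W R y : ℝ} (hW : 0 ≤ W) (hR : 0 ≤ R) (r : ℕ)
    (hy : (S.card : ℝ) ≤ y) (hy1 : 1 ≤ y)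
    (h : ∀ U ⊆ S, U.card ≤ 2 * r →
      |((Ω.filter fun ω => ∀ i ∈ U, Q i ω).card : ℝ) - W * ∏ i ∈ U, g i| ≤ R) :
    ((Ω.filter fun ω => ∀ i ∈ S, ¬ Q i ω).card : ℝ) ≤
      W * (Real.exp (-∑ i ∈ S, g i) + Real.exp (-(2 * r) + 3 * ∑ i ∈ S, g i)) + 3 * y ^ (2 * r) * R := by
  set P := S.powerset.filter fun U => U.card ≤ 2 * r with hP
  have h1 : ((Ω.filter fun ω => ∀ i ∈ S, ¬ Q i ω).card : ℝ) ≤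
      ∑ U ∈ P, (-1 : ℝ) ^ U.card * ((Ω.filter fun ω => ∀ i ∈ U, Q i ω).card : ℝ) := by
    calc ((Ω.filter fun ω => ∀ i ∈ S, ¬ Q i ω).card : ℝ)
        = ∑ ω ∈ Ω, (if ∀ i ∈ S, ¬ Q i ω then (1 : ℝ) else 0) := by
          rw [Finset.card_filter]; push_cast; rfl
      _ ≤ ∑ ω ∈ Ω, ∑ U ∈ P, (-1 : ℝ) ^ U.card * (if ∀ i ∈ U, Q i ω then 1 else 0) :=
          Finset.sum_le_sum fun ω _ => bonferroni S (fun i => Q i ω) r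
      _ = _ := by
          rw [Finset.sum_comm]
          refine Finset.sum_congr rfl fun U _ => ?_
          rw [← Finset.mul_sum, Finset.card_filter]
          push_cast; rfl
  have h2 : ∑ U ∈ P, (-1 : ℝ) ^ U.card * ((Ω.filter fun ω => ∀ i ∈ U, Q i ω).card : ℝ) ≤
      W * ∑ U ∈ P, (-1 : ℝ) ^ U.card * ∏ i ∈ U, g i + 3 * y ^ (2 * r) * R := by
    have h3 : ∀ U ∈ P, (-1 : ℝ) ^ U.card * ((Ω.filter fun ω => ∀ i ∈ U, Q i ω).card : ℝ) ≤
        W * ((-1 : ℝ) ^ U.card * ∏ i ∈ U, g i) + R := by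
      intro U hU
      have hU' := Finset.mem_filter.mp hU
      have h4 := h U (Finset.mem_powerset.mp hU'.1) hU'.2
      have h5 : |(-1 : ℝ) ^ U.card *
          (((Ω.filter fun ω => ∀ i ∈ U, Q i ω).card : ℝ) - W * ∏ i ∈ U, g i)| ≤ R := by
        rw [abs_mul, abs_pow, abs_neg, abs_one, one_pow, one_mul]; exact h4
      have := (abs_le.mp h5).2
      linarith
    refine (Finset.sum_le_sum h3).trans ?_
    rw [Finset.sum_add_distrib, ← Finset.mul_sum, Finset.sum_const, nsmul_eq_mul]
    have := card_small_subsets_le S (2 * r) hy hy1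
    gcongr
  refine (h1.trans h2).trans ?_
  gcongr
  -- complete the truncated sum; the tail is bounded by Rankin's trick
  have hgn : ∀ U ∈ S.powerset, 0 ≤ ∏ i ∈ U, g i := fun U hU =>
    Finset.prod_nonneg fun i hi => hg0 i (Finset.mem_powerset.mp hU hi)
  have h4 : ∑ U ∈ P, (-1 : ℝ) ^ U.card * ∏ i ∈ U, g i ≤ ∑ U ∈ S.powerset, ∏ i ∈ U, (-g i) +
      ∑ U ∈ S.powerset, Real.exp (-(2 * r)) * ∏ i ∈ U, (Real.exp 1 * g i) := by
    rw [hP, Finset.sum_filter, ← Finset.sum_add_distrib]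
    refine Finset.sum_le_sum fun U hU => ?_
    have hn := hgn U hU
    rw [Finset.prod_neg, Finset.prod_mul_distrib, Finset.prod_const, ← Real.exp_nat_mul]
    split_ifs with hc
    · have : 0 ≤ Real.exp (-(2 * r)) * (Real.exp (U.card * 1) * ∏ i ∈ U, g i) := by positivity
      linarith
    · have h5 : (1 : ℝ) ≤ Real.exp (-(2 * r)) * Real.exp (U.card * 1) := by
        rw [← Real.exp_add]
        apply Real.one_le_exp
        have : (2 * r : ℝ) ≤ U.card := by exact_mod_cast (not_le.mp hc).le
        linarith
      have h6 : -(∏ i ∈ U, g i) ≤ (-1 : ℝ) ^ U.card * ∏ i ∈ U, g i := by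
        rcases neg_one_pow_eq_or ℝ U.card with h | h <;> rw [h] <;> linarith
      nlinarith
  refine h4.trans ?_
  rw [← Finset.prod_one_add, ← Finset.mul_sum, ← Finset.prod_one_add]
  refine add_le_add ?_ ?_
  · rw [← Finset.sum_neg_distrib, Real.exp_sum]
    refine Finset.prod_le_prod (fun i hi => by linarith [hg1 i hi]) fun i hi => ?_
    linarith [Real.add_one_le_exp (-g i)]
  · rw [Real.exp_add, Finset.mul_sum, Real.exp_sum]
    refine mul_le_mul_of_nonneg_left ?_ (Real.exp_pos _).le
    refine Finset.prod_le_prod (fun i hi => ?_) fun i hi => ?_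
    · have := hg0 i hi; positivity
    · have h7 := Real.add_one_le_exp (3 * g i)
      have h8 := Real.exp_one_lt_d9
      nlinarith [hg0 i hi]
end

/-! ### Cubics with a double root modulo given primes -/

section
/-- The discriminant of the binary cubic form `(a, b, c, d)`. -/
def disc4 (a b c d : ℤ) : ℤ :=
  b ^ 2 * c ^ 2 - 4 * a * c ^ 3 - 4 * b ^ 3 * d - 27 * a ^ 2 * d ^ 2 + 18 * a * b * c * d

/-- `a X³ + b X² + c X + d` is congruent mod `m` to `(X - r)² (a X + b + 2 a r)` for some `r`. -/
def DblRoot (a b : ℤ) (m : ℕ) (w : ℤ × ℤ) : Prop :=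
  ∃ r : ℤ, (m : ℤ) ∣ w.1 - (-3 * a * r ^ 2 - 2 * b * r) ∧ (m : ℤ) ∣ w.2 - (2 * a * r ^ 3 + b * r ^ 2)

lemma DblRoot.dvd_disc {a b : ℤ} {m : ℕ} {w : ℤ × ℤ} (h : DblRoot a b m w) :
    (m : ℤ) ∣ disc4 a b w.1 w.2 := by
  obtain ⟨r, h1, h2⟩ := h
  rw [← ZMod.intCast_zmod_eq_zero_iff_dvd] at *
  push_cast [disc4] at *
  rw [sub_eq_zero] at h1 h2
  rw [h1, h2]
  ring

lemma dblRoot_mul {a b : ℤ} {m n : ℕ} (hmn : m.Coprime n) (w : ℤ × ℤ) :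
    DblRoot a b (m * n) w ↔ DblRoot a b m w ∧ DblRoot a b n w := by
  constructor
  · rintro ⟨r, h1, h2⟩
    have hm : (m : ℤ) ∣ ((m * n : ℕ) : ℤ) := by push_cast; exact dvd_mul_right _ _
    have hn : (n : ℤ) ∣ ((m * n : ℕ) : ℤ) := by push_cast; exact dvd_mul_left _ _
    exact ⟨⟨r, hm.trans h1, hm.trans h2⟩, ⟨r, hn.trans h1, hn.trans h2⟩⟩
  · rintro ⟨⟨r, h1, h2⟩, ⟨s, h3, h4⟩⟩
    have hc : IsCoprime (m : ℤ) (n : ℤ) := Nat.isCoprime_iff_coprime.mpr hmn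
    obtain ⟨u, v, huv⟩ := hc
    refine ⟨r * (v * n) + s * (u * m), ?_, ?_⟩
    all_goals
      push_cast
      refine IsCoprime.mul_dvd (Nat.isCoprime_iff_coprime.mpr hmn) ?_ ?_
    all_goals
      rw [← ZMod.intCast_zmod_eq_zero_iff_dvd] at *
    all_goals
      have e := congrArg (Int.cast : ℤ → ZMod m) huv
      have e' := congrArg (Int.cast : ℤ → ZMod n) huv
      push_cast [ZMod.natCast_self] at *
      simp only [mul_zero, zero_add, add_zero] at *
      simp only [e, e', mul_one]
      first | exact h1 | exact h2 | exact h3 | exact h4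

lemma dblRoot_prod {a b : ℤ} (U : Finset ℕ) (hU : ∀ p ∈ U, p.Prime) (w : ℤ × ℤ) :
    DblRoot a b (∏ p ∈ U, p) w ↔ ∀ p ∈ U, DblRoot a b p w := by
  induction U using Finset.induction_on with
  | empty => simp [DblRoot]
  | insert p U hp ih =>
    rw [Finset.prod_insert hp, dblRoot_mul, ih fun q hq => hU q (Finset.mem_insert_of_mem hq)]
    · simp
    · refine Nat.Coprime.prod_right fun q hq => ?_
      rw [Nat.coprime_primes (hU p (Finset.mem_insert_self _ _)) (hU q (Finset.mem_insert_of_mem hq))]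
      rintro rfl; exact hp hq

lemma dblRoot_unique_prime {a b : ℤ} {p : ℕ} (hp : p.Prime) (h5 : 5 ≤ p)
    (hab : ¬ ((p : ℤ) ∣ a ∧ (p : ℤ) ∣ b)) {r s : ℤ}
    (h1 : (p : ℤ) ∣ (-3 * a * r ^ 2 - 2 * b * r) - (-3 * a * s ^ 2 - 2 * b * s))
    (h2 : (p : ℤ) ∣ (2 * a * r ^ 3 + b * r ^ 2) - (2 * a * s ^ 3 + b * s ^ 2)) :
    (p : ℤ) ∣ r - s := by
  by_contra hrs
  have hpi : Prime (p : ℤ) := Nat.prime_iff_prime_int.mp hp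
  have h3 : (p : ℤ) ∣ 3 * a * (r + s) + 2 * b := by
    have : (-3 * a * r ^ 2 - 2 * b * r) - (-3 * a * s ^ 2 - 2 * b * s) =
      (r - s) * (-(3 * a * (r + s) + 2 * b)) := by ring
    rw [this] at h1
    have := (hpi.dvd_or_dvd h1).resolve_left hrs
    rwa [dvd_neg] at this
  have h4 : (p : ℤ) ∣ 2 * a * (r ^ 2 + r * s + s ^ 2) + b * (r + s) := by
    have : (2 * a * r ^ 3 + b * r ^ 2) - (2 * a * s ^ 3 + b * s ^ 2) =
      (r - s) * (2 * a * (r ^ 2 + r * s + s ^ 2) + b * (r + s)) := by ring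
    rw [this] at h2
    exact (hpi.dvd_or_dvd h2).resolve_left hrs
  have h6 : (p : ℤ) ∣ a * (r - s) ^ 2 := by
    have := (h4.mul_left 2).sub (h3.mul_left (r + s))
    refine this.trans (dvd_of_eq ?_)
    ring
  have ha : (p : ℤ) ∣ a :=
    (hpi.dvd_or_dvd h6).resolve_right fun h => hrs (hpi.dvd_of_dvd_pow h)
  refine hab ⟨ha, ?_⟩
  have h7 : (p : ℤ) ∣ 2 * b := by
    have := h3.sub (ha.mul_left (3 * (r + s)))
    refine this.trans (dvd_of_eq ?_); ring
  refine (hpi.dvd_or_dvd h7).resolve_left fun h => ?_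
  have := Int.le_of_dvd (by norm_num) h
  omega

/-- The double root is unique modulo the product of the primes in `U`, which turns the union over `r` into
an exact count. -/
lemma dblRoot_unique {a b : ℤ} (U : Finset ℕ) (hU : ∀ p ∈ U, p.Prime ∧ 5 ≤ p ∧
    ¬ ((p : ℤ) ∣ a ∧ (p : ℤ) ∣ b)) {r s : ℤ} {w : ℤ × ℤ}
    (h1 : ((∏ p ∈ U, p : ℕ) : ℤ) ∣ w.1 - (-3 * a * r ^ 2 - 2 * b * r))
    (h2 : ((∏ p ∈ U, p : ℕ) : ℤ) ∣ w.2 - (2 * a * r ^ 3 + b * r ^ 2))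
    (h3 : ((∏ p ∈ U, p : ℕ) : ℤ) ∣ w.1 - (-3 * a * s ^ 2 - 2 * b * s))
    (h4 : ((∏ p ∈ U, p : ℕ) : ℤ) ∣ w.2 - (2 * a * s ^ 3 + b * s ^ 2)) :
    ((∏ p ∈ U, p : ℕ) : ℤ) ∣ r - s := by
  have key : ∀ p ∈ U, (p : ℤ) ∣ r - s := by
    intro p hp
    obtain ⟨hp1, hp2, hp3⟩ := hU p hp
    have hd : (p : ℤ) ∣ ((∏ p ∈ U, p : ℕ) : ℤ) := Int.natCast_dvd_natCast.mpr (Finset.dvd_prod_of_mem _ hp)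
    refine dblRoot_unique_prime hp1 hp2 hp3 ?_ ?_
    · have := hd.trans (h3.sub h1); refine this.trans (dvd_of_eq ?_); ring
    · have := hd.trans (h4.sub h2); refine this.trans (dvd_of_eq ?_); ring
  rw [Int.natCast_dvd]
  refine Finset.prod_primes_dvd _ (fun p hp => Nat.prime_iff.mp (hU p hp).1) fun p hp => ?_
  exact Int.natCast_dvd.mp (key p hp)

/-- Number of elements of a residue class in a symmetric interval. -/
lemma count_residue (X : ℕ) {m : ℕ} (hm : 0 < m) (u : ℤ) :
    |(((Finset.Icc (-(X : ℤ)) X).filter fun c => (m : ℤ) ∣ c - u).card : ℝ) - (2 * X + 1) / m| ≤ 1 := by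
  have h1 : (Finset.Icc (-(X : ℤ)) X).filter (fun c => (m : ℤ) ∣ c - u) =
      (Finset.Ioc (-(X : ℤ) - 1) X).filter (fun c => c ≡ u [ZMOD m]) := by
    ext c
    simp only [Finset.mem_filter, Finset.mem_Icc, Finset.mem_Ioc, Int.modEq_iff_dvd]
    rw [← dvd_neg, neg_sub]
    constructor <;> rintro ⟨h, h'⟩ <;> exact ⟨by omega, h'⟩
  have h2 := Int.Ioc_filter_modEq_card (-(X : ℤ) - 1) X (r := m) (by exact_mod_cast hm) u
  rw [h1]
  generalize ((Finset.Ioc (-(X : ℤ) - 1) X).filter (fun c => c ≡ u [ZMOD m])).card = N at h2 ⊢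
  have hm' : (0 : ℚ) < m := by exact_mod_cast hm
  set α : ℚ := (((X : ℤ) : ℚ) - u) / ((m : ℤ) : ℚ) with hα
  set β : ℚ := (((-(X : ℤ) - 1 : ℤ) : ℚ) - u) / ((m : ℤ) : ℚ) with hβ
  have hαβ : α - β = (2 * X + 1) / m := by
    rw [hα, hβ, ← sub_div]; push_cast; congr 1; ring
  have hle : β ≤ α := by
    have : 0 ≤ α - β := by rw [hαβ]; positivity
    linarith
  rw [max_eq_left (sub_nonneg.mpr (Int.floor_le_floor hle))] at h2
  have h3 : |(N : ℚ) - (2 * X + 1) / m| ≤ 1 := by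
    have h4 : (N : ℚ) = (⌊α⌋ : ℚ) - ⌊β⌋ := by exact_mod_cast congrArg (Int.cast : ℤ → ℚ) h2
    rw [h4, ← hαβ, abs_le]
    have := Int.floor_le α
    have := Int.floor_le β
    have := Int.lt_floor_add_one α
    have := Int.lt_floor_add_one β
    constructor <;> linarith
  have h5 : (((|(N : ℚ) - (2 * X + 1) / m| : ℚ)) : ℝ) ≤ ((1 : ℚ) : ℝ) := Rat.cast_le.mpr h3
  push_cast at h5
  exact h5

/-- In the box `|c| ≤ X`, `|d| ≤ Y` the pairs for which the cubic has a double root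
modulo every `p ∈ U` have density `∏ 1/p`. -/
lemma count_dblRoot {a b : ℤ} (U : Finset ℕ) (hU : ∀ p ∈ U, p.Prime ∧ 5 ≤ p ∧
    ¬ ((p : ℤ) ∣ a ∧ (p : ℤ) ∣ b)) (X Y : ℕ) :
    |(((Finset.Icc (-(X : ℤ)) X ×ˢ Finset.Icc (-(Y : ℤ)) Y).filter
      fun w => ∀ p ∈ U, DblRoot a b p w).card : ℝ) - (2 * X + 1) * (2 * Y + 1) * ∏ p ∈ U, (1 / (p : ℝ))|
      ≤ (2 * X + 1) + (2 * Y + 1) + ((∏ p ∈ U, p : ℕ) : ℝ) := by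
  set m := ∏ p ∈ U, p with hm
  have hm0 : 0 < m := Finset.prod_pos fun p hp => (hU p hp).1.pos
  have hmR : (0 : ℝ) < m := by exact_mod_cast hm0
  set u : ℕ → ℤ := fun r => -3 * a * r ^ 2 - 2 * b * r with hu
  set v : ℕ → ℤ := fun r => 2 * a * r ^ 3 + b * r ^ 2 with hv
  set N : ℕ → ℕ := fun r => ((Finset.Icc (-(X : ℤ)) X).filter fun c => (m : ℤ) ∣ c - u r).card with hN
  set M : ℕ → ℕ := fun r => ((Finset.Icc (-(Y : ℤ)) Y).filter fun c => (m : ℤ) ∣ c - v r).card with hM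
  have h1 : ((Finset.Icc (-(X : ℤ)) X ×ˢ Finset.Icc (-(Y : ℤ)) Y).filter
      fun w => ∀ p ∈ U, DblRoot a b p w).card = ∑ r ∈ Finset.range m, N r * M r := by
    have h2 : (Finset.Icc (-(X : ℤ)) X ×ˢ Finset.Icc (-(Y : ℤ)) Y).filter
      (fun w => ∀ p ∈ U, DblRoot a b p w) = (Finset.range m).biUnion fun r =>
        ((Finset.Icc (-(X : ℤ)) X).filter fun c => (m : ℤ) ∣ c - u r) ×ˢ
        ((Finset.Icc (-(Y : ℤ)) Y).filter fun c => (m : ℤ) ∣ c - v r) := by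
      ext w
      simp only [Finset.mem_filter, Finset.mem_product, Finset.mem_biUnion, Finset.mem_range]
      rw [← dblRoot_prod U (fun p hp => (hU p hp).1) w]
      constructor
      · rintro ⟨⟨hX, hY⟩, r, h3, h4⟩
        have hmz : (m : ℤ) ≠ 0 := by exact_mod_cast hm0.ne'
        have h5 : ((r % m).toNat : ℤ) = r % m := Int.toNat_of_nonneg (Int.emod_nonneg _ hmz)
        have h6 : (m : ℤ) ∣ r - (r % m).toNat := by rw [h5]; exact Int.dvd_self_sub_emod
        refine ⟨(r % m).toNat, ?_, ⟨hX, ?_⟩, ⟨hY, ?_⟩⟩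
        · have := Int.emod_lt_of_pos r (b := m) (by exact_mod_cast hm0)
          omega
        · have h7 : (m : ℤ) ∣ (-3 * a * r ^ 2 - 2 * b * r) - u (r % m).toNat := by
            refine (h6.mul_right (-3 * a * (r + (r % m).toNat) - 2 * b)).trans (dvd_of_eq ?_)
            simp only [hu]; ring
          refine (h3.add h7).trans (dvd_of_eq ?_); ring
        · have h7 : (m : ℤ) ∣ (2 * a * r ^ 3 + b * r ^ 2) - v (r % m).toNat := by
            refine (h6.mul_right (2 * a * (r ^ 2 + r * (r % m).toNat + ((r % m).toNat : ℤ) ^ 2)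
              + b * (r + (r % m).toNat))).trans (dvd_of_eq ?_)
            simp only [hv]; ring
          refine (h4.add h7).trans (dvd_of_eq ?_); ring
      · rintro ⟨r, -, ⟨hX, h3⟩, ⟨hY, h4⟩⟩
        exact ⟨⟨hX, hY⟩, r, h3, h4⟩
    rw [h2, Finset.card_biUnion]
    · exact Finset.sum_congr rfl fun r _ => Finset.card_product _ _
    · intro r hr s hs hrs
      rw [Function.onFun, Finset.disjoint_left]
      intro w hw hw'
      simp only [Finset.mem_filter, Finset.mem_product] at hw hw'
      have h5 := dblRoot_unique U hU hw.1.2 hw.2.2 hw'.1.2 hw'.2.2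
      apply hrs
      have h6 := Int.eq_zero_of_abs_lt_dvd h5 (by
        have := Finset.mem_range.mp (Finset.mem_coe.mp hr)
        have := Finset.mem_range.mp (Finset.mem_coe.mp hs)
        rw [abs_lt]; constructor <;> omega)
      omega
  rw [h1]
  have hprod : ∏ p ∈ U, (1 / (p : ℝ)) = 1 / m := by
    rw [hm, Finset.prod_div_distrib, Finset.prod_const_one]; push_cast; rfl
  rw [hprod]
  have h3 : (((∑ r ∈ Finset.range m, N r * M r : ℕ) : ℝ) - (2 * X + 1) * (2 * Y + 1) * (1 / m)) =
      ∑ r ∈ Finset.range m, ((N r : ℝ) * M r - (2 * X + 1) / m * ((2 * Y + 1) / m)) := by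
    rw [Finset.sum_sub_distrib, Finset.sum_const, Finset.card_range, nsmul_eq_mul]
    push_cast
    field_simp
  rw [h3]
  refine (Finset.abs_sum_le_sum_abs _ _).trans ?_
  have h4 : ∀ r ∈ Finset.range m, |(N r : ℝ) * M r - (2 * X + 1) / m * ((2 * Y + 1) / m)| ≤
      (2 * X + 1) / m + (2 * Y + 1) / m + 1 := by
    intro r _
    have hA := count_residue X hm0 (u r)
    have hB := count_residue Y hm0 (v r)
    rw [← hN] at *
    change |(N r : ℝ) - _| ≤ 1 at hA
    change |(M r : ℝ) - _| ≤ 1 at hB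
    set x : ℝ := (2 * X + 1) / m
    set y : ℝ := (2 * Y + 1) / m
    have hx : 0 ≤ x := by positivity
    have hy : 0 ≤ y := by positivity
    have hM0 : (0 : ℝ) ≤ M r := by positivity
    calc |(N r : ℝ) * M r - x * y| = |((N r : ℝ) - x) * M r + x * (M r - y)| := by ring_nf
      _ ≤ |(N r : ℝ) - x| * |(M r : ℝ)| + |x| * |(M r : ℝ) - y| := by
        rw [← abs_mul, ← abs_mul]; exact abs_add_le _ _
      _ ≤ 1 * (y + 1) + x * 1 := by
        rw [abs_of_nonneg hx, abs_of_nonneg hM0]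
        have := (abs_le.mp hB).2
        gcongr
        linarith
      _ = _ := by ring
  refine (Finset.sum_le_sum h4).trans (le_of_eq ?_)
  rw [Finset.sum_const, Finset.card_range, nsmul_eq_mul]
  field_simp
end

/-! ### Sieving binary cubic forms in a box -/

section
/-- The box of pairs `(c, d)` with `|c| ≤ X`, `|d| ≤ Y`. -/
abbrev box2 (X Y : ℕ) : Finset (ℤ × ℤ) := Finset.Icc (-(X : ℤ)) X ×ˢ Finset.Icc (-(Y : ℤ)) Y

/-- Brun's pure sieve for the discriminant: modulo each `p` not dividing both `a` and `b`, exactly `p` of the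
`p ^ 2` pairs `(c, d)` give a vanishing discriminant. -/
lemma sieve_core (S : Finset ℕ) (hS : ∀ p ∈ S, p.Prime ∧ 5 ≤ p) {z : ℝ} (hz1 : 1 ≤ z)
    (hz : ∀ p ∈ S, (p : ℝ) ≤ z) (r : ℕ) (hr : 2 * ∑ p ∈ S, 1 / (p : ℝ) ≤ r) (a b : ℤ) (X Y : ℕ) :
    (((box2 X Y).filter fun w => ∀ p ∈ S, ¬ (p : ℤ) ∣ disc4 a b w.1 w.2).card : ℝ) ≤
      (2 * X + 1) * (2 * Y + 1) * (2 * Real.exp (-∑ p ∈ S, 1 / (p : ℝ))) +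
        3 * z ^ (2 * r) * ((2 * X + 1) + (2 * Y + 1) + z ^ (2 * r)) := by
  by_cases hab : ∃ p ∈ S, (p : ℤ) ∣ a ∧ (p : ℤ) ∣ b
  · obtain ⟨p, hp, ha, hb⟩ := hab
    have : ((box2 X Y).filter fun w => ∀ p ∈ S, ¬ (p : ℤ) ∣ disc4 a b w.1 w.2) = ∅ := by
      rw [Finset.filter_eq_empty_iff]
      intro w _ h
      apply h p hp
      obtain ⟨a', rfl⟩ := ha
      obtain ⟨b', rfl⟩ := hb
      rw [← ZMod.intCast_zmod_eq_zero_iff_dvd]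
      simp [disc4]
    rw [this]
    simp only [Finset.card_empty, Nat.cast_zero]
    positivity
  push Not at hab
  have hcard : (S.card : ℝ) ≤ z := by
    have h1 : S ⊆ Finset.Icc 1 ⌊z⌋₊ := fun p hp => by
      rw [Finset.mem_Icc]
      exact ⟨(hS p hp).1.pos, Nat.le_floor (hz p hp)⟩
    have h2 := Finset.card_le_card h1
    rw [Nat.card_Icc, Nat.add_sub_cancel] at h2
    exact (Nat.cast_le.mpr h2).trans (Nat.floor_le (by linarith))
  have h1 := brunPure S (box2 X Y) (fun p w => DblRoot a b p w) (fun p => 1 / (p : ℝ))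
    (fun p _ => by positivity)
    (fun p hp => by
      rw [div_le_one (by exact_mod_cast (hS p hp).1.pos)]
      exact_mod_cast (hS p hp).1.one_le)
    (W := (2 * X + 1) * (2 * Y + 1)) (R := (2 * X + 1) + (2 * Y + 1) + z ^ (2 * r)) (y := z)
    (by positivity) (by positivity) r hcard hz1 (by
      intro U hU hUr
      refine (count_dblRoot U (fun p hp => ⟨(hS p (hU hp)).1, (hS p (hU hp)).2, fun h => hab p (hU hp) h.1 h.2⟩)
        X Y).trans ?_
      gcongr
      push_cast
      calc ∏ p ∈ U, (p : ℝ) ≤ ∏ p ∈ U, z :=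
            Finset.prod_le_prod (fun _ _ => by positivity) fun p hp => hz p (hU hp)
        _ = z ^ U.card := by rw [Finset.prod_const]
        _ ≤ z ^ (2 * r) := pow_le_pow_right₀ hz1 hUr)
  have h2 : (((box2 X Y).filter fun w => ∀ p ∈ S, ¬ (p : ℤ) ∣ disc4 a b w.1 w.2).card : ℝ) ≤
      (((box2 X Y).filter fun w => ∀ p ∈ S, ¬ DblRoot a b p w).card : ℝ) := by
    norm_cast
    refine Finset.card_le_card fun w hw => ?_
    rw [Finset.mem_filter] at hw ⊢
    exact ⟨hw.1, fun p hp h => hw.2 p hp h.dvd_disc⟩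
  refine h2.trans (h1.trans ?_)
  gcongr
  have h3 : Real.exp (-(2 * r) + 3 * ∑ p ∈ S, 1 / (p : ℝ)) ≤ Real.exp (-∑ p ∈ S, 1 / (p : ℝ)) :=
    Real.exp_le_exp.mpr (by linarith)
  linarith

lemma sum_recip_le (S : Finset ℕ) {z : ℝ} (hz1 : 1 ≤ z) (hS : ∀ p ∈ S, 0 < p ∧ (p : ℝ) ≤ z) :
    ∑ p ∈ S, 1 / (p : ℝ) ≤ 1 + Real.log z := by
  have h1 : S ⊆ Finset.Icc 1 ⌊z⌋₊ := fun p hp => by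
    rw [Finset.mem_Icc]
    exact ⟨(hS p hp).1, Nat.le_floor (hS p hp).2⟩
  refine (Finset.sum_le_sum_of_subset_of_nonneg h1 fun _ _ _ => by positivity).trans ?_
  have h2 := harmonic_le_one_add_log ⌊z⌋₊
  rw [harmonic_eq_sum_Icc] at h2
  push_cast at h2
  simp only [one_div]
  refine h2.trans ?_
  gcongr
  · exact_mod_cast Nat.floor_pos.mpr hz1
  · exact Nat.floor_le (by linarith)

/-- The sieve bound with the level chosen in terms of `T`. The condition on `B` says that it contains a
positive proportion of the primes, and the saving is a power of `log T`, uniformly in `a` and `b`. -/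
lemma sieve_main (B : ℕ → Prop) (hB : ∀ p, B p → p.Prime ∧ 5 ≤ p) {δ K : ℝ} (hδ : 0 < δ)
    (h : ∀ᶠ z : ℝ in atTop, δ * Real.log (Real.log z) - K ≤
      ∑ p ∈ Finset.range (⌊z⌋₊ + 1) with B p, 1 / (p : ℝ)) :
    ∃ η : ℝ, 0 < η ∧ ∃ C : ℝ, 0 < C ∧ ∀ᶠ T : ℝ in atTop, ∀ a b : ℤ, ∀ X Y : ℕ, T ≤ X → T ≤ Y →
      (((box2 X Y).filter fun w => ∀ p, B p → ¬ (p : ℤ) ∣ disc4 a b w.1 w.2).card : ℝ) ≤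
        C * X * Y * Real.log T ^ (-η) := by
  -- the sieving limit is `z = exp v` with `v = (log T) ^ (1 / 3)`, and `r ≈ 2 * v`: then `z ^ (2 * r)`, whose
  -- logarithm is about `4 * v ^ 2`, is a small power of `T = exp (v ^ 3)`
  refine ⟨δ / 3, by positivity, 18 * Real.exp K + 21, by positivity, ?_⟩
  have hv : Tendsto (fun T : ℝ => Real.log T ^ (1 / 3 : ℝ)) atTop atTop :=
    (tendsto_rpow_atTop (by norm_num)).comp Real.tendsto_log_atTop
  have hz := (Real.tendsto_exp_atTop.comp hv).eventually h
  have hdec : ∀ᶠ T : ℝ in atTop, Real.log T ^ (δ / 3) ≤ Real.exp (3 / 4 * Real.log T) := by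
    have := (isLittleO_rpow_exp_pos_mul_atTop (δ / 3) (b := 3 / 4) (by norm_num)).bound (c := 1) (by norm_num)
    filter_upwards [Real.tendsto_log_atTop.eventually this, Real.tendsto_log_atTop.eventually_ge_atTop 0]
      with T h1 h2
    rw [Real.norm_of_nonneg (by positivity), Real.norm_of_nonneg (by positivity), one_mul] at h1
    exact h1
  filter_upwards [hz, hdec, hv.eventually_ge_atTop 20, eventually_ge_atTop (Real.exp 1)]
    with T h1 h2 h3 hTe a b X Y hX hY
  have hT1 : 1 ≤ T := by
    have := Real.add_one_le_exp (1:ℝ); linarith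
  have hL : 1 ≤ Real.log T := (Real.le_log_iff_exp_le (by linarith)).mpr hTe
  simp only [Function.comp] at h1
  set v := Real.log T ^ (1 / 3 : ℝ) with hvdef
  have hv3 : Real.log T = v ^ 3 := by
    rw [hvdef, ← Real.rpow_natCast, ← Real.rpow_mul (by linarith)]; norm_num
  set z := Real.exp v with hzdef
  have hz1 : 1 ≤ z := Real.one_le_exp (by linarith)
  set S := (Finset.range (⌊z⌋₊ + 1)).filter B with hSdef
  have hS : ∀ p ∈ S, p.Prime ∧ 5 ≤ p := fun p hp => hB p (Finset.mem_filter.mp hp).2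
  have hSz : ∀ p ∈ S, (p : ℝ) ≤ z := fun p hp => by
    have := Finset.mem_range.mp (Finset.mem_filter.mp hp).1
    exact (Nat.le_floor_iff (by linarith)).mp (by omega)
  have hE := sum_recip_le S hz1 fun p hp => ⟨(hS p hp).1.pos, hSz p hp⟩
  rw [hzdef, Real.log_exp] at hE
  set E := ∑ p ∈ S, 1 / (p : ℝ) with hEdef
  set r := ⌈2 * (1 + v)⌉₊ with hr
  have hr1 : 2 * (1 + v) ≤ r := Nat.le_ceil _
  have hr2 : (r : ℝ) ≤ 2 * (1 + v) + 1 := (Nat.ceil_lt_add_one (by linarith)).le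
  have h4 := sieve_core S hS hz1 hSz r (by linarith) a b X Y
  have h5 : (((box2 X Y).filter fun w => ∀ p, B p → ¬ (p : ℤ) ∣ disc4 a b w.1 w.2).card : ℝ) ≤
      ((box2 X Y).filter fun w => ∀ p ∈ S, ¬ (p : ℤ) ∣ disc4 a b w.1 w.2).card := by
    norm_cast
    refine Finset.card_le_card fun w hw => ?_
    rw [Finset.mem_filter] at hw ⊢
    exact ⟨hw.1, fun p hp => hw.2 p (Finset.mem_filter.mp hp).2⟩
  refine h5.trans (h4.trans ?_)
  have hX1 : (1 : ℝ) ≤ X := by linarith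
  have hY1 : (1 : ℝ) ≤ Y := by linarith
  have hexp : Real.exp (-E) ≤ Real.exp K * Real.log T ^ (-(δ / 3)) := by
    rw [Real.log_exp] at h1
    have : Real.log T ^ (-(δ / 3)) = Real.exp (-(δ * Real.log v)) := by
      rw [hv3, Real.rpow_def_of_pos (by positivity), Real.log_pow]
      congr 1; push_cast; ring
    rw [this, ← Real.exp_add]
    apply Real.exp_le_exp.mpr
    linarith
  have hzr : z ^ (2 * r) ≤ Real.exp (1 / 4 * Real.log T) := by
    rw [hzdef, ← Real.exp_nat_mul]
    apply Real.exp_le_exp.mpr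
    rw [hv3]
    push_cast
    nlinarith [mul_nonneg (by linarith : 0 ≤ v) (by linarith : 0 ≤ v), mul_nonneg (mul_nonneg (by linarith : 0 ≤ v) (by linarith : 0 ≤ v)) (by linarith : 0 ≤ v - 20)]
  have hlast : Real.exp (-(3 / 4) * Real.log T) ≤ Real.log T ^ (-(δ / 3)) := by
    rw [Real.rpow_neg (by linarith), neg_mul, Real.exp_neg]
    exact inv_anti₀ (by positivity) h2
  set q := Real.exp (1 / 4 * Real.log T) with hq
  have hq1 : 1 ≤ q := Real.one_le_exp (by linarith)
  have hq4 : q * q * q * q = T := by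
    rw [hq, ← Real.exp_add, ← Real.exp_add, ← Real.exp_add]
    ring_nf
    exact Real.exp_log (by linarith)
  have hqT : T * Real.exp (-(3 / 4) * Real.log T) = q := by
    nth_rw 1 [← Real.exp_log (show 0 < T by linarith)]
    rw [← Real.exp_add, hq]; ring_nf
  set u := Real.exp (-(3 / 4) * Real.log T) with hu
  have hupos : 0 < u := Real.exp_pos _
  have hT0 : 0 < T := by linarith
  have herr : 3 * z ^ (2 * r) * ((2 * X + 1) + (2 * Y + 1) + z ^ (2 * r)) ≤ 21 * X * Y * u := by
    have hqq : q ≤ T := by rw [← hq4]; nlinarith [mul_nonneg (by linarith : 0 ≤ q) (by linarith : 0 ≤ q - 1), mul_nonneg (mul_nonneg (by linarith : 0 ≤ q) (by linarith : 0 ≤ q)) (by linarith : 0 ≤ q - 1), mul_nonneg (mul_nonneg (mul_nonneg (by linarith : 0 ≤ q) (by linarith : 0 ≤ q)) (by linarith : 0 ≤ q)) (by linarith : 0 ≤ q - 1)]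
    calc 3 * z ^ (2 * r) * ((2 * X + 1) + (2 * Y + 1) + z ^ (2 * r))
        ≤ 3 * q * ((2 * X + X) + (2 * Y + Y) + X) := by gcongr; linarith
      _ = 3 * u * (4 * (T * X) + 3 * (T * Y)) := by rw [← hqT]; ring
      _ ≤ 3 * u * (4 * (Y * X) + 3 * (X * Y)) := by gcongr
      _ = _ := by ring
  calc _ ≤ (2 * X + X) * (2 * Y + Y) * (2 * (Real.exp K * Real.log T ^ (-(δ / 3)))) +
        21 * X * Y * Real.log T ^ (-(δ / 3)) := by
        refine add_le_add ?_ (herr.trans ?_)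
        · gcongr
        · gcongr
    _ = _ := by ring
end

/-! ### The binary cubic form of a cubic field -/

section
open NumberField
variable {k : Type*} [Field k] [NumberField k]

/-- `1, ω, θ` generate the ring of integers as an abelian group. -/
def SpansInt (ω θ : 𝓞 k) : Prop := ∀ τ : 𝓞 k, ∃ x y z : ℤ, τ = x + y * ω + z * θ

/-- The binary cubic form `(a, b, c, d)` is the one attached by Levi (Delone–Faddeev) to the
normalised integral basis `1, ω, θ` of a cubic field. -/
structure IsMaxForm (a b c d : ℤ) (ω θ : 𝓞 k) : Prop where
  span : SpansInt ω θ
  sq₁ : ω ^ 2 = -(a * c) - b * ω + a * θ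
  mul : ω * θ = -(a * d)
  sq₂ : θ ^ 2 = -(b * d) - d * ω + c * θ

lemma SpansInt.indep (hk : Module.finrank ℚ k = 3) {ω θ : 𝓞 k} (h : SpansInt ω θ) {x y z : ℤ}
    (h0 : (x : 𝓞 k) + y * ω + z * θ = 0) : x = 0 ∧ y = 0 ∧ z = 0 := by
  have hli : LinearIndependent ℤ ![(1 : 𝓞 k), ω, θ] := by
    refine linearIndependent_of_top_le_span_of_card_eq_finrank ?_ ?_
    · intro τ _
      obtain ⟨x, y, z, rfl⟩ := h τ
      have e : (x : 𝓞 k) + y * ω + z * θ = x • (1 : 𝓞 k) + y • ω + z • θ := by simp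
      rw [e]
      refine add_mem (add_mem ?_ ?_) ?_ <;> refine Submodule.smul_mem _ _ (Submodule.subset_span ?_)
      · exact ⟨0, rfl⟩
      · exact ⟨1, rfl⟩
      · exact ⟨2, rfl⟩
    · rw [RingOfIntegers.rank, hk]; rfl
  have := Fintype.linearIndependent_iff.mp hli ![x, y, z] (by
    simp [Fin.sum_univ_three]
    exact h0)
  exact ⟨this 0, this 1, this 2⟩

lemma SpansInt.ext (hk : Module.finrank ℚ k = 3) {ω θ : 𝓞 k} (h : SpansInt ω θ) {x y z x' y' z' : ℤ}
    (h0 : (x : 𝓞 k) + y * ω + z * θ = x' + y' * ω + z' * θ) : x = x' ∧ y = y' ∧ z = z' := by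
  have := h.indep hk (x := x - x') (y := y - y') (z := z - z') (by push_cast; linear_combination h0)
  omega

lemma exists_spansInt (hk : Module.finrank ℚ k = 3) : ∃ ω θ : 𝓞 k, SpansInt ω θ := by
  set N : Submodule ℤ (𝓞 k) := Submodule.span ℤ {1} with hN
  have htf : Module.IsTorsionFree ℤ (𝓞 k ⧸ N) := by
    rw [Module.isTorsionFree_iff_smul_eq_zero]
    intro n x hx
    by_cases hn : n = 0
    · exact Or.inl hn
    right
    obtain ⟨τ, rfl⟩ := Submodule.Quotient.mk_surjective N x
    rw [← Submodule.Quotient.mk_smul, Submodule.Quotient.mk_eq_zero, hN,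
      Submodule.mem_span_singleton] at hx
    rw [Submodule.Quotient.mk_eq_zero, hN, Submodule.mem_span_singleton]
    obtain ⟨m, hm⟩ := hx
    -- an integral rational number is an integer
    have hτ : algebraMap (𝓞 k) k τ = ((m / n : ℚ) : k) := by
      have h1 := congrArg (algebraMap (𝓞 k) k) hm
      simp at h1
      push_cast
      rw [eq_div_iff (by exact_mod_cast hn), h1]; ring
    have h2 : IsIntegral ℤ ((m / n : ℚ)) := by
      have := RingOfIntegers.isIntegral_coe τ
      rw [hτ] at this
      have h3 : IsIntegral ℤ (algebraMap ℚ k (m / n : ℚ)) := by simpa using this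
      exact (isIntegral_algebraMap_iff (algebraMap ℚ k).injective).mp h3
    obtain ⟨l, hl⟩ := IsIntegrallyClosed.isIntegral_iff.mp h2
    refine ⟨l, ?_⟩
    apply RingOfIntegers.coe_injective
    rw [hτ, ← hl]
    simp
  have hfr : Module.finrank ℤ (𝓞 k ⧸ N) = 2 := by
    have h1 := Submodule.finrank_quotient_add_finrank N
    have h2 := (LinearEquiv.toSpanNonzeroSingleton ℤ (𝓞 k) 1 one_ne_zero).finrank_eq
    rw [Module.finrank_self] at h2
    rw [RingOfIntegers.rank, hk] at h1
    change _ = Module.finrank ℤ N at h2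
    omega
  set e := Module.finBasisOfFinrankEq ℤ (𝓞 k ⧸ N) hfr
  obtain ⟨ω, hω⟩ := Submodule.Quotient.mk_surjective N (e 0)
  obtain ⟨θ, hθ⟩ := Submodule.Quotient.mk_surjective N (e 1)
  refine ⟨ω, θ, fun τ => ?_⟩
  have h1 := e.sum_repr (Submodule.Quotient.mk τ)
  rw [Fin.sum_univ_two, ← hω, ← hθ, ← Submodule.Quotient.mk_smul, ← Submodule.Quotient.mk_smul,
    ← Submodule.Quotient.mk_add, eq_comm, Submodule.Quotient.eq] at h1
  obtain ⟨x, hx⟩ := Submodule.mem_span_singleton.mp h1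
  refine ⟨x, e.repr (Submodule.Quotient.mk τ) 0, e.repr (Submodule.Quotient.mk τ) 1, ?_⟩
  rw [zsmul_eq_mul, zsmul_eq_mul, zsmul_eq_mul] at hx
  linear_combination -hx

/-- The translates are chosen such that the product of the two basis elements is a rational integer. -/
lemma SpansInt.exists_maxForm (hk : Module.finrank ℚ k = 3) {ω θ : 𝓞 k} (h : SpansInt ω θ) :
    ∃ (a b c d n m : ℤ), IsMaxForm a b c d (ω + (n : 𝓞 k)) (θ + (m : 𝓞 k)) := by
  obtain ⟨q0, q1, q2, hq⟩ := h (ω * θ)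
  have h' : SpansInt (ω - (q2 : 𝓞 k)) (θ - (q1 : 𝓞 k)) := by
    intro τ
    obtain ⟨x, y, z, rfl⟩ := h τ
    exact ⟨x + y * q2 + z * q1, y, z, by push_cast; ring⟩
  set w := ω - (q2 : 𝓞 k) with hw
  set t := θ - (q1 : 𝓞 k) with ht
  set n0 : ℤ := q0 + q1 * q2 with hn0
  have hwt : w * t = n0 := by rw [hw, ht, hn0]; push_cast; linear_combination hq
  obtain ⟨p0, p1, p2, hp⟩ := h' (w ^ 2)
  obtain ⟨r0, r1, r2, hr⟩ := h' (t ^ 2)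
  obtain ⟨e1, e2, e3⟩ := h'.ext hk (x := p1 * n0 + p2 * r0) (y := p2 * r1) (z := p0 + p2 * r2)
    (x' := 0) (y' := n0) (z' := 0) (by
      push_cast
      linear_combination (-t) * hp - p2 * hr + (w - p1) * hwt)
  obtain ⟨f1, f2, f3⟩ := h'.ext hk (x := r1 * p0 + r2 * n0) (y := r0 + r1 * p1) (z := r1 * p2)
    (x' := 0) (y' := 0) (z' := n0) (by
      push_cast
      linear_combination (-w) * hr - r1 * hp + (t - r2) * hwt)
  refine ⟨p2, -p1, r2, -r1, -q2, -q1, ?_, ?_, ?_, ?_⟩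
  · convert h' using 1 <;> push_cast <;> ring
  all_goals
    have c1 : ω + ((-q2 : ℤ) : 𝓞 k) = w := by rw [hw]; push_cast; ring
    have c2 : θ + ((-q1 : ℤ) : 𝓞 k) = t := by rw [ht]; push_cast; ring
    rw [c1]
    try rw [c2]
    push_cast
  · have e3' := congrArg (Int.cast : ℤ → 𝓞 k) e3
    push_cast at e3'
    linear_combination hp + e3'
  · have e2' := congrArg (Int.cast : ℤ → 𝓞 k) e2
    push_cast at e2'
    linear_combination hwt - e2'
  · have f2' := congrArg (Int.cast : ℤ → 𝓞 k) f2
    push_cast at f2'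
    linear_combination hr + f2'

end

/-! ### Reduction of binary cubic forms -/

section
/-- Reduction of positive definite binary quadratic forms. -/
lemma gauss_reduce {A B C : ℝ} (hA : 0 < A) (hd : 0 < A * C - B ^ 2) :
    ∃ α β γ δ : ℤ, α * δ - β * γ = 1 ∧
      γ ^ 2 * C + 2 * γ * δ * B + δ ^ 2 * A ≤ α ^ 2 * C + 2 * α * β * B + β ^ 2 * A ∧
      2 * |α * γ * C + (α * δ + β * γ) * B + β * δ * A| ≤ γ ^ 2 * C + 2 * γ * δ * B + δ ^ 2 * A := by
  set S := Real.sqrt (A * C - B ^ 2) with hS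
  have hS2 : S ^ 2 = A * C - B ^ 2 := Real.sq_sqrt hd.le
  have hSpos : 0 < S := Real.sqrt_pos.mpr hd
  set τ : UpperHalfPlane := ⟨⟨B / A, S / A⟩, div_pos hSpos hA⟩ with hτ
  obtain ⟨g, hg⟩ := ModularGroup.exists_smul_mem_fd τ
  set α := g 0 0
  set β := g 0 1
  set γ := g 1 0
  set δ := g 1 1
  have hdet : α * δ - β * γ = 1 := by
    have := g.det_coe
    rw [Matrix.det_fin_two] at this
    exact this
  have hgz : ((g • τ : UpperHalfPlane) : ℂ) = (α * (τ : ℂ) + β) / (γ * (τ : ℂ) + δ) := by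
    rw [UpperHalfPlane.coe_specialLinearGroup_apply]
    simp only [algebraMap_int_eq, eq_intCast, Complex.ofReal_intCast]
    rfl
  have hτre : (τ : ℂ).re = B / A := rfl
  have hτim : (τ : ℂ).im = S / A := rfl
  have hnum : A * Complex.normSq (α * (τ : ℂ) + β) = α ^ 2 * C + 2 * α * β * B + β ^ 2 * A := by
    simp only [Complex.normSq_apply, Complex.add_re, Complex.mul_re, Complex.add_im, Complex.mul_im,
      Complex.intCast_re, Complex.intCast_im, hτre, hτim]
    field_simp
    linear_combination (α : ℝ) ^ 2 * hS2
  have hden : A * Complex.normSq (γ * (τ : ℂ) + δ) = γ ^ 2 * C + 2 * γ * δ * B + δ ^ 2 * A := by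
    simp only [Complex.normSq_apply, Complex.add_re, Complex.mul_re, Complex.add_im, Complex.mul_im,
      Complex.intCast_re, Complex.intCast_im, hτre, hτim]
    field_simp
    linear_combination (γ : ℝ) ^ 2 * hS2
  have hdpos : 0 < Complex.normSq (γ * (τ : ℂ) + δ) := by
    rw [Complex.normSq_pos]
    intro h0
    have him := congrArg Complex.im h0
    have hre := congrArg Complex.re h0
    simp only [Complex.add_re, Complex.mul_re, Complex.add_im, Complex.mul_im,
      Complex.intCast_re, Complex.intCast_im, hτre, hτim] at him hre
    have hγ : (γ : ℝ) = 0 := by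
      have : (γ : ℝ) * (S / A) = 0 := by simpa using him
      rcases mul_eq_zero.mp this with h | h
      · exact h
      · exact absurd h (div_pos hSpos hA).ne'
    have hδ : (δ : ℝ) = 0 := by simpa [hγ] using hre
    rw [show γ = 0 by exact_mod_cast hγ, show δ = 0 by exact_mod_cast hδ] at hdet
    simp at hdet
  have hmid : A * ((α * (τ : ℂ) + β) / (γ * (τ : ℂ) + δ)).re * Complex.normSq (γ * (τ : ℂ) + δ) =
      α * γ * C + (α * δ + β * γ) * B + β * δ * A := by
    have hcancel : ∀ w v : ℂ, 0 < Complex.normSq v →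
        (w / v).re * Complex.normSq v = w.re * v.re + w.im * v.im := by
      intro w v hv
      rw [Complex.div_re]
      field_simp
    rw [mul_assoc, hcancel _ _ hdpos]
    simp only [Complex.add_re, Complex.mul_re, Complex.add_im, Complex.mul_im,
      Complex.intCast_re, Complex.intCast_im, hτre, hτim]
    field_simp
    linear_combination (α * γ : ℝ) * hS2
  obtain ⟨h1, h2⟩ := hg
  refine ⟨α, β, γ, δ, hdet, ?_, ?_⟩
  · rw [← hnum, ← hden]
    rw [hgz, map_div₀, le_div_iff₀ hdpos, one_mul] at h1
    gcongr
  · rw [← hmid, ← hden]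
    change |((g • τ : UpperHalfPlane) : ℂ).re| ≤ _ at h2
    rw [hgz] at h2
    rw [abs_mul, abs_mul, abs_of_pos hA, abs_of_pos hdpos]
    nlinarith [mul_pos hA hdpos]

/-- Vieta's formulas for three distinct roots of a monic cubic. -/
lemma vieta3 {E : Type*} [Field E] {p q r x y z : E} (hxy : x ≠ y) (hyz : y ≠ z) (hxz : x ≠ z)
    (hx : x ^ 3 + p * x ^ 2 + q * x + r = 0) (hy : y ^ 3 + p * y ^ 2 + q * y + r = 0)
    (hz : z ^ 3 + p * z ^ 2 + q * z + r = 0) :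
    x + y + z = -p ∧ x * y + y * z + x * z = q ∧ x * y * z = -r := by
  have h1 : x ^ 2 + x * y + y ^ 2 + p * (x + y) + q = 0 := by
    apply mul_left_cancel₀ (sub_ne_zero.mpr hxy); linear_combination hx - hy
  have h2 : x ^ 2 + x * z + z ^ 2 + p * (x + z) + q = 0 := by
    apply mul_left_cancel₀ (sub_ne_zero.mpr hxz); linear_combination hx - hz
  have h3 : x + y + z = -p := by
    apply mul_left_cancel₀ (sub_ne_zero.mpr hyz); linear_combination h1 - h2
  have hp : p = -(x + y + z) := by linear_combination h3
  have h4 : q = x * y + y * z + x * z := by subst hp; linear_combination h1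
  refine ⟨h3, h4.symm, ?_⟩
  subst hp
  subst h4
  linear_combination hx

/-- The Hermitian geometry attached to a triple of conjugates of a normalised integral basis. -/
lemma frame_identities {a b c d : ℤ} (ha : a ≠ 0) {E : Type*} [Field E] [CharZero E] (x y z x' y' z' : E)
    (hxy : x ≠ y) (hyz : y ≠ z) (hxz : x ≠ z)
    (hx : x ^ 3 + b * x ^ 2 + (a * c) * x + a ^ 2 * d = 0)
    (hy : y ^ 3 + b * y ^ 2 + (a * c) * y + a ^ 2 * d = 0)
    (hz : z ^ 3 + b * z ^ 2 + (a * c) * z + a ^ 2 * d = 0)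
    (hx' : a * x' = x ^ 2 + b * x + a * c) (hy' : a * y' = y ^ 2 + b * y + a * c)
    (hz' : a * z' = z ^ 2 + b * z + a * c) :
    let s := (y - z) * (z' - x') - (z - x) * (y' - z')
    s ^ 2 = (disc4 a b c d : E) ∧
    s * a = (y - z) * (z - x) * (x - y) ∧
    s * b = (y' - z') * (z - x) * (x - y) + (y - z) * (z' - x') * (x - y) + (y - z) * (z - x) * (x' - y') ∧
    s * c = (y - z) * (z' - x') * (x' - y') + (y' - z') * (z - x) * (x' - y') +
      (y' - z') * (z' - x') * (x - y) ∧
    s * d = (y' - z') * (z' - x') * (x' - y') := by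
  intro s
  have hac : (a : E) ≠ 0 := by exact_mod_cast ha
  obtain ⟨e1, e2, e3⟩ := vieta3 hxy hyz hxz hx hy hz
  have hb : (b : E) = -(x + y + z) := by linear_combination e1
  have hv1 : a * (y' - z') = -x * (y - z) := by rw [mul_sub, hy', hz', hb]; ring
  have hv2 : a * (z' - x') = -y * (z - x) := by rw [mul_sub, hz', hx', hb]; ring
  have hv3 : a * (x' - y') = -z * (x - y) := by rw [mul_sub, hx', hy', hb]; ring
  set v1 := y' - z'
  set v2 := z' - x'
  set v3 := x' - y'
  have hs : s * a = (y - z) * (z - x) * (x - y) := by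
    simp only [s]
    linear_combination (y - z) * hv2 - (z - x) * hv1
  refine ⟨?_, hs, ?_, ?_, ?_⟩
  · apply mul_left_cancel₀ (pow_ne_zero 2 hac)
    have h1 : (a : E) ^ 2 * s ^ 2 = ((y - z) * (z - x) * (x - y)) ^ 2 := by rw [← hs]; ring
    have h2 : (a : E) ^ 2 * (disc4 a b c d : E) = (disc4 1 b (a * c) (a ^ 2 * d) : ℤ) := by
      push_cast [disc4]; ring
    rw [h1, h2]
    push_cast [disc4]
    rw [← e2, show (a : E) ^ 2 * d = -(x * y * z) by rw [e3]; ring, hb]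
    ring
  · apply mul_left_cancel₀ hac
    rw [show (a : E) * (s * b) = (s * a) * b by ring, hs, hb]
    linear_combination -(z - x) * (x - y) * hv1 - (y - z) * (x - y) * hv2 - (y - z) * (z - x) * hv3
  · apply mul_left_cancel₀ (pow_ne_zero 2 hac)
    rw [show (a : E) ^ 2 * (s * c) = (s * a) * (a * c) by ring, hs, ← e2]
    linear_combination -(y - z) * (a * v3 * hv2 + (-y * (z - x)) * hv3)
      - (z - x) * (a * v3 * hv1 + (-x * (y - z)) * hv3) - (x - y) * (a * v2 * hv1 + (-x * (y - z)) * hv2)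
  · apply mul_left_cancel₀ (pow_ne_zero 3 hac)
    rw [show (a : E) ^ 3 * (s * d) = (s * a) * (a ^ 2 * d) by ring, hs,
      show (a : E) ^ 2 * d = -(x * y * z) by rw [e3]; ring]
    linear_combination -(a * v2) * (a * v3) * hv1 - (-x * (y - z)) * (a * v3) * hv2 -
      (-x * (y - z)) * (-y * (z - x)) * hv3
end

section
set_option linter.unusedSectionVars false
open NumberField
variable {k : Type*} [Field k] [NumberField k]

lemma IsMaxForm.a_ne (hk : Module.finrank ℚ k = 3) {a b c d : ℤ} {ω θ : 𝓞 k}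
    (h : IsMaxForm a b c d ω θ) : a ≠ 0 := by
  rintro rfl
  have h1 : ω * (ω + b) = 0 := by
    have := h.sq₁
    push_cast at this
    linear_combination this
  rcases mul_eq_zero.mp h1 with h2 | h2
  · have := h.span.indep hk (x := 0) (y := 1) (z := 0) (by push_cast; linear_combination h2)
    omega
  · have := h.span.indep hk (x := b) (y := 1) (z := 0) (by push_cast; linear_combination h2)
    omega

lemma IsMaxForm.cubic {a b c d : ℤ} {ω θ : 𝓞 k} (h : IsMaxForm a b c d ω θ) :
    ω ^ 3 + b * ω ^ 2 + (a * c) * ω + a ^ 2 * d = 0 := by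
  linear_combination ω * h.sq₁ + a * h.mul

/-- An embedding is determined by its value on `ω`. -/
lemma IsMaxForm.embedding_inj (hk : Module.finrank ℚ k = 3) {a b c d : ℤ} {ω θ : 𝓞 k}
    (h : IsMaxForm a b c d ω θ) {E : Type*} [Field E] [CharZero E] {φ ψ : k →+* E}
    (hω : φ (algebraMap (𝓞 k) k ω) = ψ (algebraMap (𝓞 k) k ω)) : φ = ψ := by
  have ha : (a : E) ≠ 0 := by exact_mod_cast h.a_ne hk
  have hθ : φ (algebraMap (𝓞 k) k θ) = ψ (algebraMap (𝓞 k) k θ) := by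
    have h1 := congrArg (fun t => φ (algebraMap (𝓞 k) k t)) h.sq₁
    have h2 := congrArg (fun t => ψ (algebraMap (𝓞 k) k t)) h.sq₁
    simp only [map_pow, map_sub, map_add, map_neg, map_mul, map_intCast] at h1 h2
    apply mul_left_cancel₀ ha
    rw [hω] at h1
    linear_combination h2 - h1
  apply IsLocalization.ringHom_ext (nonZeroDivisors (𝓞 k))
  ext τ
  obtain ⟨x, y, z, rfl⟩ := h.span τ
  simp only [RingHom.comp_apply, map_add, map_mul, map_intCast, hω, hθ]

/-- The polar form of `∑ |x_i - x_j|²` on `ℂ³`. -/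
def diffForm (x y z x' y' z' : ℂ) : ℝ :=
  ((y - z) * (starRingEnd ℂ) (y' - z')).re + ((z - x) * (starRingEnd ℂ) (z' - x')).re +
    ((x - y) * (starRingEnd ℂ) (x' - y')).re

/-- Lagrange's identity for the form `diffForm` on vectors with real pairings. -/
lemma diffForm_lagrange (x y z x' y' z' : ℂ)
    (him : (x * (starRingEnd ℂ) x' + y * (starRingEnd ℂ) y' + z * (starRingEnd ℂ) z').im = 0)
    (h1 : (x + y + z).im = 0) (h2 : (x' + y' + z').im = 0) :
    diffForm x y z x y z * diffForm x' y' z' x' y' z' - diffForm x y z x' y' z' ^ 2 =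
      3 * Complex.normSq ((y - z) * (z' - x') - (z - x) * (y' - z')) := by
  have key : ((y - z) * (starRingEnd ℂ) (y' - z')).im + ((z - x) * (starRingEnd ℂ) (z' - x')).im +
    ((x - y) * (starRingEnd ℂ) (x' - y')).im = 0 := by
    simp only [Complex.mul_im, Complex.add_im, Complex.conj_re, Complex.conj_im, Complex.sub_re,
      Complex.sub_im] at *
    linear_combination 3 * him - (x'.re + y'.re + z'.re) * h1 + (x.re + y.re + z.re) * h2
  have : (((y - z) * (starRingEnd ℂ) (y' - z')).im + ((z - x) * (starRingEnd ℂ) (z' - x')).im +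
    ((x - y) * (starRingEnd ℂ) (x' - y')).im) ^ 2 = 0 := by rw [key]; ring
  simp only [diffForm, Complex.normSq_apply, Complex.mul_im, Complex.mul_re, Complex.conj_re,
    Complex.conj_im, Complex.sub_re, Complex.sub_im] at *
  linear_combination this

lemma normSq_add3_le (p q r : ℂ) (t : ℝ) (hp : Complex.normSq p ≤ t) (hq : Complex.normSq q ≤ t)
    (hr : Complex.normSq r ≤ t) : Complex.normSq (p + q + r) ≤ 9 * t := by
  simp only [Complex.normSq_apply, Complex.add_re, Complex.add_im] at *
  linarith [sq_nonneg (p.re - q.re), sq_nonneg (p.re - r.re), sq_nonneg (q.re - r.re),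
      sq_nonneg (p.im - q.im), sq_nonneg (p.im - r.im), sq_nonneg (q.im - r.im)]

/-- A cubic field has exactly three complex embeddings. -/
lemma exists_embEquiv (hk : Module.finrank ℚ k = 3) : Nonempty (Fin 3 ≃ (k →+* ℂ)) := by
  have : Fintype.card (k →+* ℂ) = 3 := by rw [NumberField.Embeddings.card, hk]
  exact ⟨(Fintype.equivFinOfCardEq this).symm⟩

/-- Complex conjugation permutes the embeddings, so the Hermitian pairing of two conjugate vectors is real. -/
lemma sum_conj_im (e : Fin 3 ≃ (k →+* ℂ)) (s t : k) :
    (e 0 s * (starRingEnd ℂ) (e 0 t) + e 1 s * (starRingEnd ℂ) (e 1 t) +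
      e 2 s * (starRingEnd ℂ) (e 2 t)).im = 0 := by
  have h0 : e 0 s * (starRingEnd ℂ) (e 0 t) + e 1 s * (starRingEnd ℂ) (e 1 t) +
      e 2 s * (starRingEnd ℂ) (e 2 t) = ∑ φ : k →+* ℂ, φ s * (starRingEnd ℂ) (φ t) := by
    rw [← e.sum_comp, Fin.sum_univ_three]
  have hinv : Function.Involutive (ComplexEmbedding.conjugate : (k →+* ℂ) → (k →+* ℂ)) :=
    ComplexEmbedding.involutive_conjugate k
  rw [h0, ← Complex.conj_eq_iff_im, map_sum]
  simp only [map_mul, Complex.conj_conj]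
  refine Fintype.sum_equiv hinv.toPerm _ _ fun φ => ?_
  simp [ComplexEmbedding.conjugate_coe_eq]

/-- The Hermitian geometry of a normalised integral basis, in terms of real quadratic forms. -/
lemma IsMaxForm.frame (hk : Module.finrank ℚ k = 3) {a b c d : ℤ} {ω θ : 𝓞 k}
    (h : IsMaxForm a b c d ω θ) (e : Fin 3 ≃ (k →+* ℂ)) (A B C : ℝ)
    (hA : A = diffForm (e 0 ω) (e 1 ω) (e 2 ω) (e 0 ω) (e 1 ω) (e 2 ω))
    (hB : B = diffForm (e 0 ω) (e 1 ω) (e 2 ω) (e 0 θ) (e 1 θ) (e 2 θ))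
    (hC : C = diffForm (e 0 θ) (e 1 θ) (e 2 θ) (e 0 θ) (e 1 θ) (e 2 θ)) :
    0 < A ∧ disc4 a b c d ≠ 0 ∧ A * C - B ^ 2 = 3 * |(disc4 a b c d : ℝ)| ∧
    |(disc4 a b c d : ℝ)| * a ^ 2 ≤ A ^ 3 ∧ |(disc4 a b c d : ℝ)| * b ^ 2 ≤ 9 * A ^ 2 * C ∧
    |(disc4 a b c d : ℝ)| * c ^ 2 ≤ 9 * A * C ^ 2 ∧ |(disc4 a b c d : ℝ)| * d ^ 2 ≤ C ^ 3 := by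
  have hne : ∀ i j, i ≠ j → e i ω ≠ e j ω := fun i j hij h0 =>
    hij (e.injective (h.embedding_inj hk h0))
  have hcub : ∀ i, (e i ω) ^ 3 + b * (e i ω) ^ 2 + (a * c) * e i ω + a ^ 2 * d = 0 := by
    intro i
    have h1 := congrArg (fun t => e i (algebraMap (𝓞 k) k t)) h.cubic
    simpa using h1
  have hth : ∀ i, a * e i θ = (e i ω) ^ 2 + b * e i ω + a * c := by
    intro i
    have h1 := congrArg (fun t => e i (algebraMap (𝓞 k) k t)) h.sq₁
    simp only [map_pow, map_sub, map_add, map_neg, map_mul, map_intCast] at h1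
    linear_combination -h1
  have ha := h.a_ne hk
  have him := sum_conj_im e (ω : k) (θ : k)
  have h1 := sum_conj_im e (ω : k) 1
  have h2 := sum_conj_im e (θ : k) 1
  simp only [map_one, mul_one] at h1 h2
  have h01 := hne 0 1 (by decide)
  have h12 := hne 1 2 (by decide)
  have h02 := hne 0 2 (by decide)
  have lag := diffForm_lagrange _ _ _ _ _ _ him h1 h2
  obtain ⟨hs2, hsa, hsb, hsc, hsd⟩ := frame_identities ha (e 0 ω) (e 1 ω) (e 2 ω) (e 0 θ) (e 1 θ)
    (e 2 θ) h01 h12 h02 (hcub 0) (hcub 1) (hcub 2) (hth 0) (hth 1) (hth 2)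
  rw [← hA, ← hB, ← hC] at lag
  generalize e 0 ω = x at *
  generalize e 1 ω = y at *
  generalize e 2 ω = z at *
  generalize e 0 θ = x' at *
  generalize e 1 θ = y' at *
  generalize e 2 θ = z' at *
  generalize (y - z) * (z' - x') - (z - x) * (y' - z') = s at *
  have hD : Complex.normSq s = |(disc4 a b c d : ℝ)| := by
    have := congrArg Complex.normSq hs2
    rw [map_pow, ← Complex.ofReal_intCast, Complex.normSq_ofReal] at this
    have h3 : Complex.normSq s ^ 2 = |(disc4 a b c d : ℝ)| ^ 2 := by rw [this, sq_abs]; ring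
    exact (sq_eq_sq₀ (Complex.normSq_nonneg _) (abs_nonneg _)).mp h3
  rw [hD] at lag
  have hA' : A = Complex.normSq (y - z) + Complex.normSq (z - x) + Complex.normSq (x - y) := by
    rw [hA]; simp [diffForm, Complex.normSq_apply]; ring
  have hC' : C = Complex.normSq (y' - z') + Complex.normSq (z' - x') + Complex.normSq (x' - y') := by
    rw [hC]; simp [diffForm, Complex.normSq_apply]; ring
  have hu1 := Complex.normSq_nonneg (y - z)
  have hu2 := Complex.normSq_nonneg (z - x)
  have hu3 := Complex.normSq_nonneg (x - y)
  have hv1 := Complex.normSq_nonneg (y' - z')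
  have hv2 := Complex.normSq_nonneg (z' - x')
  have hv3 := Complex.normSq_nonneg (x' - y')
  have hApos : 0 < A := by
    have : 0 < Complex.normSq (y - z) := by rw [Complex.normSq_pos]; exact sub_ne_zero.mpr h12
    linarith
  have hinteg : ∀ n : ℤ, Complex.normSq (s * n) = |(disc4 a b c d : ℝ)| * n ^ 2 := by
    intro n
    rw [map_mul, hD, ← Complex.ofReal_intCast, Complex.normSq_ofReal]; ring
  have hCn : 0 ≤ C := by linarith
  have tri := @normSq_add3_le
  have prod3 : ∀ p q r : ℂ, ∀ P Q R : ℝ, Complex.normSq p ≤ P → Complex.normSq q ≤ Q →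
      Complex.normSq r ≤ R → Complex.normSq (p * q * r) ≤ P * Q * R := by
    intro p q r P Q R hp hq hr
    rw [map_mul, map_mul]
    have := Complex.normSq_nonneg p
    have := Complex.normSq_nonneg q
    have := Complex.normSq_nonneg r
    have hP : 0 ≤ P := by linarith
    have hQ : 0 ≤ Q := by linarith
    gcongr
  have u1 : Complex.normSq (y - z) ≤ A := by linarith
  have u2 : Complex.normSq (z - x) ≤ A := by linarith
  have u3 : Complex.normSq (x - y) ≤ A := by linarith
  have v1 : Complex.normSq (y' - z') ≤ C := by linarith
  have v2 : Complex.normSq (z' - x') ≤ C := by linarith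
  have v3 : Complex.normSq (x' - y') ≤ C := by linarith
  refine ⟨hApos, ?_, lag, ?_, ?_, ?_, ?_⟩
  · intro h0
    rw [h0] at hs2
    have hs : s = 0 := by simpa using hs2
    rw [hs, zero_mul] at hsa
    have := mul_ne_zero (mul_ne_zero (sub_ne_zero.mpr h12) (sub_ne_zero.mpr h02.symm)) (sub_ne_zero.mpr h01)
    exact this hsa.symm
  · rw [← hinteg, hsa]
    exact (prod3 _ _ _ _ _ _ u1 u2 u3).trans_eq (by ring)
  · rw [← hinteg, hsb]
    refine (tri _ _ _ (A ^ 2 * C) ?_ ?_ ?_).trans_eq (by ring)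
    · exact (prod3 _ _ _ _ _ _ v1 u2 u3).trans_eq (by ring)
    · exact (prod3 _ _ _ _ _ _ u1 v2 u3).trans_eq (by ring)
    · exact (prod3 _ _ _ _ _ _ u1 u2 v3).trans_eq (by ring)
  · rw [← hinteg, hsc]
    refine (tri _ _ _ (A * C ^ 2) ?_ ?_ ?_).trans_eq (by ring)
    · exact (prod3 _ _ _ _ _ _ u1 v2 v3).trans_eq (by ring)
    · exact (prod3 _ _ _ _ _ _ v1 u2 v3).trans_eq (by ring)
    · exact (prod3 _ _ _ _ _ _ v1 v2 u3).trans_eq (by ring)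
  · rw [← hinteg, hsd]
    exact (prod3 _ _ _ _ _ _ v1 v2 v3).trans_eq (by ring)

/-- Every cubic field has a normalised integral basis whose form is reduced. -/
lemma exists_reduced (hk : Module.finrank ℚ k = 3) :
    ∃ (a b c d : ℤ) (ω θ : 𝓞 k), IsMaxForm a b c d ω θ ∧ disc4 a b c d ≠ 0 ∧
      ∃ A C : ℝ, 0 < A ∧ A ≤ C ∧ A * C ≤ 4 * |(disc4 a b c d : ℝ)| ∧
    |(disc4 a b c d : ℝ)| * a ^ 2 ≤ A ^ 3 ∧ |(disc4 a b c d : ℝ)| * b ^ 2 ≤ 9 * A ^ 2 * C ∧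
    |(disc4 a b c d : ℝ)| * c ^ 2 ≤ 9 * A * C ^ 2 ∧ |(disc4 a b c d : ℝ)| * d ^ 2 ≤ C ^ 3 := by
  obtain ⟨e⟩ := exists_embEquiv hk
  obtain ⟨ω₀, θ₀, hs⟩ := exists_spansInt hk
  obtain ⟨a₀, b₀, c₀, d₀, n₀, m₀, h₀⟩ := hs.exists_maxForm hk
  set ω := ω₀ + (n₀ : 𝓞 k)
  set θ := θ₀ + (m₀ : 𝓞 k)
  obtain ⟨hA, hD, hlag, -⟩ := h₀.frame hk e _ _ _ rfl rfl rfl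
  set A := diffForm (e 0 ω) (e 1 ω) (e 2 ω) (e 0 ω) (e 1 ω) (e 2 ω) with hAd
  set B := diffForm (e 0 ω) (e 1 ω) (e 2 ω) (e 0 θ) (e 1 θ) (e 2 θ) with hBd
  set C := diffForm (e 0 θ) (e 1 θ) (e 2 θ) (e 0 θ) (e 1 θ) (e 2 θ) with hCd
  have hDpos : 0 < |(disc4 a₀ b₀ c₀ d₀ : ℝ)| := abs_pos.mpr (by exact_mod_cast hD)
  obtain ⟨α, β, γ, δ, hdet, hle, hmid⟩ := gauss_reduce (A := A) (B := B) (C := C) hA (by linarith)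
  set ω₁ : 𝓞 k := δ * ω + γ * θ with hω₁
  set θ₁ : 𝓞 k := β * ω + α * θ with hθ₁
  have hs₁ : SpansInt ω₁ θ₁ := by
    intro τ
    obtain ⟨x, y, z, rfl⟩ := h₀.span τ
    refine ⟨x, α * y - β * z, δ * z - γ * y, ?_⟩
    have hdet' : (α : 𝓞 k) * δ - β * γ = 1 := by exact_mod_cast congrArg (Int.cast : ℤ → 𝓞 k) hdet
    rw [hω₁, hθ₁]
    push_cast
    linear_combination (-(y * ω) - z * θ) * hdet'
  obtain ⟨a, b, c, d, n, m, h⟩ := hs₁.exists_maxForm hk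
  obtain ⟨hA1, hD1, hlag1, hb⟩ := h.frame hk e _ _ _ rfl rfl rfl
  set A₁ := diffForm (e 0 (ω₁ + (n : 𝓞 k) : 𝓞 k)) (e 1 (ω₁ + (n : 𝓞 k) : 𝓞 k))
    (e 2 (ω₁ + (n : 𝓞 k) : 𝓞 k)) (e 0 (ω₁ + (n : 𝓞 k) : 𝓞 k)) (e 1 (ω₁ + (n : 𝓞 k) : 𝓞 k))
    (e 2 (ω₁ + (n : 𝓞 k) : 𝓞 k)) with hA₁
  set B₁ := diffForm (e 0 (ω₁ + (n : 𝓞 k) : 𝓞 k)) (e 1 (ω₁ + (n : 𝓞 k) : 𝓞 k))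
    (e 2 (ω₁ + (n : 𝓞 k) : 𝓞 k)) (e 0 (θ₁ + (m : 𝓞 k) : 𝓞 k)) (e 1 (θ₁ + (m : 𝓞 k) : 𝓞 k))
    (e 2 (θ₁ + (m : 𝓞 k) : 𝓞 k)) with hB₁
  set C₁ := diffForm (e 0 (θ₁ + (m : 𝓞 k) : 𝓞 k)) (e 1 (θ₁ + (m : 𝓞 k) : 𝓞 k))
    (e 2 (θ₁ + (m : 𝓞 k) : 𝓞 k)) (e 0 (θ₁ + (m : 𝓞 k) : 𝓞 k)) (e 1 (θ₁ + (m : 𝓞 k) : 𝓞 k))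
    (e 2 (θ₁ + (m : 𝓞 k) : 𝓞 k)) with hC₁
  have eA : A₁ = γ ^ 2 * C + 2 * γ * δ * B + δ ^ 2 * A := by
    simp only [hA₁, hω₁, hAd, hBd, hCd, map_add, map_mul, map_intCast]
    simp only [diffForm, Complex.mul_re, Complex.mul_im, Complex.conj_re, Complex.conj_im, Complex.sub_re,
        Complex.sub_im, Complex.add_re, Complex.add_im, Complex.intCast_re, Complex.intCast_im]
    ring
  have eC : C₁ = α ^ 2 * C + 2 * α * β * B + β ^ 2 * A := by
    simp only [hC₁, hθ₁, hAd, hBd, hCd, map_add, map_mul, map_intCast]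
    simp only [diffForm, Complex.mul_re, Complex.mul_im, Complex.conj_re, Complex.conj_im, Complex.sub_re,
        Complex.sub_im, Complex.add_re, Complex.add_im, Complex.intCast_re, Complex.intCast_im]
    ring
  have eB : B₁ = α * γ * C + (α * δ + β * γ) * B + β * δ * A := by
    simp only [hB₁, hω₁, hθ₁, hAd, hBd, hCd, map_add, map_mul, map_intCast]
    simp only [diffForm, Complex.mul_re, Complex.mul_im, Complex.conj_re, Complex.conj_im, Complex.sub_re,
        Complex.sub_im, Complex.add_re, Complex.add_im, Complex.intCast_re, Complex.intCast_im]
    ring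
  rw [← eA, ← eC] at hle
  rw [← eA, ← eB] at hmid
  refine ⟨a, b, c, d, _, _, h, hD1, A₁, C₁, hA1, hle, ?_, hb⟩
  have h4 : 4 * B₁ ^ 2 ≤ A₁ ^ 2 := by
    rw [← sq_abs B₁]
    nlinarith [abs_nonneg B₁]
  nlinarith [mul_le_mul_of_nonneg_left hle hA1.le]
end

/-! ### Prime powers dividing the discriminant of a maximal form -/

section
set_option linter.unusedSectionVars false
open NumberField
variable {k : Type*} [Field k] [NumberField k]

lemma IsMaxForm.translate {a b c d : ℤ} {ω θ : 𝓞 k} (h : IsMaxForm a b c d ω θ) (t : ℤ) :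
    ∃ ω' θ' : 𝓞 k, IsMaxForm a (b + 3 * t * a) (c + 2 * t * b + 3 * t ^ 2 * a)
      (d + t * c + t ^ 2 * b + t ^ 3 * a) ω' θ' := by
  refine ⟨ω - (t * a : 𝓞 k), θ + t * ω + ((t * b + t ^ 2 * a : ℤ) : 𝓞 k), ?_, ?_, ?_, ?_⟩
  · intro τ
    obtain ⟨x, y, z, rfl⟩ := h.span τ
    refine ⟨x + (y - t * z) * t * a - z * (t * b + t ^ 2 * a), y - t * z, z, ?_⟩
    push_cast
    ring
  · push_cast
    linear_combination h.sq₁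
  · push_cast
    linear_combination h.mul + t * h.sq₁
  · push_cast
    linear_combination h.sq₂ + 2 * t * h.mul + t ^ 2 * h.sq₁

lemma IsMaxForm.swap {a b c d : ℤ} {ω θ : 𝓞 k} (h : IsMaxForm a b c d ω θ) :
    IsMaxForm (-d) (-c) (-b) (-a) θ ω := by
  refine ⟨?_, ?_, ?_, ?_⟩
  · intro τ
    obtain ⟨x, y, z, rfl⟩ := h.span τ
    exact ⟨x, z, y, by ring⟩
  · push_cast
    linear_combination h.sq₂
  · push_cast
    linear_combination h.mul
  · push_cast
    linear_combination h.sq₁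

lemma disc4_translate (a b c d t : ℤ) : disc4 a (b + 3 * t * a) (c + 2 * t * b + 3 * t ^ 2 * a)
      (d + t * c + t ^ 2 * b + t ^ 3 * a) = disc4 a b c d := by
  simp only [disc4]; ring

lemma disc4_swap (a b c d : ℤ) : disc4 (-d) (-c) (-b) (-a) = disc4 a b c d := by
  simp only [disc4]; ring

/-- Maximality of the ring of integers at `p`. -/
lemma IsMaxForm.not_div (hk : Module.finrank ℚ k = 3) {a b c d : ℤ} {ω θ : 𝓞 k}
    (h : IsMaxForm a b c d ω θ) {p : ℕ} (hp : p.Prime) (h1 : (p : ℤ) ∣ b) (h2 : (p : ℤ) ^ 2 ∣ a * c)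
    (h3 : (p : ℤ) ^ 3 ∣ a ^ 2 * d) : False := by
  obtain ⟨u, hu⟩ := h1
  obtain ⟨v, hv⟩ := h2
  obtain ⟨w, hw⟩ := h3
  have hp0 : (p : k) ≠ 0 := by exact_mod_cast hp.ne_zero
  have hinteg : IsIntegral ℤ ((ω : k) / p) := by
    refine ⟨X ^ 3 + C u * X ^ 2 + C v * X + C w, by monicity!, ?_⟩
    simp only [eval₂_add, eval₂_mul, eval₂_pow, eval₂_X, eval₂_C]
    simp only [algebraMap_int_eq, eq_intCast]
    have hc := congrArg (algebraMap (𝓞 k) k) h.cubic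
    simp only [map_add, map_mul, map_pow, map_intCast, map_zero] at hc
    have hu' : (b : k) = p * u := by exact_mod_cast congrArg (Int.cast : ℤ → k) hu
    have hv' : (a * c : k) = p ^ 2 * v := by exact_mod_cast congrArg (Int.cast : ℤ → k) hv
    have hw' : (a ^ 2 * d : k) = p ^ 3 * w := by exact_mod_cast congrArg (Int.cast : ℤ → k) hw
    rw [hu', hv', hw'] at hc
    field_simp
    linear_combination hc
  obtain ⟨x, y, z, hτ⟩ := h.span ⟨_, hinteg⟩
  have : (p : 𝓞 k) * (x + y * ω + z * θ) = ω := by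
    rw [← hτ]
    apply RingOfIntegers.ext
    change (p : k) * ((ω : k) / p) = ω
    field_simp
  have := h.span.indep hk (x := p * x) (y := p * y - 1) (z := p * z) (by
    push_cast; linear_combination this)
  have h5 : (p : ℤ) ∣ 1 := ⟨y, by linarith [this.2.1]⟩
  exact (Nat.prime_iff_prime_int.mp hp).not_dvd_one h5

lemma dbl_zmod2 : ∀ a b c d : ZMod 2, b ^ 2 * c ^ 2 - 4 * a * c ^ 3 - 4 * b ^ 3 * d - 27 * a ^ 2 * d ^ 2
    + 18 * a * b * c * d = 0 → (a = 0 ∧ b = 0) ∨ ∃ r, a * r ^ 3 + b * r ^ 2 + c * r + d = 0 ∧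
      3 * a * r ^ 2 + 2 * b * r + c = 0 := by decide

set_option maxRecDepth 10000 in
lemma dbl_zmod3 : ∀ a b c d : ZMod 3, b ^ 2 * c ^ 2 - 4 * a * c ^ 3 - 4 * b ^ 3 * d - 27 * a ^ 2 * d ^ 2
    + 18 * a * b * c * d = 0 → (a = 0 ∧ b = 0) ∨ ∃ r, a * r ^ 3 + b * r ^ 2 + c * r + d = 0 ∧
      3 * a * r ^ 2 + 2 * b * r + c = 0 := by decide

/-- A cubic with vanishing discriminant has a rational multiple root (possibly at infinity). -/
lemma dbl_field {E : Type*} [Field E] (h2 : (2 : E) ≠ 0) (h3 : (3 : E) ≠ 0) (a b c d : E)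
    (h : b ^ 2 * c ^ 2 - 4 * a * c ^ 3 - 4 * b ^ 3 * d - 27 * a ^ 2 * d ^ 2 + 18 * a * b * c * d = 0) :
    (a = 0 ∧ b = 0) ∨ ∃ r, a * r ^ 3 + b * r ^ 2 + c * r + d = 0 ∧
      3 * a * r ^ 2 + 2 * b * r + c = 0 := by
  by_cases ha : a = 0
  · by_cases hb : b = 0
    · exact Or.inl ⟨ha, hb⟩
    right
    subst ha
    have h' : c ^ 2 = 4 * b * d := by
      apply mul_left_cancel₀ (pow_ne_zero 2 hb); linear_combination h
    refine ⟨-c / (2 * b), ?_, ?_⟩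
    · have hr : 2 * b * (-c / (2 * b)) = -c := by field_simp
      have h4 : (4 : E) ≠ 0 := by
        have := pow_ne_zero 2 h2; norm_num at this; exact this
      apply mul_left_cancel₀ (mul_ne_zero h4 hb)
      linear_combination (2 * b * (-c / (2 * b)) + c) * hr - h'
    · field_simp
      ring
  right
  by_cases hP : b ^ 2 - 3 * a * c = 0
  · have hQ : b * c - 9 * a * d = 0 := by
      have : (b * c - 9 * a * d) ^ 2 = 0 := by
        linear_combination -3 * h + 4 * (c ^ 2 - 3 * b * d) * hP
      exact pow_eq_zero_iff (two_ne_zero) |>.mp this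
    refine ⟨-b / (3 * a), ?_, ?_⟩
    · have h9 : (9 : E) ≠ 0 := by
        have := pow_ne_zero 2 h3; norm_num at this; exact this
      field_simp
      linear_combination (2 * b) * hP - 3 * a * hQ
    · field_simp
      linear_combination -hP
  · set P := b ^ 2 - 3 * a * c with hPd
    set Q := b * c - 9 * a * d with hQd
    have hf' : 3 * a * (-Q / (2 * P)) ^ 2 + 2 * b * (-Q / (2 * P)) + c = 0 := by
      have : 3 * a * Q ^ 2 - 4 * b * P * Q + 4 * c * P ^ 2 = 0 := by
        rw [hPd, hQd]; linear_combination (-9 * a) * h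
      have h4 : (4 : E) ≠ 0 := by
        have := pow_ne_zero 2 h2; norm_num at this; exact this
      field_simp
      linear_combination this
    have hr : 2 * P * (-Q / (2 * P)) = -Q := by field_simp
    refine ⟨-Q / (2 * P), ?_, hf'⟩
    set r := -Q / (2 * P)
    have h9 : (9 : E) ≠ 0 := by
      have := pow_ne_zero 2 h3; norm_num at this; exact this
    apply mul_left_cancel₀ (mul_ne_zero h9 ha)
    linear_combination (3 * a * r + b) * hf' - hr

/-- If `p` divides the discriminant, the multiple root modulo `p` may be moved to infinity. -/
lemma IsMaxForm.move {a b c d : ℤ} {ω θ : 𝓞 k} (h : IsMaxForm a b c d ω θ) {p : ℕ} (hp : p.Prime)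
    (hd : (p : ℤ) ∣ disc4 a b c d) :
    ∃ (a' b' c' d' : ℤ) (ω' θ' : 𝓞 k), IsMaxForm a' b' c' d' ω' θ' ∧
      disc4 a' b' c' d' = disc4 a b c d ∧ (p : ℤ) ∣ a' ∧ (p : ℤ) ∣ b' := by
  have : Fact p.Prime := ⟨hp⟩
  have hd' : (b : ZMod p) ^ 2 * c ^ 2 - 4 * a * c ^ 3 - 4 * b ^ 3 * d - 27 * a ^ 2 * d ^ 2
    + 18 * a * b * c * d = 0 := by
    rw [← ZMod.intCast_zmod_eq_zero_iff_dvd] at hd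
    push_cast [disc4] at hd
    exact hd
  have key : ((a : ZMod p) = 0 ∧ (b : ZMod p) = 0) ∨ ∃ r : ZMod p, a * r ^ 3 + b * r ^ 2 + c * r + d = 0 ∧
      3 * a * r ^ 2 + 2 * b * r + c = 0 := by
    by_cases h2 : p = 2
    · subst h2; exact dbl_zmod2 _ _ _ _ hd'
    by_cases h3 : p = 3
    · subst h3; exact dbl_zmod3 _ _ _ _ hd'
    refine dbl_field ?_ ?_ _ _ _ _ hd'
    · have : ((2 : ℕ) : ZMod p) ≠ 0 := by
        rw [Ne, ZMod.natCast_eq_zero_iff]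
        intro h; exact h2 ((Nat.prime_dvd_prime_iff_eq hp Nat.prime_two).mp h)
      exact_mod_cast this
    · have : ((3 : ℕ) : ZMod p) ≠ 0 := by
        rw [Ne, ZMod.natCast_eq_zero_iff]
        intro h; exact h3 ((Nat.prime_dvd_prime_iff_eq hp Nat.prime_three).mp h)
      exact_mod_cast this
  rcases key with ⟨ha, hb⟩ | ⟨r, hr1, hr2⟩
  · rw [ZMod.intCast_zmod_eq_zero_iff_dvd] at ha hb
    exact ⟨a, b, c, d, ω, θ, h, rfl, ha, hb⟩
  · obtain ⟨t, rfl⟩ := ZMod.intCast_surjective r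
    obtain ⟨ω', θ', h'⟩ := h.translate t
    refine ⟨_, _, _, _, _, _, h'.swap, ?_, ?_, ?_⟩
    · rw [disc4_swap, disc4_translate]
    · rw [← ZMod.intCast_zmod_eq_zero_iff_dvd]
      push_cast
      linear_combination -hr1
    · rw [← ZMod.intCast_zmod_eq_zero_iff_dvd]
      push_cast
      linear_combination -hr2

set_option maxRecDepth 10000 in
/-- The case `p = 2` of the bound for the power of `p` dividing the discriminant, after extracting the
obvious powers of `2`. -/
lemma two_adic : ∀ a b c d : ZMod 4, (a = 1 ∨ a = 3) → (c = 1 ∨ c = 3) →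
    b ^ 2 * c ^ 2 - 2 * a * c ^ 3 - 8 * b ^ 3 * d - 27 * a ^ 2 * d ^ 2 + 18 * a * b * c * d ≠ 0 := by
  decide

/-- If `p` is odd, `p ∤ c` and the multiple root is at infinity, then `p² ∤ disc`. -/
lemma IsMaxForm.sq_not_dvd (hk : Module.finrank ℚ k = 3) {a b c d : ℤ} {ω θ : 𝓞 k}
    (h : IsMaxForm a b c d ω θ) {p : ℕ} (hp : p.Prime) (h2 : p ≠ 2) (ha : (p : ℤ) ∣ a)
    (hb : (p : ℤ) ∣ b) (hc : ¬ (p : ℤ) ∣ c) : ¬ (p : ℤ) ^ 2 ∣ disc4 a b c d := by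
  intro hD
  have hpi := Nat.prime_iff_prime_int.mp hp
  obtain ⟨a1, rfl⟩ := ha
  obtain ⟨b1, rfl⟩ := hb
  have h1 : (p : ℤ) ^ 2 ∣ p * (4 * a1 * c ^ 3) := by
    have : (p : ℤ) * (4 * a1 * c ^ 3) = (p : ℤ) ^ 2 * (b1 ^ 2 * c ^ 2 - 4 * p * b1 ^ 3 * d -
        27 * a1 ^ 2 * d ^ 2 + 18 * a1 * b1 * c * d) - disc4 (p * a1) (p * b1) c d := by
      simp only [disc4]; ring
    rw [this]
    exact dvd_sub (dvd_mul_right _ _) hD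
  rw [pow_two, mul_dvd_mul_iff_left hpi.ne_zero] at h1
  rcases hpi.dvd_or_dvd h1 with h3 | h3
  · rcases hpi.dvd_or_dvd h3 with h4 | h4
    · have : (p : ℤ) ∣ 2 ^ 2 := by norm_num; exact h4
      have := hpi.dvd_of_dvd_pow this
      have := Int.natCast_dvd_natCast.mp (show (p : ℤ) ∣ (2 : ℕ) from this)
      exact h2 ((Nat.prime_dvd_prime_iff_eq hp Nat.prime_two).mp this)
    · obtain ⟨a2, rfl⟩ := h4
      exact h.not_div hk hp (Dvd.intro _ rfl) ⟨a2 * c, by ring⟩ ⟨p * a2 ^ 2 * d, by ring⟩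
  · exact hc (hpi.dvd_of_dvd_pow h3)

/-- The discriminant of a cubic field is divisible by no sixth power of a prime. -/
lemma IsMaxForm.pow_six_not_dvd (hk : Module.finrank ℚ k = 3) {a b c d : ℤ} {ω θ : 𝓞 k}
    (h : IsMaxForm a b c d ω θ) {p : ℕ} (hp : p.Prime) : ¬ (p : ℤ) ^ 6 ∣ disc4 a b c d := by
  intro hD
  have hpi := Nat.prime_iff_prime_int.mp hp
  obtain ⟨a, b, c, d, ω, θ, h, e, ha, hb⟩ := h.move hp ((dvd_pow_self _ (by norm_num)).trans hD)
  rw [← e] at hD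
  by_cases hc : (p : ℤ) ∣ c
  · have hd : ¬ (p : ℤ) ∣ d := by
      rintro ⟨d1, rfl⟩
      obtain ⟨a1, rfl⟩ := ha
      obtain ⟨c1, rfl⟩ := hc
      exact h.not_div hk hp hb ⟨a1 * c1, by ring⟩ ⟨a1 ^ 2 * d1, by ring⟩
    obtain ⟨a1, rfl⟩ := ha
    obtain ⟨b1, rfl⟩ := hb
    obtain ⟨c1, rfl⟩ := hc
    have ha1 : ¬ (p : ℤ) ∣ a1 := by
      rintro ⟨a2, rfl⟩
      exact h.not_div hk hp (Dvd.intro _ rfl) ⟨a2 * (p * c1), by ring⟩ ⟨p * a2 ^ 2 * d, by ring⟩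
    by_cases h3 : p = 3
    · subst h3
      push_cast at *
      have e2 : disc4 (3 * a1) (3 * b1) (3 * c1) d = 3 ^ 3 * (3 * b1 ^ 2 * c1 ^ 2 - 12 * a1 * c1 ^ 3 -
        4 * b1 ^ 3 * d - 9 * a1 ^ 2 * d ^ 2 + 18 * a1 * b1 * c1 * d) := by
        simp only [disc4]; ring
      rw [e2, show (729 : ℤ) = 3 ^ 3 * 27 by norm_num,
        mul_dvd_mul_iff_left (by norm_num)] at hD
      have hb1 : (3 : ℤ) ∣ b1 := by
        have h4 : (3 : ℤ) ∣ b1 ^ 3 * d := by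
          have : (3 : ℤ) ∣ 4 * (b1 ^ 3 * d) := by
            obtain ⟨q, hq⟩ := hD
            exact ⟨b1 ^ 2 * c1 ^ 2 - 4 * a1 * c1 ^ 3 - 3 * a1 ^ 2 * d ^ 2 + 6 * a1 * b1 * c1 * d - 9 * q,
              by linear_combination -hq⟩
          omega
        rcases hpi.dvd_or_dvd h4 with h5 | h5
        · exact hpi.dvd_of_dvd_pow h5
        · exact absurd h5 hd
      obtain ⟨b2, rfl⟩ := hb1
      have hc1 : (3 : ℤ) ∣ c1 := by
        have h4 : (3 : ℤ) ∣ a1 * c1 ^ 3 := by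
          have : (9 : ℤ) ∣ 12 * (a1 * c1 ^ 3) := by
            obtain ⟨q, hq⟩ := hD
            exact ⟨3 * b2 ^ 2 * c1 ^ 2 - 12 * b2 ^ 3 * d - a1 ^ 2 * d ^ 2 + 6 * a1 * b2 * c1 * d - 3 * q,
              by linear_combination -hq⟩
          omega
        rcases hpi.dvd_or_dvd h4 with h5 | h5
        · exact absurd h5 ha1
        · exact hpi.dvd_of_dvd_pow h5
      obtain ⟨c2, rfl⟩ := hc1
      have h4 : (3 : ℤ) ∣ a1 ^ 2 * d ^ 2 := by
        have : (27 : ℤ) ∣ 9 * (a1 ^ 2 * d ^ 2) := by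
          obtain ⟨q, hq⟩ := hD
          exact ⟨9 * b2 ^ 2 * c2 ^ 2 - 12 * a1 * c2 ^ 3 - 4 * b2 ^ 3 * d + 6 * a1 * b2 * c2 * d - q,
              by linear_combination -hq⟩
        omega
      rcases hpi.dvd_or_dvd h4 with h5 | h5
      · exact ha1 (hpi.dvd_of_dvd_pow h5)
      · exact hd (hpi.dvd_of_dvd_pow h5)
    · have hD3 : (p : ℤ) ^ 3 ∣ disc4 (p * a1) (p * b1) (p * c1) d :=
        (pow_dvd_pow _ (by norm_num)).trans hD
      have h1 : (p : ℤ) ^ 2 * p ∣ p ^ 2 * (27 * a1 ^ 2 * d ^ 2) := by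
        have : (p : ℤ) ^ 2 * (27 * a1 ^ 2 * d ^ 2) = (p : ℤ) ^ 2 * p * (p * b1 ^ 2 * c1 ^ 2 -
          4 * p * a1 * c1 ^ 3 - 4 * b1 ^ 3 * d + 18 * a1 * b1 * c1 * d)
            - disc4 (p * a1) (p * b1) (p * c1) d := by
          simp only [disc4]; ring
        rw [this]
        exact dvd_sub (dvd_mul_right _ _) (by rwa [← pow_succ])
      rw [mul_dvd_mul_iff_left (pow_ne_zero 2 hpi.ne_zero)] at h1
      rcases hpi.dvd_or_dvd h1 with h4 | h4
      · rcases hpi.dvd_or_dvd h4 with h5 | h5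
        · have : (p : ℤ) ∣ 3 ^ 3 := by norm_num; exact h5
          have := hpi.dvd_of_dvd_pow this
          have := Int.natCast_dvd_natCast.mp (show (p : ℤ) ∣ (3 : ℕ) from this)
          exact h3 ((Nat.prime_dvd_prime_iff_eq hp Nat.prime_three).mp this)
        · exact ha1 (hpi.dvd_of_dvd_pow h5)
      · exact hd (hpi.dvd_of_dvd_pow h4)
  · by_cases h2 : p = 2
    · subst h2
      obtain ⟨a1, rfl⟩ := ha
      obtain ⟨b1, rfl⟩ := hb
      have ha1 : ¬ ((2 : ℕ) : ℤ) ∣ a1 := by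
        rintro ⟨a2, rfl⟩
        exact h.not_div hk hp (Dvd.intro _ rfl) ⟨a2 * c, by ring⟩ ⟨2 * a2 ^ 2 * d, by push_cast; ring⟩
      push_cast at *
      have e2 : disc4 (2 * a1) (2 * b1) c d = 4 * (b1 ^ 2 * c ^ 2 - 2 * a1 * c ^ 3 - 8 * b1 ^ 3 * d -
        27 * a1 ^ 2 * d ^ 2 + 18 * a1 * b1 * c * d) := by
        simp only [disc4]; ring
      rw [e2, show (64 : ℤ) = 4 * 16 by norm_num, mul_dvd_mul_iff_left (by norm_num)] at hD
      have hD4 : ((4 : ℕ) : ℤ) ∣ _ := (show ((4 : ℕ) : ℤ) ∣ 16 by norm_num).trans hD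
      rw [← ZMod.intCast_zmod_eq_zero_iff_dvd] at hD4
      push_cast at hD4
      have hodd : ∀ u : ℤ, ¬ (2 : ℤ) ∣ u → (u : ZMod 4) = 1 ∨ (u : ZMod 4) = 3 := by
        intro u hu
        have : u % 4 = 1 ∨ u % 4 = 3 := by omega
        rcases this with h | h
        · left
          have : (4 : ℤ) ∣ u - 1 := by omega
          have := (ZMod.intCast_zmod_eq_zero_iff_dvd (u - 1) 4).mpr this
          push_cast at this
          linear_combination this
        · right
          have : (4 : ℤ) ∣ u - 3 := by omega
          have := (ZMod.intCast_zmod_eq_zero_iff_dvd (u - 3) 4).mpr this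
          push_cast at this
          linear_combination this
      exact two_adic _ _ _ _ (hodd _ ha1) (hodd _ hc) hD4
    · exact h.sq_not_dvd hk hp h2 ha hb hc ((pow_dvd_pow _ (by norm_num)).trans hD)
end

/-! ### Orders inside the maximal order -/

section
open NumberField
variable {k : Type*} [Field k] [NumberField k]

lemma cubic_unique (hk : Module.finrank ℚ k = 3) {Ω : 𝓞 k}
    (hgen : ∀ φ ψ : k →+* ℂ, φ Ω = ψ Ω → φ = ψ) {p q r p' q' r' : ℤ}
    (h : Ω ^ 3 + p * Ω ^ 2 + q * Ω + r = 0) (h' : Ω ^ 3 + p' * Ω ^ 2 + q' * Ω + r' = 0) :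
    p = p' ∧ q = q' ∧ r = r' := by
  obtain ⟨e⟩ := exists_embEquiv hk
  have hne : ∀ i j, i ≠ j → e i Ω ≠ e j Ω := fun i j hij h0 => hij (e.injective (hgen _ _ h0))
  have h1 : ∀ i, (e i Ω) ^ 3 + p * (e i Ω) ^ 2 + q * e i Ω + r = 0 := by
    intro i
    simpa using congrArg (fun t => e i (algebraMap (𝓞 k) k t)) h
  have h2 : ∀ i, (e i Ω) ^ 3 + p' * (e i Ω) ^ 2 + q' * e i Ω + r' = 0 := by
    intro i
    simpa using congrArg (fun t => e i (algebraMap (𝓞 k) k t)) h'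
  have h01 := hne 0 1 (by decide)
  have h12 := hne 1 2 (by decide)
  have h02 := hne 0 2 (by decide)
  obtain ⟨a1, a2, a3⟩ := vieta3 h01 h12 h02 (h1 0) (h1 1) (h1 2)
  obtain ⟨b1, b2, b3⟩ := vieta3 h01 h12 h02 (h2 0) (h2 1) (h2 2)
  refine ⟨?_, ?_, ?_⟩
  · have : (p : ℂ) = p' := by linear_combination a1 - b1
    exact_mod_cast this
  · have : (q : ℂ) = q' := by linear_combination b2 - a2
    exact_mod_cast this
  · have : (r : ℂ) = r' := by linear_combination a3 - b3
    exact_mod_cast this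

/-- If the form is a cube modulo `p`, then so is the minimal polynomial of every integral generator. -/
lemma IsMaxForm.triple (hk : Module.finrank ℚ k = 3) {a b c d : ℤ} {ω θ : 𝓞 k}
    (h : IsMaxForm a b c d ω θ) {p : ℤ} (ha : p ∣ a) (hb : p ∣ b) (hc : p ∣ c) {Ω : 𝓞 k}
    (hgen : ∀ φ ψ : k →+* ℂ, φ Ω = ψ Ω → φ = ψ) {A B C : ℤ}
    (hΩ : Ω ^ 3 + A * Ω ^ 2 + B * Ω + C = 0) :
    ∃ x : ℤ, p ∣ A + 3 * x ∧ p ∣ B - 3 * x ^ 2 ∧ p ∣ C + x ^ 3 := by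
  obtain ⟨x, y, z, rfl⟩ := h.span Ω
  set e1 : ℤ := b * y - c * z with he1
  set e2 : ℤ := a * c * y ^ 2 + (3 * a * d - b * c) * (y * z) + b * d * z ^ 2 with he2
  set e3 : ℤ := a ^ 2 * d * y ^ 3 - (a * c ^ 2 - 2 * a * b * d) * (y ^ 2 * z)
    + (b ^ 2 * d - 2 * a * c * d) * (y * z ^ 2) - a * d ^ 2 * z ^ 3 with he3
  have hτ : (y * ω + z * θ) ^ 3 + e1 * (y * ω + z * θ) ^ 2 + e2 * (y * ω + z * θ) + e3 = 0 := by
    push_cast [he1, he2, he3]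
    linear_combination (y * ω + z * θ + (b * y - c * z)) * (y ^ 2 * h.sq₁ + 2 * y * z * h.mul + z ^ 2 * h.sq₂) +
      (-b * y ^ 2 - d * z ^ 2) * (y * h.sq₁ + z * h.mul) + (a * y ^ 2 + c * z ^ 2) * (y * h.mul + z * h.sq₂)
  obtain ⟨f1, f2, f3⟩ := cubic_unique hk hgen hΩ (p' := e1 - 3 * x) (q' := e2 - 2 * x * e1 + 3 * x ^ 2)
    (r' := -x ^ 3 + e1 * x ^ 2 - e2 * x + e3) (by push_cast; linear_combination hτ)
  obtain ⟨a, rfl⟩ := ha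
  obtain ⟨b, rfl⟩ := hb
  obtain ⟨c, rfl⟩ := hc
  refine ⟨x, ?_, ?_, ?_⟩
  · rw [f1, he1]; exact ⟨b * y - c * z, by ring⟩
  · rw [f2, he1, he2]
    exact ⟨a * (p * c) * y ^ 2 + (3 * a * d - b * (p * c)) * (y * z) + b * d * z ^ 2 -
      2 * x * (b * y - c * z), by ring⟩
  · rw [f3, he1, he2, he3]
    exact ⟨a * (p * a) * d * y ^ 3 - (a * (p * c) ^ 2 - 2 * a * (p * b) * d) * (y ^ 2 * z)
      + (b * (p * b) * d - 2 * a * (p * c) * d) * (y * z ^ 2) - a * d ^ 2 * z ^ 3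
      - x * (a * (p * c) * y ^ 2 + (3 * a * d - b * (p * c)) * (y * z) + b * d * z ^ 2) +
      x ^ 2 * (b * y - c * z), by ring⟩

/-- The discriminant of any form representing an order differs from the maximal one by a square. -/
lemma IsMaxForm.index (hk : Module.finrank ℚ k = 3) {a b c d : ℤ} {ω θ : 𝓞 k}
    (h : IsMaxForm a b c d ω θ) {a' b' c' d' : ℤ} (ha' : a' ≠ 0) {Ω Θ : 𝓞 k}
    (hgen : ∀ φ ψ : k →+* ℂ, φ Ω = ψ Ω → φ = ψ)
    (hΩ : Ω ^ 3 + b' * Ω ^ 2 + (a' * c') * Ω + a' ^ 2 * d' = 0)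
    (hΘ : a' * Θ = Ω ^ 2 + b' * Ω + a' * c') :
    ∃ t : ℤ, disc4 a' b' c' d' = disc4 a b c d * t ^ 2 := by
  obtain ⟨e⟩ := exists_embEquiv hk
  have hne : ∀ i j, i ≠ j → e i Ω ≠ e j Ω := fun i j hij h0 => hij (e.injective (hgen _ _ h0))
  have hne' : ∀ i j, i ≠ j → e i ω ≠ e j ω := fun i j hij h0 =>
    hij (e.injective (h.embedding_inj hk h0))
  have h1 : ∀ i, (e i Ω) ^ 3 + b' * (e i Ω) ^ 2 + (a' * c') * e i Ω + a' ^ 2 * d' = 0 := by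
    intro i
    simpa using congrArg (fun t => e i (algebraMap (𝓞 k) k t)) hΩ
  have h2 : ∀ i, a' * e i Θ = (e i Ω) ^ 2 + b' * e i Ω + a' * c' := by
    intro i
    simpa using congrArg (fun t => e i (algebraMap (𝓞 k) k t)) hΘ
  have hcub : ∀ i, (e i ω) ^ 3 + b * (e i ω) ^ 2 + (a * c) * e i ω + a ^ 2 * d = 0 := by
    intro i
    simpa using congrArg (fun t => e i (algebraMap (𝓞 k) k t)) h.cubic
  have hth : ∀ i, a * e i θ = (e i ω) ^ 2 + b * e i ω + a * c := by
    intro i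
    have h1 := congrArg (fun t => e i (algebraMap (𝓞 k) k t)) h.sq₁
    simp only [map_pow, map_sub, map_add, map_neg, map_mul, map_intCast] at h1
    linear_combination -h1
  obtain ⟨s1, -⟩ := frame_identities ha' _ _ _ (e 0 Θ) (e 1 Θ) (e 2 Θ) (hne 0 1 (by decide))
    (hne 1 2 (by decide)) (hne 0 2 (by decide)) (h1 0) (h1 1) (h1 2) (h2 0) (h2 1) (h2 2)
  obtain ⟨s2, -⟩ := frame_identities (h.a_ne hk) _ _ _ (e 0 θ) (e 1 θ) (e 2 θ) (hne' 0 1 (by decide))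
    (hne' 1 2 (by decide)) (hne' 0 2 (by decide)) (hcub 0) (hcub 1) (hcub 2) (hth 0) (hth 1) (hth 2)
  obtain ⟨x, y, z, rfl⟩ := h.span Ω
  obtain ⟨x', y', z', rfl⟩ := h.span Θ
  refine ⟨y * z' - z * y', ?_⟩
  have : (disc4 a' b' c' d' : ℂ) = disc4 a b c d * (y * z' - z * y') ^ 2 := by
    rw [← s1, ← s2]
    simp only [map_add, map_mul, map_intCast]
    ring
  exact_mod_cast this
end

/-! ### Discriminants and quadratic subfields -/

section
open NumberField

/-- The discriminant of a family of integers is the field discriminant times a square. -/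
lemma discr_family {K : Type*} [Field K] [NumberField K] {ι : Type*} [Fintype ι] [DecidableEq ι]
    (hι : Fintype.card ι = Module.finrank ℚ K) (v : ι → 𝓞 K) :
    ∃ i : ℤ, Algebra.discr ℤ v = NumberField.discr K * i ^ 2 := by
  have hcard : Fintype.card (Module.Free.ChooseBasisIndex ℤ (𝓞 K)) = Fintype.card ι := by
    rw [hι, ← RingOfIntegers.rank, Module.finrank_eq_card_chooseBasisIndex]
  set b := (RingOfIntegers.basis K).reindex (Fintype.equivOfCardEq hcard)
  have hv : Matrix.vecMul b ((b.toMatrix v).map (algebraMap ℤ (𝓞 K))) = v := by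
    ext1 j
    simp only [Matrix.vecMul, dotProduct, Matrix.map_apply, Module.Basis.toMatrix_apply]
    conv_rhs => rw [← b.sum_repr (v j)]
    refine Finset.sum_congr rfl fun i _ => ?_
    rw [zsmul_eq_mul, mul_comm]; rfl
  refine ⟨(b.toMatrix v).det, ?_⟩
  conv_lhs => rw [← hv]
  rw [Algebra.discr_of_matrix_vecMul, NumberField.discr_eq_discr K b]
  ring

lemma sq_dvd_four_mul {i s : ℤ} (hs : Squarefree s) (h : i ^ 2 ∣ 4 * s) : i ^ 2 ≤ 4 := by
  rcases Int.even_or_odd' i with ⟨j, rfl | rfl⟩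
  · have h1 : j * j ∣ s := by
      have : 4 * (j * j) ∣ 4 * s := by
        convert h using 1; ring
      exact (mul_dvd_mul_iff_left (by norm_num)).mp this
    have := Int.isUnit_iff.mp (hs j h1)
    rcases this with rfl | rfl <;> norm_num
  · have h1 : (2 * j + 1) * (2 * j + 1) ∣ s := by
      have hco : IsCoprime ((2 * j + 1) ^ 2) (4 : ℤ) := by
        rw [show (4 : ℤ) = 2 ^ 2 by norm_num]
        apply IsCoprime.pow
        exact ⟨1, -j, by ring⟩
      have := hco.dvd_of_dvd_mul_left h
      rwa [pow_two] at this
    have := Int.isUnit_iff.mp (hs _ h1)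
    rcases this with h | h <;> rw [h] <;> norm_num

/-- A number field of degree six containing `√s`, `s` squarefree, has discriminant at least `|s| ^ 3`. -/
lemma quad_subfield_discr {F : Type*} [Field F] [NumberField F] (hF : Module.finrank ℚ F = 6)
    {s : ℤ} (hs : Squarefree s) {δ : F} (hδ : δ ^ 2 = s) :
    |s| ^ 3 ≤ |NumberField.discr F| := by
  have hs0 : s ≠ 0 := hs.ne_zero
  by_cases hrat : ∃ q : ℚ, algebraMap ℚ F q = δ
  · obtain ⟨q, rfl⟩ := hrat
    have hq : q ^ 2 = s := by
      have : algebraMap ℚ F (q ^ 2) = algebraMap ℚ F s := by rw [map_pow, hδ]; simp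
      exact (algebraMap ℚ F).injective this
    have : ∃ n : ℤ, (n : ℚ) = q := by
      have hi : IsIntegral ℤ q := ⟨X ^ 2 - C s, by monicity!, by
        simp only [eval₂_sub, eval₂_pow, eval₂_X, eval₂_C, hq]; simp⟩
      obtain ⟨n, hn⟩ := IsIntegrallyClosed.isIntegral_iff.mp hi
      exact ⟨n, by simpa using hn⟩
    obtain ⟨n, rfl⟩ := this
    have hn : n * n = s := by rw [← pow_two]; exact_mod_cast hq
    have := Int.isUnit_iff.mp (hs n ⟨1, by rw [hn, mul_one]⟩)
    have hs1 : s = 1 := by rcases this with rfl | rfl <;> simp at hn <;> exact hn.symm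
    rw [hs1]
    have := NumberField.discr_ne_zero F
    rw [abs_one, one_pow]
    exact Int.one_le_abs this
  · have hinteg : IsIntegral ℚ δ := Algebra.IsIntegral.isIntegral δ
    have hmin : minpoly ℚ δ = X ^ 2 - C (s : ℚ) := by
      symm
      apply minpoly.eq_of_irreducible_of_monic
      · rw [Polynomial.irreducible_iff_roots_eq_zero_of_degree_le_three]
        · rw [Multiset.eq_zero_iff_forall_notMem]
          intro q hq
          have hq2 : q ^ 2 = s := by
            have := (Polynomial.mem_roots'.mp hq).2
            simpa [sub_eq_zero] using this
          have h0 : (algebraMap ℚ F q - δ) * (algebraMap ℚ F q + δ) = 0 := by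
            have : (algebraMap ℚ F q) ^ 2 = s := by rw [← map_pow, hq2]; simp
            linear_combination this - hδ
          rcases mul_eq_zero.mp h0 with h | h
          · exact hrat ⟨q, sub_eq_zero.mp h⟩
          · exact hrat ⟨-q, by rw [map_neg]; linear_combination -h⟩
        · rw [Polynomial.natDegree_X_pow_sub_C]
        · rw [Polynomial.natDegree_X_pow_sub_C]; norm_num
      · simp [hδ]
      · monicity!
    set K := ℚ⟮δ⟯ with hK
    have hfin : Module.finrank ℚ K = 2 := by
      rw [IntermediateField.adjoin.finrank hinteg, hmin, Polynomial.natDegree_X_pow_sub_C]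
    have hKF : Module.finrank K F = 3 := by
      have := Module.finrank_mul_finrank ℚ K F
      rw [hfin, hF] at this
      omega
    have hd : |NumberField.discr K| ^ 3 ≤ |NumberField.discr F| := by
      have h1 := natAbs_discr_eq_absNorm_differentIdeal_mul_natAbs_discr_pow K (𝓞 K) F (𝓞 F)
      rw [hKF] at h1
      have hpos : 0 < (NumberField.discr F).natAbs := Int.natAbs_pos.mpr (NumberField.discr_ne_zero F)
      have h2 : (NumberField.discr K).natAbs ^ 3 ≤ (NumberField.discr F).natAbs :=
        Nat.le_of_dvd hpos (h1 ▸ Dvd.intro_left _ rfl)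
      zify at h2
      exact h2
    refine le_trans (pow_le_pow_left₀ (abs_nonneg s) ?_ 3) hd
    set g : K := AdjoinSimple.gen ℚ δ
    have hg2 : g ^ 2 = (s : K) := by
      apply (algebraMap K F).injective
      rw [map_pow, AdjoinSimple.algebraMap_gen, hδ]; simp
    have hgi : IsIntegral ℤ g := ⟨X ^ 2 - C s, by monicity!, by
      simp only [eval₂_sub, eval₂_pow, eval₂_X, eval₂_C, hg2]; simp⟩
    set γ : 𝓞 K := ⟨g, hgi⟩
    have hγ2 : γ * γ = (s : 𝓞 K) := by
      apply RingOfIntegers.ext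
      have h1 : algebraMap (𝓞 K) K (γ * γ) = algebraMap (𝓞 K) K (s : 𝓞 K) := by
        rw [map_mul, map_intCast, ← pow_two]
        exact hg2
      exact h1
    obtain ⟨i, hi⟩ := discr_family (K := K) (ι := Fin 2) (by simp [hfin]) ![1, γ]
    have htr : Algebra.trace ℚ K g = 0 := by
      have := (adjoin.powerBasis hinteg).trace_gen_eq_nextCoeff_minpoly
      rw [adjoin.powerBasis_gen, minpoly_gen, hmin] at this
      refine this.trans ?_
      rw [Polynomial.nextCoeff_of_natDegree_pos (by rw [natDegree_X_pow_sub_C]; norm_num),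
        Polynomial.natDegree_X_pow_sub_C, coeff_sub, coeff_X_pow, coeff_C]
      simp
    have htrZ : Algebra.trace ℤ (𝓞 K) γ = 0 := by
      have h2 : ((Algebra.trace ℤ (𝓞 K) γ : ℤ) : ℚ) = 0 := by
        rw [Algebra.coe_trace_int]; exact htr
      exact_mod_cast h2
    have hone : ∀ n : ℤ, Algebra.trace ℤ (𝓞 K) (n : 𝓞 K) = 2 * n := by
      intro n
      have := Algebra.trace_algebraMap (R := ℤ) (S := 𝓞 K) n
      rw [RingOfIntegers.rank, hfin] at this
      simpa using this
    have hdisc : Algebra.discr ℤ ![1, γ] = 4 * s := by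
      rw [Algebra.discr_def, Matrix.det_fin_two]
      have h1 := hone 1
      simp only [Int.cast_one] at h1
      simp [Algebra.traceMatrix_apply, Algebra.traceForm_apply, hγ2, htrZ, hone, h1]
      ring
    rw [hdisc] at hi
    have hi4 := sq_dvd_four_mul hs (Dvd.intro_left _ hi.symm)
    have : 4 * |s| = |NumberField.discr K| * i ^ 2 := by
      rw [← abs_of_nonneg (sq_nonneg i), ← abs_mul, ← hi, abs_mul]; rfl
    nlinarith [abs_nonneg (NumberField.discr K)]
end

/-! ### Specialisations of a cubic over the ring of integer polynomials -/

section
open NumberField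

/-- The degree `E` homogenisation of `g`, evaluated at the integers `(m, n)`. -/
def hom (E : ℕ) (g : ℤ[X]) (m n : ℤ) : ℤ :=
  ∑ i ∈ Finset.range (E + 1), g.coeff i * m ^ i * n ^ (E - i)

/-- The `Y`-discriminant of `Y³ + a Y² + b Y + c` over `ℤ[T]`. -/
def deltaP (a b c : ℤ[X]) : ℤ[X] :=
  a ^ 2 * b ^ 2 - 4 * b ^ 3 - 4 * a ^ 3 * c - 27 * c ^ 2 + 18 * a * b * c

lemma hom_rat {E : ℕ} {g : ℤ[X]} (hg : g.natDegree ≤ E) {m n : ℤ} (hn : n ≠ 0) :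
    (hom E g m n : ℚ) = n ^ E * g.eval₂ (Int.castRingHom ℚ) (m / n) := by
  have hn' : (n : ℚ) ≠ 0 := by exact_mod_cast hn
  rw [Polynomial.eval₂_eq_sum_range' _ (Nat.lt_succ_of_le hg), hom, Finset.mul_sum]
  push_cast
  refine Finset.sum_congr rfl fun i hi => ?_
  have hi' : i ≤ E := Nat.lt_succ_iff.mp (Finset.mem_range.mp hi)
  have : (n : ℚ) ^ E = n ^ (E - i) * n ^ i := by rw [← pow_add, Nat.sub_add_cancel hi']
  rw [this, div_pow]
  simp only [eq_intCast]
  field_simp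

lemma hom_mod {E : ℕ} {g : ℤ[X]} (hg : g.natDegree ≤ E) {m n τ p : ℤ} (h : p ∣ n * τ - m) :
    p ∣ hom E g m n - n ^ E * g.eval τ := by
  have e : hom E g (n * τ) n = n ^ E * g.eval τ := by
    rw [Polynomial.eval_eq_sum_range' (Nat.lt_succ_of_le hg), hom, Finset.mul_sum]
    refine Finset.sum_congr rfl fun i hi => ?_
    have hi' : i ≤ E := Nat.lt_succ_iff.mp (Finset.mem_range.mp hi)
    have : n ^ E = n ^ (E - i) * n ^ i := by rw [← pow_add, Nat.sub_add_cancel hi']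
    rw [this]; ring
  rw [← e, hom, hom, ← Finset.sum_sub_distrib]
  refine Finset.dvd_sum fun i _ => ?_
  have : p ∣ m ^ i - (n * τ) ^ i := by
    refine dvd_trans ?_ (sub_dvd_pow_sub_pow _ _ i)
    rw [← dvd_neg]; simpa using h
  rw [← sub_mul, ← mul_sub, mul_assoc]
  exact Dvd.dvd.mul_left (Dvd.dvd.mul_right this _) _

/-- At a prime dividing the denominator `n`, only the top coefficient survives. -/
lemma hom_dvd_lead {E : ℕ} {g : ℤ[X]} {m n : ℤ} (hmn : IsCoprime m n) {p : ℤ} (hp : Prime p)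
    (hpn : p ∣ n) (h : p ∣ hom E g m n) : p ∣ g.coeff E := by
  rw [hom, Finset.sum_range_succ, Nat.sub_self, pow_zero, mul_one] at h
  have h1 : p ∣ ∑ i ∈ Finset.range E, g.coeff i * m ^ i * n ^ (E - i) := by
    refine Finset.dvd_sum fun i hi => ?_
    have : E - i ≠ 0 := by have := Finset.mem_range.mp hi; omega
    exact Dvd.dvd.mul_left (dvd_pow hpn this) _
  have h2 := (dvd_add_right h1).mp h
  rcases hp.dvd_or_dvd h2 with h3 | h3
  · exact h3
  · exact absurd (hmn.isUnit_of_dvd' (hp.dvd_of_dvd_pow h3) hpn) hp.not_isUnit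

lemma deltaP_natDegree {a b c : ℤ[X]} {D : ℕ} (ha : a.natDegree ≤ D) (hb : b.natDegree ≤ D)
    (hc : c.natDegree ≤ D) : (deltaP a b c).natDegree ≤ 4 * D := by
  have e4 : (4 : ℤ[X]) = C 4 := rfl
  have e27 : (27 : ℤ[X]) = C 27 := rfl
  have e18 : (18 : ℤ[X]) = C 18 := rfl
  unfold deltaP
  rw [e4, e27, e18]
  compute_degree
  all_goals omega

lemma disc4_hom {a b c : ℤ[X]} {D : ℕ} (ha : a.natDegree ≤ D) (hb : b.natDegree ≤ D)
    (hc : c.natDegree ≤ D) {m n : ℤ} (hn : n ≠ 0) :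
    disc4 (n ^ D) (hom D a m n) (hom D b m n) (hom D c m n) = hom (4 * D) (deltaP a b c) m n := by
  have : ((disc4 (n ^ D) (hom D a m n) (hom D b m n) (hom D c m n) : ℤ) : ℚ) =
      (hom (4 * D) (deltaP a b c) m n : ℤ) := by
    rw [hom_rat (deltaP_natDegree ha hb hc) hn, disc4]
    push_cast [hom_rat ha hn, hom_rat hb hn, hom_rat hc hn]
    simp only [deltaP, eval₂_add, eval₂_sub, eval₂_mul, eval₂_pow, eval₂_ofNat]
    ring
  exact_mod_cast this

/-- At a triple root both the discriminant and its derivative vanish, so such primes divide the resultant. -/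
lemma deltaP_triple {R : Type*} [CommRing R] (φ : ℤ[X] →+* R) {a b c : ℤ[X]} {r : R}
    (ha : φ a = -3 * r) (hb : φ b = 3 * r ^ 2) (hc : φ c = - r ^ 3) :
    φ (deltaP a b c) = 0 ∧ φ (derivative (deltaP a b c)) = 0 := by
  constructor
  · simp only [deltaP, map_add, map_sub, map_mul, map_pow, map_ofNat, ha, hb, hc]; ring
  · have : derivative (deltaP a b c) = (2 * a * b ^ 2 - 12 * a ^ 2 * c + 18 * b * c) * derivative a
      + (2 * a ^ 2 * b - 12 * b ^ 2 + 18 * a * c) * derivative b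
      + (- 4 * a ^ 3 - 54 * c + 18 * a * b) * derivative c := by
      simp only [deltaP, derivative_add, derivative_sub, derivative_mul, derivative_pow,
        derivative_ofNat]
      simp only [Nat.cast_ofNat, map_ofNat]
      norm_num
      ring
    rw [this]
    simp only [map_add, map_sub, map_mul, map_neg, map_pow, map_ofNat, ha, hb, hc]; ring

variable {k : Type*} [Field k] [NumberField k]
set_option linter.unusedSectionVars false

/-- A root `y` of an integral cubic gives the integral elements `N y` and `N y² + A y + B`. -/
lemma exists_integral_pair {N A B C : ℤ} {y : k} (hy : N * y ^ 3 + A * y ^ 2 + B * y + C = 0) :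
    ∃ Ω Θ : 𝓞 k, (Ω : k) = N * y ∧ Ω ^ 3 + A * Ω ^ 2 + (N * B) * Ω + N ^ 2 * C = 0 ∧
      N * Θ = Ω ^ 2 + A * Ω + N * B := by
  have hΩ : IsIntegral ℤ ((N : k) * y) :=
    ⟨X ^ 3 + Polynomial.C A * X ^ 2 + Polynomial.C (N * B) * X + Polynomial.C (N ^ 2 * C),
      by monicity!, by
      simp only [eval₂_add, eval₂_mul, eval₂_pow, eval₂_X, eval₂_C]
      simp only [eq_intCast, Int.cast_mul, Int.cast_pow]
      linear_combination (N : k) ^ 2 * hy⟩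
  have hΘ : IsIntegral ℤ ((N : k) * y ^ 2 + A * y + B) :=
    ⟨X ^ 3 + Polynomial.C (-B) * X ^ 2 + Polynomial.C (A * C) * X + Polynomial.C (- N * C ^ 2),
      by monicity!, by
      simp only [eval₂_add, eval₂_mul, eval₂_pow, eval₂_X, eval₂_C]
      simp only [eq_intCast, Int.cast_mul, Int.cast_pow, Int.cast_neg]
      linear_combination (((N : k) * y ^ 2 + A * y + B) * (N * y + A) - C * N) * hy⟩
  obtain ⟨Ω, e1⟩ : ∃ Ω : 𝓞 k, algebraMap (𝓞 k) k Ω = N * y := ⟨⟨_, hΩ⟩, rfl⟩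
  obtain ⟨Θ, e2⟩ : ∃ Θ : 𝓞 k, algebraMap (𝓞 k) k Θ = N * y ^ 2 + A * y + B := ⟨⟨_, hΘ⟩, rfl⟩
  refine ⟨Ω, Θ, e1, ?_, ?_⟩
  · apply FaithfulSMul.algebraMap_injective (𝓞 k) k
    simp only [map_add, map_mul, map_pow, map_intCast, map_zero, e1]
    linear_combination (N : k) ^ 2 * hy
  · apply FaithfulSMul.algebraMap_injective (𝓞 k) k
    simp only [map_add, map_mul, map_pow, map_intCast, e1, e2]
    ring

/-- The discriminant of the maximal form of a specialised field: it divides the homogenised value of `Δ` with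
square cofactor, and away from the prime factors of `6 * lead * R` its prime divisors `p` divide it once
only and give a root of `Δ` modulo `p`. -/
lemma spec_main (hk : Module.finrank ℚ k = 3) {D : ℕ} {a b c : ℤ[X]} (ha : a.natDegree ≤ D)
    (hb : b.natDegree ≤ D) (hc : c.natDegree ≤ D) {u v : ℤ[X]} {R : ℤ}
    (hR : u * deltaP a b c + v * derivative (deltaP a b c) = C R)
    {m n : ℤ} (hmn : IsCoprime m n) (hn : n ≠ 0) {y : k}
    (hgen : ∀ φ ψ : k →+* ℂ, φ y = ψ y → φ = ψ)
    (hy : (n : k) ^ D * y ^ 3 + hom D a m n * y ^ 2 + hom D b m n * y + hom D c m n = 0)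
    {a₀ b₀ c₀ d₀ : ℤ} {ω θ : 𝓞 k} (h : IsMaxForm a₀ b₀ c₀ d₀ ω θ) :
    (∃ t : ℤ, hom (4 * D) (deltaP a b c) m n = disc4 a₀ b₀ c₀ d₀ * t ^ 2) ∧
    ∀ p : ℕ, p.Prime → ¬ (p : ℤ) ∣ 6 * (deltaP a b c).coeff (4 * D) * R →
      (p : ℤ) ∣ disc4 a₀ b₀ c₀ d₀ →
      ¬ Rootless (deltaP a b c) p ∧ ¬ (p : ℤ) ^ 2 ∣ disc4 a₀ b₀ c₀ d₀ := by
  set N : ℤ := n ^ D with hN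
  have hN0 : N ≠ 0 := pow_ne_zero _ hn
  obtain ⟨Ω, Θ, h0, h1, h2⟩ := exists_integral_pair (N := N) (A := hom D a m n)
    (B := hom D b m n) (C := hom D c m n) (y := y) (by push_cast [hN]; exact hy)
  have hgen' : ∀ φ ψ : k →+* ℂ, φ Ω = ψ Ω → φ = ψ := by
    intro φ ψ hφ
    rw [h0, map_mul, map_mul, map_intCast, map_intCast] at hφ
    exact hgen _ _ (mul_left_cancel₀ (by exact_mod_cast hN0) hφ)
  obtain ⟨t, ht⟩ := h.index hk hN0 hgen' h1 h2
  rw [disc4_hom ha hb hc hn] at ht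
  refine ⟨⟨t, ht⟩, ?_⟩
  intro p hp hpM hpd
  have : Fact p.Prime := ⟨hp⟩
  have hpi := Nat.prime_iff_prime_int.mp hp
  have hpH : (p : ℤ) ∣ hom (4 * D) (deltaP a b c) m n := ht ▸ Dvd.dvd.mul_right hpd _
  have hpn : ¬ (p : ℤ) ∣ n := fun hpn =>
    hpM (Dvd.dvd.mul_right (Dvd.dvd.mul_left (hom_dvd_lead hmn hpi hpn hpH) _) _)
  have hpR : ¬ (p : ℤ) ∣ R := fun h => hpM (Dvd.dvd.mul_left h _)
  have hnz : (n : ZMod p) ≠ 0 := by rwa [Ne, ZMod.intCast_zmod_eq_zero_iff_dvd]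
  obtain ⟨τ, hτ⟩ := ZMod.intCast_surjective ((m : ZMod p) / (n : ZMod p))
  have hτ' : (p : ℤ) ∣ n * τ - m := by
    rw [← ZMod.intCast_zmod_eq_zero_iff_dvd]
    push_cast
    rw [hτ]; field_simp; ring
  have hcong : ∀ {E : ℕ} {g : ℤ[X]}, g.natDegree ≤ E →
      (hom E g m n : ZMod p) = n ^ E * (g.eval τ : ℤ) := by
    intro E g hg
    have := hom_mod hg hτ'
    rw [← ZMod.intCast_zmod_eq_zero_iff_dvd] at this
    push_cast at this
    linear_combination this
  refine ⟨?_, ?_⟩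
  · intro hr
    refine hr τ ?_
    rw [← ZMod.intCast_zmod_eq_zero_iff_dvd] at hpH ⊢
    rw [hcong (deltaP_natDegree ha hb hc)] at hpH
    exact (mul_eq_zero.mp hpH).resolve_left (pow_ne_zero _ hnz)
  · intro hsq
    obtain ⟨a', b', c', d', ω', θ', h', e, ha', hb'⟩ := h.move hp hpd
    have hc' : (p : ℤ) ∣ c' := by
      by_contra hcc
      refine h'.sq_not_dvd hk hp ?_ ha' hb' hcc (e ▸ hsq)
      rintro rfl
      exact hpM (Dvd.dvd.mul_right (Dvd.dvd.mul_right (by norm_num) _) _)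
    obtain ⟨x, x1, x2, x3⟩ := h'.triple hk ha' hb' hc' hgen' (A := hom D a m n)
      (B := N * hom D b m n) (C := N ^ 2 * hom D c m n) (by push_cast; exact h1)
    simp only [← ZMod.intCast_zmod_eq_zero_iff_dvd] at x1 x2 x3
    push_cast [hN, hcong ha, hcong hb, hcong hc] at x1 x2 x3
    have hz : (n : ZMod p) ^ D ≠ 0 := pow_ne_zero _ hnz
    set φ : ℤ[X] →+* ZMod p := (Int.castRingHom (ZMod p)).comp (evalRingHom τ) with hφ
    have key := deltaP_triple φ (a := a) (b := b) (c := c) (r := x / (n : ZMod p) ^ D) ?_ ?_ ?_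
    · apply hpR
      rw [← ZMod.intCast_zmod_eq_zero_iff_dvd]
      have := congrArg φ hR
      rw [map_add, map_mul, map_mul, key.1, key.2] at this
      simpa [hφ] using this.symm
    · have : φ a = ((a.eval τ : ℤ) : ZMod p) := by simp [hφ]
      rw [this]; field_simp; linear_combination x1
    · have : φ b = ((b.eval τ : ℤ) : ZMod p) := by simp [hφ]
      rw [this]; field_simp; linear_combination x2
    · have : φ c = ((c.eval τ : ℤ) : ZMod p) := by simp [hφ]
      rw [this]; field_simp; linear_combination x3
end

/-! ### The field of a binary cubic form -/

section
open NumberField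

/-- The square part of `d` involves only primes dividing `M`, each to a bounded power. -/
lemma sqfree_bound {d M : ℤ} (hM : M ≠ 0)
    (h1 : ∀ p : ℕ, p.Prime → ¬ (p : ℤ) ∣ M → ¬ (p : ℤ) ^ 2 ∣ d)
    (h2 : ∀ p : ℕ, p.Prime → ¬ (p : ℤ) ^ 6 ∣ d) :
    ∃ s t : ℤ, Squarefree s ∧ d = s * t ^ 2 ∧ |d| ≤ |s| * M ^ 4 := by
  obtain ⟨s, t, hst, hs⟩ := Nat.sq_mul_squarefree d.natAbs
  have hdvd : t ∣ M.natAbs ^ 2 := by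
    rw [Nat.dvd_iff_prime_pow_dvd_dvd]
    intro p k hp hk
    have hpow : ∀ j, p ^ j ∣ t → (p : ℤ) ^ (2 * j) ∣ d := by
      intro j hj
      rw [← Int.natCast_pow, Int.natCast_dvd, ← hst, mul_comm 2 j, pow_mul]
      exact Dvd.dvd.mul_right (pow_dvd_pow_of_dvd hj 2) _
    rcases Nat.eq_zero_or_pos k with rfl | hk0
    · simp
    have hpt : p ^ 1 ∣ t := (pow_dvd_pow p hk0).trans hk
    have hpM : p ∣ M.natAbs := by
      by_contra hcon
      exact h1 p hp (by rwa [Int.natCast_dvd]) (hpow 1 hpt)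
    have hk2 : k ≤ 2 := by
      by_contra hcon
      exact h2 p hp (hpow 3 ((pow_dvd_pow p (by omega)).trans hk))
    exact (pow_dvd_pow p hk2).trans (pow_dvd_pow_of_dvd hpM 2)
  have htM : t ≤ M.natAbs ^ 2 :=
    Nat.le_of_dvd (pow_pos (Int.natAbs_pos.mpr hM) 2) hdvd
  have hle : d.natAbs ≤ s * M.natAbs ^ 4 := by
    rw [← hst, mul_comm]
    calc s * t ^ 2 ≤ s * (M.natAbs ^ 2) ^ 2 := by gcongr
      _ = _ := by ring
  have hle' : |d| ≤ (s : ℤ) * M ^ 4 := by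
    zify at hle
    rwa [show (4 : ℕ) = 2 * 2 from rfl, pow_mul |M|, sq_abs, ← pow_mul] at hle
  have hsq : Squarefree (s : ℤ) := Int.squarefree_natCast.mpr hs
  rcases Int.natAbs_eq d with hd1 | hd1
  · refine ⟨s, t, hsq, ?_, by simpa using hle'⟩
    rw [hd1, ← hst]; push_cast; ring
  · refine ⟨-s, t, (by
      intro x hx; exact hsq x (by simpa using hx)), ?_, by simpa using hle'⟩
    rw [hd1, ← hst]; push_cast; ring

local notation "Qbar" => AlgebraicClosure ℚ

-- The `ℚ`-algebra structure found on `ℚ̄` is the one of a characteristic zero division ring; it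
-- agrees with the structure coming from the construction of `ℚ̄`, but only after unfolding.
instance qbar_isAlgebraic : Algebra.IsAlgebraic ℚ (AlgebraicClosure ℚ) :=
  AlgebraicClosure.isAlgebraic ℚ

instance qbar_normal : Normal ℚ (AlgebraicClosure ℚ) :=
  @IsAlgClosure.normal ℚ (AlgebraicClosure ℚ) _ _ (AlgebraicClosure.instAlgebra ℚ)
    (by infer_instance)

/-- The field generated by the roots of the cubic `a z³ + b z² + c z + d`. -/
def formField (a b c d : ℤ) : IntermediateField ℚ (AlgebraicClosure ℚ) :=
  IntermediateField.adjoin ℚ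
    {z : AlgebraicClosure ℚ | (a : AlgebraicClosure ℚ) * z ^ 3 + b * z ^ 2 + c * z + d = 0}

lemma normal_mem {F : IntermediateField ℚ Qbar} (hF : Normal ℚ F) {x z : Qbar} (hx : x ∈ F)
    (hz : aeval z (minpoly ℚ x) = 0) : z ∈ F := by
  obtain ⟨σ, hσ⟩ := minpoly.exists_algEquiv_of_root' (Algebra.IsAlgebraic.isAlgebraic x) hz
  have h := (IntermediateField.normal_iff_forall_map_le' (K := F)).mp (by exact hF) σ
  exact h ⟨x, hx, hσ⟩

lemma formField_normal (a b c d : ℤ) : Normal ℚ (formField a b c d) := by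
  refine (IntermediateField.normal_iff_forall_map_le' (K := formField a b c d)).mpr ?_
  intro σ
  rw [formField, IntermediateField.adjoin_map]
  refine IntermediateField.adjoin.mono _ _ _ ?_
  rintro _ ⟨z, hz, rfl⟩
  have := congrArg σ hz
  simpa using this

lemma adjoin_emb_ext {y : Qbar} {φ ψ : ℚ⟮y⟯ →+* ℂ}
    (h : φ (AdjoinSimple.gen ℚ y) = ψ (AdjoinSimple.gen ℚ y)) : φ = ψ := by
  have hinteg : IsIntegral ℚ y := Algebra.IsIntegral.isIntegral y
  have : φ.toRatAlgHom = ψ.toRatAlgHom := by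
    apply (adjoin.powerBasis hinteg).algHom_ext
    rw [adjoin.powerBasis_gen]; exact h
  ext x
  exact DFunLike.congr_fun this x

lemma finrank_adjoin_le {y : Qbar} {f : ℚ[X]} (hf : f.Monic) (hy : aeval y f = 0) :
    Module.finrank ℚ ℚ⟮y⟯ ≤ f.natDegree := by
  have hinteg : IsIntegral ℚ y := Algebra.IsIntegral.isIntegral y
  rw [IntermediateField.adjoin.finrank hinteg]
  exact Polynomial.natDegree_le_of_dvd (minpoly.dvd ℚ y hy) hf.ne_zero

/-- The form of the maximal order of `ℚ(y)` generates the same Galois closure as `y`. -/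
lemma formField_eq {y : Qbar} [NumberField ℚ⟮y⟯] (hk : Module.finrank ℚ ℚ⟮y⟯ = 3)
    {F : IntermediateField ℚ Qbar} (hF : Normal ℚ F)
    (hFy : F = adjoin ℚ {z | aeval z (minpoly ℚ y) = 0})
    {a b c d : ℤ} {ω θ : 𝓞 ℚ⟮y⟯} (h : IsMaxForm a b c d ω θ) : F = formField a b c d := by
  have hinteg : IsIntegral ℚ y := Algebra.IsIntegral.isIntegral y
  have ha : a ≠ 0 := h.a_ne hk
  have ha' : (a : Qbar) ≠ 0 := by exact_mod_cast ha
  have hyF : y ∈ F := by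
    rw [hFy]; exact IntermediateField.subset_adjoin _ _ (minpoly.aeval ℚ y)
  have hkF : ℚ⟮y⟯ ≤ F := by
    rw [IntermediateField.adjoin_simple_le_iff]; exact hyF
  -- the elements `ω`, `θ` seen in `ℚ̄`
  set w : Qbar := ((algebraMap (𝓞 ℚ⟮y⟯) ℚ⟮y⟯ ω : ℚ⟮y⟯) : Qbar) with hw
  set v : Qbar := ((algebraMap (𝓞 ℚ⟮y⟯) ℚ⟮y⟯ θ : ℚ⟮y⟯) : Qbar) with hv
  set ι : 𝓞 ℚ⟮y⟯ →+* Qbar := (algebraMap ℚ⟮y⟯ Qbar).comp (algebraMap (𝓞 ℚ⟮y⟯) ℚ⟮y⟯) with hι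
  have hιw : ι ω = w := rfl
  have hιv : ι θ = v := rfl
  set ρ : Qbar := w / a with hρ
  have hwρ : w = a * ρ := by rw [hρ]; field_simp
  have hρ0 : (a : Qbar) * ρ ^ 3 + b * ρ ^ 2 + c * ρ + d = 0 := by
    have := congrArg ι h.cubic
    simp only [map_add, map_mul, map_pow, map_intCast, map_zero, hιw] at this
    rw [hwρ] at this
    apply mul_left_cancel₀ (pow_ne_zero 2 ha')
    linear_combination this
  have hvρ : v = a * ρ ^ 2 + b * ρ + c := by
    have := congrArg ι h.sq₁
    simp only [map_add, map_sub, map_neg, map_mul, map_pow, map_intCast, hιw, hιv] at this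
    rw [hwρ] at this
    apply mul_left_cancel₀ ha'
    linear_combination -this
  have hρk : ρ ∈ ℚ⟮y⟯ := div_mem (algebraMap (𝓞 ℚ⟮y⟯) ℚ⟮y⟯ ω).2 (intCast_mem _ a)
  have hyρ : y ∈ ℚ⟮ρ⟯ := by
    obtain ⟨N, hN0, hN⟩ := (IsAlgebraic.exists_integral_multiple (R := ℤ)
      ((IsFractionRing.isAlgebraic_iff ℤ ℚ ℚ⟮y⟯).mpr
        (Algebra.IsAlgebraic.isAlgebraic (AdjoinSimple.gen ℚ y))))
    obtain ⟨e1, e2, e3, he⟩ := h.span ⟨_, hN⟩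
    have := congrArg ι he
    simp only [map_add, map_mul, map_intCast, hιw, hιv] at this
    have h2 : ι ⟨_, hN⟩ = N * y := by
      have : ι ⟨_, hN⟩ = ((N • AdjoinSimple.gen ℚ y : ℚ⟮y⟯) : Qbar) := rfl
      rw [this]; simp
    rw [h2] at this
    have hN' : (N : Qbar) ≠ 0 := by exact_mod_cast hN0
    have : y = (e1 + e2 * w + e3 * v) / N := by rw [← this]; field_simp
    have hm : ρ ∈ ℚ⟮ρ⟯ := mem_adjoin_simple_self ℚ ρ
    rw [this, hvρ, hwρ]
    have hi : ∀ n : ℤ, (n : Qbar) ∈ ℚ⟮ρ⟯ := fun n => intCast_mem _ n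
    exact div_mem (add_mem (add_mem (hi _) (mul_mem (hi _) (mul_mem (hi _) hm)))
      (mul_mem (hi _) (add_mem (add_mem (mul_mem (hi _) (pow_mem hm 2)) (mul_mem (hi _) hm))
        (hi _)))) (hi _)
  have hadj : ℚ⟮ρ⟯ = ℚ⟮y⟯ := le_antisymm (by rwa [IntermediateField.adjoin_simple_le_iff])
    (by rwa [IntermediateField.adjoin_simple_le_iff])
  have hρint : IsIntegral ℚ ρ := Algebra.IsIntegral.isIntegral ρ
  have hdegρ : (minpoly ℚ ρ).natDegree = 3 := by
    rw [← IntermediateField.adjoin.finrank hρint, hadj, hk]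
  set g : ℚ[X] := C (a : ℚ) * X ^ 3 + C (b : ℚ) * X ^ 2 + C (c : ℚ) * X + C (d : ℚ) with hg
  have hgρ : aeval ρ g = 0 := by simpa [hg] using hρ0
  have hgdeg : g.natDegree ≤ 3 := by rw [hg]; compute_degree
  have hgm : g = C g.leadingCoeff * minpoly ℚ ρ :=
    Polynomial.eq_leadingCoeff_mul_of_monic_of_dvd_of_natDegree_le (minpoly.monic hρint)
      (minpoly.dvd ℚ ρ hgρ) (by rw [hdegρ]; exact hgdeg)
  have hg0 : g.leadingCoeff ≠ 0 := by
    rw [Polynomial.leadingCoeff_ne_zero]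
    intro h0
    have := congrArg (fun q => q.coeff 3) h0
    simp only [hg, coeff_add, coeff_C_mul, coeff_X_pow, coeff_X, coeff_C, coeff_zero] at this
    norm_num at this
    exact ha this
  apply le_antisymm
  · conv_lhs => rw [hFy]
    rw [IntermediateField.adjoin_le_iff]
    intro z hz
    refine normal_mem (formField_normal a b c d) (x := y) ?_ hz
    have : ℚ⟮ρ⟯ ≤ formField a b c d := by
      rw [IntermediateField.adjoin_simple_le_iff]
      exact IntermediateField.subset_adjoin _ _ hρ0
    exact this hyρ
  · rw [formField, IntermediateField.adjoin_le_iff]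
    intro z hz
    refine normal_mem hF (x := ρ) (hkF hρk) ?_
    have hz' : aeval z g = 0 := by simpa [hg] using hz
    rw [hgm, map_mul, aeval_C] at hz'
    exact (mul_eq_zero.mp hz').resolve_left (by simpa using hg0)
end

/-! ### Specialised fields and their forms -/

section
open NumberField

local notation "Qbar" => AlgebraicClosure ℚ

lemma absDiscr_eq (F : IntermediateField ℚ (AlgebraicClosure ℚ)) [NumberField F] :
    absDiscr F = NumberField.discr F := by
  have h : FiniteDimensional ℚ F := NumberField.to_finiteDimensional
  rw [absDiscr, dif_pos h]

lemma S3Fields.numberField {x : ℕ} {F : IntermediateField ℚ (AlgebraicClosure ℚ)}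
    (hF : F ∈ S3Fields x) : NumberField F := by
  obtain ⟨h1, -⟩ := hF
  exact ⟨⟩

lemma S3Fields.finrank {x : ℕ} {F : IntermediateField ℚ (AlgebraicClosure ℚ)}
    (hF : F ∈ S3Fields x) : Module.finrank ℚ F = 6 := by
  have := S3Fields.numberField hF
  obtain ⟨h1, h2, ⟨e⟩, -⟩ := hF
  have h3 := IsGalois.card_aut_eq_finrank ℚ F
  rw [Nat.card_congr e.toEquiv, Nat.card_eq_fintype_card, Fintype.card_perm, Fintype.card_fin] at h3
  exact h3.symm

/-- Evaluation of `g ∈ ℤ[T]` at a rational number. -/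
def evQ (g : ℤ[X]) (t : ℚ) : ℚ := g.eval₂ (Int.castRingHom ℚ) t

lemma specialize_aeval {D : ℕ} {P : Polynomial (Polynomial ℤ)} (hP : P ∈ QSet 3 D) (t : ℚ)
    (z : Qbar) : aeval z (specialize P t) =
      z ^ 3 + (evQ (P.coeff 2) t : Qbar) * z ^ 2 + (evQ (P.coeff 1) t : Qbar) * z
        + (evQ (P.coeff 0) t : Qbar) := by
  obtain ⟨hm, hd, -⟩ := hP
  have hc : P.coeff 3 = 1 := by rw [← hd]; exact hm.coeff_natDegree
  rw [specialize, aeval_def, eval₂_map, eval₂_eq_sum_range' _ (n := 4) (by omega)]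
  simp only [Finset.sum_range_succ, Finset.sum_range_zero, hc, evQ, RingHom.comp_apply,
    coe_eval₂RingHom, eq_ratCast]
  simp
  ring

lemma specialize_monic {D : ℕ} {P : Polynomial (Polynomial ℤ)} (hP : P ∈ QSet 3 D) (t : ℚ) :
    (specialize P t).Monic ∧ (specialize P t).natDegree = 3 := by
  refine ⟨hP.1.map _, ?_⟩
  rw [specialize, hP.1.natDegree_map, hP.2.1]

lemma disc_cubic_eq {R : Type*} [CommRing R] {a b c x y z : R} (h1 : x + y + z = -a)
    (h2 : x * y + y * z + x * z = b) (h3 : x * y * z = -c) :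
    ((x - y) * (y - z) * (x - z)) ^ 2 =
      a ^ 2 * b ^ 2 - 4 * b ^ 3 - 4 * a ^ 3 * c - 27 * c ^ 2 + 18 * a * b * c := by
  obtain rfl : a = -(x + y + z) := by rw [h1, neg_neg]
  obtain rfl : c = -(x * y * z) := by rw [h3, neg_neg]
  subst h2
  ring

/-- If the splitting field of `P(t, Y)` has degree six, then `P(t, Y)` is irreducible, and the square root
of its discriminant lies in the splitting field. -/
lemma spec_structure {D : ℕ} {P : Polynomial (Polynomial ℤ)} (hP : P ∈ QSet 3 D) {x : ℕ}
    {F : IntermediateField ℚ (AlgebraicClosure ℚ)} (hF : F ∈ S3Fields x) {t : ℚ}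
    (hsep : (specialize P t).Separable)
    (hFt : F = IntermediateField.adjoin ℚ ((specialize P t).rootSet (AlgebraicClosure ℚ))) :
    ∃ y : Qbar, minpoly ℚ y = specialize P t ∧ ∃ δ : F, δ ≠ 0 ∧
      δ ^ 2 = ((evQ (deltaP (P.coeff 2) (P.coeff 1) (P.coeff 0)) t : ℚ) : F) := by
  have := S3Fields.numberField hF
  have h6 := S3Fields.finrank hF
  obtain ⟨hm, hdeg⟩ := specialize_monic hP t
  set f := specialize P t with hf
  have hroots : (f.map (algebraMap ℚ Qbar)).roots.card = 3 := by
    rw [← hdeg, ← Polynomial.natDegree_map (algebraMap ℚ Qbar)]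
    exact (IsAlgClosed.splits (f.map (algebraMap ℚ Qbar))).natDegree_eq_card_roots.symm
  have hnodup : (f.map (algebraMap ℚ Qbar)).roots.Nodup := nodup_roots hsep.map
  obtain ⟨y1, y2, y3, hy⟩ := Multiset.card_eq_three.mp hroots
  rw [hy] at hnodup
  simp only [Multiset.insert_eq_cons, Multiset.nodup_cons, Multiset.mem_cons,
    Multiset.mem_singleton, Multiset.nodup_singleton, and_true, not_or] at hnodup
  obtain ⟨⟨h12, h13⟩, h23⟩ := hnodup
  have hset : ∀ z : Qbar, z ∈ f.rootSet Qbar ↔ z = y1 ∨ z = y2 ∨ z = y3 := by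
    intro z
    rw [rootSet_def, Finset.mem_coe, Multiset.mem_toFinset, aroots_def, hy]
    simp
  have hzero : ∀ z, z = y1 ∨ z = y2 ∨ z = y3 → aeval z f = 0 := fun z hz =>
    (mem_rootSet'.mp ((hset z).mpr hz)).2
  have e1 := hzero y1 (by simp)
  have e2 := hzero y2 (by simp)
  have e3 := hzero y3 (by simp)
  have e1' := e1
  rw [hf, specialize_aeval hP] at e1 e2 e3
  obtain ⟨v1, v2, v3⟩ := vieta3 h12 h23 h13 e1 e2 e3
  have hirr : Irreducible f := by
    rw [hm.irreducible_iff_roots_eq_zero_of_degree_le_three (by omega) (by omega),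
      Multiset.eq_zero_iff_forall_notMem]
    intro q hq
    have hq0 : aeval ((q : ℚ) : Qbar) f = 0 := by
      have h0 := (mem_roots'.mp hq).2
      rw [IsRoot.def] at h0
      have := Polynomial.aeval_algebraMap_apply_eq_algebraMap_eval (A := Qbar) q f
      rw [h0, map_zero] at this
      exact this
    -- a rational root forces degree at most two
    have main : ∀ z1 z2 z3 : Qbar, z1 = (q : ℚ) → z1 ≠ z2 → z2 ≠ z3 → z1 ≠ z3 →
        (∀ z, z ∈ f.rootSet Qbar → z = z1 ∨ z = z2 ∨ z = z3) →
        z1 + z2 + z3 = -(evQ (P.coeff 2) t : Qbar) →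
        z1 * z2 * z3 + (evQ (P.coeff 0) t : Qbar) = 0 →
        z1 * z2 + z2 * z3 + z1 * z3 = (evQ (P.coeff 1) t : Qbar) → False := by
      intro z1 z2 z3 hz1 n12 n23 n13 hz w1 w3 w2
      have hle : F ≤ ℚ⟮z2⟯ := by
        rw [hFt, IntermediateField.adjoin_le_iff]
        have hz1m : z1 ∈ ℚ⟮z2⟯ := by rw [hz1]; exact SubfieldClass.ratCast_mem _ q
        have hz2m : z2 ∈ ℚ⟮z2⟯ := mem_adjoin_simple_self ℚ z2
        intro z hzz
        rcases hz z hzz with rfl | rfl | rfl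
        · exact hz1m
        · exact hz2m
        · have : z = -(evQ (P.coeff 2) t : Qbar) - z1 - z2 := by linear_combination w1
          rw [this]
          exact sub_mem (sub_mem (neg_mem (SubfieldClass.ratCast_mem _ _)) hz1m) hz2m
      have hfin := finrank_adjoin_le (y := z2)
        (f := X ^ 2 + C (evQ (P.coeff 2) t + q) * X +
          C (evQ (P.coeff 1) t + q * (evQ (P.coeff 2) t + q))) (by monicity!) (by
          simp only [map_add, map_mul, map_pow, aeval_X, aeval_C, eq_ratCast]
          rw [← hz1]
          linear_combination -w2 + (z2 + z1) * w1)
      have hd2 : (X ^ 2 + C (evQ (P.coeff 2) t + q) * X +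
          C (evQ (P.coeff 1) t + q * (evQ (P.coeff 2) t + q)) : ℚ[X]).natDegree ≤ 2 := by
        compute_degree
      have : FiniteDimensional ℚ ℚ⟮z2⟯ :=
        adjoin.finiteDimensional (Algebra.IsIntegral.isIntegral z2)
      have hmono : Module.finrank ℚ F ≤ Module.finrank ℚ ℚ⟮z2⟯ :=
        IntermediateField.finrank_le_of_le_right hle
      omega
    have hqr : ((q : ℚ) : Qbar) ∈ f.rootSet Qbar := by
      rw [mem_rootSet']
      exact ⟨(hm.map _).ne_zero, hq0⟩
    rcases (hset _).mp hqr with h | h | h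
    · exact main y1 y2 y3 h.symm h12 h23 h13 (fun z hz => (hset z).mp hz) v1
        (by linear_combination v3) v2
    · exact main y2 y1 y3 h.symm (Ne.symm h12) h13 h23
        (fun z hz => by rcases (hset z).mp hz with h | h | h <;> tauto)
        (by linear_combination v1) (by linear_combination v3) (by linear_combination v2)
    · exact main y3 y2 y1 h.symm (Ne.symm h23) (Ne.symm h12) (Ne.symm h13)
        (fun z hz => by rcases (hset z).mp hz with h | h | h <;> tauto)
        (by linear_combination v1) (by linear_combination v3) (by linear_combination v2)
  refine ⟨y1, (minpoly.eq_of_irreducible_of_monic hirr e1' hm).symm, ?_⟩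
  have hmem : ∀ z, z = y1 ∨ z = y2 ∨ z = y3 → z ∈ F := by
    intro z hz
    rw [hFt]
    exact IntermediateField.subset_adjoin _ _ ((hset z).mpr hz)
  refine ⟨(⟨y1, hmem _ (by simp)⟩ - ⟨y2, hmem _ (by simp)⟩) *
    (⟨y2, hmem _ (by simp)⟩ - ⟨y3, hmem _ (by simp)⟩) *
    (⟨y1, hmem _ (by simp)⟩ - ⟨y3, hmem _ (by simp)⟩), ?_, ?_⟩
  · refine mul_ne_zero (mul_ne_zero ?_ ?_) ?_ <;> rw [sub_ne_zero] <;> intro h <;>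
      have := congrArg Subtype.val h
    exacts [h12 this, h23 this, h13 this]
  apply Subtype.ext
  have := disc_cubic_eq v1 v2 v3
  have e : (evQ (deltaP (P.coeff 2) (P.coeff 1) (P.coeff 0)) t : Qbar) =
      (evQ (P.coeff 2) t : Qbar) ^ 2 * (evQ (P.coeff 1) t : Qbar) ^ 2 -
      4 * (evQ (P.coeff 1) t : Qbar) ^ 3 - 4 * (evQ (P.coeff 2) t : Qbar) ^ 3 *
      (evQ (P.coeff 0) t : Qbar) - 27 * (evQ (P.coeff 0) t : Qbar) ^ 2 +
      18 * (evQ (P.coeff 2) t : Qbar) * (evQ (P.coeff 1) t : Qbar) * (evQ (P.coeff 0) t : Qbar) := by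
    simp only [deltaP, evQ, eval₂_add, eval₂_sub, eval₂_mul, eval₂_pow, eval₂_ofNat]
    push_cast
    ring
  rw [← e] at this
  simpa using this

/-- Every `S₃`-field in `Sp(P)` of bounded discriminant is the field of a cubic form of bounded
discriminant whose prime divisors, up to finitely many, divide a value of `Δ`. -/
theorem spec_field {D : ℕ} {P : Polynomial (Polynomial ℤ)} (hP : P ∈ QSet 3 D) {Δ u v : ℤ[X]}
    {R : ℤ} (hΔ : Δ = deltaP (P.coeff 2) (P.coeff 1) (P.coeff 0))
    (hR : u * Δ + v * derivative Δ = C R) (hR0 : R ≠ 0) (hlead : Δ.coeff (4 * D) ≠ 0)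
    {M : ℤ} (hM : M = 6 * Δ.coeff (4 * D) * R) {x : ℕ}
    {F : IntermediateField ℚ (AlgebraicClosure ℚ)} (hFP : F ∈ SpSet P) (hF : F ∈ S3Fields x) :
    ∃ (k : IntermediateField ℚ (AlgebraicClosure ℚ)) (_ : NumberField k),
      Module.finrank ℚ k = 3 ∧ ∀ (a b c d : ℤ) (ω θ : 𝓞 k), IsMaxForm a b c d ω θ →
      disc4 a b c d ≠ 0 → 
      F = formField a b c d ∧ |disc4 a b c d| ^ 3 ≤ M ^ 12 * x ∧
      ∀ p : ℕ, p.Prime → ¬ (p : ℤ) ∣ M → (p : ℤ) ∣ disc4 a b c d → ¬ Rootless Δ p := by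
  have hM0 : M ≠ 0 := by rw [hM]; exact mul_ne_zero (mul_ne_zero (by norm_num) hlead) hR0
  obtain ⟨t, hsep, hFt⟩ := hFP
  obtain ⟨y, hy, δ, hδ0, hδ⟩ := spec_structure hP hF hsep hFt
  obtain ⟨hm, hdeg⟩ := specialize_monic hP t
  have hinteg : IsIntegral ℚ y := Algebra.IsIntegral.isIntegral y
  have hfd : FiniteDimensional ℚ ℚ⟮y⟯ := adjoin.finiteDimensional hinteg
  have hnf : NumberField ℚ⟮y⟯ := ⟨⟩
  have hk : Module.finrank ℚ ℚ⟮y⟯ = 3 := by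
    have := IntermediateField.adjoin.finrank hinteg
    rw [hy, hdeg] at this
    exact this
  refine ⟨ℚ⟮y⟯, hnf, hk, ?_⟩
  intro a b c d ω θ h hd0
  set m : ℤ := t.num
  set n : ℤ := (t.den : ℤ) with hn
  have hn0 : n ≠ 0 := by rw [hn]; exact_mod_cast t.den_ne_zero
  have ht : t = m / n := by rw [hn]; push_cast; exact (Rat.num_div_den t).symm
  have hmn : IsCoprime m n := by
    rw [Int.isCoprime_iff_nat_coprime]
    exact t.reduced
  have hdegs := hP.2.2
  have hev : ∀ {E : ℕ} {g : ℤ[X]}, g.natDegree ≤ E → ((hom E g m n : ℤ) : ℚ) = n ^ E * evQ g t := by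
    intro E g hg
    rw [hom_rat hg hn0, ← ht]; rfl
  have hyk : ((n : ℚ⟮y⟯) ^ D * (AdjoinSimple.gen ℚ y) ^ 3 + hom D (P.coeff 2) m n *
      (AdjoinSimple.gen ℚ y) ^ 2 + hom D (P.coeff 1) m n * (AdjoinSimple.gen ℚ y) +
      hom D (P.coeff 0) m n) = 0 := by
    have h0 : aeval y (specialize P t) = 0 := by rw [← hy]; exact minpoly.aeval ℚ y
    rw [specialize_aeval hP] at h0
    have hcast : ∀ i, ((hom D (P.coeff i) m n : ℤ) : Qbar) = (n : Qbar) ^ D * (evQ (P.coeff i) t : Qbar) := by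
      intro i
      have := congrArg (fun q : ℚ => (q : Qbar)) (hev (hdegs i))
      push_cast at this
      exact this
    apply Subtype.ext
    push_cast
    rw [AdjoinSimple.coe_gen, hcast, hcast, hcast]
    linear_combination (n : Qbar) ^ D * h0
  obtain ⟨⟨e, he⟩, hp⟩ := spec_main hk (hdegs 2) (hdegs 1) (hdegs 0) (hΔ ▸ hR) hmn hn0
    (fun φ ψ h => adjoin_emb_ext h) hyk h
  rw [← hΔ] at he hp
  rw [← hM] at hp
  refine ⟨?_, ?_, fun p hpp hpM hpd => (hp p hpp hpM hpd).1⟩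
  · have hgal : IsGalois ℚ F := hF.2.1
    refine formField_eq hk hgal.to_normal ?_ h
    rw [hFt, hy]
    congr 1
    ext z
    rw [mem_rootSet']
    exact ⟨fun h => h.2, fun h => ⟨(hm.map _).ne_zero, h⟩⟩
  · obtain ⟨s, r, hs, hsr, hle⟩ := sqfree_bound (d := disc4 a b c d) hM0
      (fun p hpp hpM hpd => (hp p hpp hpM ((dvd_pow_self _ (by norm_num)).trans hpd)).2 hpd)
      (fun p hpp => h.pow_six_not_dvd hk hpp)
    have := S3Fields.numberField hF
    have h6 := S3Fields.finrank hF
    have hx : |NumberField.discr F| ≤ x := by rw [← absDiscr_eq]; exact hF.2.2.2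
    have hr0 : r ≠ 0 := by rintro rfl; simp [hsr] at hd0
    have he0 : e ≠ 0 := by
      rintro rfl
      have h1 := hev (E := 4 * D) (g := Δ)
        (hΔ ▸ deltaP_natDegree (hdegs 2) (hdegs 1) (hdegs 0))
      rw [he] at h1
      have h2 : evQ Δ t = 0 := by
        have h3 : (n : ℚ) ^ (4 * D) ≠ 0 := pow_ne_zero _ (by exact_mod_cast hn0)
        simpa [h3] using h1.symm
      rw [← hΔ, h2, Rat.cast_zero] at hδ
      exact hδ0 (pow_eq_zero_iff (by norm_num) |>.mp hδ)
    obtain ⟨δ', hδ'⟩ : ∃ δ' : F, δ' ^ 2 = (s : F) := by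
      refine ⟨δ * (n : F) ^ (2 * D) / (r * e), ?_⟩
      have h1 := hev (E := 4 * D) (g := Δ)
        (hΔ ▸ deltaP_natDegree (hdegs 2) (hdegs 1) (hdegs 0))
      rw [he, hsr] at h1
      have h2 := congrArg (fun q : ℚ => (q : F)) h1
      push_cast at h2
      have hr' : (r : F) ≠ 0 := by exact_mod_cast hr0
      have he' : (e : F) ≠ 0 := by exact_mod_cast he0
      rw [div_pow, mul_pow, hδ, ← hΔ]
      field_simp
      rw [show ((n : F) ^ (2 * D)) ^ 2 = (n : F) ^ (4 * D) by ring_nf]; linear_combination -h2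
    have h3 := quad_subfield_discr h6 hs hδ'
    calc |disc4 a b c d| ^ 3 ≤ (|s| * M ^ 4) ^ 3 := pow_le_pow_left₀ (abs_nonneg _) hle 3
      _ = M ^ 12 * |s| ^ 3 := by ring
      _ ≤ M ^ 12 * x := by
        refine mul_le_mul_of_nonneg_left (h3.trans hx) ?_
        rw [show (12 : ℕ) = 2 * 6 from rfl, pow_mul]; positivity
end

/-! ### Counting reduced forms -/

section

/-- Dyadic localisation of a reduced form: the coefficients lie in a box of shape `j`. -/
lemma form_bounds {a b c d A C D T : ℝ} (hD : 0 < D) (hT : 0 < T) (hDT : D ≤ T ^ 4) (hA : 0 < A)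
    (hAC : A ≤ C) (h0 : A * C ≤ 4 * D) (ha : D * a ^ 2 ≤ A ^ 3) (hb : D * b ^ 2 ≤ 9 * A ^ 2 * C)
    (hc : D * c ^ 2 ≤ 9 * A * C ^ 2) (hd : D * d ^ 2 ≤ C ^ 3) :
    ∃ j : ℕ, |a| * (√2 ^ j) ^ 3 ≤ 3 * T ∧ |b| * √2 ^ j ≤ 12 * T ∧
      |c| ≤ 17 * T * √2 ^ j ∧ |d| ≤ 8 * T * (√2 ^ j) ^ 3 := by
  obtain ⟨j, hj1, hj2⟩ := exists_nat_pow_near (x := C / A) (y := 4) (by rwa [le_div_iff₀ hA, one_mul])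
    (by norm_num)
  rw [le_div_iff₀ hA] at hj1
  rw [div_lt_iff₀ hA] at hj2
  have hC : 0 < C := hA.trans_le hAC
  set l : ℝ := √2 ^ j with hl
  have hl0 : 0 < l := by positivity
  set E : ℝ := √D with hE
  have hE0 : 0 < E := Real.sqrt_pos.mpr hD
  have hE2 : E ^ 2 = D := Real.sq_sqrt hD.le
  have hET : E ≤ T ^ 2 := by
    apply le_of_sq_le_sq _ (by positivity)
    rw [hE2]; linarith [show (T ^ 2) ^ 2 = T ^ 4 by ring]
  set κ : ℝ := l ^ 2 with hκ
  have hκ0 : 0 < κ := by positivity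
  have h4 : (4 : ℝ) ^ j = κ ^ 2 := by
    have h2 : κ = 2 ^ j := by
      rw [hκ, hl, ← pow_mul, mul_comm, pow_mul, Real.sq_sqrt (by norm_num)]
    rw [h2, ← pow_mul, mul_comm, pow_mul]
    norm_num
  rw [h4] at hj1
  rw [pow_succ, h4] at hj2
  have hAκ : A * κ ≤ 2 * E := by
    apply le_of_sq_le_sq _ (by positivity)
    nlinarith
  have hCκ : C ≤ 4 * κ * E := by
    apply le_of_sq_le_sq _ (by positivity)
    have : C * C ≤ κ ^ 2 * 4 * A * C := by nlinarith
    nlinarith [sq_nonneg κ, mul_le_mul_of_nonneg_left h0 (sq_nonneg κ)]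
  rw [← hE2] at ha hb hc hd
  have hAκ0 : 0 < A * κ := by positivity
  have k1 : a ^ 2 * κ ^ 3 ≤ 8 * E := by
    have h1 : (A * κ) ^ 3 ≤ (2 * E) ^ 3 := pow_le_pow_left₀ hAκ0.le hAκ 3
    have h2 : E ^ 2 * (a ^ 2 * κ ^ 3) ≤ E ^ 2 * (8 * E) := by
      have := mul_le_mul_of_nonneg_right ha (pow_pos hκ0 3).le
      nlinarith
    exact le_of_mul_le_mul_left h2 (by positivity)
  have k2 : b ^ 2 * κ ≤ 144 * E := by
    have h1 : (A * κ) ^ 2 * C ≤ (2 * E) ^ 2 * (4 * κ * E) :=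
      mul_le_mul (pow_le_pow_left₀ hAκ0.le hAκ 2) hCκ hC.le (by positivity)
    have h2 : (E ^ 2 * κ) * (b ^ 2 * κ) ≤ (E ^ 2 * κ) * (144 * E) := by
      have := mul_le_mul_of_nonneg_right hb (pow_pos hκ0 2).le
      nlinarith
    exact le_of_mul_le_mul_left h2 (by positivity)
  have k3 : c ^ 2 ≤ 288 * κ * E := by
    have h1 : (A * κ) * C ^ 2 ≤ (2 * E) * (4 * κ * E) ^ 2 :=
      mul_le_mul hAκ (pow_le_pow_left₀ hC.le hCκ 2) (by positivity) (by positivity)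
    have h2 : (E ^ 2 * κ) * c ^ 2 ≤ (E ^ 2 * κ) * (288 * κ * E) := by
      have := mul_le_mul_of_nonneg_right hc hκ0.le
      nlinarith
    exact le_of_mul_le_mul_left h2 (by positivity)
  have k4 : d ^ 2 ≤ 64 * κ ^ 3 * E := by
    have h1 : C ^ 3 ≤ (4 * κ * E) ^ 3 := pow_le_pow_left₀ hC.le hCκ 3
    have h2 : E ^ 2 * d ^ 2 ≤ E ^ 2 * (64 * κ ^ 3 * E) := by nlinarith
    exact le_of_mul_le_mul_left h2 (by positivity)
  refine ⟨j, ?_, ?_, ?_, ?_⟩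
  · rw [← hl]
    apply le_of_sq_le_sq _ (by positivity)
    calc (|a| * l ^ 3) ^ 2 = a ^ 2 * κ ^ 3 := by rw [hκ, ← sq_abs a]; ring
      _ ≤ 8 * E := k1
      _ ≤ 8 * T ^ 2 := by linarith
      _ ≤ (3 * T) ^ 2 := by linarith [sq_nonneg T, mul_pow 3 T 2]
  · apply le_of_sq_le_sq _ (by positivity)
    calc (|b| * l) ^ 2 = b ^ 2 * κ := by rw [hκ, ← sq_abs b]; ring
      _ ≤ 144 * E := k2
      _ ≤ (12 * T) ^ 2 := by linarith [mul_pow 12 T 2]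
  · apply le_of_sq_le_sq _ (by positivity)
    rw [sq_abs]
    calc c ^ 2 ≤ 288 * κ * E := k3
      _ ≤ 288 * κ * T ^ 2 := by gcongr
      _ ≤ (17 * T * l) ^ 2 := by rw [hκ]; nlinarith [mul_pos (pow_pos hT 2) (pow_pos hl0 2)]
  · apply le_of_sq_le_sq _ (by positivity)
    rw [sq_abs]
    calc d ^ 2 ≤ 64 * κ ^ 3 * E := k4
      _ ≤ 64 * κ ^ 3 * T ^ 2 := by gcongr
      _ = (8 * T * l ^ 3) ^ 2 := by rw [hκ]; ring
end

section

/-- Passage from a real bound to an integer box. -/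
lemma int_mem_Icc_of_abs_le {n : ℤ} {N : ℕ} {R : ℝ} (h : |(n : ℝ)| ≤ R) (hR : R < N + 1) :
    n ∈ Finset.Icc (-(N : ℤ)) N := by
  have h1 : |(n : ℝ)| < N + 1 := h.trans_lt hR
  have h2 : |n| < (N : ℤ) + 1 := by exact_mod_cast h1
  rw [Finset.mem_Icc, ← abs_le]
  omega

/-- Translates by `t ≤ l ^ 2` of a reduced form of shape `l` stay in a box of the same shape. -/
lemma translate_bounds {a b c d l T t : ℝ} (hl : 0 < l) (ht0 : 0 ≤ t) (ht : t ≤ l ^ 2)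
    (ha : |a| * l ^ 3 ≤ 3 * T) (hb : |b| * l ≤ 12 * T) (hc : |c| ≤ 17 * T * l)
    (hd : |d| ≤ 8 * T * l ^ 3) :
    |b + 3 * t * a| ≤ 21 * T / l ∧ |c + 2 * t * b + 3 * t ^ 2 * a| ≤ 50 * T * l ∧
      |d + t * c + t ^ 2 * b + t ^ 3 * a| ≤ 40 * T * l ^ 3 := by
  have a0 := abs_nonneg a
  have b0 := abs_nonneg b
  have c0 := abs_nonneg c
  have t2 : t ^ 2 ≤ l ^ 4 := by
    calc t ^ 2 ≤ (l ^ 2) ^ 2 := pow_le_pow_left₀ ht0 ht 2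
      _ = l ^ 4 := by ring
  have t3 : t ^ 3 ≤ l ^ 6 := by
    calc t ^ 3 ≤ (l ^ 2) ^ 3 := pow_le_pow_left₀ ht0 ht 3
      _ = l ^ 6 := by ring
  have e1 : |t * a| ≤ |a| * l ^ 2 := by
    rw [abs_mul, abs_of_nonneg ht0, mul_comm]; gcongr
  have e2 : |t ^ 2 * a| ≤ 3 * T * l := by
    rw [abs_mul, abs_of_nonneg (by positivity)]
    calc t ^ 2 * |a| ≤ l ^ 4 * |a| := by gcongr
      _ = (|a| * l ^ 3) * l := by ring
      _ ≤ 3 * T * l := by gcongr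
  have e3 : |t ^ 3 * a| ≤ 3 * T * l ^ 3 := by
    rw [abs_mul, abs_of_nonneg (by positivity)]
    calc t ^ 3 * |a| ≤ l ^ 6 * |a| := by gcongr
      _ = (|a| * l ^ 3) * l ^ 3 := by ring
      _ ≤ 3 * T * l ^ 3 := by gcongr
  have f1 : |t * b| ≤ 12 * T * l := by
    rw [abs_mul, abs_of_nonneg ht0]
    calc t * |b| ≤ l ^ 2 * |b| := by gcongr
      _ = (|b| * l) * l := by ring
      _ ≤ 12 * T * l := by gcongr
  have f2 : |t ^ 2 * b| ≤ 12 * T * l ^ 3 := by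
    rw [abs_mul, abs_of_nonneg (by positivity)]
    calc t ^ 2 * |b| ≤ l ^ 4 * |b| := by gcongr
      _ = (|b| * l) * l ^ 3 := by ring
      _ ≤ 12 * T * l ^ 3 := by gcongr
  have g1 : |t * c| ≤ 17 * T * l ^ 3 := by
    rw [abs_mul, abs_of_nonneg ht0]
    calc t * |c| ≤ l ^ 2 * (17 * T * l) := by gcongr
      _ = 17 * T * l ^ 3 := by ring
  refine ⟨?_, ?_, ?_⟩
  · rw [le_div_iff₀ hl]
    have : |b + 3 * t * a| ≤ |b| + 3 * (|a| * l ^ 2) := by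
      calc |b + 3 * t * a| ≤ |b| + |3 * (t * a)| := by rw [← mul_assoc]; exact abs_add_le _ _
        _ ≤ _ := by rw [abs_mul, abs_of_pos (by norm_num : (0:ℝ) < 3)]; gcongr
    calc |b + 3 * t * a| * l ≤ (|b| + 3 * (|a| * l ^ 2)) * l := by gcongr
      _ = |b| * l + 3 * (|a| * l ^ 3) := by ring
      _ ≤ 21 * T := by linarith
  · rw [abs_le] at *
    constructor <;> linarith
  · rw [abs_le] at *
    constructor <;> linarith

/-- Fields whose reduced form has shape `j`. The form has `2 ^ j` translates in a slightly larger box, all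
surviving the sieve and all belonging to the same field, which saves a factor `2 ^ j`. -/
lemma count_shape {α : Type*} (Φ : ℤ → ℤ → ℤ → ℤ → α) (B : ℕ → Prop) {T C η : ℝ} (hT : 1 ≤ T)
    (hC : 0 < C) (hη : 0 ≤ Real.log T ^ (-η))
    (hs : ∀ a b : ℤ, ∀ X Y : ℕ, T ≤ X → T ≤ Y →
      (((box2 X Y).filter fun w => ∀ p, B p → ¬ (p : ℤ) ∣ disc4 a b w.1 w.2).card : ℝ)
        ≤ C * X * Y * Real.log T ^ (-η)) (j : ℕ) (𝓕 : Finset α)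
    (h : ∀ F ∈ 𝓕, ∃ a b c d : ℤ, a ≠ 0 ∧ |(a : ℝ)| * (√2 ^ j) ^ 3 ≤ 3 * T ∧
      |(b : ℝ)| * √2 ^ j ≤ 12 * T ∧ |(c : ℝ)| ≤ 17 * T * √2 ^ j ∧
      |(d : ℝ)| ≤ 8 * T * (√2 ^ j) ^ 3 ∧ (∀ p, B p → ¬ (p : ℤ) ∣ disc4 a b c d) ∧
      ∀ t : ℤ, Φ a (b + 3 * t * a) (c + 2 * t * b + 3 * t ^ 2 * a)
        (d + t * c + t ^ 2 * b + t ^ 3 * a) = F) :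
    (𝓕.card : ℝ) ≤ 900000 * C * T ^ 4 * Real.log T ^ (-η) * (1 / 2) ^ j := by
  rcases 𝓕.eq_empty_or_nonempty with rfl | ⟨F₀, hF₀⟩
  · simp only [Finset.card_empty, Nat.cast_zero]; positivity
  set l : ℝ := √2 ^ j with hl
  have hl1 : 1 ≤ l := one_le_pow₀ (by rw [Real.one_le_sqrt]; norm_num)
  have hl0 : 0 < l := by linarith
  have hT0 : 0 < T := by linarith
  have hl2 : l ^ 2 = 2 ^ j := by rw [hl, ← pow_mul, mul_comm, pow_mul, Real.sq_sqrt (by norm_num)]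
  -- a nonzero leading coefficient bounds the shape
  have hl3 : l ^ 3 ≤ 3 * T := by
    obtain ⟨a, b, c, d, ha, hal, -⟩ := h F₀ hF₀
    have : (1 : ℝ) ≤ |(a : ℝ)| := by exact_mod_cast Int.one_le_abs ha
    calc l ^ 3 = 1 * l ^ 3 := by ring
      _ ≤ |(a : ℝ)| * l ^ 3 := by gcongr
      _ ≤ _ := hal
  have hl13 : l ≤ l ^ 3 := by nlinarith [mul_nonneg hl0.le (by linarith : (0:ℝ) ≤ l - 1)]
  set A0 : ℕ := ⌊3 * T / l ^ 3⌋₊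
  set B0 : ℕ := ⌊21 * T / l⌋₊
  set X : ℕ := ⌈50 * T * l⌉₊
  set Y : ℕ := ⌈40 * T * l ^ 3⌉₊
  have hTl : T ≤ T * l := le_mul_of_one_le_right hT0.le hl1
  have hTl3 : T ≤ T * l ^ 3 := le_mul_of_one_le_right hT0.le (one_le_pow₀ hl1)
  have hX1 : 50 * T * l ≤ X := Nat.le_ceil _
  have hY1 : 40 * T * l ^ 3 ≤ Y := Nat.le_ceil _
  have hX2 : (X : ℝ) ≤ 51 * T * l := by
    have := Nat.ceil_lt_add_one (a := 50 * T * l) (by positivity)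
    linarith
  have hY2 : (Y : ℝ) ≤ 41 * T * l ^ 3 := by
    have := Nat.ceil_lt_add_one (a := 40 * T * l ^ 3) (by positivity)
    linarith
  have hA2 : (2 * (A0 : ℝ) + 1) ≤ 9 * T / l ^ 3 := by
    have h1 : (A0 : ℝ) ≤ 3 * T / l ^ 3 := Nat.floor_le (by positivity)
    have h2 : 1 ≤ 3 * T / l ^ 3 := by rw [le_div_iff₀ (by positivity)]; linarith
    have : 9 * T / l ^ 3 = 3 * (3 * T / l ^ 3) := by ring
    linarith
  have hB2 : (2 * (B0 : ℝ) + 1) ≤ 45 * T / l := by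
    have h1 : (B0 : ℝ) ≤ 21 * T / l := Nat.floor_le (by positivity)
    have h2 : 1 ≤ 3 * T / l := by rw [le_div_iff₀ (by positivity)]; linarith
    have : 45 * T / l = 2 * (21 * T / l) + (3 * T / l) := by ring
    linarith
  set S : Finset ((ℤ × ℤ) × (ℤ × ℤ)) := (box2 A0 B0 ×ˢ box2 X Y).filter fun w =>
    ∀ p, B p → ¬ (p : ℤ) ∣ disc4 w.1.1 w.1.2 w.2.1 w.2.2
  have hS : (S.card : ℝ) ≤ (2 * A0 + 1) * (2 * B0 + 1) * (C * X * Y * Real.log T ^ (-η)) := by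
    have h1 : S.card = ∑ u ∈ box2 A0 B0, (S.filter fun w => w.1 = u).card :=
      Finset.card_eq_sum_card_fiberwise fun w hw =>
        (Finset.mem_product.mp (Finset.mem_filter.mp hw).1).1
    rw [h1]
    push_cast
    have h2 : ∀ u ∈ box2 A0 B0, ((S.filter fun w => w.1 = u).card : ℝ)
        ≤ C * X * Y * Real.log T ^ (-η) := by
      intro u _
      refine le_trans ?_ (hs u.1 u.2 X Y (by linarith) (by linarith))
      norm_cast
      refine Finset.card_le_card_of_injOn Prod.snd ?_ ?_
      · rintro w hw
        simp only [S, Finset.coe_filter, Finset.mem_filter, Finset.mem_product (p := w),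
          Set.mem_ofPred_eq] at hw ⊢
        obtain ⟨⟨⟨-, h3⟩, h4⟩, rfl⟩ := hw
        exact ⟨h3, h4⟩
      · intro w hw w' hw' e
        simp only [Finset.coe_filter, Set.mem_ofPred_eq] at hw hw'
        exact Prod.ext (hw.2.trans hw'.2.symm) e
    refine (Finset.sum_le_sum h2).trans ?_
    rw [Finset.sum_const, nsmul_eq_mul]
    have : ((box2 A0 B0).card : ℝ) = (2 * A0 + 1) * (2 * B0 + 1) := by
      simp only [box2, Finset.card_product, Int.card_Icc]
      rw [show ((A0 : ℤ) + 1 - -(A0 : ℤ)).toNat = 2 * A0 + 1 by omega,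
        show ((B0 : ℤ) + 1 - -(B0 : ℤ)).toNat = 2 * B0 + 1 by omega]
      push_cast; ring
    rw [this]
  have hinj : (𝓕 ×ˢ Finset.range (2 ^ j)).card ≤ S.card := by
    choose! a b c d ha h1 h2 h3 h4 h5 h6 using h
    refine Finset.card_le_card_of_injOn (fun w : α × ℕ =>
      ((a w.1, b w.1 + 3 * w.2 * a w.1), (c w.1 + 2 * w.2 * b w.1 + 3 * (w.2 : ℤ) ^ 2 * a w.1,
        d w.1 + w.2 * c w.1 + (w.2 : ℤ) ^ 2 * b w.1 + (w.2 : ℤ) ^ 3 * a w.1))) ?_ ?_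
    · rintro ⟨F, t⟩ hw
      rw [Finset.mem_coe, Finset.mem_product, Finset.mem_range] at hw
      obtain ⟨hF, ht⟩ := hw
      have ht' : (t : ℝ) ≤ l ^ 2 := by rw [hl2]; exact_mod_cast ht.le
      obtain ⟨k1, k2, k3⟩ := translate_bounds hl0 (Nat.cast_nonneg t) ht' (h1 F hF) (h2 F hF)
        (h3 F hF) (h4 F hF)
      rw [Finset.mem_coe, Finset.mem_filter, Finset.mem_product, Finset.mem_product,
        Finset.mem_product]
      refine ⟨⟨⟨?_, ?_⟩, ?_, ?_⟩, ?_⟩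
      · refine int_mem_Icc_of_abs_le (R := 3 * T / l ^ 3) ?_ (Nat.lt_floor_add_one _)
        rw [le_div_iff₀ (by positivity)]; exact h1 F hF
      · refine int_mem_Icc_of_abs_le (R := 21 * T / l) ?_ (Nat.lt_floor_add_one _)
        push_cast; exact k1
      · refine int_mem_Icc_of_abs_le (R := 50 * T * l) ?_ (by linarith)
        push_cast; exact k2
      · refine int_mem_Icc_of_abs_le (R := 40 * T * l ^ 3) ?_ (by linarith)
        push_cast; exact k3
      · intro p hp
        dsimp only
        rw [disc4_translate]
        exact h5 F hF p hp
    · rintro ⟨F, t⟩ hw ⟨F', t'⟩ hw' e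
      rw [Finset.mem_coe, Finset.mem_product] at hw hw'
      simp only [Prod.mk.injEq] at e
      have hFF : F = F' := by
        rw [← h6 F hw.1 t, ← h6 F' hw'.1 t', e.1.2, e.2.1, e.2.2, e.1.1]
      subst hFF
      have : (t : ℤ) = t' := by
        have h7 : 3 * a F * ((t : ℤ) - t') = 0 := by linarith [e.1.2]
        rcases mul_eq_zero.mp h7 with h8 | h8
        · exact absurd h8 (mul_ne_zero (by norm_num) (ha F hw.1))
        · linarith
      simp [Int.natCast_inj.mp this]
  rw [Finset.card_product, Finset.card_range] at hinj
  have hfin : (𝓕.card : ℝ) * 2 ^ j ≤ 900000 * C * T ^ 4 * Real.log T ^ (-η) := by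
    calc (𝓕.card : ℝ) * 2 ^ j ≤ S.card := by exact_mod_cast hinj
      _ ≤ _ := hS
      _ ≤ (9 * T / l ^ 3) * (45 * T / l) * (C * (51 * T * l) * (41 * T * l ^ 3) * Real.log T ^ (-η)) := by
        gcongr
      _ = 846855 * (C * T ^ 4 * Real.log T ^ (-η)) := by field_simp; ring
      _ ≤ _ := by
        have : 0 ≤ C * T ^ 4 * Real.log T ^ (-η) := by positivity
        linarith
  rw [one_div, inv_pow, ← div_eq_mul_inv, le_div_iff₀ (by positivity)]
  exact hfin

/-- The bound of `count_shape`, summed over all shapes `j`. -/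
lemma count_forms {α : Type*} (Φ : ℤ → ℤ → ℤ → ℤ → α) (B : ℕ → Prop)
    (hB : ∀ p, B p → p.Prime ∧ 5 ≤ p) {δ K : ℝ} (hδ : 0 < δ)
    (h : ∀ᶠ z : ℝ in atTop, δ * Real.log (Real.log z) - K
      ≤ ∑ p ∈ Finset.range (⌊z⌋₊ + 1) with B p, 1 / (p : ℝ)) :
    ∃ η : ℝ, 0 < η ∧ ∃ C : ℝ, 0 < C ∧ ∀ᶠ T : ℝ in atTop, ∀ 𝓕 : Finset α,
      (∀ F ∈ 𝓕, ∃ a b c d : ℤ, a ≠ 0 ∧ disc4 a b c d ≠ 0 ∧ |(disc4 a b c d : ℝ)| ≤ T ^ 4 ∧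
        (∃ A C : ℝ, 0 < A ∧ A ≤ C ∧ A * C ≤ 4 * |(disc4 a b c d : ℝ)| ∧
          |(disc4 a b c d : ℝ)| * a ^ 2 ≤ A ^ 3 ∧ |(disc4 a b c d : ℝ)| * b ^ 2 ≤ 9 * A ^ 2 * C ∧
          |(disc4 a b c d : ℝ)| * c ^ 2 ≤ 9 * A * C ^ 2 ∧ |(disc4 a b c d : ℝ)| * d ^ 2 ≤ C ^ 3) ∧
        (∀ p, B p → ¬ (p : ℤ) ∣ disc4 a b c d) ∧
        ∀ t : ℤ, Φ a (b + 3 * t * a) (c + 2 * t * b + 3 * t ^ 2 * a)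
          (d + t * c + t ^ 2 * b + t ^ 3 * a) = F) →
      (𝓕.card : ℝ) ≤ C * T ^ 4 * Real.log T ^ (-η) := by
  obtain ⟨η, hη, C, hC, hs⟩ := sieve_main B hB hδ h
  refine ⟨η, hη, 1800000 * C, by positivity, ?_⟩
  filter_upwards [hs, eventually_ge_atTop 1] with T hs hT 𝓕 hF
  have hlog : 0 ≤ Real.log T ^ (-η) := Real.rpow_nonneg (Real.log_nonneg hT) _
  have hj : ∀ F ∈ 𝓕, ∃ j : ℕ, ∃ a b c d : ℤ, a ≠ 0 ∧ |(a : ℝ)| * (√2 ^ j) ^ 3 ≤ 3 * T ∧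
      |(b : ℝ)| * √2 ^ j ≤ 12 * T ∧ |(c : ℝ)| ≤ 17 * T * √2 ^ j ∧
      |(d : ℝ)| ≤ 8 * T * (√2 ^ j) ^ 3 ∧ (∀ p, B p → ¬ (p : ℤ) ∣ disc4 a b c d) ∧
      ∀ t : ℤ, Φ a (b + 3 * t * a) (c + 2 * t * b + 3 * t ^ 2 * a)
        (d + t * c + t ^ 2 * b + t ^ 3 * a) = F := by
    intro F hFF
    obtain ⟨a, b, c, d, ha, h0, hT4, ⟨A, C, hA, hAC, h1, h2, h3, h4, h5⟩, hp, ht⟩ := hF F hFF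
    obtain ⟨j, k1, k2, k3, k4⟩ := form_bounds (abs_pos.mpr (by exact_mod_cast h0)) (by linarith)
      hT4 hA hAC h1 h2 h3 h4 h5
    exact ⟨j, a, b, c, d, ha, k1, k2, k3, k4, hp, ht⟩
  choose! J hJ using hj
  have hcard : 𝓕.card = ∑ j ∈ 𝓕.image J, (𝓕.filter fun F => J F = j).card :=
    Finset.card_eq_sum_card_image J 𝓕
  have hpos : 0 ≤ 900000 * C * T ^ 4 * Real.log T ^ (-η) := by positivity
  calc (𝓕.card : ℝ) = ∑ j ∈ 𝓕.image J, ((𝓕.filter fun F => J F = j).card : ℝ) := by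
        rw [hcard]; push_cast; rfl
    _ ≤ ∑ j ∈ 𝓕.image J, 900000 * C * T ^ 4 * Real.log T ^ (-η) * (1 / 2) ^ j := by
        refine Finset.sum_le_sum fun j _ => count_shape Φ B hT hC hlog hs j _ ?_
        intro F hFj
        rw [Finset.mem_filter] at hFj
        obtain ⟨hFF, rfl⟩ := hFj
        exact hJ F hFF
    _ = 900000 * C * T ^ 4 * Real.log T ^ (-η) * ∑ j ∈ 𝓕.image J, (1 / 2 : ℝ) ^ j := by
        rw [Finset.mul_sum]
    _ ≤ 900000 * C * T ^ 4 * Real.log T ^ (-η) * 2 := by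
        refine mul_le_mul_of_nonneg_left ?_ hpos
        exact (summable_geometric_two.sum_le_tsum _ fun _ _ => by positivity).trans_eq
          tsum_geometric_two
    _ = _ := by ring
end

/-! ### Upper bound for the specialised fields -/

section
open NumberField

/-- The upper bound: a generic cubic has few specialisations of bounded discriminant. -/
theorem sp_upper {D : ℕ} (hD : 1 ≤ D) {P : Polynomial (Polynomial ℤ)} (hP : P ∈ QSet 3 D)
    {Δ u v : ℤ[X]} {R : ℤ} (hΔ : Δ = deltaP (P.coeff 2) (P.coeff 1) (P.coeff 0))
    (hR : u * Δ + v * derivative Δ = C R) (hR0 : R ≠ 0) {l : ℕ} (hl : l.Prime)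
    (hll : ¬ (l : ℤ) ∣ Δ.coeff (4 * D)) (hr : Rootless Δ l) :
    ∃ η : ℝ, 0 < η ∧ ∃ C : ℝ, 0 < C ∧ ∀ᶠ x : ℕ in atTop,
      ((SpSet P ∩ S3Fields x).ncard : ℝ) ≤ C * (x : ℝ) ^ (1 / 3 : ℝ) * Real.log x ^ (-η) := by
  have hlead : Δ.coeff (4 * D) ≠ 0 := by
    intro h; rw [h] at hll; exact hll (dvd_zero _)
  have hdeg : Δ.natDegree = 4 * D := by
    refine le_antisymm ?_ (le_natDegree_of_ne_zero hlead)
    rw [hΔ]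
    exact deltaP_natDegree (hP.2.2 2) (hP.2.2 1) (hP.2.2 0)
  obtain ⟨δ, hδ, K, hK⟩ := rootless_recip_sum (g := Δ) (by omega) hl
    (by rwa [leadingCoeff, hdeg]) hr
  obtain ⟨M, hM⟩ : ∃ M : ℤ, M = 6 * Δ.coeff (4 * D) * R := ⟨_, rfl⟩
  have hM0 : M ≠ 0 := by rw [hM]; exact mul_ne_zero (mul_ne_zero (by norm_num) hlead) hR0
  have hM1 : (1 : ℝ) ≤ |(M : ℝ)| := by exact_mod_cast Int.one_le_abs hM0
  obtain ⟨B, hB⟩ : ∃ B : ℕ → Prop, ∀ p, B p ↔ p.Prime ∧ 5 ≤ p ∧ ¬ (p : ℤ) ∣ M ∧ Rootless Δ p :=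
    ⟨_, fun _ => Iff.rfl⟩
  have hsum : ∀ᶠ z : ℝ in atTop, δ * Real.log (Real.log z)
      - (K + ∑ p ∈ Finset.range (M.natAbs + 6), 1 / (p : ℝ))
      ≤ ∑ p ∈ Finset.range (⌊z⌋₊ + 1) with B p, 1 / (p : ℝ) := by
    filter_upwards [hK] with z hz
    have h1 : ∑ p ∈ Finset.range (⌊z⌋₊ + 1) with p.Prime ∧ Rootless Δ p, 1 / (p : ℝ) ≤
        ∑ p ∈ (Finset.range (⌊z⌋₊ + 1)).filter B ∪ Finset.range (M.natAbs + 6), 1 / (p : ℝ) := by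
      refine Finset.sum_le_sum_of_subset_of_nonneg ?_ fun _ _ _ => by positivity
      intro p hp
      rw [Finset.mem_filter] at hp
      rw [Finset.mem_union, Finset.mem_filter, hB]
      by_cases h5 : 5 ≤ p
      · by_cases hpM : (p : ℤ) ∣ M
        · right
          rw [Finset.mem_range]
          have := Nat.le_of_dvd (by omega) (Int.natCast_dvd.mp hpM)
          omega
        · exact Or.inl ⟨hp.1, hp.2.1, h5, hpM, hp.2.2⟩
      · right; rw [Finset.mem_range]; omega
    have h2 : ∑ p ∈ (Finset.range (⌊z⌋₊ + 1)).filter B ∪ Finset.range (M.natAbs + 6), 1 / (p : ℝ)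
        ≤ ∑ p ∈ Finset.range (⌊z⌋₊ + 1) with B p, 1 / (p : ℝ)
          + ∑ p ∈ Finset.range (M.natAbs + 6), 1 / (p : ℝ) := by
      rw [← Finset.sum_union_inter]
      exact le_add_of_nonneg_right (Finset.sum_nonneg fun _ _ => by positivity)
    linarith
  obtain ⟨η, hη, C, hC, hmain⟩ := count_forms formField B (fun p hp => ⟨((hB p).mp hp).1, ((hB p).mp hp).2.1⟩) hδ hsum
  refine ⟨η, hη, C * (M : ℝ) ^ 4 * 12 ^ η, by positivity, ?_⟩
  have hT : Tendsto (fun x : ℕ => |(M : ℝ)| * (x : ℝ) ^ (1 / 12 : ℝ)) atTop atTop :=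
    Tendsto.const_mul_atTop (by linarith)
      ((tendsto_rpow_atTop (by norm_num)).comp tendsto_natCast_atTop_atTop)
  filter_upwards [hT.eventually hmain, eventually_ge_atTop 3] with x hx hx3
  have hx0 : (0 : ℝ) < x := by positivity
  have hx1 : (3 : ℝ) ≤ x := by exact_mod_cast hx3
  have hlx : 0 < Real.log x := Real.log_pos (by linarith)
  set T : ℝ := |(M : ℝ)| * (x : ℝ) ^ (1 / 12 : ℝ) with hTd
  have hT0 : 0 < T := by positivity
  have hT4 : T ^ 4 = (M : ℝ) ^ 4 * (x : ℝ) ^ (1 / 3 : ℝ) := by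
    rw [hTd, mul_pow, Even.pow_abs (by decide), ← Real.rpow_natCast ((x : ℝ) ^ _),
      ← Real.rpow_mul hx0.le]
    norm_num
  have hT12 : (T ^ 4) ^ 3 = (M : ℝ) ^ 12 * x := by
    rw [hT4, mul_pow, ← pow_mul, ← Real.rpow_natCast ((x : ℝ) ^ _), ← Real.rpow_mul hx0.le]
    norm_num
  have hlogT : Real.log T ^ (-η) ≤ 12 ^ η * Real.log x ^ (-η) := by
    have h1 : Real.log x / 12 ≤ Real.log T := by
      rw [hTd, Real.log_mul (by linarith) (by positivity), Real.log_rpow hx0]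
      linarith [Real.log_nonneg hM1]
    calc Real.log T ^ (-η) ≤ (Real.log x / 12) ^ (-η) :=
          Real.rpow_le_rpow_of_nonpos (by positivity) h1 (by linarith)
      _ = 12 ^ η * Real.log x ^ (-η) := by
          rw [Real.div_rpow hlx.le (by norm_num), Real.rpow_neg (by norm_num : (0:ℝ) ≤ 12)]
          field_simp
  by_cases hfin : (SpSet P ∩ S3Fields x).Finite
  swap
  · rw [Set.Infinite.ncard hfin]
    simp only [Nat.cast_zero]
    positivity
  rw [Set.ncard_eq_toFinset_card _ hfin]
  refine (hx hfin.toFinset ?_).trans ?_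
  · intro F hF
    rw [Set.Finite.mem_toFinset] at hF
    obtain ⟨k, hnf, hk, hall⟩ := spec_field hP hΔ hR hR0 hlead hM hF.1 hF.2
    obtain ⟨a, b, c, d, ω, θ, hmf, hd0, hred⟩ := exists_reduced hk
    obtain ⟨-, h2, h3⟩ := hall a b c d ω θ hmf hd0
    refine ⟨a, b, c, d, hmf.a_ne hk, hd0, ?_, hred, ?_, ?_⟩
    · refine le_of_pow_le_pow_left₀ (n := 3) (by norm_num) (by positivity) ?_
      rw [hT12]
      exact_mod_cast h2
    · intro p hBp hpd
      obtain ⟨hp, -, hpM, hpr⟩ := (hB p).mp hBp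
      exact h3 p hp hpM hpd hpr
    · intro t
      obtain ⟨ω', θ', hmf'⟩ := hmf.translate t
      exact (hall _ _ _ _ _ _ hmf' (by rwa [disc4_translate])).1.symm
  · rw [hT4]
    calc C * ((M : ℝ) ^ 4 * (x : ℝ) ^ (1 / 3 : ℝ)) * Real.log T ^ (-η)
        ≤ C * ((M : ℝ) ^ 4 * (x : ℝ) ^ (1 / 3 : ℝ)) * (12 ^ η * Real.log x ^ (-η)) := by gcongr
      _ = _ := by ring
end

/-! ### Cubics with imaginary quadratic resolvent -/

section
open NumberField

variable {L : Type*} [Field L] [NumberField L]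

lemma two_dvd_finrank {δ : L} {s : ℤ} (hs : s < 0) (hδ : δ ^ 2 = s) : 2 ∣ Module.finrank ℚ L := by
  have hinteg : IsIntegral ℚ δ := Algebra.IsIntegral.isIntegral δ
  have h1 : minpoly ℚ δ = X ^ 2 - C (s : ℚ) := by
    symm
    refine minpoly.eq_of_irreducible_of_monic ?_ (by simp [hδ]) (by monicity!)
    refine X_pow_sub_C_irreducible_of_prime Nat.prime_two fun b hb => ?_
    have : (s : ℚ) < 0 := by exact_mod_cast hs
    nlinarith [sq_nonneg b]
  have h2 := IntermediateField.adjoin.finrank hinteg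
  rw [h1, natDegree_X_pow_sub_C] at h2
  rw [← h2]
  exact ⟨_, (Module.finrank_mul_finrank ℚ ℚ⟮δ⟯ L).symm⟩

lemma three_dvd_finrank {f : ℚ[X]} (hf : Irreducible f) (hm : f.Monic) (hd : f.natDegree = 3)
    {y : L} (hy : aeval y f = 0) : 3 ∣ Module.finrank ℚ L := by
  have hinteg : IsIntegral ℚ y := Algebra.IsIntegral.isIntegral y
  have h1 : minpoly ℚ y = f := (minpoly.eq_of_irreducible_of_monic hf hy hm).symm
  have h2 := IntermediateField.adjoin.finrank hinteg
  rw [h1, hd] at h2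
  rw [← h2]
  exact ⟨_, (Module.finrank_mul_finrank ℚ ℚ⟮y⟯ L).symm⟩

/-- The splitting field of an irreducible cubic whose quadratic resolvent is imaginary. -/
lemma s3_equiv {f : ℚ[X]} (hf : Irreducible f) (hm : f.Monic) (hd : f.natDegree = 3)
    (ρ : Fin 3 → L) (hsplit : f.map (algebraMap ℚ L) = ∏ i, (X - C (ρ i)))
    (hgen : IntermediateField.adjoin ℚ (Set.range ρ) = ⊤) {δ : L} {s : ℤ} (hs : s < 0)
    (hδ : δ ^ 2 = s) :
    IsGalois ℚ L ∧ Module.finrank ℚ L = 6 ∧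
      ∃ e : (L ≃ₐ[ℚ] L) ≃* Equiv.Perm (Fin 3), ∀ σ i, σ (ρ i) = ρ (e σ i) := by
  have hroot : ∀ y : L, aeval y f = 0 ↔ ∃ i, y = ρ i := by
    intro y
    rw [← eval_map_algebraMap, hsplit, eval_prod, Finset.prod_eq_zero_iff]
    simp [sub_eq_zero]
  have hrs : f.rootSet L = Set.range ρ := by
    ext y
    rw [mem_rootSet, hroot]
    simp only [Set.mem_range, hf.ne_zero, ne_eq, not_false_eq_true, true_and, eq_comm]
  have hsep : f.Separable := hf.separable
  have hsf : IsSplittingField ℚ L f := by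
    rw [isSplittingField_iff_intermediateField]
    refine ⟨?_, by rw [hrs, hgen]⟩
    rw [hsplit]
    exact Splits.prod fun i _ => Splits.X_sub_C _
  have hgal : IsGalois ℚ L := IsGalois.of_separable_splitting_field hsep
  have hinj : Function.Injective ρ := by
    have h1 : (f.map (algebraMap ℚ L)).Separable := hsep.map
    rw [hsplit, separable_prod_X_sub_C_iff] at h1
    exact h1
  have hj : ∀ (σ : L ≃ₐ[ℚ] L) (i : Fin 3), ∃ j, σ (ρ i) = ρ j := by
    intro σ i
    have h1 := aeval_algHom_apply (σ : L →ₐ[ℚ] L) (ρ i) f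
    rw [(hroot _).mpr ⟨i, rfl⟩, map_zero] at h1
    exact (hroot _).mp h1
  choose j hj using hj
  have hjm : ∀ σ τ i, j (σ * τ) i = j σ (j τ i) := fun σ τ i => hinj (by
    rw [← hj, ← hj, ← hj]; rfl)
  have hj1 : ∀ i, j 1 i = i := fun i => hinj (by rw [← hj]; rfl)
  let φ : (L ≃ₐ[ℚ] L) →* Equiv.Perm (Fin 3) :=
    { toFun := fun σ => ⟨j σ, j σ⁻¹, fun i => by rw [← hjm, inv_mul_cancel, hj1],
        fun i => by rw [← hjm, mul_inv_cancel, hj1]⟩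
      map_one' := Equiv.ext hj1
      map_mul' := fun σ τ => Equiv.ext (hjm σ τ) }
  have hφ : ∀ σ i, σ (ρ i) = ρ (φ σ i) := hj
  have hφi : Function.Injective φ := by
    intro σ τ h
    have h1 : ∀ i, σ (ρ i) = τ (ρ i) := fun i => by rw [hφ, hφ, h]
    have h2 : (σ : L →ₐ[ℚ] L) = τ := by
      refine AlgHom.ext_of_adjoin_eq_top hsf.adjoin_rootSet ?_
      rw [hrs]
      rintro _ ⟨i, rfl⟩
      exact h1 i
    exact AlgEquiv.ext fun x => DFunLike.congr_fun h2 x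
  have hcard : Nat.card (L ≃ₐ[ℚ] L) = Module.finrank ℚ L := IsGalois.card_aut_eq_finrank ℚ L
  have h6 : Nat.card (Equiv.Perm (Fin 3)) = 6 := by
    rw [Nat.card_eq_fintype_card, Fintype.card_perm, Fintype.card_fin]; rfl
  have hle : Module.finrank ℚ L ≤ 6 := by
    rw [← hcard, ← h6]; exact Nat.card_le_card_of_injective φ hφi
  have hpos : 0 < Module.finrank ℚ L := Module.finrank_pos
  have h2 := two_dvd_finrank hs hδ
  have h3 := three_dvd_finrank hf hm hd ((hroot (ρ 0)).mpr ⟨0, rfl⟩)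
  have hfr : Module.finrank ℚ L = 6 := by omega
  have hbij : Function.Bijective φ :=
    Function.Injective.bijective_of_nat_card_le hφi (by rw [hcard, h6, hfr])
  exact ⟨hgal, hfr, MulEquiv.ofBijective φ hbij, hφ⟩

lemma sum_perm3 {A : Type*} [AddCommMonoid A] (G : Fin 3 → Fin 3 → Fin 3 → A) :
    ∑ π : Equiv.Perm (Fin 3), G (π 0) (π 1) (π 2) =
      G 0 1 2 + G 1 0 2 + G 0 2 1 + G 2 1 0 + G 1 2 0 + G 2 0 1 := by
  have : (Finset.univ : Finset (Equiv.Perm (Fin 3))) = {1, Equiv.swap 0 1, Equiv.swap 1 2,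
    Equiv.swap 0 2, Equiv.swap 0 1 * Equiv.swap 1 2, Equiv.swap 1 2 * Equiv.swap 0 1} := by decide
  rw [this]
  repeat rw [Finset.sum_insert (by decide)]
  rw [Finset.sum_singleton]
  simp only [← add_assoc]
  rfl

lemma trace_perm3 [IsGalois ℚ L] (e : (L ≃ₐ[ℚ] L) ≃* Equiv.Perm (Fin 3))
    (G : Fin 3 → Fin 3 → Fin 3 → L) (x : 𝓞 L) (n : ℤ)
    (hx : ∀ σ : L ≃ₐ[ℚ] L, σ x = G (e σ 0) (e σ 1) (e σ 2))
    (hn : G 0 1 2 + G 1 0 2 + G 0 2 1 + G 2 1 0 + G 1 2 0 + G 2 0 1 = n) :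
    Algebra.trace ℤ (𝓞 L) x = n := by
  have h1 := trace_eq_sum_automorphisms (K := ℚ) (x : L)
  have h2 : ∑ σ : L ≃ₐ[ℚ] L, σ x = n := by
    rw [← hn, ← sum_perm3]
    exact Fintype.sum_equiv e.toEquiv _ _ hx
  rw [h2, ← Algebra.coe_trace_int] at h1
  rw [map_intCast] at h1
  exact_mod_cast h1
end

/-! ### Discriminant of the splitting field of X³ - 3 X - r -/

section
open NumberField

variable {L : Type*} [Field L] [NumberField L]

/-- The determinant of the trace form on the integers used in `discr_bound`. -/
lemma det_gram (m : ℤ) : (!![6, 0, 0, 0, 0, 0; 0, -18 * m, 0, 0, 0, 0; 0, 0, 12, -6, 0, 0;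
    0, 0, -6, 12, 0, 0; 0, 0, 0, 0, -12 * m, 6 * m; 0, 0, 0, 0, 6 * m, -12 * m] :
    Matrix (Fin 6) (Fin 6) ℤ).det = -1259712 * m ^ 3 := by
  simp [Matrix.det_succ_row_zero, Fin.sum_univ_succ, Fin.succAbove]
  ring

/-- Explicit integers in the splitting field of `X ^ 3 - 3 X - r` bound its discriminant. -/
lemma discr_bound [IsGalois ℚ L] (hfr : Module.finrank ℚ L = 6) {ρ : Fin 3 → L}
    (e : (L ≃ₐ[ℚ] L) ≃* Equiv.Perm (Fin 3)) (he : ∀ σ i, σ (ρ i) = ρ (e σ i))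
    {m w r : ℤ} (hm : m ≠ 0) (hw : w ≠ 0) (hpell : r ^ 2 - m * w ^ 2 = 4)
    (h1 : ρ 0 + ρ 1 + ρ 2 = 0) (h2 : ρ 0 * ρ 1 + ρ 0 * ρ 2 + ρ 1 * ρ 2 = -3)
    (h3 : ρ 0 * ρ 1 * ρ 2 = r) {δ : L}
    (hδ : δ = (ρ 0 - ρ 1) * (ρ 1 - ρ 2) * (ρ 0 - ρ 2) / (3 * w)) (hδ2 : δ ^ 2 = -3 * m) :
    |NumberField.discr L| ≤ 1259712 * |m| ^ 3 := by
  have hwL : (w : L) ≠ 0 := by exact_mod_cast hw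
  have hmL : (m : L) ≠ 0 := by exact_mod_cast hm
  have hpL : (r : L) ^ 2 - m * (w : L) ^ 2 = 4 := by exact_mod_cast hpell
  have hroot : ∀ i, ρ i ^ 3 - 3 * ρ i - r = 0 := by
    intro i
    fin_cases i <;> simp only [Fin.zero_eta, Fin.mk_one, Fin.reduceFinMk]
    · linear_combination ρ 0 ^ 2 * h1 - ρ 0 * h2 + h3
    · linear_combination ρ 1 ^ 2 * h1 - ρ 1 * h2 + h3
    · linear_combination ρ 2 ^ 2 * h1 - ρ 2 * h2 + h3
  have hkey : ∀ i, (ρ i ^ 2 - 4) * (ρ i ^ 2 - 1) ^ 2 = m * (w : L) ^ 2 := by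
    intro i
    linear_combination (ρ i ^ 3 - 3 * ρ i + r) * hroot i + hpL
  have hne : ∀ i, ρ i ^ 2 - 1 ≠ 0 := by
    intro i h
    have := hkey i
    rw [h] at this
    exact mul_ne_zero hmL (pow_ne_zero 2 hwL) (by rw [← this]; ring)
  obtain ⟨κ, hκ⟩ : ∃ κ : Fin 3 → L, ∀ i, κ i = m * w / (ρ i ^ 2 - 1) := ⟨_, fun _ => rfl⟩
  have hκ2 : ∀ i, κ i ^ 2 = m * (ρ i ^ 2 - 4) := by
    intro i
    rw [hκ, div_pow, div_eq_iff (pow_ne_zero 2 (hne i))]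
    linear_combination (-(m : L)) * hkey i
  -- `3 (ρ i ^ 2 - 1)` is the derivative of the cubic at `ρ i`, so `κ i` is a Lagrange coefficient
  have hκδ : ∀ i j k, ρ i + ρ j + ρ k = 0 → ρ i * ρ j + ρ i * ρ k + ρ j * ρ k = -3 →
      3 * κ i * ((ρ i - ρ j) * (ρ i - ρ k)) = 9 * m * w := by
    intro i j k h1 h2
    have : (ρ i - ρ j) * (ρ i - ρ k) = 3 * (ρ i ^ 2 - 1) := by
      linear_combination -2 * ρ i * h1 + h2
    rw [this, hκ]
    field_simp [hne i]
    norm_num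
  obtain ⟨Q, hQ⟩ : ∃ Q, Q = (ρ 0 - ρ 1) * (ρ 1 - ρ 2) * (ρ 0 - ρ 2) := ⟨_, rfl⟩
  have hQ0 : Q ≠ 0 := by
    rintro rfl
    rw [← hQ, zero_div] at hδ
    rw [hδ] at hδ2
    exact mul_ne_zero (by norm_num : (-3 : L) ≠ 0) hmL (by rw [← hδ2]; ring)
  have k0 : κ 0 * Q = 3 * m * w * (ρ 1 - ρ 2) := by
    rw [hQ]; linear_combination (ρ 1 - ρ 2) / 3 * hκδ 0 1 2 h1 h2
  have k1 : κ 1 * Q = -3 * m * w * (ρ 0 - ρ 2) := by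
    rw [hQ]; linear_combination (-(ρ 0 - ρ 2) / 3) * hκδ 1 0 2 (by linear_combination h1)
      (by linear_combination h2)
  have k2 : κ 2 * Q = 3 * m * w * (ρ 0 - ρ 1) := by
    rw [hQ]; linear_combination (ρ 0 - ρ 1) / 3 * hκδ 2 0 1 (by linear_combination h1)
      (by linear_combination h2)
  have s1 : κ 0 + κ 1 + κ 2 = 0 := by
    refine mul_right_cancel₀ hQ0 ?_
    linear_combination k0 + k1 + k2
  have s2 : ρ 0 * κ 0 + ρ 1 * κ 1 + ρ 2 * κ 2 = 0 := by
    refine mul_right_cancel₀ hQ0 ?_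
    linear_combination ρ 0 * k0 + ρ 1 * k1 + ρ 2 * k2
  have hρint : ∀ i, IsIntegral ℤ (ρ i) := fun i =>
    ⟨X ^ 3 - 3 * X - C r, by monicity!, by
      rw [eval₂_sub, eval₂_C]; simpa using hroot i⟩
  have hintsq : ∀ {x y : L}, IsIntegral ℤ y → x ^ 2 = y → IsIntegral ℤ x := by
    rintro x y hy rfl
    exact hy.of_pow (by norm_num)
  have hmint : ∀ n : ℤ, IsIntegral ℤ (n : L) := fun n => isIntegral_algebraMap (x := n)
  have hκint : ∀ i, IsIntegral ℤ (κ i) := fun i => by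
    refine hintsq (y := (m : L) * (ρ i ^ 2 - (4 : ℤ))) ?_ (by rw [hκ2]; norm_num)
    exact (hmint m).mul (((hρint i).pow 2).sub (hmint 4))
  have hδint : IsIntegral ℤ δ := hintsq (y := ((-3 * m : ℤ) : L)) (hmint _) (by rw [hδ2]; norm_num)
  obtain ⟨d, hd⟩ : ∃ d : 𝓞 L, (d : L) = δ := ⟨⟨_, hδint⟩, rfl⟩
  choose P hP using fun i => (⟨⟨_, hρint i⟩, rfl⟩ : ∃ d : 𝓞 L, (d : L) = ρ i)
  choose K hK using fun i => (⟨⟨_, hκint i⟩, rfl⟩ : ∃ d : 𝓞 L, (d : L) = κ i)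
  have hσκ : ∀ (σ : L ≃ₐ[ℚ] L) i, σ (κ i) = κ (e σ i) := fun σ i => by
    rw [hκ, hκ, map_div₀, map_sub, map_pow, he, map_mul, map_one, map_intCast, map_intCast]
  have hσδ : ∀ σ : L ≃ₐ[ℚ] L, σ δ = (ρ (e σ 0) - ρ (e σ 1)) * (ρ (e σ 1) - ρ (e σ 2)) *
      (ρ (e σ 0) - ρ (e σ 2)) / (3 * w) := fun σ => by
    rw [hδ, map_div₀, map_mul, map_mul, map_mul, map_sub, map_sub, map_sub, he, he, he,
      map_intCast, map_ofNat]
  have sq : ρ 0 ^ 2 + ρ 1 ^ 2 + ρ 2 ^ 2 = 6 := by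
    linear_combination (ρ 0 + ρ 1 + ρ 2) * h1 - 2 * h2
  have t00 : Algebra.trace ℤ (𝓞 L) 1 = 6 :=
    trace_perm3 e (fun _ _ _ => 1) 1 6 (fun σ => by simp) (by norm_num)
  have t0d : Algebra.trace ℤ (𝓞 L) d = 0 :=
    trace_perm3 e (fun i j k => (ρ i - ρ j) * (ρ j - ρ k) * (ρ i - ρ k) / (3 * w)) d 0
      (fun σ => by rw [hd, hσδ]) (by push_cast; ring)
  have t0P : ∀ i, Algebra.trace ℤ (𝓞 L) (P i) = 0 := by
    intro i
    refine trace_perm3 e (fun j k l => ρ (![j, k, l] i)) (P i) 0 (fun σ => ?_) ?_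
    · rw [hP, he]; fin_cases i <;> rfl
    · fin_cases i <;> simp <;> linear_combination 2 * h1
  have t0K : ∀ i, Algebra.trace ℤ (𝓞 L) (K i) = 0 := by
    intro i
    refine trace_perm3 e (fun j k l => κ (![j, k, l] i)) (K i) 0 (fun σ => ?_) ?_
    · rw [hK, hσκ]; fin_cases i <;> rfl
    · fin_cases i <;> simp <;> linear_combination 2 * s1
  have cm : ∀ x y : 𝓞 L, ((x * y : 𝓞 L) : L) = x * y := fun x y => map_mul (algebraMap (𝓞 L) L) x y
  have tdd : Algebra.trace ℤ (𝓞 L) (d * d) = -18 * m :=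
    trace_perm3 e (fun _ _ _ => -3 * m) (d * d) (-18 * m)
      (fun σ => by
        rw [cm, hd, ← pow_two, hδ2, map_mul, map_neg, map_ofNat, map_intCast]) (by push_cast; ring)
  have tdP : ∀ i, Algebra.trace ℤ (𝓞 L) (d * P i) = 0 := by
    intro i
    refine trace_perm3 e (fun j k l => (ρ j - ρ k) * (ρ k - ρ l) * (ρ j - ρ l) / (3 * w) *
      ρ (![j, k, l] i)) (d * P i) 0 (fun σ => ?_) ?_
    · rw [cm, hd, hP, map_mul, he, hσδ]; fin_cases i <;> rfl
    · fin_cases i <;> simp <;> ring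
  have tdK : ∀ i, Algebra.trace ℤ (𝓞 L) (d * K i) = 0 := by
    intro i
    refine trace_perm3 e (fun j k l => (ρ j - ρ k) * (ρ k - ρ l) * (ρ j - ρ l) / (3 * w) *
      κ (![j, k, l] i)) (d * K i) 0 (fun σ => ?_) ?_
    · rw [cm, hd, hK, map_mul, hσκ, hσδ]; fin_cases i <;> rfl
    · fin_cases i <;> simp <;> ring
  have tPK : ∀ i j, Algebra.trace ℤ (𝓞 L) (P i * K j) = 0 := by
    intro i i'
    refine trace_perm3 e (fun j k l => ρ (![j, k, l] i) * κ (![j, k, l] i')) (P i * K i') 0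
      (fun σ => ?_) ?_
    · rw [cm, hP, hK, map_mul, he, hσκ]; fin_cases i <;> fin_cases i' <;> rfl
    · fin_cases i <;> fin_cases i' <;> simp <;>
      first
        | linear_combination 2 * s2
        | linear_combination (κ 0 + κ 1 + κ 2) * h1 - s2
  have tPP : ∀ i, Algebra.trace ℤ (𝓞 L) (P i * P i) = 12 := by
    intro i
    refine trace_perm3 e (fun j k l => ρ (![j, k, l] i) * ρ (![j, k, l] i)) (P i * P i) 12
      (fun σ => ?_) ?_
    · rw [cm, hP, map_mul, he]; fin_cases i <;> rfl
    · fin_cases i <;> simp <;> linear_combination 2 * sq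
  have tPQ : Algebra.trace ℤ (𝓞 L) (P 0 * P 1) = -6 := by
    refine trace_perm3 e (fun j k l => ρ j * ρ k) (P 0 * P 1) (-6)
      (fun σ => ?_) ?_
    · rw [cm, hP, hP, map_mul, he, he]
    · simp; linear_combination 2 * h2
  have tKK : ∀ i, Algebra.trace ℤ (𝓞 L) (K i * K i) = -12 * m := by
    intro i
    refine trace_perm3 e (fun j k l => κ (![j, k, l] i) * κ (![j, k, l] i)) (K i * K i) (-12 * m)
      (fun σ => ?_) ?_
    · rw [cm, hK, map_mul, hσκ]; fin_cases i <;> rfl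
    · fin_cases i <;> simp <;>
      linear_combination 2 * hκ2 0 + 2 * hκ2 1 + 2 * hκ2 2 + 2 * m * sq
  have tKQ : Algebra.trace ℤ (𝓞 L) (K 0 * K 1) = 6 * m := by
    refine trace_perm3 e (fun j k l => κ j * κ k) (K 0 * K 1) (6 * m)
      (fun σ => ?_) ?_
    · rw [cm, hK, hK, map_mul, hσκ, hσκ]
    · simp
      linear_combination (κ 0 + κ 1 + κ 2) * s1 - hκ2 0 - hκ2 1 - hκ2 2 - m * sq
  have hdisc : Algebra.discr ℤ ![1, d, P 0, P 1, K 0, K 1] = -1259712 * m ^ 3 := by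
    rw [Algebra.discr_def, ← det_gram]
    congr 1
    ext i j
    rw [Algebra.traceMatrix_apply, Algebra.traceForm_apply]
    fin_cases i <;> fin_cases j <;>
      simp [t00, t0d, t0P, t0K, tdd, tdP, tdK, tPK, tPP, tPQ, tKK, tKQ, mul_comm _ d,
        mul_comm (K _) (P _), mul_comm (P 1) (P 0), mul_comm (K 1) (K 0)]
  obtain ⟨i, hi⟩ := discr_family (K := L) (ι := Fin 6) (by rw [hfr]; rfl)
    ![1, d, P 0, P 1, K 0, K 1]
  rw [hdisc] at hi
  have hi0 : i ≠ 0 := by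
    rintro rfl
    have : m ^ 3 = 0 := by linarith
    exact hm (pow_eq_zero_iff (by norm_num) |>.mp this)
  have habs := congrArg abs hi
  rw [abs_mul, abs_mul, abs_pow, abs_pow] at habs
  have h1i : 1 ≤ |i| ^ 2 := one_le_pow₀ (Int.one_le_abs hi0)
  calc |NumberField.discr L| = |NumberField.discr L| * 1 := by ring
    _ ≤ |NumberField.discr L| * |i| ^ 2 := by gcongr
    _ = 1259712 * |m| ^ 3 := by rw [← habs]; norm_num
end

/-! ### A Pell-type equation -/

section
open NumberField

/-- The cubic `X ^ 3 - 3 X - r` for the least solution of a Pell-type equation is irreducible: a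
root would be a smaller solution. -/
lemma exists_pell_irreducible {m : ℤ} (hm : 2 ≤ m) (hsq : Squarefree m) :
    ∃ r w : ℤ, w ≠ 0 ∧ r ^ 2 - m * w ^ 2 = 4 ∧
      Irreducible (X ^ 3 - 3 * X - C (r : ℚ) : ℚ[X]) := by
  have hns : ¬ IsSquare m := by
    rintro ⟨k, rfl⟩
    have := hsq k (dvd_refl _)
    rcases Int.isUnit_iff.mp this with rfl | rfl <;> norm_num at hm
  have hex : ∃ r : ℕ, 2 < r ∧ ∃ w : ℤ, (r : ℤ) ^ 2 - m * w ^ 2 = 4 := by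
    obtain ⟨x, y, hxy, hy⟩ := Pell.exists_of_not_isSquare (by omega) hns
    refine ⟨2 * x.natAbs, ?_, 2 * y, ?_⟩
    · have h1 : 1 ≤ y ^ 2 := by have := pow_pos (abs_pos.mpr hy) 2; rw [sq_abs] at this; omega
      have h2 : 1 < |x| := by
        rw [← one_lt_sq_iff₀ (abs_nonneg x), sq_abs]; nlinarith
      have := Int.natCast_natAbs x
      omega
    · push_cast
      rw [mul_pow, sq_abs]
      linear_combination 4 * hxy
  obtain ⟨hr2, w, hw⟩ := Nat.find_spec hex
  have hmin := fun k hk => Nat.find_min hex (m := k) hk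
  set r := Nat.find hex
  have hr2' : (2 : ℤ) < r := by exact_mod_cast hr2
  have hw0 : w ≠ 0 := by rintro rfl; nlinarith
  refine ⟨r, w, hw0, hw, ?_⟩
  have hmon : (X ^ 3 - 3 * X - C (r : ℤ) : ℤ[X]).Monic := by monicity!
  have hmap : (X ^ 3 - 3 * X - C ((r : ℤ) : ℚ) : ℚ[X]) =
      (X ^ 3 - 3 * X - C (r : ℤ) : ℤ[X]).map (algebraMap ℤ ℚ) := by
    rw [Polynomial.map_sub, map_C]; simp
  have hdeg : (X ^ 3 - 3 * X - C (r : ℤ) : ℤ[X]).natDegree = 3 := by compute_degree!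
  have hmonQ : (X ^ 3 - 3 * X - C ((r : ℤ) : ℚ) : ℚ[X]).Monic := by rw [hmap]; exact hmon.map _
  have hdegQ : (X ^ 3 - 3 * X - C ((r : ℤ) : ℚ) : ℚ[X]).natDegree = 3 := by
    rw [hmap, hmon.natDegree_map, hdeg]
  rw [hmonQ.irreducible_iff_roots_eq_zero_of_degree_le_three (by omega) (by omega)]
  by_contra hroots
  obtain ⟨q, hq⟩ := Multiset.exists_mem_of_ne_zero hroots
  have hq0 : aeval q (X ^ 3 - 3 * X - C (r : ℤ) : ℤ[X]) = 0 := by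
    have := (mem_roots'.mp hq).2
    rw [hmap, IsRoot, eval_map_algebraMap] at this
    exact this
  obtain ⟨ρ, rfl⟩ := isInteger_of_is_root_of_monic hmon hq0
  have hρ : ρ ^ 3 - 3 * ρ = r := by
    rw [map_sub, aeval_C] at hq0
    simp only [map_sub, map_mul, map_pow, aeval_X, map_ofNat] at hq0
    simp at hq0
    have : ((ρ ^ 3 - 3 * ρ - r : ℤ) : ℚ) = 0 := by push_cast; exact hq0
    have h2 : ρ ^ 3 - 3 * ρ - r = 0 := by exact_mod_cast this
    linarith
  have hkey : (ρ ^ 2 - 4) * (ρ ^ 2 - 1) ^ 2 = m * w ^ 2 := by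
    linear_combination (ρ ^ 3 - 3 * ρ + r) * hρ + hw
  have hdvd : (ρ ^ 2 - 1) ∣ w := by
    have hm0 : m ≠ 0 := by omega
    have hd0 : ρ ^ 2 - 1 ≠ 0 := by
      intro h; rw [h] at hkey
      exact mul_ne_zero hm0 (pow_ne_zero 2 hw0) (by rw [← hkey]; ring)
    have h1 : (ρ ^ 2 - 1) ^ 2 ∣ (m * w) ^ 2 := ⟨m * (ρ ^ 2 - 4), by linear_combination -m * hkey⟩
    obtain ⟨z, hz⟩ := (Int.pow_dvd_pow_iff (by norm_num)).mp h1
    have h2 : z ^ 2 = m * (ρ ^ 2 - 4) := by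
      refine mul_left_cancel₀ (pow_ne_zero 2 hd0) ?_
      linear_combination -(m * w + (ρ ^ 2 - 1) * z) * hz - m * hkey
    obtain ⟨y, rfl⟩ := (hsq.dvd_pow_iff_dvd (by norm_num)).mp (Dvd.intro _ h2.symm)
    exact ⟨y, mul_left_cancel₀ hm0 (by linear_combination hz)⟩
  obtain ⟨v, rfl⟩ := hdvd
  have hne : (ρ ^ 2 - 1) ≠ 0 := left_ne_zero_of_mul hw0
  have hv0 : v ≠ 0 := right_ne_zero_of_mul hw0
  have hv : ρ ^ 2 - m * v ^ 2 = 4 := by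
    have : (ρ ^ 2 - 4 - m * v ^ 2) * (ρ ^ 2 - 1) ^ 2 = 0 := by linear_combination hkey
    rcases mul_eq_zero.mp this with h | h
    · linarith
    · exact absurd (pow_eq_zero_iff (by norm_num) |>.mp h) hne
  have hv1 : 1 ≤ v ^ 2 := by have := pow_pos (abs_pos.mpr hv0) 2; rw [sq_abs] at this; omega
  have hρ2 : 2 < |ρ| := by
    by_contra h
    have h1 : |ρ| ^ 2 ≤ 2 ^ 2 := pow_le_pow_left₀ (abs_nonneg _) (by omega) 2
    rw [sq_abs] at h1
    nlinarith
  have hcast := Int.natCast_natAbs ρ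
  refine hmin ρ.natAbs ?_ ⟨by omega, v, by rw [hcast, sq_abs]; exact hv⟩
  have h1 : (r : ℤ) = |ρ| * (|ρ| ^ 2 - 3) := by
    have h3 : |ρ ^ 3 - 3 * ρ| = (r : ℤ) := by rw [hρ]; exact abs_of_pos (by omega)
    rw [← h3, show ρ ^ 3 - 3 * ρ = ρ * (ρ ^ 2 - 3) by ring, abs_mul, ← sq_abs ρ,
      abs_of_nonneg (a := |ρ| ^ 2 - 3) (by nlinarith)]
  have : |ρ| < r := by rw [h1]; nlinarith [mul_pos (show 0 < |ρ| by omega) (show 0 < |ρ| - 2 by omega)]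
  omega
end

/-! ### A family of S₃-fields -/

section
open NumberField

local notation "Qbar" => AlgebraicClosure ℚ

/-- An `S₃`-field of discriminant `O(m ^ 3)` with quadratic subfield `ℚ(√(-3 * m))`. -/
lemma exists_s3_field {m : ℤ} (hm : 2 ≤ m) (hsq : Squarefree m) {x : ℕ}
    (hx : 1259712 * m ^ 3 ≤ x) : ∃ F ∈ S3Fields x, ∃ δ : F, δ ^ 2 = ((-3 * m : ℤ) : F) := by
  obtain ⟨r, w, hw, hpell, hirr⟩ := exists_pell_irreducible hm hsq
  set f : ℚ[X] := X ^ 3 - 3 * X - C (r : ℚ) with hf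
  have hmon : f.Monic := by rw [hf]; monicity!
  have hdeg : f.natDegree = 3 := by rw [hf]; compute_degree!
  obtain ⟨z, hz⟩ : ∃ z : Fin 3 → Qbar, f.map (algebraMap ℚ Qbar) = ∏ i, (X - C (z i)) := by
    have hsp : (f.map (algebraMap ℚ Qbar)).Splits := IsAlgClosed.splits _
    have hm' : (f.map (algebraMap ℚ Qbar)).Monic := hmon.map _
    have h1 := hsp.eq_prod_roots
    rw [hm'.leadingCoeff, C_1, one_mul] at h1
    have hc : (f.map (algebraMap ℚ Qbar)).roots.card = 3 := by
      rw [← hsp.natDegree_eq_card_roots, hmon.natDegree_map, hdeg]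
    obtain ⟨a, b, c, habc⟩ := Multiset.card_eq_three.mp hc
    refine ⟨![a, b, c], ?_⟩
    rw [h1, habc, Fin.prod_univ_three]
    simp [mul_assoc]
  set F : IntermediateField ℚ (AlgebraicClosure ℚ) := IntermediateField.adjoin ℚ (Set.range z)
    with hF
  have hfd : FiniteDimensional ℚ F :=
    IntermediateField.finiteDimensional_adjoin fun y _ => Algebra.IsIntegral.isIntegral y
  have hnf : NumberField F := ⟨⟩
  let ρ : Fin 3 → F := fun i => ⟨z i, IntermediateField.subset_adjoin _ _ ⟨i, rfl⟩⟩
  have hinj : Function.Injective (algebraMap F Qbar) := (algebraMap F Qbar).injective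
  have hsplit : f.map (algebraMap ℚ F) = ∏ i, (X - C (ρ i)) := by
    refine Polynomial.map_injective _ hinj ?_
    rw [Polynomial.map_map, Polynomial.map_prod]
    simp only [Polynomial.map_sub, map_X, map_C]
    refine Eq.trans ?_ hz
    congr 1
  have hgen : @IntermediateField.adjoin ℚ _ F _ F.algebra' (Set.range ρ) = ⊤ := by
    refine IntermediateField.lift_injective F ?_
    rw [IntermediateField.lift_top, IntermediateField.lift_adjoin, ← Set.range_comp]
    rfl
  have hexp : ∀ y : F, y ^ 3 - 3 * y - r = (y - ρ 0) * (y - ρ 1) * (y - ρ 2) := by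
    intro y
    have := congrArg (eval y) hsplit
    rw [Fin.prod_univ_three] at this
    rw [eval_map_algebraMap, hf, map_sub, aeval_C] at this
    simp only [map_sub, map_mul, map_pow, aeval_X, map_ofNat, eval_mul, eval_sub, eval_X, eval_C] at this
    rw [← this]; simp
  have e0 := hexp 0
  have e1 := hexp 1
  have e2 := hexp (-1)
  have h1 : ρ 0 + ρ 1 + ρ 2 = 0 := by linear_combination (e1 + e2 - 2 * e0) / 2
  have h2 : ρ 0 * ρ 1 + ρ 0 * ρ 2 + ρ 1 * ρ 2 = -3 := by linear_combination (e2 - e1) / 2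
  have h3 : ρ 0 * ρ 1 * ρ 2 = r := by linear_combination e0
  have hwF : (w : F) ≠ 0 := by exact_mod_cast hw
  have hpF : (r : F) ^ 2 - m * (w : F) ^ 2 = 4 := by exact_mod_cast hpell
  obtain ⟨δ, hδ⟩ : ∃ δ, δ = (ρ 0 - ρ 1) * (ρ 1 - ρ 2) * (ρ 0 - ρ 2) / (3 * (w : F)) := ⟨_, rfl⟩
  have hδ2 : δ ^ 2 = -3 * m := by
    have := disc_cubic_eq (a := 0) (b := -3) (c := -(r : F)) (x := ρ 0) (y := ρ 1) (z := ρ 2)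
      (by linear_combination h1) (by linear_combination h2) (by linear_combination h3)
    rw [hδ, div_pow, this, div_eq_iff (pow_ne_zero 2 (mul_ne_zero (by norm_num) hwF))]
    linear_combination -27 * hpF
  have hδ3 : δ ^ 2 = ((-3 * m : ℤ) : F) := by rw [hδ2]; push_cast; ring
  obtain ⟨hgal, hfr, e, he⟩ := s3_equiv hirr hmon hdeg ρ hsplit hgen (s := -3 * m) (by omega) hδ3
  have hbd := discr_bound hfr e he (by omega) hw hpell h1 h2 h3 hδ hδ2
  refine ⟨F, ⟨hfd, hgal, ⟨e⟩, ?_⟩, δ, hδ3⟩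
  rw [absDiscr_eq]
  rw [abs_of_pos (a := m) (by omega)] at hbd
  exact hbd.trans hx

/-- A field of degree six contains `√(-3 * m)` for at most one positive squarefree `m`: two of them would
generate a subfield of degree four. -/
lemma quad_unique {L : Type*} [Field L] [NumberField L] (hfr : Module.finrank ℚ L = 6) {m m' : ℤ}
    (hm : 0 < m) (hm' : 0 < m') (hsq : Squarefree m) (hsq' : Squarefree m') {δ δ' : L}
    (h : δ ^ 2 = ((-3 * m : ℤ) : L)) (h' : δ' ^ 2 = ((-3 * m' : ℤ) : L)) : m = m' := by
  have hinteg : IsIntegral ℚ δ := Algebra.IsIntegral.isIntegral δ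
  have hm1 : minpoly ℚ δ = X ^ 2 - C ((-3 * m : ℤ) : ℚ) := by
    symm
    refine minpoly.eq_of_irreducible_of_monic ?_ (by simp [h]) (by monicity!)
    refine X_pow_sub_C_irreducible_of_prime Nat.prime_two fun b hb => ?_
    have : ((-3 * m : ℤ) : ℚ) < 0 := by exact_mod_cast (by omega)
    nlinarith [sq_nonneg b]
  have h2 := IntermediateField.adjoin.finrank hinteg
  rw [hm1, natDegree_X_pow_sub_C] at h2
  have h3 : Module.finrank ℚ⟮δ⟯ L = 3 := by
    have := Module.finrank_mul_finrank ℚ ℚ⟮δ⟯ L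
    rw [h2, hfr] at this
    omega
  have hinteg' : IsIntegral ℚ⟮δ⟯ δ' := Algebra.IsIntegral.isIntegral δ'
  have h4 : (minpoly ℚ⟮δ⟯ δ').natDegree ∣ 3 := by
    rw [← h3]; exact minpoly.degree_dvd hinteg'
  have h5 : (minpoly ℚ⟮δ⟯ δ').natDegree ≤ 2 := by
    have hne : (X ^ 2 - C ((-3 * m' : ℤ) : ℚ⟮δ⟯)) ≠ 0 := by
      apply Monic.ne_zero; monicity!
    have := natDegree_le_of_dvd (minpoly.dvd ℚ⟮δ⟯ δ' (p := X ^ 2 - C ((-3 * m' : ℤ) : ℚ⟮δ⟯))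
      (by rw [map_sub, map_pow, aeval_X, aeval_C, h', map_intCast, sub_self])) hne
    rwa [natDegree_X_pow_sub_C] at this
  have h6 : (minpoly ℚ⟮δ⟯ δ').natDegree = 1 := by
    rcases (Nat.dvd_prime Nat.prime_three).mp h4 with h | h
    · exact h
    · omega
  obtain ⟨y, hy⟩ := minpoly.natDegree_eq_one_iff.mp h6
  have hlin : ∀ t ∈ Algebra.adjoin ℚ {δ}, ∃ p q : ℚ, t = (p : L) + q * δ := by
    intro t ht
    induction ht using Algebra.adjoin_induction with
    | mem x hx => exact ⟨0, 1, by rw [hx]; simp⟩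
    | algebraMap r => exact ⟨r, 0, by simp⟩
    | add x y _ _ hx hy =>
      obtain ⟨p, q, rfl⟩ := hx
      obtain ⟨p', q', rfl⟩ := hy
      exact ⟨p + p', q + q', by push_cast; ring⟩
    | mul x y _ _ hx hy =>
      obtain ⟨p, q, rfl⟩ := hx
      obtain ⟨p', q', rfl⟩ := hy
      refine ⟨p * p' + q * q' * (-3 * m), p * q' + p' * q, ?_⟩
      push_cast at h ⊢
      linear_combination (q * q' : L) * h
  have hmem : δ' ∈ Algebra.adjoin ℚ {δ} := by
    rw [← IntermediateField.adjoin_simple_toSubalgebra_of_isAlgebraic hinteg.isAlgebraic, ← hy]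
    exact y.2
  obtain ⟨p, q, hpq⟩ := hlin δ' hmem
  have hirr : ∀ t : ℚ, (t : L) ≠ δ := by
    rintro t rfl
    have h7 : t ^ 2 = -3 * m := by push_cast at h; exact_mod_cast h
    have h8 : (0 : ℚ) < m := by exact_mod_cast hm
    nlinarith [sq_nonneg t]
  have hsq2 : (p : L) ^ 2 - 3 * m * q ^ 2 + 2 * p * q * δ = -3 * m' := by
    push_cast at h h'
    rw [hpq] at h'
    linear_combination h' - (q : L) ^ 2 * h
  have hpq0 : p * q = 0 := by
    by_contra hne
    refine hirr ((-3 * m' - p ^ 2 + 3 * m * q ^ 2) / (2 * (p * q))) ?_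
    have : (2 * (p * q) : L) ≠ 0 := by exact_mod_cast mul_ne_zero two_ne_zero hne
    push_cast
    rw [div_eq_iff this]
    linear_combination -hsq2
  rcases mul_eq_zero.mp hpq0 with h0 | h0
  · subst h0
    have h9 : (m' : ℚ) = m * q ^ 2 := by
      have : (m' : L) = m * q ^ 2 := by push_cast at hsq2; linear_combination (1 / 3 : L) * hsq2
      exact_mod_cast this
    -- `m' * den ^ 2 = m * num ^ 2` with both `m`, `m'` squarefree
    have h10 : m' * (q.den : ℤ) ^ 2 = m * q.num ^ 2 := by
      have hd : (q.den : ℚ) ≠ 0 := by exact_mod_cast q.den_ne_zero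
      have : (m' : ℚ) * (q.den : ℚ) ^ 2 = m * (q.num : ℚ) ^ 2 := by
        have hq : q * q.den = q.num := Rat.mul_den_eq_num q
        rw [h9, ← hq]; ring
      exact_mod_cast this
    have hcop : IsCoprime q.num (q.den : ℤ) := by
      rw [Int.isCoprime_iff_gcd_eq_one]; exact q.reduced
    have h11 : (q.den : ℤ) ^ 2 ∣ m :=
      (hcop.symm.pow (m := 2) (n := 2)).dvd_of_dvd_mul_right ⟨m', by rw [← h10]; ring⟩
    have h12 : q.num ^ 2 ∣ m' :=
      (hcop.pow (m := 2) (n := 2)).dvd_of_dvd_mul_right ⟨m, by rw [h10]; ring⟩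
    have h13 := hsq (q.den : ℤ) (by rwa [← sq])
    have h14 := hsq' q.num (by rwa [← sq])
    have h15 : (q.den : ℤ) ^ 2 = 1 := by
      rcases Int.isUnit_iff.mp h13 with h | h <;> rw [h] <;> norm_num
    have h16 : q.num ^ 2 = 1 := by
      rcases Int.isUnit_iff.mp h14 with h | h <;> rw [h] <;> norm_num
    rw [h15, h16] at h10
    linarith
  · subst h0
    exfalso
    have h9 : (p : ℚ) ^ 2 = -3 * m' := by
      have : (p : L) ^ 2 = -3 * m' := by push_cast at hsq2; linear_combination hsq2
      exact_mod_cast this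
    have h8 : (0 : ℚ) < m' := by exact_mod_cast hm'
    nlinarith [sq_nonneg p]
end

/-! ### Lower bound for the number of S₃-fields -/

section

lemma sum_inv_sq_le (n : ℕ) (hn : 2 ≤ n) :
    ∑ d ∈ Finset.Icc 2 n, (1 : ℝ) / (d : ℝ) ^ 2 ≤ 3 / 4 - 1 / n := by
  induction n, hn using Nat.le_induction with
  | base => norm_num
  | succ n hn ih =>
    rw [Finset.sum_Icc_succ_top (by omega)]
    have h0 : (0 : ℝ) < n := by exact_mod_cast (by omega)
    have : (1 : ℝ) / ((n + 1 : ℕ) : ℝ) ^ 2 ≤ 1 / n - 1 / ((n + 1 : ℕ) : ℝ) := by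
      push_cast
      rw [div_sub_div _ _ h0.ne' (by positivity), div_le_div_iff₀ (by positivity) (by positivity)]
      nlinarith
    linarith

/-- At least a quarter of the integers in `[1, y]` are squarefree. -/
lemma squarefree_count (y : ℕ) :
    (y : ℝ) / 4 ≤ ((Finset.Icc 1 y).filter Squarefree).card := by
  rcases lt_or_ge y 2 with hy | hy
  · interval_cases y
    · simp
    · have : (Finset.Icc 1 1).filter Squarefree = ({1} : Finset ℕ) := by
        ext a; simp only [Finset.mem_filter, Finset.mem_Icc, Finset.mem_singleton]
        constructor
        · rintro ⟨h, _⟩; omega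
        · rintro rfl; exact ⟨by omega, squarefree_one⟩
      rw [this]; norm_num
  have h1 : ((Finset.Icc 1 y).filter Squarefree).card +
      ((Finset.Icc 1 y).filter fun m => ¬ Squarefree m).card = y := by
    rw [Finset.card_filter_add_card_filter_not]; simp
  have h2 : ((Finset.Icc 1 y).filter fun m => ¬ Squarefree m) ⊆
      (Finset.Icc 2 y).biUnion fun d => (Finset.Icc 1 y).filter fun m => d ^ 2 ∣ m := by
    intro m hm
    simp only [Finset.mem_filter, Finset.mem_Icc] at hm
    obtain ⟨⟨hm1, hm2⟩, hm3⟩ := hm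
    simp only [Squarefree, not_forall] at hm3
    obtain ⟨d, hd, hu⟩ := hm3
    have hd0 : d ≠ 0 := by rintro rfl; simp at hd; omega
    have hd1 : d ≠ 1 := by rintro rfl; exact hu isUnit_one
    have hle := Nat.le_of_dvd hm1 hd
    simp only [Finset.mem_biUnion, Finset.mem_filter, Finset.mem_Icc]
    exact ⟨d, ⟨by omega, by nlinarith [Nat.pos_of_ne_zero hd0]⟩, ⟨hm1, hm2⟩, by rwa [sq]⟩
  have h3 : ((((Finset.Icc 1 y).filter fun m => ¬ Squarefree m).card : ℕ) : ℝ) ≤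
      ∑ d ∈ Finset.Icc 2 y, (y : ℝ) * (1 / (d : ℝ) ^ 2) := by
    refine le_trans (Nat.cast_le.mpr ((Finset.card_le_card h2).trans Finset.card_biUnion_le)) ?_
    push_cast
    refine Finset.sum_le_sum fun d hd => ?_
    have : ((Finset.Icc 1 y).filter fun m => d ^ 2 ∣ m).card = y / d ^ 2 := by
      rw [← Nat.Ioc_filter_dvd_card_eq_div]; rfl
    rw [this]
    refine Nat.cast_div_le.trans (le_of_eq ?_)
    push_cast; ring
  rw [← Finset.mul_sum] at h3
  have h4 := sum_inv_sq_le y hy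
  have h5 : (0 : ℝ) < y := by exact_mod_cast (by omega)
  have h6 : (0 : ℝ) < 1 / y := by positivity
  have h7 : (y : ℝ) * ∑ d ∈ Finset.Icc 2 y, (1 : ℝ) / (d : ℝ) ^ 2 ≤ y * (3 / 4) := by
    gcongr; linarith
  have h8 : (((Finset.Icc 1 y).filter Squarefree).card : ℝ) +
      (((Finset.Icc 1 y).filter fun m => ¬ Squarefree m).card : ℝ) = y := by exact_mod_cast h1
  linarith

/-- Hermite's theorem for the fields counted here. -/
lemma S3Fields.finite (x : ℕ) : (S3Fields x).Finite := by
  have h := NumberField.finite_of_discr_bdd (AlgebraicClosure ℚ) x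
  refine (h.image Subtype.val).subset ?_
  intro F hF
  obtain ⟨hfd, -, -, hd⟩ := hF
  refine ⟨⟨F, hfd⟩, ?_, rfl⟩
  have : NumberField F := ⟨⟩
  rw [absDiscr_eq] at hd
  exact hd

/-- There are `≫ x ^ (1/3)` fields in `S3Fields x`. -/
lemma S3Fields_lower : ∃ c : ℝ, 0 < c ∧ ∀ᶠ x : ℕ in atTop,
    c * (x : ℝ) ^ (1 / 3 : ℝ) ≤ (S3Fields x).ncard := by
  refine ⟨1 / 1000, by norm_num, ?_⟩
  have ht : Tendsto (fun x : ℕ => (x : ℝ) ^ (1 / 3 : ℝ)) atTop atTop :=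
    (tendsto_rpow_atTop (by norm_num)).comp tendsto_natCast_atTop_atTop
  filter_upwards [ht.eventually_ge_atTop 2000] with x hx
  set t : ℝ := (x : ℝ) ^ (1 / 3 : ℝ) with ht
  have ht3 : t ^ 3 = x := by
    rw [ht, ← Real.rpow_natCast, ← Real.rpow_mul (by positivity)]; norm_num
  set y := ⌊t / 108⌋₊ with hy
  have hy1 : (y : ℝ) ≤ t / 108 := Nat.floor_le (by positivity)
  have hy2 : t / 108 < y + 1 := Nat.lt_floor_add_one _
  set A := (Finset.Icc 2 y).filter Squarefree with hA
  have hAc : (y : ℝ) / 4 - 1 ≤ A.card := by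
    have h1 := squarefree_count y
    have h2 : (Finset.Icc 1 y).filter Squarefree ⊆ insert 1 A := by
      intro m hm
      simp only [hA, Finset.mem_filter, Finset.mem_Icc, Finset.mem_insert] at hm ⊢
      by_cases h : m = 1
      · exact Or.inl h
      · exact Or.inr ⟨by omega, hm.2⟩
    have h3 := (Finset.card_le_card h2).trans (Finset.card_insert_le _ _)
    have h4 : (((Finset.Icc 1 y).filter Squarefree).card : ℝ) ≤ A.card + 1 := by exact_mod_cast h3
    linarith
  have hex : ∀ m ∈ A, ∃ F ∈ S3Fields x, ∃ δ : F, δ ^ 2 = ((-3 * (m : ℤ) : ℤ) : F) := by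
    intro m hm
    simp only [hA, Finset.mem_filter, Finset.mem_Icc] at hm
    refine exists_s3_field (by omega) (Int.squarefree_natCast.mpr hm.2) ?_
    have : (1259712 * (m : ℝ) ^ 3) ≤ x := by
      have hm' : (m : ℝ) ≤ t / 108 := le_trans (by exact_mod_cast hm.1.2) hy1
      have : (m : ℝ) ^ 3 ≤ (t / 108) ^ 3 := by gcongr
      rw [div_pow, ht3] at this
      linarith
    exact_mod_cast this
  choose! G hG using hex
  have hcard : A.card ≤ (S3Fields x).ncard := by
    rw [← Set.ncard_coe_finset]
    refine Set.ncard_le_ncard_of_injOn G (fun m hm => (hG m hm).1) ?_ (S3Fields.finite x)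
    intro m hm m' hm' he
    obtain ⟨hF, δ, hδ⟩ := hG m hm
    obtain ⟨hF', δ', hδ'⟩ := hG m' hm'
    have hmA := hm
    have hmA' := hm'
    simp only [hA, Finset.coe_filter, Finset.mem_Icc] at hmA hmA'
    have := S3Fields.numberField hF
    have hex : ∃ ε : G m, ε ^ 2 = ((-3 * (m' : ℤ) : ℤ) : G m) := by
      rw [he]; exact ⟨δ', hδ'⟩
    obtain ⟨ε, hε⟩ := hex
    have := quad_unique (S3Fields.finrank hF) (m := m) (m' := m') (by have := hmA.1; omega)
      (by have := hmA'.1; omega)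
      (Int.squarefree_natCast.mpr hmA.2) (Int.squarefree_natCast.mpr hmA'.2) hδ hε
    exact_mod_cast this
  have : (A.card : ℝ) ≤ (S3Fields x).ncard := by exact_mod_cast hcard
  linarith
end

/-! ### Monic cubics with vanishing discriminant over a finite field -/

section

/-- The discriminant of the monic cubic `Y³ + a Y² + b Y + c`, on triples `(a, b, c)`. -/
def dl {R : Type*} [CommRing R] (e : R × R × R) : R :=
  e.1 ^ 2 * e.2.1 ^ 2 - 4 * e.2.1 ^ 3 - 4 * e.1 ^ 3 * e.2.2 - 27 * e.2.2 ^ 2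
    + 18 * e.1 * e.2.1 * e.2.2

/-- The coefficients of `(Y - r)² (Y - s)`. -/
def zpar {R : Type*} [CommRing R] (w : R × R) : R × R × R :=
  (-2 * w.1 - w.2, w.1 ^ 2 + 2 * w.1 * w.2, -(w.1 ^ 2 * w.2))

variable {F : Type*} [Field F]

lemma zpar_injective : Function.Injective (zpar : F × F → F × F × F) := by
  rintro ⟨r, s⟩ ⟨r', s'⟩ h
  simp only [zpar, Prod.mk.injEq] at h
  obtain ⟨h1, h2, h3⟩ := h
  have hr : r = r' := by
    by_contra hne
    have hne' := sub_ne_zero.mpr hne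
    have hs : s = 2 * r' + s' - 2 * r := by linear_combination -h1
    subst hs
    have e1 : (r - r') * (3 * (r + r') - 2 * (2 * r' + s')) = 0 := by linear_combination -h2
    have e2 : (r - r') * (2 * (r ^ 2 + r * r' + r' ^ 2) - (2 * r' + s') * (r + r')) = 0 := by
      linear_combination h3
    have e1' := (mul_eq_zero.mp e1).resolve_left hne'
    have e2' := (mul_eq_zero.mp e2).resolve_left hne'
    refine hne' (pow_eq_zero_iff (two_ne_zero) |>.mp ?_ : r - r' = 0)
    linear_combination 2 * e2' - (r + r') * e1'
  subst hr
  ext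
  · rfl
  · simp only; linear_combination -h1

lemma dl_zpar (w : F × F) : dl (zpar w) = 0 := by
  simp only [dl, zpar]; ring

lemma exists_zpar (h2 : (2 : F) ≠ 0) (h3 : (3 : F) ≠ 0) {e : F × F × F} (he : dl e = 0) :
    ∃ w, zpar w = e := by
  obtain ⟨a, b, c⟩ := e
  simp only [dl] at he
  by_cases h : a ^ 2 - 3 * b = 0
  · have e1 : 2 * a ^ 3 - 9 * a * b + 27 * c = 0 := by
      refine pow_eq_zero_iff (two_ne_zero) |>.mp ?_
      linear_combination -27 * he + 4 * (a ^ 2 - 3 * b) ^ 2 * h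
    refine ⟨(-a / 3, -a / 3), ?_⟩
    simp only [zpar, Prod.mk.injEq]
    refine ⟨by field_simp; ring, ?_, ?_⟩
    · field_simp
      linear_combination 3 * h
    · have h27 : (27 : F) ≠ 0 := by
        have : (27 : F) = 3 ^ 3 := by norm_num
        rw [this]; exact pow_ne_zero _ h3
      field_simp
      linear_combination (3 * a) * h - e1
  · obtain ⟨k, hk⟩ : ∃ k, k = a ^ 2 - 3 * b := ⟨_, rfl⟩
    rw [← hk] at h
    obtain ⟨r, hr⟩ : ∃ r, r * (2 * k) = 9 * c - a * b :=
      ⟨(9 * c - a * b) / (2 * k), div_mul_cancel₀ _ (mul_ne_zero h2 h)⟩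
    have h4 : (4 : F) ≠ 0 := by
      have : (4 : F) = 2 ^ 2 := by norm_num
      rw [this]; exact pow_ne_zero _ h2
    -- `r` is a root of the derivative and of the cubic
    have d1 : 3 * r ^ 2 + 2 * a * r + b = 0 := by
      have : (4 * k ^ 2) * (3 * r ^ 2 + 2 * a * r + b) = 0 := by
        have : (4 * k ^ 2) * (3 * r ^ 2 + 2 * a * r + b) =
          3 * (r * (2 * k)) ^ 2 + 4 * a * k * (r * (2 * k)) + 4 * k ^ 2 * b := by ring
        rw [this, hr, hk]
        linear_combination -9 * he
      exact (mul_eq_zero.mp this).resolve_left (mul_ne_zero h4 (pow_ne_zero 2 h))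
    have d2 : r ^ 3 + a * r ^ 2 + b * r + c = 0 := by
      have : (9 : F) * (r ^ 3 + a * r ^ 2 + b * r + c) = 0 := by
        rw [hk] at hr
        linear_combination (3 * r + a) * d1 - hr
      refine (mul_eq_zero.mp this).resolve_left ?_
      have : (9 : F) = 3 ^ 2 := by norm_num
      rw [this]; exact pow_ne_zero _ h3
    refine ⟨(r, -a - 2 * r), ?_⟩
    simp only [zpar, Prod.mk.injEq]
    refine ⟨by ring, by linear_combination -d1, by linear_combination r * d1 - d2⟩

variable [Fintype F]

/-- The cubics with a double root are parametrised bijectively by `zpar`. -/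
lemma card_dl_zero (h2 : (2 : F) ≠ 0) (h3 : (3 : F) ≠ 0) :
    (Finset.univ.filter fun e : F × F × F => dl e = 0).card = Fintype.card F ^ 2 := by
  have : (Finset.univ.filter fun e : F × F × F => dl e = 0) =
      Finset.univ.image (zpar : F × F → _) := by
    ext e
    simp only [Finset.mem_filter, Finset.mem_univ, true_and, Finset.mem_image]
    exact ⟨exists_zpar h2 h3, by rintro ⟨w, rfl⟩; exact dl_zpar w⟩
  rw [this, Finset.card_image_of_injective _ zpar_injective, Finset.card_univ, Fintype.card_prod, sq]

/-- For fixed `κ`, few triples `w` have both `w` and `κ - w` of discriminant zero: along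
`w = zpar (r, s)` with `s` fixed, `dl (κ - w)` is a sextic in `r` with leading coefficient `8`. -/
lemma card_dl_two (h2 : (2 : F) ≠ 0) (h3 : (3 : F) ≠ 0) (κ : F × F × F) :
    (Finset.univ.filter fun w : F × F × F => dl w = 0 ∧ dl (κ - w) = 0).card ≤
      6 * Fintype.card F := by
  have h1 : (Finset.univ.filter fun w : F × F × F => dl w = 0 ∧ dl (κ - w) = 0) ⊆
      (Finset.univ : Finset F).biUnion fun s =>
        (Finset.univ.filter fun r : F => dl (κ - zpar (r, s)) = 0).image fun r => zpar (r, s) := by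
    intro w hw
    simp only [Finset.mem_filter, Finset.mem_univ, true_and] at hw
    obtain ⟨⟨r, s⟩, rfl⟩ := exists_zpar h2 h3 hw.1
    simp only [Finset.mem_biUnion, Finset.mem_image, Finset.mem_filter, Finset.mem_univ, true_and]
    exact ⟨s, r, hw.2, rfl⟩
  refine (Finset.card_le_card h1).trans (Finset.card_biUnion_le.trans ?_)
  have h4 : ∀ s : F, ((Finset.univ.filter fun r : F => dl (κ - zpar (r, s)) = 0).image
      fun r => zpar (r, s)).card ≤ 6 := by
    intro s
    refine Finset.card_image_le.trans ?_
    obtain ⟨k1, k2, k3⟩ := κ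
    obtain ⟨a, ha⟩ : ∃ a : F[X], a = 2 * X + C (k1 + s) := ⟨_, rfl⟩
    obtain ⟨b, hb⟩ : ∃ b : F[X], b = -X ^ 2 - C (2 * s) * X + C k2 := ⟨_, rfl⟩
    obtain ⟨c, hc⟩ : ∃ c : F[X], c = C s * X ^ 2 + C k3 := ⟨_, rfl⟩
    obtain ⟨G, hG⟩ : ∃ G : F[X], G = dl (a, b, c) := ⟨_, rfl⟩
    have hdeg : G.natDegree ≤ 6 := by
      rw [hG, ha, hb, hc]; simp only [dl]; compute_degree
    have hco : G.coeff 6 = 8 := by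
      rw [hG, ha, hb, hc]; simp only [dl]
      compute_degree
      all_goals norm_num
    have hne : G ≠ 0 := by
      rintro h
      rw [h, coeff_zero] at hco
      have : (8 : F) = 2 ^ 3 := by norm_num
      exact pow_ne_zero 3 h2 (this ▸ hco.symm)
    have hsub : (Finset.univ.filter fun r : F => dl ((k1, k2, k3) - zpar (r, s)) = 0) ⊆
        G.roots.toFinset := by
      intro r hr
      simp only [Finset.mem_filter, Finset.mem_univ, true_and] at hr
      rw [Multiset.mem_toFinset, mem_roots hne, IsRoot, ← hr, hG, ha, hb, hc]
      simp only [dl, zpar, Prod.mk_sub_mk, eval_sub, eval_add, eval_mul, eval_pow, eval_ofNat, eval_neg,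
        eval_C, eval_X]
      ring
    exact (Finset.card_le_card hsub).trans ((Multiset.toFinset_card_le _).trans
      ((card_roots' G).trans hdeg))
  refine (Finset.sum_le_sum fun s _ => h4 s).trans ?_
  simp [mul_comm]
end

section
variable {F : Type*} [Field F]

/-- The value at `t` of the family `A + p + q T`. -/
def famVal (A : F → F × F × F) (u : (F × F × F) × (F × F × F)) (t : F) : F × F × F :=
  A t + u.1 + t • u.2

variable [Fintype F]

lemma famVal_bijective (A : F → F × F × F) {t t' : F} (h : t ≠ t') :
    Function.Bijective fun u => (famVal A u t, famVal A u t') := by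
  rw [← Finite.injective_iff_bijective]
  rintro ⟨p, q⟩ ⟨p', q'⟩ he
  simp only [famVal, Prod.mk.injEq] at he
  obtain ⟨h1, h2⟩ := he
  have h3 : (t - t') • (q - q') = 0 := by
    have e1 : p + t • q = p' + t • q' := by
      have := h1; rw [add_assoc, add_assoc] at this; exact add_left_cancel this
    have e2 : p + t' • q = p' + t' • q' := by
      have := h2; rw [add_assoc, add_assoc] at this; exact add_left_cancel this
    have := congrArg₂ (· - ·) e1 e2
    simp only [add_sub_add_left_eq_sub, ← sub_smul] at this
    rw [smul_sub, this, sub_self]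
  have h4 : q = q' := by
    rcases smul_eq_zero.mp h3 with h5 | h5
    · exact absurd (sub_eq_zero.mp h5) h
    · exact sub_eq_zero.mp h5
  subst h4
  have h6 : p = p' := by simpa using h1
  rw [h6]

/-- The values of the family at two distinct points are independent and uniform. -/
lemma card_famVal_two (A : F → F × F × F) {t t' : F} (h : t ≠ t')
    (Q : (F × F × F) × (F × F × F) → Prop) [DecidablePred Q]
    [DecidablePred fun u => Q (famVal A u t, famVal A u t')] :
    (Finset.univ.filter fun u => Q (famVal A u t, famVal A u t')).card =
      (Finset.univ.filter Q).card := by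
  have hb := famVal_bijective A h
  refine Finset.card_bij (fun u _ => (famVal A u t, famVal A u t')) ?_ ?_ ?_
  · intro u hu; simpa using hu
  · intro u _ u' _ he; exact hb.1 he
  · intro w hw
    obtain ⟨u, hu⟩ := hb.2 w
    simp only at hu
    refine ⟨u, ?_, hu⟩
    simp only [Finset.mem_filter, Finset.mem_univ, true_and] at hw ⊢
    rw [hu]; exact hw

lemma card_famVal_pair (h2 : (2 : F) ≠ 0) (h3 : (3 : F) ≠ 0) (A : F → F × F × F) {t t' : F}
    (h : t ≠ t') :
    (Finset.univ.filter fun u => dl (famVal A u t) = 0 ∧ dl (famVal A u t') = 0).card =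
      Fintype.card F ^ 4 := by
  rw [card_famVal_two A h fun w => dl w.1 = 0 ∧ dl w.2 = 0]
  rw [← Finset.univ_product_univ, Finset.filter_product (fun e : F × F × F => dl e = 0)
    (fun e : F × F × F => dl e = 0), Finset.card_product, card_dl_zero h2 h3]
  ring

lemma card_famVal_one (h2 : (2 : F) ≠ 0) (h3 : (3 : F) ≠ 0) (A : F → F × F × F) (t : F) :
    (Finset.univ.filter fun u => dl (famVal A u t) = 0).card = Fintype.card F ^ 5 := by
  obtain ⟨t', ht⟩ := exists_ne t
  rw [card_famVal_two A ht.symm fun w => dl w.1 = 0]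
  have : (Finset.univ.filter fun w : (F × F × F) × (F × F × F) => dl w.1 = 0) =
      (Finset.univ.filter fun e : F × F × F => dl e = 0) ×ˢ Finset.univ := by
    ext w; simp
  rw [this, Finset.card_product, card_dl_zero h2 h3, Finset.card_univ]
  simp only [Fintype.card_prod]
  ring

/-- Few members of the family have a discriminant vanishing at `0`, `1` and `-1`; this bounds the members
with identically vanishing discriminant. -/
lemma card_famVal_three (h2 : (2 : F) ≠ 0) (h3 : (3 : F) ≠ 0) (A : F → F × F × F) :
    (Finset.univ.filter fun u => dl (famVal A u 0) = 0 ∧ dl (famVal A u 1) = 0 ∧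
      dl (famVal A u (-1)) = 0).card ≤ 6 * Fintype.card F ^ 3 := by
  obtain ⟨κ, hκ⟩ : ∃ κ : F × F × F, κ = A (-1) - (2 : F) • A 0 + A 1 := ⟨_, rfl⟩
  have h1 : ∀ u, famVal A u (-1) = ((2 : F) • famVal A u 0 + κ) - famVal A u 1 := by
    intro u
    rw [hκ]; simp only [famVal]
    module
  simp only [h1]
  rw [card_famVal_two A zero_ne_one fun w => dl w.1 = 0 ∧ dl w.2 = 0 ∧
    dl (((2 : F) • w.1 + κ) - w.2) = 0]
  have h4 : (Finset.univ.filter fun w : (F × F × F) × (F × F × F) => dl w.1 = 0 ∧ dl w.2 = 0 ∧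
      dl (((2 : F) • w.1 + κ) - w.2) = 0) =
    (Finset.univ.filter fun e : F × F × F => dl e = 0).biUnion fun e =>
      (Finset.univ.filter fun w : F × F × F => dl w = 0 ∧ dl (((2 : F) • e + κ) - w) = 0).image
        fun w => (e, w) := by
    ext ⟨e, w⟩
    simp only [Finset.mem_filter, Finset.mem_univ, true_and, Finset.mem_biUnion, Finset.mem_image,
      Prod.mk.injEq]
    constructor
    · rintro ⟨a, b, c⟩; exact ⟨e, a, w, ⟨b, c⟩, rfl, rfl⟩
    · rintro ⟨e', a, w', ⟨b, c⟩, rfl, rfl⟩; exact ⟨a, b, c⟩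
  rw [h4]
  refine Finset.card_biUnion_le.trans ?_
  refine (Finset.sum_le_sum fun e _ => Finset.card_image_le.trans (card_dl_two h2 h3 _)).trans ?_
  rw [Finset.sum_const, card_dl_zero h2 h3, smul_eq_mul]
  apply le_of_eq; ring

/-- First and second moments of the number of zeros `t` of the discriminant show that a positive
proportion of the family has no zeros at all. -/
lemma fam_count (h2 : (2 : F) ≠ 0) (h3 : (3 : F) ≠ 0) (A : F → F × F × F) {n : ℕ} (hn : 1 ≤ n)
    (hA : ∀ u, (∃ t, dl (famVal A u t) ≠ 0) →
      (Finset.univ.filter fun t => dl (famVal A u t) = 0).card ≤ n) :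
    Fintype.card F ^ 6 ≤ 7 * Fintype.card F ^ 5 +
      n * (Finset.univ.filter fun u => ∀ t, dl (famVal A u t) ≠ 0).card := by
  set l := Fintype.card F with hl
  set N : (F × F × F) × (F × F × F) → ℕ := fun u =>
    (Finset.univ.filter fun t => dl (famVal A u t) = 0).card with hN
  have hN1 : ∀ u, (N u : ℤ) = ∑ t, if dl (famVal A u t) = 0 then 1 else 0 := by
    intro u; rw [Finset.sum_boole]
  have s1 : ∑ u, (N u : ℤ) = l ^ 6 := by
    simp only [hN1]
    rw [Finset.sum_comm]
    simp only [Finset.sum_boole, card_famVal_one h2 h3]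
    rw [Finset.sum_const, Finset.card_univ, ← hl]
    push_cast; simp only [nsmul_eq_mul]; ring
  have s2 : ∑ u, (N u : ℤ) ^ 2 = l * (l ^ 5 + (l - 1) * l ^ 4) := by
    have e1 : ∀ u, (N u : ℤ) ^ 2 = ∑ t, ∑ t', if dl (famVal A u t) = 0 ∧ dl (famVal A u t') = 0
        then 1 else 0 := by
      intro u
      rw [sq, hN1, Finset.sum_mul_sum]
      refine Finset.sum_congr rfl fun t _ => Finset.sum_congr rfl fun t' _ => ?_
      rw [ite_and]; split_ifs <;> simp
    simp only [e1]
    rw [Finset.sum_comm]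
    have e2 : ∀ t, ∑ u, ∑ t', (if dl (famVal A u t) = 0 ∧ dl (famVal A u t') = 0
        then (1 : ℤ) else 0) = l ^ 5 + (l - 1) * l ^ 4 := by
      intro t
      rw [Finset.sum_comm, ← Finset.add_sum_erase _ _ (Finset.mem_univ t)]
      congr 1
      · simp only [and_self, Finset.sum_boole, card_famVal_one h2 h3]; push_cast; rfl
      · rw [Finset.sum_congr rfl (g := fun _ => (l : ℤ) ^ 4)]
        · rw [Finset.sum_const, Finset.card_erase_of_mem (Finset.mem_univ t), Finset.card_univ,
            nsmul_eq_mul, ← hl, Nat.cast_sub (by rw [hl]; exact Fintype.card_pos)]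
          push_cast; rfl
        · intro t' ht'
          rw [Finset.sum_boole, card_famVal_pair h2 h3 A (Finset.ne_of_mem_erase ht').symm]
          push_cast; rfl
    rw [Finset.sum_congr rfl fun t _ => e2 t, Finset.sum_const, Finset.card_univ, nsmul_eq_mul]
  have hcardU : ((Finset.univ : Finset ((F × F × F) × (F × F × F))).card : ℤ) = l ^ 6 := by
    rw [Finset.card_univ]; simp only [Fintype.card_prod]; push_cast; ring
  have s3 : ∑ u, (((N u : ℤ) - 1) * (N u - n)) = l ^ 6 - l ^ 5 := by
    have : ∀ u, ((N u : ℤ) - 1) * (N u - n) = (N u : ℤ) ^ 2 - (n + 1) * N u + n := by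
      intro u; ring
    simp only [this]
    rw [Finset.sum_add_distrib, Finset.sum_sub_distrib, ← Finset.mul_sum, s1, s2, Finset.sum_const,
      nsmul_eq_mul, hcardU]
    ring
  have hpt : ∀ u, ((N u : ℤ) - 1) * (N u - n) ≤
      n * (if ∀ t, dl (famVal A u t) ≠ 0 then 1 else 0) +
      l ^ 2 * (if dl (famVal A u 0) = 0 ∧ dl (famVal A u 1) = 0 ∧
      dl (famVal A u (-1)) = 0 then 1 else 0) := by
    intro u
    have hn' : (1 : ℤ) ≤ n := by exact_mod_cast hn
    have hl0 : (0 : ℤ) ≤ l ^ 2 := by positivity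
    by_cases hz : ∃ t, dl (famVal A u t) ≠ 0
    · have hle : (N u : ℤ) ≤ n := by exact_mod_cast hA u hz
      have hr : (0 : ℤ) ≤ l ^ 2 * (if dl (famVal A u 0) = 0 ∧ dl (famVal A u 1) = 0 ∧
        dl (famVal A u (-1)) = 0 then 1 else 0) := by split_ifs <;> simp
      rcases Nat.eq_zero_or_pos (N u) with h0 | h0
      · have : ∀ t, dl (famVal A u t) ≠ 0 := by
          intro t ht
          rw [hN, Finset.card_eq_zero] at h0
          have : t ∈ (Finset.univ.filter fun t => dl (famVal A u t) = 0) := by simp [ht]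
          rw [h0] at this; simp at this
        rw [if_pos this, h0]
        push_cast; linarith
      · have h0' : (1 : ℤ) ≤ N u := by exact_mod_cast h0
        have hr' : (0 : ℤ) ≤ n * (if ∀ t, dl (famVal A u t) ≠ 0 then 1 else 0) := by
          split_ifs <;> simp
        nlinarith
    · push Not at hz
      rw [if_pos (c := dl (famVal A u 0) = 0 ∧ dl (famVal A u 1) = 0 ∧
        dl (famVal A u (-1)) = 0) ⟨hz _, hz _, hz _⟩]
      have hr' : (0 : ℤ) ≤ n * (if ∀ t, dl (famVal A u t) ≠ 0 then 1 else 0) := by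
          split_ifs <;> simp
      have hNl : (N u : ℤ) ≤ l := by exact_mod_cast Finset.card_le_univ _
      have hNl' : N u = l := by rw [hN, hl, ← Finset.card_univ]; simp [hz]
      rw [hNl']
      have : (1 : ℤ) ≤ l := by exact_mod_cast (Fintype.card_pos : 0 < Fintype.card F)
      nlinarith
  have htot := Finset.sum_le_sum fun u (_ : u ∈ Finset.univ) => hpt u
  rw [s3, Finset.sum_add_distrib, ← Finset.mul_sum, ← Finset.mul_sum, Finset.sum_boole,
    Finset.sum_boole] at htot
  have h6 : ((Finset.univ.filter fun u => dl (famVal A u 0) = 0 ∧ dl (famVal A u 1) = 0 ∧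
      dl (famVal A u (-1)) = 0).card : ℤ) ≤ 6 * l ^ 3 := by exact_mod_cast card_famVal_three h2 h3 A
  have h7 := mul_le_mul_of_nonneg_left h6 (by positivity : (0 : ℤ) ≤ l ^ 2)
  zify
  linarith
end

/-! ### Local densities -/

section

/-- Averaging over all translates of a family reduces a density on `V` to densities on the family. -/
lemma averaging {V U : Type*} [AddGroup V] [Fintype V] [Fintype U] (ψ : U → V) (Q : V → Prop) :
    ∑ v, (Finset.univ.filter fun u => Q (v + ψ u)).card =
      Fintype.card U * (Finset.univ.filter Q).card := by
  have : ∀ v, (Finset.univ.filter fun u => Q (v + ψ u)).card = ∑ u, if Q (v + ψ u) then 1 else 0 := by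
    intro v; rw [Finset.card_filter]
  simp only [this]
  rw [Finset.sum_comm, Finset.card_filter]
  have h : ∀ u, ∑ v, (if Q (v + ψ u) then 1 else 0) = ∑ v, if Q v then 1 else 0 := fun u =>
    Fintype.sum_equiv (Equiv.addRight (ψ u)) _ _ fun v => rfl
  rw [Finset.sum_congr rfl fun u _ => h u, Finset.sum_const, Finset.card_univ, smul_eq_mul]

/-- The polynomial of degree at most `D` with the `i`-th row of `v` as coefficients. -/
def rowPoly {R : Type*} [CommRing R] {D : ℕ} (v : Fin 3 × Fin (D + 1) → R) (i : Fin 3) : R[X] :=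
  ∑ j : Fin (D + 1), C (v (i, j)) * X ^ (j : ℕ)

/-- The discriminant in `Y` of `Y³ + a Y² + b Y + c`, for the rows `a, b, c` of `v`. -/
def rowDisc {R : Type*} [CommRing R] {D : ℕ} (v : Fin 3 × Fin (D + 1) → R) : R[X] :=
  dl (rowPoly v 0, rowPoly v 1, rowPoly v 2)

/-- The coefficient of `T ^ (4 * D)` in `rowDisc v`. -/
def rowLead {R : Type*} [CommRing R] {D : ℕ} (v : Fin 3 × Fin (D + 1) → R) : R :=
  v (0, Fin.last D) ^ 2 * (v (1, Fin.last D) ^ 2 - 4 * v (0, Fin.last D) * v (2, Fin.last D))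

/-- The coefficient matrices whose discriminant has full degree and no zeros. -/
def goodRows (R : Type*) [CommRing R] (D : ℕ) : Set (Fin 3 × Fin (D + 1) → R) :=
  {v | rowLead v ≠ 0 ∧ ∀ t, (rowDisc v).eval t ≠ 0}

lemma rowPoly_natDegree {R : Type*} [CommRing R] {D : ℕ} (v : Fin 3 × Fin (D + 1) → R) (i : Fin 3) :
    (rowPoly v i).natDegree ≤ D := by
  refine natDegree_sum_le_of_forall_le _ _ fun j _ => ?_
  exact (natDegree_C_mul_X_pow_le _ _).trans (by have := j.2; omega)

lemma rowPoly_coeff {R : Type*} [CommRing R] {D : ℕ} (v : Fin 3 × Fin (D + 1) → R) (i : Fin 3)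
    (j : Fin (D + 1)) : (rowPoly v i).coeff j = v (i, j) := by
  rw [rowPoly, finsetSum_coeff, Finset.sum_eq_single j]
  · simp
  · intro j' _ hj
    rw [coeff_C_mul, coeff_X_pow, if_neg, mul_zero]
    exact fun h => hj (Fin.ext h.symm)
  · simp

lemma dl_natDegree {R : Type*} [CommRing R] {D : ℕ} {a b c : R[X]} (ha : a.natDegree ≤ D)
    (hb : b.natDegree ≤ D) (hc : c.natDegree ≤ D) : (dl (a, b, c)).natDegree ≤ 4 * D := by
  simp only [dl]
  compute_degree
  repeat' apply max_le
  all_goals omega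

lemma dl_coeff_top {R : Type*} [CommRing R] {D : ℕ} (hD : 1 ≤ D) {a b c : R[X]}
    (ha : a.natDegree ≤ D) (hb : b.natDegree ≤ D) (hc : c.natDegree ≤ D) :
    (dl (a, b, c)).coeff (4 * D) =
      a.coeff D ^ 2 * (b.coeff D ^ 2 - 4 * a.coeff D * c.coeff D) := by
  have e : dl (a, b, c) = (a ^ 2 * b ^ 2 - C 4 * (a ^ 3 * c)) +
      (C 18 * (a * b * c) - C 4 * b ^ 3 - C 27 * c ^ 2) := by
    simp only [dl, map_ofNat]; ring
  have h1 : (a ^ 2 * b ^ 2).coeff (2 * D + 2 * D) = a.coeff D ^ 2 * b.coeff D ^ 2 := by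
    rw [coeff_mul_add_eq_of_natDegree_le (natDegree_pow_le_of_le 2 ha) (natDegree_pow_le_of_le 2 hb),
      coeff_pow_of_natDegree_le ha, coeff_pow_of_natDegree_le hb]
  have h2 : (a ^ 3 * c).coeff (3 * D + D) = a.coeff D ^ 3 * c.coeff D := by
    rw [coeff_mul_add_eq_of_natDegree_le (natDegree_pow_le_of_le 3 ha) hc,
      coeff_pow_of_natDegree_le ha]
  have h3 : (C 18 * (a * b * c) - C 4 * b ^ 3 - C 27 * c ^ 2).coeff (4 * D) = 0 := by
    refine coeff_eq_zero_of_natDegree_lt (lt_of_le_of_lt (b := 3 * D) ?_ (by omega))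
    compute_degree
    repeat' apply max_le
    all_goals omega
  rw [show 2 * D + 2 * D = 4 * D by ring] at h1
  rw [show 3 * D + D = 4 * D by ring] at h2
  rw [e, coeff_add, h3, coeff_sub, coeff_C_mul, h1, h2]
  ring

lemma rowDisc_coeff_top {R : Type*} [CommRing R] {D : ℕ} (hD : 1 ≤ D)
    (v : Fin 3 × Fin (D + 1) → R) : (rowDisc v).coeff (4 * D) = rowLead v := by
  have h := fun i => rowPoly_coeff v i (Fin.last D)
  simp only [Fin.val_last] at h
  rw [rowDisc, dl_coeff_top hD (rowPoly_natDegree v 0) (rowPoly_natDegree v 1)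
    (rowPoly_natDegree v 2), h, h, h, rowLead]

lemma rowDisc_eval {R : Type*} [CommRing R] {D : ℕ} (v : Fin 3 × Fin (D + 1) → R) (t : R) :
    (rowDisc v).eval t =
      dl ((rowPoly v 0).eval t, (rowPoly v 1).eval t, (rowPoly v 2).eval t) := by
  simp [rowDisc, dl]

variable {F : Type*} [Field F] [Fintype F]

lemma card_lead_zero (h2 : (2 : F) ≠ 0) :
    (Finset.univ.filter fun e : F × F × F => e.1 ^ 2 * (e.2.1 ^ 2 - 4 * e.1 * e.2.2) = 0).card ≤
      2 * Fintype.card F ^ 2 := by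
  have h : (Finset.univ.filter fun e : F × F × F => e.1 ^ 2 * (e.2.1 ^ 2 - 4 * e.1 * e.2.2) = 0) ⊆
      (Finset.univ.image fun w : F × F => ((0 : F), w.1, w.2)) ∪
      (Finset.univ.image fun w : F × F => (w.1, w.2, w.2 ^ 2 / (4 * w.1))) := by
    rintro ⟨x, y, z⟩ he
    simp only [Finset.mem_filter, Finset.mem_univ, true_and] at he
    rw [Finset.mem_union]
    by_cases hx : x = 0
    · left; rw [hx]; exact Finset.mem_image_of_mem _ (Finset.mem_univ (y, z))
    · right
      have h4 : (4 : F) ≠ 0 := by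
        have : (4 : F) = 2 ^ 2 := by norm_num
        rw [this]; exact pow_ne_zero _ h2
      have := (mul_eq_zero.mp he).resolve_left (pow_ne_zero 2 hx)
      have hz : z = y ^ 2 / (4 * x) := by
        rw [eq_div_iff (mul_ne_zero h4 hx)]; linear_combination -this
      rw [hz]; exact Finset.mem_image_of_mem _ (Finset.mem_univ (x, y))
  refine (Finset.card_le_card h).trans ((Finset.card_union_le _ _).trans ?_)
  refine (add_le_add Finset.card_image_le Finset.card_image_le).trans ?_
  rw [Finset.card_univ, Fintype.card_prod]
  apply le_of_eq; ring

/-- Local density of `goodRows`, obtained from `fam_count` by averaging over the affine families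
`v + p + q T`. -/
lemma card_goodRows {D : ℕ} (hD : 1 ≤ D) (h2 : (2 : F) ≠ 0) (h3 : (3 : F) ≠ 0)
    (hl : 14 + 16 * D ≤ Fintype.card F) :
    Fintype.card (Fin 3 × Fin (D + 1) → F) ≤
      8 * D * (Finset.univ.filter fun v => v ∈ goodRows F D).card := by
  set l := Fintype.card F with hldef
  set V := Fintype.card (Fin 3 × Fin (D + 1) → F) with hV
  obtain ⟨Ro, hRo⟩ : ∃ Ro : (Fin 3 × Fin (D + 1) → F) → Prop, ∀ v, Ro v ↔
    ∀ t, (rowDisc v).eval t ≠ 0 := ⟨_, fun v => Iff.rfl⟩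
  obtain ⟨Lz, hLz⟩ : ∃ Lz : (Fin 3 × Fin (D + 1) → F) → Prop, ∀ v, Lz v ↔
    rowLead v = 0 := ⟨_, fun v => Iff.rfl⟩
  let comp : F × F × F → Fin 3 → F := fun e => ![e.1, e.2.1, e.2.2]
  have hl0 : 0 < l := Fintype.card_pos
  -- rootless matrices, by translating along linear polynomials
  have hA : l * V ≤ 7 * V + 4 * D * (l * (Finset.univ.filter Ro).card) := by
    let j0 : Fin (D + 1) := 0
    let j1 : Fin (D + 1) := ⟨1, by omega⟩
    have hj : j0 ≠ j1 := by intro h; have := congrArg Fin.val h; simp [j0, j1] at this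
    let ψ : (F × F × F) × (F × F × F) → (Fin 3 × Fin (D + 1) → F) := fun u x =>
      if x.2 = j0 then comp u.1 x.1 else if x.2 = j1 then comp u.2 x.1 else 0
    have hψ : ∀ v u i t, (rowPoly (v + ψ u) i).eval t =
        (rowPoly v i).eval t + comp u.1 i + t * comp u.2 i := by
      intro v u i t
      simp only [rowPoly, eval_finsetSum, eval_mul, eval_C, eval_pow, eval_X, Pi.add_apply, add_mul,
        Finset.sum_add_distrib, add_assoc]
      congr 1
      rw [← Finset.add_sum_erase _ _ (Finset.mem_univ j0),
        ← Finset.add_sum_erase _ _ (Finset.mem_erase.mpr ⟨hj.symm, Finset.mem_univ j1⟩),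
        Finset.sum_eq_zero]
      · simp only [ψ, if_true, if_neg hj.symm]
        simp [j0, j1, mul_comm]
      · intro x hx
        simp only [Finset.mem_erase, Finset.mem_univ, and_true] at hx
        simp [ψ, hx.1, hx.2]
    have hev : ∀ v u t, (rowDisc (v + ψ u)).eval t = dl (famVal (fun t =>
        ((rowPoly v 0).eval t, (rowPoly v 1).eval t, (rowPoly v 2).eval t)) u t) := by
      intro v u t
      rw [rowDisc_eval, hψ, hψ, hψ]
      rfl
    have hv : ∀ v, l ^ 6 ≤ 7 * l ^ 5 + 4 * D * (Finset.univ.filter fun u => Ro (v + ψ u)).card := by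
      intro v
      have := fam_count h2 h3 (fun t =>
        ((rowPoly v 0).eval t, (rowPoly v 1).eval t, (rowPoly v 2).eval t)) (n := 4 * D) (by omega) ?_
      · simp only [hRo, hev]; exact this
      · intro u hu
        simp only [← hev] at hu ⊢
        obtain ⟨t, ht⟩ := hu
        have hne : rowDisc (v + ψ u) ≠ 0 := by rintro h; rw [h] at ht; simp at ht
        have hsub : (Finset.univ.filter fun t => (rowDisc (v + ψ u)).eval t = 0) ⊆
            (rowDisc (v + ψ u)).roots.toFinset := by
          intro r hr
          simp only [Finset.mem_filter, Finset.mem_univ, true_and] at hr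
          rw [Multiset.mem_toFinset, mem_roots hne]; exact hr
        exact (Finset.card_le_card hsub).trans ((Multiset.toFinset_card_le _).trans
          ((card_roots' _).trans (dl_natDegree (rowPoly_natDegree _ 0) (rowPoly_natDegree _ 1)
            (rowPoly_natDegree _ 2))))
    have hs := Finset.sum_le_sum fun v (_ : v ∈ Finset.univ) => hv v
    rw [Finset.sum_add_distrib, ← Finset.mul_sum, ← Finset.mul_sum, averaging, Finset.sum_const, Finset.sum_const,
      Finset.card_univ, ← hV, smul_eq_mul, smul_eq_mul] at hs
    simp only [Fintype.card_prod, ← hldef] at hs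
    have h5 : 0 < l ^ 5 := by positivity
    refine Nat.le_of_mul_le_mul_left ?_ h5
    calc l ^ 5 * (l * V) = V * l ^ 6 := by ring
      _ ≤ _ := hs
      _ = _ := by ring
  have hB : l * (Finset.univ.filter Lz).card ≤ 2 * V := by
    let ψ : F × F × F → (Fin 3 × Fin (D + 1) → F) := fun u x =>
      if x.2 = Fin.last D then comp u x.1 else 0
    have hv : ∀ v, (Finset.univ.filter fun u => Lz (v + ψ u)).card ≤ 2 * l ^ 2 := by
      intro v
      refine le_trans ?_ (card_lead_zero h2)
      refine Finset.card_le_card_of_injOn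
        (fun u => (v (0, Fin.last D), v (1, Fin.last D), v (2, Fin.last D)) + u) ?_ ?_
      · intro u hu
        simp only [Finset.coe_filter, Finset.mem_univ, true_and, Set.mem_ofPred_eq, hLz, rowLead, ψ,
          Pi.add_apply, if_true, comp] at hu ⊢
        exact hu
      · intro u _ u' _ h
        exact add_left_cancel h
    have hs := Finset.sum_le_sum fun v (_ : v ∈ Finset.univ) => hv v
    rw [averaging, Finset.sum_const, Finset.card_univ, ← hV, smul_eq_mul] at hs
    simp only [Fintype.card_prod, ← hldef] at hs
    have h5 : 0 < l ^ 2 := by positivity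
    refine Nat.le_of_mul_le_mul_left ?_ h5
    calc l ^ 2 * (l * (Finset.univ.filter Lz).card) = l * (l * l) * (Finset.univ.filter Lz).card := by
          ring
      _ ≤ _ := hs
      _ = _ := by ring
  have hC : (Finset.univ.filter Ro).card ≤
      (Finset.univ.filter fun v => v ∈ goodRows F D).card + (Finset.univ.filter Lz).card := by
    refine le_trans (Finset.card_le_card ?_) (Finset.card_union_le _ _)
    intro v hv
    simp only [Finset.mem_union, Finset.mem_filter, Finset.mem_univ, true_and] at hv ⊢
    by_cases h : rowLead v = 0
    · right; exact (hLz v).mpr h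
    · left; exact ⟨h, (hRo v).mp hv⟩
  set G := (Finset.univ.filter fun v => v ∈ goodRows F D).card
  refine Nat.le_of_mul_le_mul_left ?_ hl0
  have h1 : 4 * D * (l * (Finset.univ.filter Ro).card) ≤
      4 * D * (l * (G + (Finset.univ.filter Lz).card)) := by gcongr
  have h5 : 4 * D * (l * (G + (Finset.univ.filter Lz).card)) ≤ 4 * D * (l * G) + 4 * D * (2 * V) := by
    rw [mul_add, mul_add]; gcongr
  have h6 : (14 + 16 * D) * V ≤ l * V := by gcongr
  nlinarith
end

/-! ### Fejér weights -/

section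
open Complex

/-- The additive character `n ↦ exp (2 π i n / L)`. -/
def eChar (L : ℕ) (n : ℤ) : ℂ := Complex.exp (2 * Real.pi * I * (n / L))

/-- The Fejér weight `|∑_{j < J} exp (2 π i j n / L)|²`. -/
def fejer (L J : ℕ) (n : ℤ) : ℝ := ‖∑ j ∈ Finset.range J, eChar L (j * n)‖ ^ 2

lemma eChar_add (L : ℕ) (m n : ℤ) : eChar L (m + n) = eChar L m * eChar L n := by
  simp only [eChar, ← Complex.exp_add]; congr 1; push_cast; ring

lemma eChar_conj (L : ℕ) (n : ℤ) : (starRingEnd ℂ) (eChar L n) = eChar L (-n) := by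
  simp only [eChar, ← Complex.exp_conj]; congr 1
  simp only [map_mul, map_div₀, Complex.conj_I, Complex.conj_ofReal, map_ofNat, map_intCast,
    map_natCast]
  push_cast; ring

lemma fejer_nonneg (L J : ℕ) (n : ℤ) : 0 ≤ fejer L J n := by unfold fejer; positivity

lemma fejer_expand (L J : ℕ) (n : ℤ) : (fejer L J n : ℂ) =
    ∑ j ∈ Finset.range J, ∑ j' ∈ Finset.range J, eChar L ((j - j') * n) := by
  unfold fejer
  rw [Complex.ofReal_pow, ← Complex.mul_conj', map_sum, Finset.sum_mul_sum]
  refine Finset.sum_congr rfl fun j _ => Finset.sum_congr rfl fun j' _ => ?_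
  rw [eChar_conj, ← eChar_add]; congr 1; ring

lemma filter_residue {q M : ℕ} (hq : 0 < q) (s r : ℤ) :
    ((Finset.Ico s (s + (q * M : ℕ))).filter fun n => (q : ℤ) ∣ n - r) =
      (Finset.range M).image fun m : ℕ => (s + (r - s) % q) + q * m := by
  have hq' : (0 : ℤ) < q := by exact_mod_cast hq
  ext n
  simp only [Finset.mem_filter, Finset.mem_Ico, Finset.mem_image, Finset.mem_range]
  constructor
  · rintro ⟨⟨h1, h2⟩, h3⟩
    have e1 : (n - s) % q = (r - s) % q := by
      refine Int.emod_emod_of_dvd _ (dvd_refl _) |>.symm.trans ?_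
      rw [Int.emod_emod_of_dvd _ (dvd_refl _)]
      refine Int.emod_eq_emod_iff_emod_sub_eq_zero.mpr ?_
      rw [show n - s - (r - s) = n - r by ring]
      exact Int.emod_eq_zero_of_dvd h3
    have e2 := Int.mul_ediv_add_emod (n - s) q
    have e3 : 0 ≤ (n - s) / q := Int.ediv_nonneg (by omega) hq'.le
    refine ⟨((n - s) / q).toNat, ?_, ?_⟩
    · have : (n - s) / q < M := by
        refine Int.ediv_lt_of_lt_mul hq' ?_
        push_cast at h2; linarith
      omega
    · rw [Int.toNat_of_nonneg e3, ← e1]; linarith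
  · rintro ⟨m, hm, rfl⟩
    have e1 := Int.emod_nonneg (r - s) hq'.ne'
    have e2 := Int.emod_lt_of_pos (r - s) hq'
    have e3 : (q : ℤ) * m + q ≤ q * M := by
      have : (m : ℤ) + 1 ≤ M := by exact_mod_cast hm
      nlinarith
    refine ⟨⟨by nlinarith [Int.natCast_nonneg m], by push_cast; linarith⟩, ?_⟩
    have e4 := Int.mul_ediv_add_emod (r - s) q
    exact ⟨m - (r - s) / q, by linarith⟩

lemma eChar_residue_sum {q M : ℕ} (hq : 0 < q) (hM : 0 < M) (s r : ℤ) {h : ℤ} (hh : |h| < M) :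
    ∑ n ∈ (Finset.Ico s (s + (q * M : ℕ))).filter fun n => (q : ℤ) ∣ n - r, eChar (q * M) (h * n) =
      if h = 0 then (M : ℂ) else 0 := by
  have hqC : (q : ℂ) ≠ 0 := by exact_mod_cast hq.ne'
  have hMC : (M : ℂ) ≠ 0 := by exact_mod_cast hM.ne'
  rw [filter_residue hq, Finset.sum_image]
  · have e : ∀ m : ℕ, eChar (q * M) (h * ((s + (r - s) % q) + q * m)) =
        eChar (q * M) (h * (s + (r - s) % q)) * eChar M h ^ m := by
      intro m
      rw [mul_add, eChar_add]
      congr 1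
      simp only [eChar, ← Complex.exp_nat_mul]
      congr 1
      push_cast
      field_simp
    simp only [e]
    rw [← Finset.mul_sum]
    split_ifs with h0
    · subst h0; simp [eChar]
    · have h1 : eChar M h ≠ 1 := by
        unfold eChar
        rw [Ne, Complex.exp_eq_one_iff]
        rintro ⟨n, hn⟩
        have : (h : ℂ) = n * M := by
          have h2pi : (2 * Real.pi * I : ℂ) ≠ 0 := Complex.two_pi_I_ne_zero
          have : (h / M : ℂ) = n := by
            apply mul_left_cancel₀ h2pi; rw [hn]; ring
          field_simp at this; rw [this]; ring
        have h2 : h = n * M := by exact_mod_cast this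
        have hn0 : n ≠ 0 := by rintro rfl; simp at h2; exact h0 h2
        rw [h2, abs_mul, Nat.abs_cast] at hh
        have : 1 ≤ |n| := Int.one_le_abs hn0
        have hM' : (0 : ℤ) < M := by exact_mod_cast hM
        nlinarith
      have h2 : eChar M h ^ M = 1 := by
        simp only [eChar, ← Complex.exp_nat_mul]
        rw [Complex.exp_eq_one_iff]
        exact ⟨h, by field_simp⟩
      have h3 := mul_neg_geom_sum (eChar M h) M
      rw [h2, sub_self] at h3
      rw [(mul_eq_zero.mp h3).resolve_left (sub_ne_zero.mpr h1.symm), mul_zero]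
  · intro m _ m' _ he
    have hq' : (q : ℤ) ≠ 0 := by exact_mod_cast hq.ne'
    have : (q : ℤ) * m = q * m' := by simpa using he
    exact_mod_cast mul_left_cancel₀ hq' this

/-- The Fejér weights are exactly equidistributed in residue classes to moduli `q ≤ L / J`. -/
lemma fejer_residue_sum {q M J : ℕ} (hq : 0 < q) (hM : 0 < M) (hJ : J ≤ M) (s r : ℤ) :
    ∑ n ∈ (Finset.Ico s (s + (q * M : ℕ))).filter fun n => (q : ℤ) ∣ n - r, fejer (q * M) J n =
      (J : ℝ) * M := by
  have : ((∑ n ∈ (Finset.Ico s (s + (q * M : ℕ))).filter fun n => (q : ℤ) ∣ n - r,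
      fejer (q * M) J n : ℝ) : ℂ) = (J : ℂ) * M := by
    rw [Complex.ofReal_sum]
    simp only [fejer_expand]
    rw [Finset.sum_comm]
    have h : ∀ j ∈ Finset.range J, ∑ n ∈ (Finset.Ico s (s + (q * M : ℕ))).filter
        fun n => (q : ℤ) ∣ n - r, ∑ j' ∈ Finset.range J, eChar (q * M) ((j - j') * n) = M := by
      intro j hj
      rw [Finset.sum_comm, Finset.sum_congr rfl (g := fun j' => if j' = j then (M : ℂ) else 0)]
      · rw [Finset.sum_ite_eq', if_pos hj]
      · intro j' hj'
        rw [Finset.mem_range] at hj hj'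
        rw [eChar_residue_sum hq hM]
        · congr 1
          rw [sub_eq_zero, eq_comm]; simp [eq_comm]
        · rw [abs_lt]; constructor <;> omega
    rw [Finset.sum_congr rfl h]
    simp
  exact_mod_cast this

/-- The Fejér weight has its maximal order of magnitude near `0`. -/
lemma fejer_lower {L J : ℕ} (hL : 0 < L) {n : ℤ} (hn : |n| * (8 * J) ≤ L) :
    (J : ℝ) ^ 2 / 2 ≤ fejer L J n := by
  have hLR : (0 : ℝ) < L := by exact_mod_cast hL
  have h1 : ∀ j ∈ Finset.range J, Real.sqrt 2 / 2 ≤ (eChar L (j * n)).re := by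
    intro j hj
    rw [Finset.mem_range] at hj
    have e : (2 * Real.pi * I * (((j * n : ℤ) : ℂ) / L) : ℂ) =
        ((2 * Real.pi * ((j * n : ℤ) / L) : ℝ) : ℂ) * I := by push_cast; ring
    rw [eChar, e, Complex.exp_ofReal_mul_I_re, ← Real.cos_abs, ← Real.cos_pi_div_four]
    refine Real.cos_le_cos_of_nonneg_of_le_pi (abs_nonneg _) (by linarith [Real.pi_pos]) ?_
    rw [abs_mul, abs_of_pos (by positivity : 0 < 2 * Real.pi), abs_div, abs_of_pos hLR]
    have h2 : |((j * n : ℤ) : ℝ)| * 8 ≤ L := by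
      have h3 : |(j : ℤ) * n| * 8 ≤ L := by
        refine le_trans ?_ hn
        rw [abs_mul, Nat.abs_cast]
        have : (j : ℤ) ≤ J := by exact_mod_cast hj.le
        have := mul_le_mul_of_nonneg_right this (abs_nonneg n)
        linarith
      exact_mod_cast h3
    have h4 : |((j * n : ℤ) : ℝ)| / L ≤ 1 / 8 := by
      rw [div_le_div_iff₀ hLR (by norm_num)]; linarith
    nlinarith [Real.pi_pos]
  have h2 : (J : ℝ) * (Real.sqrt 2 / 2) ≤ ‖∑ j ∈ Finset.range J, eChar L (j * n)‖ := by
    refine le_trans ?_ (Complex.re_le_norm _)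
    rw [Complex.re_sum]
    calc (J : ℝ) * (Real.sqrt 2 / 2) = ∑ j ∈ Finset.range J, Real.sqrt 2 / 2 := by simp
      _ ≤ _ := Finset.sum_le_sum h1
  unfold fejer
  calc (J : ℝ) ^ 2 / 2 = (J * (Real.sqrt 2 / 2)) ^ 2 := by
        rw [mul_pow, div_pow, Real.sq_sqrt (by norm_num)]; ring
    _ ≤ _ := by gcongr
end

/-! ### A variance sieve -/

section
variable {ι : Type*} [Fintype ι]

/-- The product Fejér weight on `ι → ℤ`. -/
def fejerProd (L J : ℕ) (v : ι → ℤ) : ℝ := ∏ i, fejer L J (v i)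

/-- Reduction of an integer vector modulo `l`. -/
def redMod (l : ℕ) (v : ι → ℤ) : ι → ZMod l := fun i => (v i : ZMod l)

lemma fejer_crt_sum {l l' M J : ℕ} (hl : 0 < l) (hl' : 0 < l') (hco : l.Coprime l') (hM : 0 < M)
    (hJ : J ≤ M) (s : ℤ) (a : ZMod l) (b : ZMod l') :
    ∑ n ∈ (Finset.Ico s (s + (l * l' * M : ℕ))).filter
      fun n : ℤ => (n : ZMod l) = a ∧ (n : ZMod l') = b, fejer (l * l' * M) J n = (J : ℝ) * M := by
  obtain ⟨x, rfl⟩ := ZMod.intCast_surjective a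
  obtain ⟨y, rfl⟩ := ZMod.intCast_surjective b
  obtain ⟨u, v, huv⟩ := Nat.isCoprime_iff_coprime.mpr hco
  have hiff : ∀ n : ℤ, ((n : ZMod l) = x ∧ (n : ZMod l') = y) ↔
      ((l * l' : ℕ) : ℤ) ∣ n - (x * (v * l') + y * (u * l)) := by
    intro n
    rw [eq_comm, ZMod.intCast_eq_intCast_iff_dvd_sub, eq_comm, ZMod.intCast_eq_intCast_iff_dvd_sub]
    push_cast
    have e1 : n - (x * (v * l') + y * (u * l)) = (n - x) + l * (u * (x - y)) := by
      linear_combination (-x) * huv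
    have e2 : n - (x * (v * l') + y * (u * l)) = (n - y) + l' * (v * (y - x)) := by
      linear_combination (-y) * huv
    constructor
    · rintro ⟨h1, h2⟩
      refine IsCoprime.mul_dvd (Nat.isCoprime_iff_coprime.mpr hco) ?_ ?_
      · rw [e1]; exact dvd_add h1 (dvd_mul_right _ _)
      · rw [e2]; exact dvd_add h2 (dvd_mul_right _ _)
    · intro h
      constructor
      · have h1 := (dvd_mul_right (l : ℤ) l').trans h
        rw [e1] at h1; exact (dvd_add_left (dvd_mul_right _ _)).mp h1
      · have h1 := (dvd_mul_left (l' : ℤ) l).trans h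
        rw [e2] at h1; exact (dvd_add_left (dvd_mul_right _ _)).mp h1
  rw [Finset.filter_congr fun n _ => hiff n]
  exact fejer_residue_sum (Nat.mul_pos hl hl') hM hJ s _

/-- Exact equidistribution of the product weight over pairs of residue vectors. -/
lemma fejerProd_pair_sum {l l' M J : ℕ} [NeZero l] [NeZero l'] (hco : l.Coprime l') (hM : 0 < M)
    (hJ : J ≤ M) (s : ℤ) (g : (ι → ZMod l) → ℝ) (h : (ι → ZMod l') → ℝ) :
    ∑ v ∈ Fintype.piFinset fun _ : ι => Finset.Ico s (s + (l * l' * M : ℕ)),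
      fejerProd (l * l' * M) J v * (g (redMod l v) * h (redMod l' v)) =
    ((J : ℝ) * M) ^ Fintype.card ι * ((∑ u, g u) * ∑ u, h u) := by
  rw [← Finset.sum_fiberwise (g := fun v => (redMod l v, redMod l' v)), Fintype.sum_prod_type,
    Finset.sum_mul_sum, Finset.mul_sum]
  refine Finset.sum_congr rfl fun u _ => ?_
  rw [Finset.mul_sum]
  refine Finset.sum_congr rfl fun u' _ => ?_
  have e : ((Fintype.piFinset fun _ : ι => Finset.Ico s (s + (l * l' * M : ℕ))).filter
      fun v => (redMod l v, redMod l' v) = (u, u')) =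
    Fintype.piFinset fun i => (Finset.Ico s (s + (l * l' * M : ℕ))).filter
      fun n : ℤ => (n : ZMod l) = u i ∧ (n : ZMod l') = u' i := by
    ext v
    simp only [Finset.mem_filter, Fintype.mem_piFinset, Prod.mk.injEq, redMod, funext_iff]
    constructor
    · rintro ⟨h1, h2, h3⟩ i; exact ⟨h1 i, h2 i, h3 i⟩
    · intro h; exact ⟨fun i => (h i).1, fun i => (h i).2.1, fun i => (h i).2.2⟩
  have e2 : ∀ v ∈ ((Fintype.piFinset fun _ : ι => Finset.Ico s (s + (l * l' * M : ℕ))).filter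
      fun v => (redMod l v, redMod l' v) = (u, u')),
      fejerProd (l * l' * M) J v * (g (redMod l v) * h (redMod l' v)) =
      fejerProd (l * l' * M) J v * (g u * h u') := by
    intro v hv
    obtain ⟨h1, h2⟩ := Prod.mk.injEq _ _ _ _ ▸ (Finset.mem_filter.mp hv).2
    rw [h1, h2]
  rw [Finset.sum_congr rfl e2, ← Finset.sum_mul, e]
  congr 1
  simp only [fejerProd]
  rw [← Finset.prod_univ_sum, Finset.prod_congr rfl fun i _ => fejer_crt_sum (NeZero.pos l)
    (NeZero.pos l') hco hM hJ s (u i) (u' i)]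
  simp

/-- Integer vectors in a box of side `H` which avoid, modulo every prime `l ∈ B`, a set of residues
of density at least `κ`: their proportion is `O(1 / #B)` as soon as all `l * l' ≤ R ≍ H`. The proof
computes the variance of the number of `l ∈ B` with `v mod l ∈ Ω l`, with respect to a weight for
which the events at distinct primes are exactly uncorrelated. -/
lemma variance_sieve (B : Finset ℕ) (hB : ∀ l ∈ B, l.Prime) {R H : ℕ} (hR0 : 0 < R)
    (hR : ∀ l ∈ B, ∀ l' ∈ B, l * l' ≤ R) (hH : 8 * H ≤ R)
    (Ω : (l : ℕ) → Set (ι → ZMod l)) {κ : ℝ} (hκ : 0 < κ)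
    (hΩ : ∀ l ∈ B, κ * (l : ℝ) ^ Fintype.card ι ≤ (Ω l).ncard) :
    (((Fintype.piFinset fun _ : ι => Finset.Icc (-(H : ℤ)) H).filter
      fun v => ∀ l ∈ B, redMod l v ∉ Ω l).card : ℝ) * (κ ^ 2 * B.card) ≤
      (2 * R : ℝ) ^ Fintype.card ι := by
  rcases B.eq_empty_or_nonempty with hBe | hBe
  · subst hBe; simp
  set k := Fintype.card ι with hk
  set J := ∏ l ∈ B, l with hJ
  set L := R * J with hL
  have hJ0 : 0 < J := Finset.prod_pos fun l hl => (hB l hl).pos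
  have hL0 : 0 < L := Nat.mul_pos hR0 hJ0
  set s : ℤ := -(H : ℤ) with hs
  set X := Fintype.piFinset fun _ : ι => Finset.Ico s (s + (L : ℕ)) with hX
  set w : (ι → ℤ) → ℝ := fejerProd L J with hw
  have hw0 : ∀ v, 0 ≤ w v := fun v => Finset.prod_nonneg fun i _ => fejer_nonneg _ _ _
  -- the centred indicator of the event at `l`
  set f : ℕ → (ι → ℤ) → ℝ := fun l v =>
    (if redMod l v ∈ Ω l then 1 else 0) - (Ω l).ncard / (l : ℝ) ^ k with hf
  have hmean : ∀ l ∈ B, ∀ (inst : NeZero l), ∑ u : ι → ZMod l,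
      ((if u ∈ Ω l then (1 : ℝ) else 0) - (Ω l).ncard / (l : ℝ) ^ k) = 0 := by
    intro l hl _
    have hl0 : (0 : ℝ) < l := by exact_mod_cast (hB l hl).pos
    rw [Finset.sum_sub_distrib, Finset.sum_boole, Finset.sum_const, Finset.card_univ,
      Fintype.card_fun, ZMod.card, nsmul_eq_mul, Set.ncard_eq_toFinset_card _ (Set.toFinite _)]
    have : (Finset.univ.filter fun u : ι → ZMod l => u ∈ Ω l) = (Set.toFinite (Ω l)).toFinset := by
      ext u; simp
    rw [this]; push_cast
    rw [← hk]
    field_simp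
    simp
  have hcross : ∀ l ∈ B, ∀ l' ∈ B, l ≠ l' → ∑ v ∈ X, w v * (f l v * f l' v) = 0 := by
    intro l hl l' hl' hne
    have hco : l.Coprime l' := (Nat.coprime_primes (hB l hl) (hB l' hl')).mpr hne
    have i1 : NeZero l := ⟨(hB l hl).ne_zero⟩
    have i2 : NeZero l' := ⟨(hB l' hl').ne_zero⟩
    have hdvd : l * l' ∣ J := by
      refine hco.mul_dvd_of_dvd_of_dvd ?_ ?_ <;> exact Finset.dvd_prod_of_mem _ (by assumption)
    obtain ⟨M, hM⟩ : l * l' ∣ L := hdvd.trans (dvd_mul_left _ _)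
    have hM0 : 0 < M := by
      rcases Nat.eq_zero_or_pos M with h | h
      · rw [h, mul_zero] at hM; omega
      · exact h
    have hJM : J ≤ M := by
      have h1 : l * l' * J ≤ l * l' * M := by
        rw [← hM, hL]; exact Nat.mul_le_mul_right _ (hR l hl l' hl')
      exact Nat.le_of_mul_le_mul_left h1 (Nat.mul_pos (hB l hl).pos (hB l' hl').pos)
    have := fejerProd_pair_sum hco hM0 hJM s
      (fun u : ι → ZMod l => (if u ∈ Ω l then (1 : ℝ) else 0) - (Ω l).ncard / (l : ℝ) ^ k)
      (fun u : ι → ZMod l' => (if u ∈ Ω l' then (1 : ℝ) else 0) - (Ω l').ncard / (l' : ℝ) ^ k)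
    rw [hmean l hl i1, zero_mul, mul_zero, ← hM] at this
    exact this
  have hdens : ∀ l ∈ B, (Ω l).ncard / (l : ℝ) ^ k ≤ 1 := by
    intro l hl
    have i1 : NeZero l := ⟨(hB l hl).ne_zero⟩
    have hl0 : (0 : ℝ) < l := by exact_mod_cast (hB l hl).pos
    rw [div_le_one (by positivity)]
    have : (Ω l).ncard ≤ Nat.card (ι → ZMod l) := Set.ncard_le_card _
    rw [Nat.card_eq_fintype_card, Fintype.card_fun, ZMod.card] at this
    exact_mod_cast this
  have hXsum : ∑ v ∈ X, w v = ((J : ℝ) * L) ^ k := by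
    have := fejerProd_pair_sum (ι := ι) (l := 1) (l' := 1) (M := L) (J := J) (Nat.coprime_one_left 1)
      hL0 (Nat.le_mul_of_pos_left _ hR0) s (fun _ => 1) (fun _ => 1)
    simp only [mul_one, one_mul, Finset.sum_const, Finset.card_univ, Fintype.card_unique, one_smul] at this
    exact this
  have hdiag : ∀ l ∈ B, ∑ v ∈ X, w v * (f l v * f l v) ≤ ((J : ℝ) * L) ^ k := by
    intro l hl
    rw [← hXsum]
    refine Finset.sum_le_sum fun v _ => mul_le_of_le_one_right (hw0 v) ?_
    have h1 := hdens l hl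
    have h2 : 0 ≤ (Ω l).ncard / (l : ℝ) ^ k := by positivity
    simp only [hf]
    split_ifs <;> nlinarith
  have htotal : ∑ v ∈ X, w v * (∑ l ∈ B, f l v) ^ 2 ≤ B.card * ((J : ℝ) * L) ^ k := by
    have e : ∀ v, w v * (∑ l ∈ B, f l v) ^ 2 = ∑ l ∈ B, ∑ l' ∈ B, w v * (f l v * f l' v) := by
      intro v
      rw [sq, Finset.sum_mul_sum, Finset.mul_sum]
      exact Finset.sum_congr rfl fun l _ => Finset.mul_sum _ _ _
    simp only [e]
    rw [Finset.sum_comm, ← nsmul_eq_mul]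
    refine Finset.sum_le_card_nsmul _ _ _ fun l hl => ?_
    rw [Finset.sum_comm, Finset.sum_eq_single l]
    · exact hdiag l hl
    · intro l' hl' hne; exact hcross l hl l' hl' hne.symm
    · intro h; exact absurd hl h
  set Bad := (Fintype.piFinset fun _ : ι => Finset.Icc (-(H : ℤ)) H).filter
      fun v => ∀ l ∈ B, redMod l v ∉ Ω l with hBad
  have hsub : Bad ⊆ X := by
    intro v hv
    simp only [hBad, Finset.mem_filter, Fintype.mem_piFinset, Finset.mem_Icc] at hv
    simp only [hX, Fintype.mem_piFinset, Finset.mem_Ico]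
    intro i
    have h1 := hv.1 i
    have h2 : R ≤ L := Nat.le_mul_of_pos_right _ hJ0
    constructor <;> omega
  have hlow : ∀ v ∈ Bad, ((J : ℝ) ^ 2 / 2) ^ k * (κ * B.card) ^ 2 ≤ w v * (∑ l ∈ B, f l v) ^ 2 := by
    intro v hv
    simp only [hBad, Finset.mem_filter, Fintype.mem_piFinset, Finset.mem_Icc] at hv
    obtain ⟨hv1, hv2⟩ := hv
    have a1 : ((J : ℝ) ^ 2 / 2) ^ k ≤ w v := by
      rw [hk, ← Finset.card_univ, ← Finset.prod_const]
      refine Finset.prod_le_prod (fun _ _ => by positivity) fun i _ => fejer_lower hL0 ?_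
      have h1 : |v i| ≤ H := abs_le.mpr (hv1 i)
      have h2 : (8 : ℤ) * H ≤ R := by exact_mod_cast hH
      rw [hL]; push_cast
      have h3 : (0 : ℤ) ≤ J := Int.natCast_nonneg _
      calc |v i| * (8 * (J : ℤ)) ≤ H * (8 * J) := by gcongr
        _ = (8 * H) * J := by ring
        _ ≤ R * J := by gcongr
    have a2 : (κ * B.card) ^ 2 ≤ (∑ l ∈ B, f l v) ^ 2 := by
      have h1 : κ * B.card ≤ -∑ l ∈ B, f l v := by
        rw [← Finset.sum_neg_distrib, mul_comm, ← nsmul_eq_mul]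
        refine Finset.card_nsmul_le_sum _ _ _ fun l hl => ?_
        have hl0 : (0 : ℝ) < l := by exact_mod_cast (hB l hl).pos
        simp only [hf]
        rw [if_neg (hv2 l hl), zero_sub, neg_neg, le_div_iff₀ (by positivity)]
        exact hΩ l hl
      rw [← neg_sq (∑ l ∈ B, f l v)]
      gcongr
    exact mul_le_mul a1 a2 (by positivity) (hw0 v)
  have hfin : (Bad.card : ℝ) * (((J : ℝ) ^ 2 / 2) ^ k * (κ * B.card) ^ 2) ≤
      B.card * ((J : ℝ) * L) ^ k := by
    refine le_trans ?_ htotal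
    refine le_trans ?_ (Finset.sum_le_sum_of_subset_of_nonneg hsub fun v _ _ =>
      mul_nonneg (hw0 v) (sq_nonneg _))
    rw [← nsmul_eq_mul]
    exact Finset.card_nsmul_le_sum _ _ _ hlow
  have hJR : (0 : ℝ) < J := by exact_mod_cast hJ0
  have hBc : (0 : ℝ) < B.card := by exact_mod_cast Finset.card_pos.mpr hBe
  have hpos : 0 < (B.card : ℝ) * ((J : ℝ) ^ 2 / 2) ^ k := by positivity
  refine le_of_mul_le_mul_left ?_ hpos
  calc (B.card : ℝ) * ((J : ℝ) ^ 2 / 2) ^ k * (Bad.card * (κ ^ 2 * B.card)) =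
        (Bad.card : ℝ) * (((J : ℝ) ^ 2 / 2) ^ k * (κ * B.card) ^ 2) := by ring
    _ ≤ _ := hfin
    _ = B.card * ((J : ℝ) ^ 2 / 2 * (2 * R)) ^ k := by rw [hL]; push_cast; ring_nf
    _ = _ := by rw [mul_pow]; ring
end

/-! ### Rootless primes for generic polynomials -/

section

lemma rowPoly_map {R S : Type*} [CommRing R] [CommRing S] (φ : R →+* S) {D : ℕ}
    (v : Fin 3 × Fin (D + 1) → R) (i : Fin 3) :
    rowPoly (fun x => φ (v x)) i = (rowPoly v i).map φ := by
  simp [rowPoly, Polynomial.map_sum]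

lemma rowDisc_map {R S : Type*} [CommRing R] [CommRing S] (φ : R →+* S) {D : ℕ}
    (v : Fin 3 × Fin (D + 1) → R) :
    rowDisc (fun x => φ (v x)) = (rowDisc v).map φ := by
  simp only [rowDisc, rowPoly_map, dl]
  simp

/-- If the reduction of `v` modulo `l` is good, then `l` is a prime as needed in `sp_upper`. -/
lemma rootless_of_goodRows {D : ℕ} (hD : 1 ≤ D) {l : ℕ} {v : Fin 3 × Fin (D + 1) → ℤ}
    (h : redMod l v ∈ goodRows (ZMod l) D) :
    ¬ (l : ℤ) ∣ (rowDisc v).coeff (4 * D) ∧ Rootless (rowDisc v) l := by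
  obtain ⟨h1, h2⟩ := h
  have e : rowDisc (redMod l v) = (rowDisc v).map (Int.castRingHom (ZMod l)) :=
    rowDisc_map (Int.castRingHom (ZMod l)) v
  constructor
  · rw [← rowDisc_coeff_top hD, e, coeff_map] at h1
    intro hd
    exact h1 ((ZMod.intCast_zmod_eq_zero_iff_dvd _ l).mpr hd)
  · intro a hd
    refine h2 (a : ZMod l) ?_
    rw [e, show (a : ZMod l) = Int.castRingHom (ZMod l) a from rfl, eval_map_apply]
    exact (ZMod.intCast_zmod_eq_zero_iff_dvd _ l).mpr hd

/-- Chebyshev's lower bound, for primes above a fixed bound. -/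
lemma card_primes_Icc_lower (m : ℕ) : ∃ c : ℝ, 0 < c ∧ ∀ᶠ n : ℕ in atTop,
    c * n / Real.log n ≤ ((Finset.Icc m n).filter Nat.Prime).card := by
  have hlog2 : 0 < Real.log 2 := Real.log_pos (by norm_num)
  refine ⟨Real.log 2 / 2, by positivity, ?_⟩
  have h1 : ∀ᶠ n : ℕ in atTop, Real.log n ≤ Real.log 2 / (2 * (m + 2)) * n := by
    have := (Real.isLittleO_log_id_atTop.comp_tendsto tendsto_natCast_atTop_atTop).def
      (c := Real.log 2 / (2 * (m + 2))) (by positivity)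
    filter_upwards [this] with n hn
    simpa using (Real.le_norm_self _).trans hn
  filter_upwards [h1, eventually_ge_atTop 2] with n hn hn2
  have hn2' : (2 : ℝ) ≤ n := by exact_mod_cast hn2
  have hlog : 0 < Real.log n := Real.log_pos (by linarith)
  have hp := Chebyshev.pi_ge n
  have hl1 : Real.log (n + 1) ≤ 2 * Real.log n := by
    rw [← Real.log_rpow (by linarith)]
    refine Real.log_le_log (by positivity) ?_
    norm_num
    nlinarith
  have hcard : (Nat.primeCounting n : ℝ) ≤ ((Finset.Icc m n).filter Nat.Prime).card + m := by
    have : Nat.primeCounting n ≤ ((Finset.Icc m n).filter Nat.Prime).card + m := by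
      rw [Nat.primeCounting, Nat.primeCounting', Nat.count_eq_card_filter_range]
      calc _ ≤ ((Finset.Icc m n).filter Nat.Prime ∪ Finset.range m).card := by
            refine Finset.card_le_card fun p hp => ?_
            simp only [Finset.mem_filter, Finset.mem_range, Finset.mem_union, Finset.mem_Icc] at hp ⊢
            by_cases h : p < m
            · exact Or.inr h
            · exact Or.inl ⟨⟨by omega, by omega⟩, hp.2⟩
        _ ≤ _ := (Finset.card_union_le _ _).trans (by simp)
    exact_mod_cast this
  rw [div_le_iff₀ hlog] at hp ⊢
  have hm : (m + 2) * Real.log n ≤ Real.log 2 / 2 * n := by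
    calc (m + 2) * Real.log n ≤ (m + 2) * (Real.log 2 / (2 * (m + 2)) * n) := by gcongr
      _ = _ := by field_simp
  nlinarith

/-- The coefficient vectors of the polynomials of height at most `H`. -/
def coefBox (D H : ℕ) : Finset (Fin 3 × Fin (D + 1) → ℤ) :=
  Fintype.piFinset fun _ => Finset.Icc (-(H : ℤ)) H

/-- Few coefficient vectors have a discriminant without a suitable rootless prime. -/
lemma bad_count {D : ℕ} (hD : 1 ≤ D) : ∃ C : ℝ, 0 < C ∧ ∀ᶠ H : ℕ in atTop,
    (((coefBox D H).filter fun v => ¬ ∃ l : ℕ, l.Prime ∧ ¬ (l : ℤ) ∣ (rowDisc v).coeff (4 * D) ∧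
      Rootless (rowDisc v) l).card : ℝ) ≤
      C * (H : ℝ) ^ (3 * (D + 1)) * (Real.log H / Real.sqrt H) := by
  obtain ⟨c, hc, hpr⟩ := card_primes_Icc_lower (14 + 16 * D)
  have hD' : (0 : ℝ) < D := by exact_mod_cast hD
  set k := 3 * (D + 1) with hk
  have hkc : Fintype.card (Fin 3 × Fin (D + 1)) = k := by simp [hk]
  have hQ : Tendsto (fun H : ℕ => Nat.sqrt (8 * H)) atTop atTop := by
    refine tendsto_atTop.mpr fun b => ?_
    filter_upwards [eventually_ge_atTop (b * b)] with H hH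
    exact Nat.le_sqrt.mpr (by omega)
  refine ⟨16 ^ k * (8 * D) ^ 2 * (4 / c), by positivity, ?_⟩
  filter_upwards [hQ.eventually hpr, eventually_ge_atTop 2, hQ.eventually (eventually_ge_atTop 2)]
    with H hH hH2 hQ2
  -- products of two primes up to `Q` stay below `R = 8 * H`
  set Q := Nat.sqrt (8 * H) with hQd
  set B := (Finset.Icc (14 + 16 * D) Q).filter Nat.Prime with hB
  have hBp : ∀ l ∈ B, l.Prime := fun l hl => (Finset.mem_filter.mp hl).2
  have hBQ : ∀ l ∈ B, 14 + 16 * D ≤ l ∧ l ≤ Q := fun l hl =>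
    Finset.mem_Icc.mp (Finset.mem_filter.mp hl).1
  have hQQ : Q * Q ≤ 8 * H := Nat.sqrt_le _
  have hvs := variance_sieve (ι := Fin 3 × Fin (D + 1)) B hBp (R := 8 * H) (H := H) (by omega)
    (fun l hl l' hl' => (Nat.mul_le_mul (hBQ l hl).2 (hBQ l' hl').2).trans hQQ) le_rfl
    (fun l => goodRows (ZMod l) D) (κ := 1 / (8 * D)) (by positivity) (by
      intro l hl
      have : Fact l.Prime := ⟨hBp l hl⟩
      have hl14 := (hBQ l hl).1
      have hne : ∀ n : ℕ, 0 < n → n < 14 → ((n : ℕ) : ZMod l) ≠ 0 := by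
        intro n hn hn' h
        rw [ZMod.natCast_eq_zero_iff] at h
        have := Nat.le_of_dvd hn h
        omega
      have := card_goodRows (F := ZMod l) hD (by exact_mod_cast hne 2 (by norm_num) (by norm_num))
        (by exact_mod_cast hne 3 (by norm_num) (by norm_num)) (by rw [ZMod.card]; exact hl14)
      have e : (Finset.univ.filter fun v => v ∈ goodRows (ZMod l) D).card =
          (goodRows (ZMod l) D).ncard := by
        rw [Set.ncard_eq_toFinset_card _ (Set.toFinite _)]
        congr 1; ext v; simp
      rw [e, Fintype.card_fun, ZMod.card] at this
      have h' : (l : ℝ) ^ Fintype.card (Fin 3 × Fin (D + 1)) ≤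
        8 * D * (goodRows (ZMod l) D).ncard := by exact_mod_cast this
      rw [one_div, inv_mul_le_iff₀ (by positivity)]
      exact h')
  set N : ℝ := (((coefBox D H).filter fun v => ¬ ∃ l : ℕ, l.Prime ∧
    ¬ (l : ℤ) ∣ (rowDisc v).coeff (4 * D) ∧ Rootless (rowDisc v) l).card : ℝ) with hN
  obtain ⟨M, hle, hM⟩ : ∃ M : ℝ, N ≤ M ∧ M * ((1 / (8 * D)) ^ 2 * B.card) ≤ (16 * H : ℝ) ^ k := by
    refine ⟨_, ?_, hvs.trans (le_of_eq ?_)⟩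
    · rw [hN]
      refine Nat.cast_le.mpr (Finset.card_le_card fun v hv => ?_)
      simp only [Finset.mem_filter] at hv ⊢
      rw [coefBox] at hv
      exact ⟨by convert! hv.1,
        fun l hl hg => hv.2 ⟨l, hBp l hl, rootless_of_goodRows hD hg⟩⟩
    · rw [hkc]; push_cast; ring
  have hHr : (2 : ℝ) ≤ H := by exact_mod_cast hH2
  have hlH : 0 < Real.log H := Real.log_pos (by linarith)
  have hQr : (2 : ℝ) ≤ Q := by exact_mod_cast hQ2
  have hlQ : 0 < Real.log Q := Real.log_pos (by linarith)
  have hQ1 : Real.sqrt H ≤ Q := by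
    rw [Real.sqrt_le_left (by positivity)]
    have h1 : 8 * H < (Q + 1) * (Q + 1) := Nat.lt_succ_sqrt _
    have h2 : (8 : ℝ) * H < (Q + 1) * (Q + 1) := by exact_mod_cast h1
    nlinarith
  have hQ2' : Real.log Q ≤ 4 * Real.log H := by
    rw [show (4 : ℝ) * Real.log H = Real.log ((H : ℝ) ^ 4) by rw [Real.log_pow]; norm_num]
    refine Real.log_le_log (by positivity) ?_
    have h1 : (Q : ℝ) ≤ 8 * H := by
      have : Q ≤ 8 * H := Nat.sqrt_le_self _
      exact_mod_cast this
    have h2 : (8 : ℝ) ≤ (H : ℝ) ^ 3 := by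
      calc (8 : ℝ) = 2 ^ 3 := by norm_num
        _ ≤ _ := by gcongr
    calc (Q : ℝ) ≤ 8 * H := h1
      _ ≤ (H : ℝ) ^ 3 * H := by gcongr
      _ = _ := by ring
  have hsq : 0 < Real.sqrt H := Real.sqrt_pos.mpr (by linarith)
  have hBc : c * Real.sqrt H / (4 * Real.log H) ≤ B.card := by
    refine le_trans ?_ hH
    gcongr
  have hN0 : 0 ≤ N := Nat.cast_nonneg _
  have key : N * ((1 / (8 * D)) ^ 2 * (c * Real.sqrt H / (4 * Real.log H))) ≤ (16 * H : ℝ) ^ k := by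
    refine le_trans ?_ hM
    exact mul_le_mul hle (mul_le_mul_of_nonneg_left hBc (by positivity)) (by positivity)
      (hN0.trans hle)
  rw [← le_div_iff₀ (by positivity)] at key
  refine key.trans (le_of_eq ?_)
  rw [mul_pow]
  field_simp
end

/-! ### Generic separability of the discriminant -/

section

/-- An explicit Bézout identity. -/
lemma separable_cubic_aux : (4 * X ^ 3 + 27 * X - 27 : ℚ[X]).Separable := by
  refine ⟨C (1 / 486) * (-3 * (2 * X + 3)), C (1 / 486) * (2 * X ^ 2 + 3 * X + 9), ?_⟩
  have e : derivative (4 * X ^ 3 + 27 * X - 27 : ℚ[X]) = 12 * X ^ 2 + 27 := by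
    simp [derivative_pow]
    have : (C 3 : ℚ[X]) = 3 := rfl
    try rw [this]
    ring
  rw [e]
  have : (C (1 / 486) : ℚ[X]) * 486 = 1 := by
    rw [show (486 : ℚ[X]) = C 486 from rfl, ← C_mul]; norm_num
  linear_combination this

lemma separable_quartic_aux : ((1 - X) * (4 * X ^ 3 + 27 * X - 27) : ℚ[X]).Separable := by
  refine Separable.mul ?_ separable_cubic_aux ?_
  · refine ⟨0, -1, ?_⟩
    simp
  · refine ⟨C (1 / 4) * (4 * X ^ 2 + 4 * X + 31), C (1 / 4), ?_⟩
    have : (C (1 / 4) : ℚ[X]) * 4 = 1 := by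
      rw [show (4 : ℚ[X]) = C 4 from rfl, ← C_mul]; norm_num
    linear_combination this

lemma separable_comp_X_pow {g : ℚ[X]} (hg : g.Separable) (h0 : g.eval 0 ≠ 0) {D : ℕ} (hD : 1 ≤ D) :
    (g.comp (X ^ D)).Separable := by
  rw [Polynomial.Separable, derivative_comp]
  refine IsCoprime.mul_right ?_ ?_
  · rw [derivative_X_pow]
    refine IsCoprime.mul_right ?_ (IsCoprime.pow_right ?_)
    · have : (D : ℚ) ≠ 0 := by exact_mod_cast (by omega : D ≠ 0)
      refine ⟨0, C (D : ℚ)⁻¹, ?_⟩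
      rw [zero_mul, zero_add, ← C_mul, inv_mul_cancel₀ this, C_1]
    · have : ¬ (X : ℚ[X]) ∣ g.comp (X ^ D) := by
        rw [X_dvd_iff, coeff_zero_eq_eval_zero, eval_comp]
        simpa [zero_pow (by omega : D ≠ 0)] using h0
      exact ((irreducible_X.coprime_iff_not_dvd).mpr this).symm
  · obtain ⟨a, b, h⟩ := hg
    refine ⟨a.comp (X ^ D), b.comp (X ^ D), ?_⟩
    rw [← mul_comp, ← mul_comp, ← add_comp, h, one_comp]

/-- The resultant in degrees `4 * D` and `4 * D - 1` of `rowDisc v` and its derivative. -/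
def rowRes {R : Type*} [CommRing R] {D : ℕ} (v : Fin 3 × Fin (D + 1) → R) : R :=
  (rowDisc v).resultant (derivative (rowDisc v)) (4 * D) (4 * D - 1)

lemma rowRes_map {R S : Type*} [CommRing R] [CommRing S] (φ : R →+* S) {D : ℕ}
    (v : Fin 3 × Fin (D + 1) → R) : rowRes (fun x => φ (v x)) = φ (rowRes v) := by
  rw [rowRes, rowDisc_map, derivative_map, resultant_map_map, rowRes]

lemma rowDisc_natDegree {R : Type*} [CommRing R] {D : ℕ} (v : Fin 3 × Fin (D + 1) → R) :
    (rowDisc v).natDegree ≤ 4 * D :=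
  dl_natDegree (rowPoly_natDegree v 0) (rowPoly_natDegree v 1) (rowPoly_natDegree v 2)

/-- The resultant lies in the ideal generated by `Δ` and its derivative. -/
lemma rowRes_bezout {D : ℕ} (hD : 1 ≤ D) (v : Fin 3 × Fin (D + 1) → ℤ) :
    ∃ u w : ℤ[X], u * rowDisc v + w * derivative (rowDisc v) = C (rowRes v) := by
  obtain ⟨p, q, -, -, h⟩ := exists_mul_add_mul_eq_C_resultant (rowDisc v) (derivative (rowDisc v))
    (rowDisc_natDegree v) ((natDegree_derivative_le _).trans
      (Nat.sub_le_sub_right (rowDisc_natDegree v) 1)) (Or.inl (by omega : 4 * D ≠ 0))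
  exact ⟨p, q, by rw [rowRes, ← h]; ring⟩

/-- The family `Y³ + T^D Y² + (T^D - 1)` has a separable discriminant of full degree. -/
lemma exists_rowRes_ne_zero {D : ℕ} (hD : 1 ≤ D) : ∃ v : Fin 3 × Fin (D + 1) → ℚ, rowRes v ≠ 0 := by
  set v : Fin 3 × Fin (D + 1) → ℚ := fun x =>
    if x.1 = 0 then (if x.2 = Fin.last D then 1 else 0) else
      if x.1 = 1 then 0 else (if x.2 = Fin.last D then 1 else 0) - (if x.2 = 0 then 1 else 0) with hv
  refine ⟨v, ?_⟩
  have h0 : rowPoly v 0 = X ^ D := by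
    simp [rowPoly, hv]
  have h1 : rowPoly v 1 = 0 := by simp [rowPoly, hv]
  have h2 : rowPoly v 2 = X ^ D - 1 := by
    simp [rowPoly, hv, sub_mul, Finset.sum_sub_distrib]
  have hd : rowDisc v = ((1 - X) * (4 * X ^ 3 + 27 * X - 27) : ℚ[X]).comp (X ^ D) := by
    rw [rowDisc, h0, h1, h2, dl]
    simp only [mul_comp, sub_comp, add_comp, one_comp, X_comp, pow_comp, ofNat_comp]
    ring
  have hsep : (rowDisc v).Separable := by
    rw [hd]
    exact separable_comp_X_pow separable_quartic_aux (by simp) hD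
  have htop : (rowDisc v).coeff (4 * D) ≠ 0 := by
    rw [rowDisc_coeff_top hD, rowLead]
    have : Fin.last D ≠ 0 := by
      intro h; have := congrArg Fin.val h; simp at this; omega
    simp [hv, this]
  have hdeg : (rowDisc v).natDegree = 4 * D :=
    le_antisymm (rowDisc_natDegree v) (le_natDegree_of_ne_zero htop)
  have := resultant_ne_zero _ _ hsep
  rw [natDegree_derivative, hdeg] at this
  exact this

/-- Few coefficient vectors have an inseparable discriminant (Schwartz–Zippel). -/
lemma rowRes_zero_count {D : ℕ} (hD : 1 ≤ D) : ∃ C : ℝ, 0 < C ∧ ∀ H : ℕ,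
    (((coefBox D H).filter fun v => rowRes v = 0).card : ℝ) ≤
      C * ((2 * H + 1 : ℝ) ^ (3 * (D + 1)) / (2 * H + 1)) := by
  set gen : MvPolynomial (Fin 3 × Fin (D + 1)) ℤ :=
    rowRes (fun x => (MvPolynomial.X x : MvPolynomial (Fin 3 × Fin (D + 1)) ℤ)) with hgen
  have hev : ∀ v : Fin 3 × Fin (D + 1) → ℤ, MvPolynomial.eval v gen = rowRes v := by
    intro v
    rw [hgen, ← rowRes_map]; simp
  have hgen0 : gen ≠ 0 := by
    intro h
    obtain ⟨v, hv⟩ := exists_rowRes_ne_zero hD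
    apply hv
    have : MvPolynomial.eval₂Hom (Int.castRingHom ℚ) v gen = rowRes v := by
      rw [hgen, ← rowRes_map]; simp
    rw [← this, h, map_zero]
  obtain ⟨e⟩ : Nonempty (Fin 3 × Fin (D + 1) ≃ Fin (3 * (D + 1))) :=
    ⟨Fintype.equivFinOfCardEq (by simp)⟩
  set p := MvPolynomial.rename e gen with hp
  have hp0 : p ≠ 0 := by
    rw [hp]
    exact (map_ne_zero_iff _ (MvPolynomial.rename_injective _ e.injective)).mpr hgen0
  refine ⟨p.totalDegree + 1, by positivity, fun H => ?_⟩
  have hsz := MvPolynomial.schwartz_zippel_totalDegree hp0 (Finset.Icc (-(H : ℤ)) H)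
  have hcard : (Finset.Icc (-(H : ℤ)) H).card = 2 * H + 1 := by
    rw [Int.card_Icc]; omega
  rw [hcard] at hsz
  obtain ⟨M, hM1, hM2⟩ : ∃ M : ℕ, ((coefBox D H).filter fun v => rowRes v = 0).card ≤ M ∧
      (M : ℚ≥0) / (((2 * H + 1 : ℕ) : ℚ≥0) ^ (3 * (D + 1))) ≤ p.totalDegree / (2 * H + 1 : ℕ) := by
    refine ⟨_, ?_, hsz⟩
    refine Finset.card_le_card_of_injOn (fun v => v ∘ e.symm) ?_ ?_
    · intro v hv
      simp only [Finset.coe_filter, Set.mem_ofPred_eq, coefBox, Fintype.mem_piFinset] at hv ⊢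
      refine ⟨fun i => hv.1 _, ?_⟩
      rw [hp, MvPolynomial.eval_rename, Function.comp_assoc, Equiv.symm_comp_self,
        Function.comp_id, hev, hv.2]
    · intro v _ w _ h
      funext x
      simpa using congrFun h (e x)
  have hM3 : (M : ℝ) / ((2 * H + 1 : ℝ) ^ (3 * (D + 1))) ≤ p.totalDegree / (2 * H + 1) := by
    have := (NNRat.cast_le (K := ℝ)).mpr hM2
    push_cast at this
    exact this
  rw [div_le_iff₀ (by positivity)] at hM3
  calc _ ≤ (M : ℝ) := by exact_mod_cast hM1
    _ ≤ _ := hM3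
    _ = p.totalDegree * ((2 * H + 1 : ℝ) ^ (3 * (D + 1)) / (2 * H + 1)) := by ring
    _ ≤ _ := by gcongr; linarith
end

/-! ### The Galois group over the rational function field -/

section

lemma map_dl {R S : Type*} [CommRing R] [CommRing S] (φ : R →+* S) (a b c : R) :
    φ (dl (a, b, c)) = dl (φ a, φ b, φ c) := by
  simp only [dl, map_add, map_sub, map_mul, map_pow, map_ofNat]

lemma cubic_coeffs {R : Type*} [CommRing R] (a b c : R) :
    (X ^ 3 + C a * X ^ 2 + C b * X + C c).coeff 2 = a ∧
    (X ^ 3 + C a * X ^ 2 + C b * X + C c).coeff 1 = b ∧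
    (X ^ 3 + C a * X ^ 2 + C b * X + C c).coeff 0 = c := by
  refine ⟨?_, ?_, ?_⟩ <;> simp [coeff_X, coeff_C, coeff_X_pow]

lemma gal_card_le_six {K : Type*} [Field K] {f : K[X]} (h3 : f.natDegree = 3) :
    Nat.card f.Gal ≤ 6 := by
  have : Fact (f.map (algebraMap K f.SplittingField)).Splits := ⟨SplittingField.splits f⟩
  have hinj := Gal.galActionHom_injective f f.SplittingField
  have h1 := Nat.card_le_card_of_injective _ hinj
  have h2 : (f.rootSet f.SplittingField).ncard ≤ 3 := by
    rw [← h3]; exact ncard_rootSet_le f _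
  rw [Nat.card_perm] at h1
  refine h1.trans ?_
  rw [show 6 = Nat.factorial 3 from rfl]
  exact Nat.factorial_le h2

/-- A cubic without roots has a Galois group of order divisible by `3`, and a nonsquare discriminant makes
the order even. -/
lemma gal_card_six {K : Type*} [Field K] [CharZero K] {f : K[X]} (hm : f.Monic)
    (h3 : f.natDegree = 3) (hr : ∀ x, ¬ f.IsRoot x)
    (hd : ∀ y, y ^ 2 ≠ dl (f.coeff 2, f.coeff 1, f.coeff 0)) : Nat.card f.Gal = 6 := by
  have hirr : Irreducible f := by
    rw [hm.irreducible_iff_roots_eq_zero_of_degree_le_three (by omega) (by omega)]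
    refine Multiset.eq_zero_of_forall_notMem fun x hx => hr x ?_
    exact isRoot_of_mem_roots hx
  have d3 : 3 ∣ Nat.card f.Gal := by
    have := Gal.prime_degree_dvd_card hirr (by rw [h3]; exact Nat.prime_three)
    rwa [h3] at this
  have d2 : 2 ∣ Nat.card f.Gal := by
    rw [Gal.card_of_separable hirr.separable]
    set L := f.SplittingField
    have hsp : (f.map (algebraMap K L)).Splits := SplittingField.splits f
    have hmL : (f.map (algebraMap K L)).Monic := hm.map _
    have hcard : (f.map (algebraMap K L)).roots.card = 3 := by
      rw [← hsp.natDegree_eq_card_roots, natDegree_map, h3]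
    obtain ⟨x, y, z, hxyz⟩ := Multiset.card_eq_three.mp hcard
    have hprod := hsp.eq_prod_roots_of_monic hmL
    rw [hxyz] at hprod
    have hprod' : f.map (algebraMap K L) = X ^ 3 + C (-(x + y + z)) * X ^ 2 +
        C (x * y + y * z + x * z) * X + C (-(x * y * z)) := by
      rw [hprod]
      simp only [Multiset.insert_eq_cons, Multiset.map_cons, Multiset.map_singleton,
        Multiset.prod_cons, Multiset.prod_singleton, C_neg, C_add, C_mul]
      ring
    have c2 : algebraMap K L (f.coeff 2) = -(x + y + z) := by
      rw [← coeff_map, hprod']; exact (cubic_coeffs _ _ _).1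
    have c1 : algebraMap K L (f.coeff 1) = x * y + y * z + x * z := by
      rw [← coeff_map, hprod']; exact (cubic_coeffs _ _ _).2.1
    have c0 : algebraMap K L (f.coeff 0) = -(x * y * z) := by
      rw [← coeff_map, hprod']; exact (cubic_coeffs _ _ _).2.2
    set δ := (x - y) * (y - z) * (x - z)
    have hδ : δ ^ 2 = algebraMap K L (dl (f.coeff 2, f.coeff 1, f.coeff 0)) := by
      have := disc_cubic_eq (a := algebraMap K L (f.coeff 2)) (b := algebraMap K L (f.coeff 1))
        (c := algebraMap K L (f.coeff 0)) (x := x) (y := y) (z := z) (by rw [c2, neg_neg]) c1.symm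
        (by rw [c0, neg_neg])
      rw [map_dl]
      exact this
    have hirr2 := X_pow_sub_C_irreducible_of_prime Nat.prime_two hd
    have hmin : minpoly K δ = X ^ 2 - C (dl (f.coeff 2, f.coeff 1, f.coeff 0)) := by
      refine (minpoly.eq_of_irreducible_of_monic hirr2 ?_ (monic_X_pow_sub_C _ (by norm_num))).symm
      simp [hδ]
    have hfin : Module.finrank K K⟮δ⟯ = 2 := by
      rw [adjoin.finrank (Algebra.IsIntegral.isIntegral δ), hmin, natDegree_X_pow_sub_C]
    rw [← hfin, ← Module.finrank_mul_finrank K K⟮δ⟯ L]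
    exact dvd_mul_right _ _
  have hpos : 0 < Nat.card f.Gal := Nat.card_pos
  have hle := gal_card_le_six h3
  omega

/-- A cubic over `k[T]` whose discriminant is squarefree of the maximal degree `4 * D` has Galois group
of order `6` over `k(T)`. A root `r` would give a factorization `(Y - r)(Y² + sY + t)`, so that
`(r² + sr + t)²` divides the discriminant; then `r² + sr + t` is constant and the discriminant has
degree at most `deg (s² - 4 * t) ≤ 2 * D`. -/
lemma gal_card_ratFunc {k : Type*} [Field k] [CharZero k] {D : ℕ} (hD : 1 ≤ D) {f : k[X][X]}
    (hm : f.Monic) (h3 : f.natDegree = 3) (hdeg : ∀ i, (f.coeff i).natDegree ≤ D)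
    (hsq : Squarefree (dl (f.coeff 2, f.coeff 1, f.coeff 0)))
    (htop : (dl (f.coeff 2, f.coeff 1, f.coeff 0)).natDegree = 4 * D) :
    Nat.card (f.map (algebraMap k[X] (RatFunc k))).Gal = 6 := by
  have hinj : Function.Injective (algebraMap k[X] (RatFunc k)) :=
    FaithfulSMul.algebraMap_injective _ _
  refine gal_card_six (hm.map _) (by rw [hm.natDegree_map, h3]) ?_ ?_
  · intro x hx
    have hinteg : IsIntegral k[X] x := ⟨f, hm, by rw [← eval_map]; exact hx⟩
    obtain ⟨r, rfl⟩ := IsIntegrallyClosed.isIntegral_iff.mp hinteg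
    have hr : f.eval r = 0 := by
      rw [IsRoot, eval_map_apply] at hx
      exact hinj (by rw [hx, map_zero])
    obtain ⟨a, ha⟩ : ∃ a, f.coeff 2 = a := ⟨_, rfl⟩
    obtain ⟨b, hb⟩ : ∃ b, f.coeff 1 = b := ⟨_, rfl⟩
    obtain ⟨c, hc⟩ : ∃ c, f.coeff 0 = c := ⟨_, rfl⟩
    have hda := hdeg 2
    have hdb := hdeg 1
    have hdc := hdeg 0
    have hc3 : f.coeff 3 = 1 := by rw [← h3]; exact hm.coeff_natDegree
    rw [eval_eq_sum_range, h3] at hr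
    simp only [Finset.sum_range_succ, Finset.sum_range_zero, hc3, ha, hb, hc] at hr
    rw [ha, hb, hc] at hsq htop
    rw [ha] at hda
    rw [hb] at hdb
    rw [hc] at hdc
    have hrD : r.natDegree ≤ D := by
      by_contra! hlt
      have e : r ^ 3 = -(a * r ^ 2 + b * r + c) := by linear_combination hr
      have h1 : (r ^ 3).natDegree = 3 * r.natDegree := natDegree_pow _ _
      have h2 : (-(a * r ^ 2 + b * r + c)).natDegree ≤ D + 2 * r.natDegree := by
        compute_degree
        omega
      rw [e] at h1
      omega
    set s := a + r with hs
    set t := b + r * s with ht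
    have hsD : s.natDegree ≤ D := by rw [hs]; compute_degree; omega
    have htD : t.natDegree ≤ 2 * D := by rw [ht]; compute_degree; omega
    have hfac : dl (a, b, c) = (s ^ 2 - 4 * t) * ((r ^ 2 + s * r + t) * (r ^ 2 + s * r + t)) := by
      have hc' : c = -(r * t) := by rw [ht, hs]; linear_combination hr
      have ha' : a = s - r := by rw [hs]; ring
      have hb' : b = t - r * s := by rw [ht]; ring
      rw [hc', hb', ha']
      simp only [dl]
      ring
    have hu : IsUnit (r ^ 2 + s * r + t) := hsq _ (by rw [hfac]; exact dvd_mul_left _ _)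
    have hu0 := natDegree_eq_zero_of_isUnit hu
    have hle : (dl (a, b, c)).natDegree ≤ 2 * D := by
      rw [hfac]
      refine natDegree_mul_le.trans ?_
      have h1 : (s ^ 2 - 4 * t).natDegree ≤ 2 * D := by compute_degree; omega
      have h2 := natDegree_mul_le (p := r ^ 2 + s * r + t) (q := r ^ 2 + s * r + t)
      omega
    omega
  · intro y hy
    have e : dl ((f.map (algebraMap k[X] (RatFunc k))).coeff 2,
        (f.map (algebraMap k[X] (RatFunc k))).coeff 1,
        (f.map (algebraMap k[X] (RatFunc k))).coeff 0) =
        algebraMap k[X] (RatFunc k) (dl (f.coeff 2, f.coeff 1, f.coeff 0)) := by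
      rw [map_dl, coeff_map, coeff_map, coeff_map]
    rw [e] at hy
    have hinteg : IsIntegral k[X] y :=
      ⟨X ^ 2 - C (dl (f.coeff 2, f.coeff 1, f.coeff 0)), monic_X_pow_sub_C _ (by norm_num), by
        rw [eval₂_sub, eval₂_pow, eval₂_X, eval₂_C, hy, sub_self]⟩
    obtain ⟨w, rfl⟩ := IsIntegrallyClosed.isIntegral_iff.mp hinteg
    rw [← map_pow] at hy
    have hw := hinj hy
    have hu : IsUnit w := hsq _ (by rw [← hw, sq])
    have hu0 := natDegree_eq_zero_of_isUnit hu
    rw [← hw, natDegree_pow, hu0] at htop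
    omega

lemma gal_card_toQbarT {D : ℕ} (hD : 1 ≤ D) {P : ℤ[X][X]} (hP : P ∈ QSet 3 D) {u w : ℤ[X]} {R : ℤ}
    (hR : u * dl (P.coeff 2, P.coeff 1, P.coeff 0) +
      w * derivative (dl (P.coeff 2, P.coeff 1, P.coeff 0)) = C R) (hR0 : R ≠ 0)
    (htop : (dl (P.coeff 2, P.coeff 1, P.coeff 0)).coeff (4 * D) ≠ 0) :
    Nat.card (toQbarT P).Gal = 6 := by
  obtain ⟨hm, h3, hdeg⟩ := hP
  set φ := Int.castRingHom (AlgebraicClosure ℚ) with hφ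
  have hφi : Function.Injective φ := RingHom.injective_int φ
  have e : toQbarT P = (P.map (mapRingHom φ)).map
      (algebraMap (AlgebraicClosure ℚ)[X] (RatFunc (AlgebraicClosure ℚ))) := by
    rw [toQbarT, Polynomial.map_map]
  have hdl : dl ((P.map (mapRingHom φ)).coeff 2, (P.map (mapRingHom φ)).coeff 1,
      (P.map (mapRingHom φ)).coeff 0) = (dl (P.coeff 2, P.coeff 1, P.coeff 0)).map φ := by
    rw [coeff_map, coeff_map, coeff_map]
    exact (map_dl (mapRingHom φ) _ _ _).symm
  rw [e]
  refine gal_card_ratFunc hD (hm.map _) (by rw [hm.natDegree_map, h3]) ?_ ?_ ?_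
  · intro i
    rw [coeff_map]
    exact natDegree_map_le.trans (hdeg i)
  · rw [hdl]
    refine Separable.squarefree ?_
    refine ⟨C (φ R)⁻¹ * u.map φ, C (φ R)⁻¹ * w.map φ, ?_⟩
    have := congrArg (Polynomial.map φ) hR
    rw [Polynomial.map_add, Polynomial.map_mul, Polynomial.map_mul, ← derivative_map, map_C] at this
    have hc : (C (φ R)⁻¹ : (AlgebraicClosure ℚ)[X]) * C (φ R) = 1 := by
      rw [← C_mul, inv_mul_cancel₀ ((map_ne_zero_iff _ hφi).mpr hR0), C_1]
    linear_combination C (φ R)⁻¹ * this + hc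
  · rw [hdl, natDegree_map_eq_of_injective hφi]
    exact le_antisymm (dl_natDegree (hdeg 2) (hdeg 1) (hdeg 0)) (le_natDegree_of_ne_zero htop)
end

/-! ### Generic polynomials are good -/

section

/-- The cubic with coefficient vector `v`. -/
def polyOf {D : ℕ} (v : Fin 3 × Fin (D + 1) → ℤ) : ℤ[X][X] :=
  X ^ 3 + C (rowPoly v 0) * X ^ 2 + C (rowPoly v 1) * X + C (rowPoly v 2)

lemma polyOf_monic {D : ℕ} (v : Fin 3 × Fin (D + 1) → ℤ) : (polyOf v).Monic := by
  unfold polyOf; monicity!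

lemma polyOf_natDegree {D : ℕ} (v : Fin 3 × Fin (D + 1) → ℤ) : (polyOf v).natDegree = 3 := by
  unfold polyOf; compute_degree!

lemma polyOf_coeff_cases {D : ℕ} (v : Fin 3 × Fin (D + 1) → ℤ) (i : ℕ) :
    (∃ j : Fin 3, (polyOf v).coeff i = rowPoly v j) ∨ (polyOf v).coeff i = 1 ∨
      (polyOf v).coeff i = 0 := by
  obtain ⟨h2, h1, h0⟩ := cubic_coeffs (rowPoly v 0) (rowPoly v 1) (rowPoly v 2)
  rcases (by omega : i = 0 ∨ i = 1 ∨ i = 2 ∨ i = 3 ∨ 3 < i) with rfl | rfl | rfl | rfl | h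
  · exact Or.inl ⟨2, h0⟩
  · exact Or.inl ⟨1, h1⟩
  · exact Or.inl ⟨0, h2⟩
  · refine Or.inr (Or.inl ?_)
    have := (polyOf_monic v).coeff_natDegree
    rwa [polyOf_natDegree] at this
  · exact Or.inr (Or.inr (coeff_eq_zero_of_natDegree_lt (by rwa [polyOf_natDegree])))

lemma polyOf_mem_QSet {D : ℕ} (v : Fin 3 × Fin (D + 1) → ℤ) : polyOf v ∈ QSet 3 D := by
  refine ⟨polyOf_monic v, polyOf_natDegree v, fun i => ?_⟩
  rcases polyOf_coeff_cases v i with ⟨j, h⟩ | h | h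
  · rw [h]; exact rowPoly_natDegree v j
  · rw [h]; simp
  · rw [h]; simp

lemma polyOf_injective {D : ℕ} : Function.Injective (polyOf (D := D)) := by
  intro v w h
  obtain ⟨h2, h1, h0⟩ := cubic_coeffs (rowPoly v 0) (rowPoly v 1) (rowPoly v 2)
  obtain ⟨g2, g1, g0⟩ := cubic_coeffs (rowPoly w 0) (rowPoly w 1) (rowPoly w 2)
  have e : ∀ i, rowPoly v i = rowPoly w i := by
    simp only [polyOf] at h
    intro i
    fin_cases i
    · exact h2.symm.trans ((congrArg (fun p => p.coeff 2) h).trans g2)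
    · exact h1.symm.trans ((congrArg (fun p => p.coeff 1) h).trans g1)
    · exact h0.symm.trans ((congrArg (fun p => p.coeff 0) h).trans g0)
  funext ⟨i, j⟩
  rw [← rowPoly_coeff v, ← rowPoly_coeff w, e]

lemma polyOf_height {D H : ℕ} (hH : 1 ≤ H) {v : Fin 3 × Fin (D + 1) → ℤ} (hv : v ∈ coefBox D H) :
    QHeightLE (polyOf v) H := by
  have hv' : ∀ x, |v x| ≤ (H : ℤ) := fun x =>
    abs_le.mpr (Finset.mem_Icc.mp (Fintype.mem_piFinset.mp hv x))
  intro i j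
  rcases polyOf_coeff_cases v i with ⟨r, h⟩ | h | h
  · rw [h]
    by_cases hj : j < D + 1
    · have := rowPoly_coeff v r ⟨j, hj⟩
      rw [show (rowPoly v r).coeff j = v (r, ⟨j, hj⟩) from this]
      exact hv' _
    · rw [coeff_eq_zero_of_natDegree_lt (lt_of_le_of_lt (rowPoly_natDegree v r) (by omega))]
      simp
  · rw [h, coeff_one]
    split_ifs
    · simp; omega
    · simp
  · rw [h]; simp

lemma exists_polyOf {D H : ℕ} {P : ℤ[X][X]} (hP : P ∈ QSet 3 D) (hh : QHeightLE P H) :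
    ∃ v ∈ coefBox D H, polyOf v = P := by
  obtain ⟨hm, h3, hdeg⟩ := hP
  refine ⟨fun x => (P.coeff (2 - x.1)).coeff x.2, ?_, ?_⟩
  · refine Fintype.mem_piFinset.mpr fun x => Finset.mem_Icc.mpr (abs_le.mp (hh _ _))
  · have hrow : ∀ i : Fin 3, rowPoly (fun x : Fin 3 × Fin (D + 1) =>
        (P.coeff (2 - x.1)).coeff x.2) i = P.coeff (2 - i) := by
      intro i
      rw [rowPoly]
      conv_rhs => rw [as_sum_range_C_mul_X_pow' (P.coeff (2 - i)) (n := D + 1)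
        (by have := hdeg (2 - i); omega)]
      exact Fin.sum_univ_eq_sum_range (fun j => C ((P.coeff (2 - i)).coeff j) * X ^ j) (D + 1)
    have hc3 : P.coeff 3 = 1 := by rw [← h3]; exact hm.coeff_natDegree
    rw [polyOf, hrow, hrow, hrow]
    conv_rhs => rw [as_sum_range_C_mul_X_pow' P (n := 4) (by omega)]
    simp only [Finset.sum_range_succ, Finset.sum_range_zero, hc3]
    simp
    ring

lemma QSet_height_eq {D H : ℕ} (hH : 1 ≤ H) :
    QSet 3 D ∩ {P | QHeightLE P H} = polyOf '' (coefBox D H : Set (Fin 3 × Fin (D + 1) → ℤ)) := by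
  ext P
  constructor
  · rintro ⟨h1, h2⟩
    obtain ⟨v, hv, rfl⟩ := exists_polyOf h1 h2
    exact ⟨v, hv, rfl⟩
  · rintro ⟨v, hv, rfl⟩
    exact ⟨polyOf_mem_QSet v, polyOf_height hH hv⟩

lemma card_coefBox (D H : ℕ) : (coefBox D H).card = (2 * H + 1) ^ (3 * (D + 1)) := by
  rw [coefBox, Fintype.card_piFinset, Finset.prod_const, Finset.card_univ, Int.card_Icc]
  congr 1
  · omega
  · simp

/-- The arithmetic conditions on the discriminant imply membership in `GoodS3 D`. -/
lemma polyOf_mem_GoodS3 {D : ℕ} (hD : 1 ≤ D) {v : Fin 3 × Fin (D + 1) → ℤ} (hR : rowRes v ≠ 0)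
    {l : ℕ} (hl : l.Prime) (hll : ¬ (l : ℤ) ∣ (rowDisc v).coeff (4 * D))
    (hr : Rootless (rowDisc v) l) : polyOf v ∈ GoodS3 D := by
  obtain ⟨h2, h1, h0⟩ := cubic_coeffs (rowPoly v 0) (rowPoly v 1) (rowPoly v 2)
  have c2 : (polyOf v).coeff 2 = rowPoly v 0 := h2
  have c1 : (polyOf v).coeff 1 = rowPoly v 1 := h1
  have c0 : (polyOf v).coeff 0 = rowPoly v 2 := h0
  obtain ⟨u, w, huw⟩ := rowRes_bezout hD v
  have htop : (rowDisc v).coeff (4 * D) ≠ 0 := fun h => hll (h ▸ dvd_zero _)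
  refine ⟨polyOf_mem_QSet v, ?_, ?_⟩
  · refine gal_card_toQbarT hD (polyOf_mem_QSet v) (u := u) (w := w) (R := rowRes v) ?_ hR ?_
    · rw [c2, c1, c0]; exact huw
    · rw [c2, c1, c0]; exact htop
  · obtain ⟨η, hη, C, hC, hup⟩ := sp_upper hD (polyOf_mem_QSet v) (Δ := rowDisc v) (u := u) (v := w)
      (R := rowRes v) (by rw [c2, c1, c0]; rfl) huw hR hl hll hr
    obtain ⟨c, hc, hlow⟩ := S3Fields_lower
    refine ⟨η, hη, ?_⟩
    refine IsBigO.of_bound (C / c) ?_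
    filter_upwards [hup, hlow, eventually_ge_atTop 2] with x h1 h2 hx
    have hx' : (2 : ℝ) ≤ x := by exact_mod_cast hx
    have hlog : 0 < Real.log x := Real.log_pos (by linarith)
    have hpow : 0 < (x : ℝ) ^ (1 / 3 : ℝ) := Real.rpow_pos_of_pos (by linarith) _
    have hS : (0 : ℝ) < (S3Fields x).ncard := lt_of_lt_of_le (by positivity) h2
    have hlp : 0 < Real.log x ^ (-η) := Real.rpow_pos_of_pos hlog _
    rw [Real.norm_of_nonneg (by positivity), Real.norm_of_nonneg hlp.le, div_le_iff₀ hS]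
    calc _ ≤ _ := h1
      _ = C / c * Real.log x ^ (-η) * (c * (x : ℝ) ^ (1 / 3 : ℝ)) := by field_simp
      _ ≤ _ := by gcongr

theorem stmt2 (D : ℕ) (hD : 1 ≤ D) :
    (fun H : ℕ => (1 : ℝ) -
        ((GoodS3 D ∩ {P | QHeightLE P H}).ncard : ℝ) /
          ((QSet 3 D ∩ {P | QHeightLE P H}).ncard : ℝ)) =O[atTop]
      fun H : ℕ => Real.log H / Real.sqrt H := by
  obtain ⟨C₁, hC₁, h₁⟩ := bad_count hD
  obtain ⟨C₂, hC₂, h₂⟩ := rowRes_zero_count hD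
  refine IsBigO.of_bound (C₁ + C₂) ?_
  filter_upwards [h₁, eventually_ge_atTop 3] with H hH hH3
  set k := 3 * (D + 1) with hk
  set A := coefBox D H with hA
  set B₁ := A.filter fun v => ¬ ∃ l : ℕ, l.Prime ∧ ¬ (l : ℤ) ∣ (rowDisc v).coeff (4 * D) ∧
      Rootless (rowDisc v) l with hB₁
  set B₂ := A.filter fun v => rowRes v = 0 with hB₂
  have hHr : (3 : ℝ) ≤ H := by exact_mod_cast hH3
  have hfin : (QSet 3 D ∩ {P | QHeightLE P H}).Finite := by
    rw [QSet_height_eq (by omega)]; exact (Finset.finite_toSet _).image _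
  have htot : (QSet 3 D ∩ {P | QHeightLE P H}).ncard = A.card := by
    rw [QSet_height_eq (by omega), Set.ncard_image_of_injective _ polyOf_injective,
      Set.ncard_coe_finset]
  have hsub : GoodS3 D ∩ {P | QHeightLE P H} ⊆ QSet 3 D ∩ {P | QHeightLE P H} :=
    fun P hP => ⟨hP.1.1, hP.2⟩
  have hle : (GoodS3 D ∩ {P | QHeightLE P H}).ncard ≤ A.card :=
    htot ▸ Set.ncard_le_ncard hsub hfin
  have hge : A.card ≤ (GoodS3 D ∩ {P | QHeightLE P H}).ncard + B₁.card + B₂.card := by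
    have hcov : QSet 3 D ∩ {P | QHeightLE P H} ⊆ (GoodS3 D ∩ {P | QHeightLE P H}) ∪
        (polyOf '' (B₁ : Set (Fin 3 × Fin (D + 1) → ℤ)) ∪
          polyOf '' (B₂ : Set (Fin 3 × Fin (D + 1) → ℤ))) := by
      rintro P ⟨hP, hPH⟩
      obtain ⟨v, hv, rfl⟩ := exists_polyOf hP hPH
      by_cases hR : rowRes v = 0
      · exact Or.inr (Or.inr ⟨v, Finset.mem_filter.mpr ⟨hv, hR⟩, rfl⟩)
      by_cases hl : ∃ l : ℕ, l.Prime ∧ ¬ (l : ℤ) ∣ (rowDisc v).coeff (4 * D) ∧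
          Rootless (rowDisc v) l
      · obtain ⟨l, hl1, hl2, hl3⟩ := hl
        exact Or.inl ⟨polyOf_mem_GoodS3 hD hR hl1 hl2 hl3, hPH⟩
      · exact Or.inr (Or.inl ⟨v, Finset.mem_filter.mpr ⟨hv, hl⟩, rfl⟩)
    have h3 := Set.ncard_le_ncard hcov ((hfin.subset hsub).union
      (((Finset.finite_toSet _).image _).union ((Finset.finite_toSet _).image _)))
    have h4 := (Set.ncard_union_le _ _).trans (Nat.add_le_add_left (Set.ncard_union_le
      (polyOf '' (B₁ : Set (Fin 3 × Fin (D + 1) → ℤ)))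
      (polyOf '' (B₂ : Set (Fin 3 × Fin (D + 1) → ℤ)))) (GoodS3 D ∩ {P | QHeightLE P H}).ncard)
    rw [Set.ncard_image_of_injective _ polyOf_injective,
      Set.ncard_image_of_injective _ polyOf_injective, Set.ncard_coe_finset,
      Set.ncard_coe_finset] at h4
    rw [htot] at h3
    omega
  have hAc : (A.card : ℝ) = (2 * H + 1 : ℝ) ^ k := by
    rw [hA, card_coefBox]; push_cast; rfl
  have hA0 : (0 : ℝ) < A.card := by rw [hAc]; positivity
  have hle' : ((GoodS3 D ∩ {P | QHeightLE P H}).ncard : ℝ) ≤ A.card := by exact_mod_cast hle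
  have hge' : (A.card : ℝ) ≤ (GoodS3 D ∩ {P | QHeightLE P H}).ncard + B₁.card + B₂.card := by
    exact_mod_cast hge
  have hlog : 1 ≤ Real.log H := by
    rw [Real.le_log_iff_exp_le (by linarith)]
    have := Real.exp_one_lt_d9
    linarith
  have hsq : 0 < Real.sqrt H := Real.sqrt_pos.mpr (by linarith)
  rw [htot, Real.norm_of_nonneg (sub_nonneg.mpr ((div_le_one hA0).mpr hle')),
    Real.norm_of_nonneg (by positivity)]
  have e1 : (B₁.card : ℝ) / A.card ≤ C₁ * (Real.log H / Real.sqrt H) := by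
    rw [div_le_iff₀ hA0, hAc]
    calc (B₁.card : ℝ) ≤ C₁ * (H : ℝ) ^ k * (Real.log H / Real.sqrt H) := hH
      _ = C₁ * (Real.log H / Real.sqrt H) * (H : ℝ) ^ k := by ring
      _ ≤ _ := by gcongr; linarith
  have e2 : (B₂.card : ℝ) / A.card ≤ C₂ * (Real.log H / Real.sqrt H) := by
    rw [div_le_iff₀ hA0, hAc]
    have hs : Real.sqrt H ≤ 2 * H + 1 := by
      rw [Real.sqrt_le_left (by positivity)]; nlinarith
    have hin : 1 / (2 * H + 1 : ℝ) ≤ Real.log H / Real.sqrt H := by gcongr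
    calc (B₂.card : ℝ) ≤ C₂ * ((2 * H + 1 : ℝ) ^ k / (2 * H + 1)) := h₂ H
      _ = C₂ * (1 / (2 * H + 1 : ℝ)) * (2 * H + 1 : ℝ) ^ k := by ring
      _ ≤ _ := by gcongr
  have e3 : 1 - ((GoodS3 D ∩ {P | QHeightLE P H}).ncard : ℝ) / A.card ≤
      (B₁.card : ℝ) / A.card + (B₂.card : ℝ) / A.card := by
    rw [← add_div, ← div_self hA0.ne', ← sub_div]
    gcongr
    linarith
  linarith
end
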